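/- Let ω ⊂ ℝ² be a bounded, connected, open set with Lipschitz boundary, Ω = ω × (−1/2,1/2). Let f: ω × (−1/2,1/2) × [1,∞) × ℝ^{3×3} → ℝ be 𝓛²(ω)⊗𝓑-measurable and satisfy C₁|ξ|^q − 1/C₁ ≤ f(x_α,y,q,ξ) ≤ C₂(|ξ|^q+1) with 0 < C₁ ≤ C₂. Let p ∈ 𝒫_b(Ω), εₖ → 0⁺, p_{εₖ}(x) := p(x_α, εₖx₃), and let {u_{εₖ}} ⊂ L¹(Ω;ℝ³) satisfy sup_k F_{εₖ}(u_{εₖ}) < ∞, where F_ε is the clamped thin-film functional with density f. Then: (1) up to a subsequence, u_{εₖ} converges weakly in W^{1,p^-}(Ω;ℝ³) to a function u₀ ∈ W^{1,p^-}_{0,∂_LΩ}(Ω;ℝ³) which is independent of x₃ and can be identified with an element of W^{1,p^-}_0(ω;ℝ³); (2) if p₀ ∈ C(ω̄) and p_{εₖ} → p₀ in L¹_loc(Ω), then u₀ ∈ W^{1,p₀(·)}(ω;ℝ³) ∩ W^{1,p^-}_0(ω;ℝ³); (3) if p₀ ∈ 𝒫_b^{log}(ω) and p_{εₖ} → p₀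 in L¹_loc(Ω), then u₀ ∈ W^{1,p₀(·)}_0(ω;ℝ³); (4) if p₀ ∈ C(ω̄) and p_{εₖ} → p₀ in L^∞(Ω), then u_{εₖ} → u₀ strongly in L^{p₀(·)}(Ω;ℝ³). -/

import Mathlib

/-!
Everything is reduced to scalar components, and exponents are handled through modulars
`∫⁻ ‖w x‖ₑ ^ p x` rather than Luxemburg norms.

*Compactness.* The growth condition from below bounds the modular, with exponent `p_ε`, of the
scaled gradient; since `ε ≤ 1` eventually, this bounds the modulars of all components of `∇u_ε`,
and forces `∇₃u_ε → 0` at rate `ε` in `L^{p⁻}` (`exists_core`). The clamping condition makes the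
extension by zero across the lateral boundary weakly differentiable in the whole slab
`ℝ² × (-1/2, 1/2)` (`slab_ext`), so a horizontal translation moving `Ω` off itself gives a Poincaré
inequality. Weak compactness (`weak_compact`) and the vanishing of the vertical derivative
(`planar_reduction`) produce a subsequence with a planar weak limit `u₀` whose extension by zero
belongs to `W^{1,1}(ℝ²)` (`exists_lim`).

*Zero boundary values.* Near each point of the closure of a Lipschitz domain there is a ball of
directions pointing into the domain (`inward_nbhd`). After a partition of unity
(`exists_partition`), averaging each piece over small multiples of such a ball moves its support
into the domain and commutes with weak derivatives. If the exponent is log-Hölder continuous, averages of a function with finite modular converge to it in modular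
(`avg_modular`), because `s ^ (-(p(x) - p(y)))` stays bounded for `|x - y| ≲ s`. The resulting
`approx` covers constant exponents as well, hence both (1) and (3).

*Integrability of the limit.* If `p_ε → p₀` in `L¹_loc`, then along a subsequence pointwise, and
Young's inequality with the exponents `p_ε(x)` shows that the modular of the weak limit of the
gradients with exponent `p₀` is bounded (`lsc`). Finiteness of the modular of `u₀` itself does
not come from Poincaré's inequality, whose modular form fails for variable exponents. Instead `u₀(x)` is compared
with an average of `u₀` over nearby points, the difference being an integral of averages of the
gradient at smaller scales (`AvgData.gain`). Where `p₀` oscillates little, these averages gain a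
little integrability: the modular with exponent `p₀ + η` is controlled by a modular of the gradient
with any exponent at least `p₀ - η` (`gain_thin`). This only needs uniform continuity of `p₀`
and gives (2).

*Strong convergence.* Comparison with averages also turns weak convergence into strong convergence
in `L¹` (`strong_L1`). If `p_ε → p₀` uniformly, then `p_ε ≥ p₀ - η` eventually, so `gain_thin`
bounds the modulars of `u_ε` with exponent `p₀ + η` uniformly; interpolation between this bound and
the convergence in `L¹` gives convergence in the modular with exponent `p₀` (`strong_mod`), hence (4).
-/

open MeasureTheory Filter Topology Set
open scoped ENNReal NNReal

noncomputable section

/-- `ℝ^n` as a Euclidean space. -/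
abbrev Euc (n : ℕ) := EuclideanSpace ℝ (Fin n)

/-- `d × n` real matrices (gradients of maps `ℝ^n → ℝ^d`). -/
abbrev Mat (d n : ℕ) := Fin d → Fin n → ℝ

/-- Euclidean (Frobenius) norm of a matrix. -/
def mnorm {d n : ℕ} (ξ : Mat d n) : ℝ := Real.sqrt (∑ i, ∑ j, (ξ i j)^2)

/-- `G` is a weak (distributional) gradient of `v` on the open set `Ω`. -/
def IsWeakGrad {n d : ℕ} (Ω : Set (Euc n)) (v : Euc n → Euc d) (G : Euc n → Mat d n) : Prop :=
  ∀ φ : Euc n → ℝ, ContDiff ℝ (⊤ : ℕ∞) φ → HasCompactSupport φ → tsupport φ ⊆ Ω →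
    ∀ i : Fin d, ∀ j : Fin n,
      ∫ x in Ω, φ x * G x i j = - ∫ x in Ω, (fderiv ℝ φ x (EuclideanSpace.single j 1)) * v x i

/-- Membership in `W^{1,1}(Ω;ℝ^d)` with weak gradient `G`. -/
def MemW11 {n d : ℕ} (Ω : Set (Euc n)) (v : Euc n → Euc d) (G : Euc n → Mat d n) : Prop :=
  IntegrableOn v Ω ∧ (∀ i j, IntegrableOn (fun x => G x i j) Ω) ∧ IsWeakGrad Ω v G

/-- The open unit cube `(-1/2,1/2)^n`. -/
def unitCube (n : ℕ) : Set (Euc n) := {x | ∀ j, |x j| < 1/2}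

/-- Matrix of partial derivatives of a map `ℝ^n → ℝ^d`. -/
def gradMat {n d : ℕ} (φ : Euc n → Euc d) (x : Euc n) : Mat d n :=
  fun i j => fderiv ℝ φ x (EuclideanSpace.single j 1) i

/-- Quasiconvexity of `g : ℝ^{d×n} → ℝ`. -/
def QuasiconvexFn {d n : ℕ} (g : Mat d n → ℝ) : Prop :=
  ∀ ξ : Mat d n, ∀ φ : Euc n → Euc d, ContDiff ℝ (⊤ : ℕ∞) φ → tsupport φ ⊆ unitCube n →
    g ξ ≤ ∫ x in unitCube n, g (fun i j => ξ i j + gradMat φ x i j)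

/-- The quasiconvex envelope: the greatest quasiconvex function below `g`. -/
def qcEnvelope {d n : ℕ} (g : Mat d n → ℝ) (ξ : Mat d n) : ℝ :=
  sSup {t : ℝ | ∃ h : Mat d n → ℝ, QuasiconvexFn h ∧ (∀ η, h η ≤ g η) ∧ t = h ξ}

/-- The modular `∫_Ω f(x)^{p(x)} dx`, valued in `ℝ≥0∞`. -/
def emod {n : ℕ} (Ω : Set (Euc n)) (p : Euc n → ℝ) (f : Euc n → ℝ) : ℝ≥0∞ :=
  ∫⁻ x in Ω, ENNReal.ofReal (f x ^ p x)

/-- Convergence `p_k → p₀` in `L^∞(Ω)`. -/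
def TendstoLinf {n : ℕ} (Ω : Set (Euc n)) (p : ℕ → Euc n → ℝ) (p₀ : Euc n → ℝ) : Prop :=
  Tendsto (fun k => eLpNorm (fun x => p k x - p₀ x) ⊤ (volume.restrict Ω)) atTop (nhds 0)

/-- Convergence `p_k → p₀` in `L¹(Ω)`. -/
def TendstoL1 {n : ℕ} (Ω : Set (Euc n)) (p : ℕ → Euc n → ℝ) (p₀ : Euc n → ℝ) : Prop :=
  Tendsto (fun k => ∫⁻ x in Ω, ENNReal.ofReal |p k x - p₀ x|) atTop (nhds 0)

/-- Strong `L¹(Ω;ℝ^d)` convergence of vector valued maps. -/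
def TendstoL1V {n d : ℕ} (Ω : Set (Euc n)) (v : ℕ → Euc n → Euc d) (v₀ : Euc n → Euc d) : Prop :=
  Tendsto (fun k => ∫⁻ x in Ω, ENNReal.ofReal ‖v k x - v₀ x‖) atTop (nhds 0)

/-- Weak `L¹(Ω;ℝ^d)` convergence (testing against bounded measurable functions). -/
def WeakL1Tendsto {n d : ℕ} (Ω : Set (Euc n)) (v : ℕ → Euc n → Euc d) (v₀ : Euc n → Euc d) : Prop :=
  ∀ g : Euc n → ℝ, Measurable g → (∃ M, ∀ x, |g x| ≤ M) →
    ∀ i : Fin d, Tendsto (fun k => ∫ x in Ω, g x * v k x i) atTop (nhds (∫ x in Ω, g x * v₀ x i))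

/-- Weak `L^r(A)` convergence of scalar functions (testing against `L^{r'}` functions). -/
def WeakLrTendsto {n : ℕ} (A : Set (Euc n)) (r : ℝ) (F : ℕ → Euc n → ℝ) (F₀ : Euc n → ℝ) : Prop :=
  ∀ g : Euc n → ℝ, Measurable g → (∫⁻ x in A, ENNReal.ofReal (|g x| ^ (r / (r - 1)))) < ⊤ →
    Tendsto (fun k => ∫ x in A, g x * F k x) atTop (nhds (∫ x in A, g x * F₀ x))

/-- The class `𝒫_b(Ω)`: measurable exponents with `1 < p⁻ ≤ p⁺ < ∞`. -/
def IsPb {n : ℕ} (Ω : Set (Euc n)) (p : Euc n → ℝ) : Prop :=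
  Measurable p ∧ ∃ pm pM : ℝ, 1 < pm ∧ ∀ᵐ x ∂(volume.restrict Ω), pm ≤ p x ∧ p x ≤ pM

/-- log-Hölder continuity on `A`. -/
def LogHolder {n : ℕ} (A : Set (Euc n)) (p : Euc n → ℝ) : Prop :=
  ∃ γ > 0, ∀ x ∈ A, ∀ y ∈ A, 0 < dist x y → dist x y < 1/2 →
    |p x - p y| ≤ γ / |Real.log (dist x y)|

/-- The class `𝒫_b^{log}(A)`. -/
def IsPbLog {n : ℕ} (A : Set (Euc n)) (p : Euc n → ℝ) : Prop := IsPb A p ∧ LogHolder A p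

/-- `p₀ ∈ L^∞(Ω)`. -/
def MemLinf {n : ℕ} (Ω : Set (Euc n)) (p : Euc n → ℝ) : Prop :=
  Measurable p ∧ ∃ M : ℝ, ∀ᵐ x ∂(volume.restrict Ω), |p x| ≤ M

/-- Update the `i`-th coordinate of a point of `ℝ^n`. -/
def updCoord {n : ℕ} (y : Euc n) (i : Fin n) (t : ℝ) : Euc n :=
  (WithLp.equiv 2 _).symm (Function.update ((WithLp.equiv 2 _) y) i t)

/-- `s` has Lipschitz boundary: near every boundary point, in suitable orthonormal
coordinates, `s` is the open region above the graph of a Lipschitz function. -/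
def HasLipschitzBoundary {n : ℕ} (s : Set (Euc n)) : Prop :=
  ∀ x ∈ frontier s, ∃ U : Set (Euc n), IsOpen U ∧ x ∈ U ∧
    ∃ (e : Euc n ≃ₗᵢ[ℝ] Euc n) (i₀ : Fin n) (f : Euc n → ℝ) (K : NNReal),
      LipschitzWith K f ∧ (∀ y t, f (updCoord y i₀ t) = f y) ∧
      s ∩ U = {y ∈ U | f (e y) < e y i₀}

/-- `A` compactly contained in `Ω`. -/
def CompactlyIn {n : ℕ} (A Ω : Set (Euc n)) : Prop :=
  IsOpen A ∧ IsCompact (closure A) ∧ closure A ⊆ Ω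

/-- Weak `L¹(Ω)` convergence of scalar functions. -/
def WeakL1TendstoS {n : ℕ} (Ω : Set (Euc n)) (F : ℕ → Euc n → ℝ) (F₀ : Euc n → ℝ) : Prop :=
  ∀ g : Euc n → ℝ, Measurable g → (∃ M, ∀ x, |g x| ≤ M) →
    Tendsto (fun k => ∫ x in Ω, g x * F k x) atTop (nhds (∫ x in Ω, g x * F₀ x))

/-- Strong (modular) convergence in the variable exponent space `L^{q(·)}(Ω;ℝ^d)`. -/
def TendstoModular {n d : ℕ} (Ω : Set (Euc n)) (q : Euc n → ℝ)
    (us : ℕ → Euc n → Euc d) (u : Euc n → Euc d) : Prop :=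
  Tendsto (fun k => ∫⁻ x in Ω, ENNReal.ofReal (‖us k x - u x‖ ^ q x)) atTop (nhds 0)
/-- Planar projection `x ↦ x_α = (x₁,x₂)`. -/
def projα (x : Euc 3) : Euc 2 := (WithLp.equiv 2 _).symm ![x 0, x 1]

/-- Embed `(x_α, y) ∈ ℝ² × ℝ` into `ℝ³`. -/
def embed3 (xα : Euc 2) (y : ℝ) : Euc 3 := (WithLp.equiv 2 _).symm ![xα 0, xα 1, y]

/-- The rescaled thin domain `Ω = ω × (-1/2,1/2)`. -/
def thinDomain (ω : Set (Euc 2)) : Set (Euc 3) :=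
  {x | projα x ∈ ω ∧ x 2 ∈ Set.Ioo (-(1/2) : ℝ) (1/2)}

/-- The lateral boundary `∂_L Ω = ∂ω × (-1/2,1/2)`. -/
def latBoundary (ω : Set (Euc 2)) : Set (Euc 3) :=
  {x | projα x ∈ frontier ω ∧ x 2 ∈ Set.Ioo (-(1/2) : ℝ) (1/2)}

/-- The rescaling `x ↦ (x_α, ε x₃)`. -/
def scaleX (ε : ℝ) (x : Euc 3) : Euc 3 := updCoord x 2 (ε * x 2)

/-- Divide the third column of a `3×3` matrix by `ε` (the scaled gradient `(∇_α u, ε⁻¹∇₃u)`). -/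
def scaleCol (ε : ℝ) (ξ : Mat 3 3) : Mat 3 3 := fun i j => if j = 2 then ξ i j / ε else ξ i j

/-- Assemble `ξ = (ξ_α, ξ₃) ∈ ℝ^{3×3}` from `ξ_α ∈ ℝ^{3×2}` and `ξ₃ ∈ ℝ³`. -/
def joinCols (ξα : Mat 3 2) (ξ₃ : Fin 3 → ℝ) : Mat 3 3 :=
  fun i j => if h : (j : ℕ) < 2 then ξα i ⟨j, h⟩ else ξ₃ i

/-- `f₀(x_α,y,q,ξ_α) = inf_{ξ₃ ∈ ℝ³} f(x_α,y,q,(ξ_α,ξ₃))`. -/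
def finf (f : Euc 2 → ℝ → ℝ → Mat 3 3 → ℝ) (xα : Euc 2) (y q : ℝ) (ξα : Mat 3 2) : ℝ :=
  ⨅ ξ₃ : Fin 3 → ℝ, f xα y q (joinCols ξα ξ₃)

/-- `p⁻ = ess inf_Ω p`. -/
def pminus (ω : Set (Euc 2)) (p : Euc 3 → ℝ) : ℝ := essInf p (volume.restrict (thinDomain ω))

/-- Membership in `W^{1,r}_{0,∂_LΩ}(Ω;ℝ³)`: closure in `W^{1,r}(Ω)` of
`W^{1,r}_loc(ℝ³;ℝ³)` maps vanishing in a neighbourhood of the lateral boundary. -/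
def MemLatZero (ω : Set (Euc 2)) (r : ℝ) (u : Euc 3 → Euc 3) (G : Euc 3 → Mat 3 3) : Prop :=
  ∃ (w : ℕ → Euc 3 → Euc 3) (Gw : ℕ → Euc 3 → Mat 3 3),
    (∀ j, IsWeakGrad Set.univ (w j) (Gw j)) ∧
    (∀ j, LocallyIntegrable (w j) volume) ∧
    (∀ j, ∀ i l, LocallyIntegrable (fun x => Gw j x i l) volume) ∧
    (∀ j, ∃ V : Set (Euc 3), IsOpen V ∧ latBoundary ω ⊆ V ∧ ∀ x ∈ V, w j x = 0) ∧
    Tendsto (fun j => (∫⁻ x in thinDomain ω, (ENNReal.ofReal (‖w j x - u x‖ ^ r)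
        + ENNReal.ofReal (mnorm (fun i l => Gw j x i l - G x i l) ^ r)))) atTop (nhds 0)

/-- `u` belongs to `W^{1,p_ε(·)}_L(Ω;ℝ³) = W^{1,p⁻}_{0,∂_LΩ}(Ω;ℝ³) ∩ W^{1,p_ε(·)}(Ω;ℝ³)`,
with weak gradient `G`. -/
def SobAdm (ω : Set (Euc 2)) (p : Euc 3 → ℝ) (ε : ℝ) (u : Euc 3 → Euc 3)
    (G : Euc 3 → Mat 3 3) : Prop :=
  AEStronglyMeasurable u (volume.restrict (thinDomain ω)) ∧
  (∀ i j, AEMeasurable (fun x => G x i j) (volume.restrict (thinDomain ω))) ∧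
  IsWeakGrad (thinDomain ω) u G ∧
  MemLatZero ω (pminus ω p) u G ∧
  emod (thinDomain ω) (fun x => p (scaleX ε x)) (fun x => ‖u x‖) < ⊤ ∧
  emod (thinDomain ω) (fun x => p (scaleX ε x)) (fun x => mnorm (G x)) < ⊤

/-- The clamped thin-film functional
`F_ε(u) = ∫_Ω f(x_α, εx₃, p_ε(x), ∇_α u, ε⁻¹ ∇₃ u) dx` on `W^{1,p_ε(·)}_L(Ω;ℝ³)`,
`+∞` otherwise; encoded through the (a.e. unique) weak gradient. -/
def Feps (ω : Set (Euc 2)) (p : Euc 3 → ℝ)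
    (f : Euc 2 → ℝ → ℝ → Mat 3 3 → ℝ) (ε : ℝ) (u : Euc 3 → Euc 3) : ℝ≥0∞ :=
  ⨅ (G : Euc 3 → Mat 3 3) (_ : SobAdm ω p ε u G),
    ∫⁻ x in thinDomain ω, ENNReal.ofReal
      (f (projα x) (ε * x 2) (p (scaleX ε x)) (scaleCol ε (G x)))

/-- Membership in `W^{1,q(·)}(ω;ℝ³)` for the planar domain, with weak gradient `Gv`. -/
def MemW1pPlanar (ω : Set (Euc 2)) (q : Euc 2 → ℝ) (v : Euc 2 → Euc 3)
    (Gv : Euc 2 → Mat 3 2) : Prop :=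
  AEStronglyMeasurable v (volume.restrict ω) ∧
  (∀ i j, AEMeasurable (fun x => Gv x i j) (volume.restrict ω)) ∧
  IsWeakGrad ω v Gv ∧
  emod ω q (fun x => ‖v x‖) < ⊤ ∧ emod ω q (fun x => mnorm (Gv x)) < ⊤

/-- Membership in `W^{1,q(·)}_0(ω;ℝ³)`: closure in `W^{1,q(·)}(ω)` of compactly
supported Sobolev functions. -/
def MemW1p0Planar (ω : Set (Euc 2)) (q : Euc 2 → ℝ) (v : Euc 2 → Euc 3)
    (Gv : Euc 2 → Mat 3 2) : Prop :=
  MemW1pPlanar ω q v Gv ∧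
  ∃ (w : ℕ → Euc 2 → Euc 3) (Gw : ℕ → Euc 2 → Mat 3 2),
    (∀ j, MemW1pPlanar ω q (w j) (Gw j) ∧ HasCompactSupport (w j) ∧ tsupport (w j) ⊆ ω) ∧
    Tendsto (fun j => ∫⁻ x in ω, (ENNReal.ofReal (‖w j x - v x‖ ^ q x)
        + ENNReal.ofReal (mnorm (fun i l => Gw j x i l - Gv x i l) ^ q x))) atTop (nhds 0)

/-- The limiting planar functional with density `g`, on `W^{1,q(·)}_0(ω;ℝ³)`
(identified with `x₃`-independent maps on `Ω`), `+∞` otherwise in `L¹(Ω;ℝ³)`. -/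
def limFun (ω : Set (Euc 2)) (q : Euc 2 → ℝ) (g : Euc 2 → Mat 3 2 → ℝ)
    (u : Euc 3 → Euc 3) : ℝ≥0∞ :=
  ⨅ (v : Euc 2 → Euc 3) (Gv : Euc 2 → Mat 3 2)
    (_ : MemW1p0Planar ω q v Gv ∧
         ∀ᵐ x ∂(volume.restrict (thinDomain ω)), u x = v (projα x)),
    ∫⁻ xα in ω, ENNReal.ofReal (g xα (Gv xα))

/-- `p_ε → p₀` (as functions on `Ω`, `p₀` planar) in `L¹(Ω)` as `ε → 0⁺`. -/
def ScaledTendstoL1 (ω : Set (Euc 2)) (p : Euc 3 → ℝ) (p₀ : Euc 2 → ℝ) : Prop :=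
  Tendsto (fun ε : ℝ => ∫⁻ x in thinDomain ω, ENNReal.ofReal |p (scaleX ε x) - p₀ (projα x)|)
    (nhdsWithin 0 (Set.Ioi 0)) (nhds 0)

/-- `p_ε → p₀` in `L^∞(Ω)` as `ε → 0⁺`. -/
def ScaledTendstoLinf (ω : Set (Euc 2)) (p : Euc 3 → ℝ) (p₀ : Euc 2 → ℝ) : Prop :=
  Tendsto (fun ε : ℝ =>
      eLpNorm (fun x => p (scaleX ε x) - p₀ (projα x)) ⊤ (volume.restrict (thinDomain ω)))
    (nhdsWithin 0 (Set.Ioi 0)) (nhds 0)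

namespace TF

/-! ### Scalar weak derivatives and the line formula -/

/-- `g` is the weak `j`-th partial derivative of `w` on `S`. Integrals are over the whole space;
only values on `S` matter since test functions are supported in `S`. -/
def WD {n : ℕ} (S : Set (Euc n)) (j : Fin n) (w g : Euc n → ℝ) : Prop :=
  ∀ φ : Euc n → ℝ, ContDiff ℝ (⊤ : ℕ∞) φ → HasCompactSupport φ → tsupport φ ⊆ S →
    ∫ x, φ x * g x = - ∫ x, (fderiv ℝ φ x (EuclideanSpace.single j 1)) * w x

lemma eq_zero_of_notMem_tsupport {n : ℕ} {φ : Euc n → ℝ} {x : Euc n} (hx : x ∉ tsupport φ) :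
    φ x = 0 := image_eq_zero_of_notMem_tsupport hx

lemma fderiv_eq_zero_of_notMem {n : ℕ} {φ : Euc n → ℝ} {x : Euc n} (hx : x ∉ tsupport φ) :
    fderiv ℝ φ x = 0 := by
  have := tsupport_fderiv_subset (𝕜 := ℝ) (f := φ)
  exact image_eq_zero_of_notMem_tsupport (fun h => hx (this h))

/-- The weak gradient of a vector field on `Ω` amounts to weak partial derivatives of the scalar
components. -/
lemma weakGrad_iff {n d : ℕ} {Ω : Set (Euc n)} {v : Euc n → Euc d}
    {G : Euc n → Mat d n} :
    IsWeakGrad Ω v G ↔ ∀ i j, WD Ω j (fun x => v x i) (fun x => G x i j) := by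
  have key : ∀ φ : Euc n → ℝ, tsupport φ ⊆ Ω → ∀ i : Fin d, ∀ j : Fin n,
      (∫ x in Ω, φ x * G x i j = ∫ x, φ x * G x i j) ∧
      (∫ x in Ω, (fderiv ℝ φ x (EuclideanSpace.single j 1)) * v x i
        = ∫ x, (fderiv ℝ φ x (EuclideanSpace.single j 1)) * v x i) := by
    intro φ h i j
    constructor
    · apply setIntegral_eq_integral_of_forall_compl_eq_zero
      intro x hx
      rw [eq_zero_of_notMem_tsupport (fun h' => hx (h h')), zero_mul]
    · apply setIntegral_eq_integral_of_forall_compl_eq_zero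
      intro x hx
      rw [fderiv_eq_zero_of_notMem (fun h' => hx (h h'))]
      simp
  constructor
  · intro H i j φ h1 h2 h3
    obtain ⟨a, b⟩ := key φ h3 i j
    have := H φ h1 h2 h3 i j
    rw [a, b] at this
    exact this
  · intro H φ h1 h2 h3 i j
    obtain ⟨a, b⟩ := key φ h3 i j
    rw [a, b]
    exact H i j φ h1 h2 h3

lemma WD.mono {n : ℕ} {S S' : Set (Euc n)} {j : Fin n} {w g : Euc n → ℝ} (h : WD S j w g)
    (hS : S' ⊆ S) : WD S' j w g := fun φ h1 h2 h3 => h φ h1 h2 (h3.trans hS)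

/-- Weak derivatives on `S` depend only on the almost everywhere class on `S`. -/
lemma WD.congr_on {n : ℕ} {S : Set (Euc n)} {j : Fin n} {w g w' g' : Euc n → ℝ} (h : WD S j w g)
    (hw : ∀ᵐ x, x ∈ S → w x = w' x) (hg : ∀ᵐ x, x ∈ S → g x = g' x) : WD S j w' g' := by
  intro φ h1 h2 h3
  have e1 : ∫ x, φ x * g' x = ∫ x, φ x * g x := by
    apply integral_congr_ae
    filter_upwards [hg] with x hx
    by_cases hS : x ∈ S
    · rw [hx hS]
    · rw [eq_zero_of_notMem_tsupport (fun h' => hS (h3 h'))]; simp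
  have e2 : ∫ x, (fderiv ℝ φ x (EuclideanSpace.single j 1)) * w' x
      = ∫ x, (fderiv ℝ φ x (EuclideanSpace.single j 1)) * w x := by
    apply integral_congr_ae
    filter_upwards [hw] with x hx
    by_cases hS : x ∈ S
    · rw [hx hS]
    · rw [fderiv_eq_zero_of_notMem (fun h' => hS (h3 h'))]; simp
  rw [e1, e2]; exact h φ h1 h2 h3

lemma integrable_test_mul {n : ℕ} {φ w : Euc n → ℝ} (hφ : Continuous φ) (hc : HasCompactSupport φ)
    (hw : LocallyIntegrable w volume) : Integrable (fun x => φ x * w x) :=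
  hw.integrable_smul_left_of_hasCompactSupport hφ hc

lemma continuous_fderiv_apply {n : ℕ} {φ : Euc n → ℝ} (hφ : ContDiff ℝ (⊤ : ℕ∞) φ) (v : Euc n) :
    Continuous (fun x => fderiv ℝ φ x v) :=
  (hφ.continuous_fderiv (by simp)).clm_apply continuous_const

lemma hasCompactSupport_fderiv_apply {n : ℕ} {φ : Euc n → ℝ} (hφ : HasCompactSupport φ)
    (v : Euc n) : HasCompactSupport (fun x => fderiv ℝ φ x v) :=
  hφ.fderiv_apply (𝕜 := ℝ) v

lemma WD.sub {n : ℕ} {S : Set (Euc n)} {j : Fin n} {w g w' g' : Euc n → ℝ} (h : WD S j w g)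
    (h' : WD S j w' g') (i1 : LocallyIntegrable w) (i2 : LocallyIntegrable g)
    (i3 : LocallyIntegrable w') (i4 : LocallyIntegrable g') :
    WD S j (fun x => w x - w' x) (fun x => g x - g' x) := by
  intro φ h1 h2 h3
  have c1 := continuous_fderiv_apply h1 (EuclideanSpace.single j 1)
  have c2 := hasCompactSupport_fderiv_apply h2 (EuclideanSpace.single j 1)
  simp only [mul_sub]
  rw [integral_sub (integrable_test_mul h1.continuous h2 i2)
      (integrable_test_mul h1.continuous h2 i4),
    integral_sub (integrable_test_mul c1 c2 i1) (integrable_test_mul c1 c2 i3),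
    h φ h1 h2 h3, h' φ h1 h2 h3]
  ring

/-- Weak derivatives of the zero function vanish. -/
lemma WD.eq_zero {n : ℕ} {S : Set (Euc n)} (hS : IsOpen S) {j : Fin n} {w g : Euc n → ℝ}
    (h : WD S j w g) (hw : ∀ᵐ x, x ∈ S → w x = 0) (hg : LocallyIntegrableOn g S volume) :
    ∀ᵐ x, x ∈ S → g x = 0 := by
  apply hS.ae_eq_zero_of_integral_contDiff_smul_eq_zero hg
  intro φ h1 h2 h3
  have := (h.congr_on hw (Eventually.of_forall fun x _ => rfl)) φ h1 h2 h3
  simpa using this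

lemma fderiv_apply_eq_sum {n : ℕ} (φ : Euc n → ℝ) (y h : Euc n) :
    fderiv ℝ φ y h = ∑ j, h j * fderiv ℝ φ y (EuclideanSpace.single j 1) := by
  have : h = ∑ j, h j • EuclideanSpace.single j (1:ℝ) := by
    ext i
    simp [Finset.sum_apply, Pi.single_apply]
  conv_lhs => rw [this]
  simp [map_sum]

/-- The segment average of a test function, together with its directional derivative. -/
lemma segment_average {n : ℕ} {φ : Euc n → ℝ} (h1 : ContDiff ℝ (⊤ : ℕ∞) φ)
    (h2 : HasCompactSupport φ) (h : Euc n) :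
    ∃ ψ : Euc n → ℝ, (∀ y, ψ y = ∫ s in (0:ℝ)..1, φ (y - s • h)) ∧ ContDiff ℝ (⊤ : ℕ∞) ψ ∧
      HasCompactSupport ψ ∧
      tsupport ψ ⊆ (fun q : ℝ × Euc n => q.2 + q.1 • h) '' (Icc (0:ℝ) 1 ×ˢ tsupport φ) ∧
      ∀ y, fderiv ℝ ψ y h = φ y - φ (y - h) := by
  classical
  set ν : Measure (Euc n) := Measure.map (fun s : ℝ => s • h) (volume.restrict (Ioc 0 1)) with hν
  have hmeas : Measurable (fun s : ℝ => s • h) := by fun_prop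
  have : IsFiniteMeasure ν := by rw [hν]; infer_instance
  set ψ : Euc n → ℝ := MeasureTheory.convolution (fun _ => (1:ℝ)) φ (ContinuousLinearMap.mul ℝ ℝ) ν
  have hψ : ∀ y, ψ y = ∫ s in (0:ℝ)..1, φ (y - s • h) := by
    intro y
    simp only [ψ, MeasureTheory.convolution]
    rw [hν, integral_map hmeas.aemeasurable, intervalIntegral.integral_of_le zero_le_one]
    · simp
    · exact (Continuous.aestronglyMeasurable (by have := h1.continuous; fun_prop))
  have hloc : LocallyIntegrable (fun _ : Euc n => (1:ℝ)) ν := (integrable_const 1).locallyIntegrable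
  have hsm : ContDiff ℝ (⊤ : ℕ∞) ψ := h2.contDiff_convolution_right _ hloc h1
  have hK : IsCompact ((fun q : ℝ × Euc n => q.2 + q.1 • h) '' (Icc (0:ℝ) 1 ×ˢ tsupport φ)) := by
    apply (isCompact_Icc.prod h2).image
    fun_prop
  have hsub : Function.support ψ ⊆ (fun q : ℝ × Euc n => q.2 + q.1 • h) ''
      (Icc (0:ℝ) 1 ×ˢ tsupport φ) := by
    intro y hy
    by_contra hcon
    apply hy
    rw [hψ y]
    apply intervalIntegral.integral_zero_ae
    refine Eventually.of_forall fun s hs => ?_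
    rw [uIoc_of_le zero_le_one] at hs
    apply eq_zero_of_notMem_tsupport
    intro hmem
    exact hcon ⟨(s, y - s • h), ⟨⟨hs.1.le, hs.2⟩, hmem⟩, by simp⟩
  have htsub := closure_minimal hsub hK.isClosed
  refine ⟨ψ, hψ, hsm, HasCompactSupport.of_support_subset_isCompact hK hsub, htsub, ?_⟩
  intro y
  -- along the line through `y`, the average is a difference of two primitives of `φ`
  set k : ℝ → ℝ := fun σ => φ (y + σ • h) with hk
  have hkc : Continuous k := by have := h1.continuous; fun_prop
  have hline : ∀ τ : ℝ, ψ (y + τ • h) = (∫ σ in (0:ℝ)..τ, k σ) - ∫ σ in (0:ℝ)..(τ - 1), k σ := by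
    intro τ
    rw [hψ, intervalIntegral.integral_interval_sub_left (hkc.intervalIntegrable _ _)
      (hkc.intervalIntegrable _ _)]
    have := intervalIntegral.integral_comp_sub_left (a := 0) (b := 1) k τ
    rw [sub_zero] at this
    rw [← this]
    congr 1; ext s
    rw [hk]; simp only [sub_smul]; congr 1; abel
  have d1 : HasDerivAt (fun τ : ℝ => y + τ • h) h 0 := by
    simpa using ((hasDerivAt_id (0:ℝ)).smul_const h).const_add y
  have d2 : HasFDerivAt ψ (fderiv ℝ ψ y) (y + (0:ℝ) • h) := by
    simpa using ((hsm.differentiable (by simp)) y).hasFDerivAt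
  have d3 := d2.comp_hasDerivAt 0 d1
  have P : ∀ τ : ℝ, HasDerivAt (fun τ : ℝ => ∫ σ in (0:ℝ)..τ, k σ) (k τ) τ := fun τ =>
    intervalIntegral.integral_hasDerivAt_right (hkc.intervalIntegrable _ _)
      (hkc.stronglyMeasurableAtFilter _ _) hkc.continuousAt
  have d4 : HasDerivAt (fun τ : ℝ => ψ (y + τ • h)) (k 0 - k (0 - 1)) 0 := by
    have e : (fun τ : ℝ => ψ (y + τ • h))
        = fun τ => (∫ σ in (0:ℝ)..τ, k σ) - ∫ σ in (0:ℝ)..(τ - 1), k σ := funext hline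
    rw [e]
    exact (P 0).sub ((P (0 - 1)).comp_sub_const 0 1)
  have := d3.unique d4
  rw [this, hk]
  simp [sub_eq_add_neg]

/-- Fundamental theorem of calculus along segments for weakly differentiable functions: if the
segments `x + [0,1]h`, `x ∈ A`, stay in `S`, then for almost every `x ∈ A` the increment of `w` is
the integral of the directional derivative. Testing against `φ` reduces the claim to the segment
average of `φ`, which is again a test function. -/
lemma line_formula {n : ℕ} {S A : Set (Euc n)} (hA : IsOpen A) (h : Euc n)
    (hAS : ∀ x ∈ A, ∀ s ∈ Icc (0:ℝ) 1, x + s • h ∈ S) {w : Euc n → ℝ} {g : Fin n → Euc n → ℝ}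
    (hw : Integrable w) (hg : ∀ j, Integrable (g j)) (hgm : ∀ j, Measurable (g j))
    (hWD : ∀ j, WD S j w (g j)) :
    ∀ᵐ x, x ∈ A → w (x + h) - w x = ∫ s in Ioc (0:ℝ) 1, ∑ j, h j * g j (x + s • h) := by
  set H : Euc n → ℝ := fun x => ∑ j, h j * g j x with hH
  have hHi : Integrable H := integrable_finsetSum _ fun j _ => (hg j).const_mul _
  have hHm : Measurable H := by fun_prop
  have hprod : Integrable (fun q : Euc n × ℝ => H (q.1 + q.2 • h))
      ((volume : Measure (Euc n)).prod (volume.restrict (Ioc (0:ℝ) 1))) := by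
    have hm : Measurable (fun q : Euc n × ℝ => H (q.1 + q.2 • h)) := by fun_prop
    rw [integrable_prod_iff' hm.aestronglyMeasurable]
    refine ⟨Eventually.of_forall fun s => hHi.comp_add_right (s • h), ?_⟩
    have : ∀ s : ℝ, ∫ x, ‖H (x + s • h)‖ = ∫ x, ‖H x‖ := fun s =>
      integral_add_right_eq_self (μ := (volume : Measure (Euc n))) (fun x => ‖H x‖) (s • h)
    simp only [this]
    exact integrable_const _
  have hI : Integrable (fun x => ∫ s in Ioc (0:ℝ) 1, H (x + s • h)) := hprod.integral_prod_left
  have hwh : Integrable (fun x => w (x + h)) := hw.comp_add_right h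
  have key : ∀ᵐ x, x ∈ A → w (x + h) - w x - ∫ s in Ioc (0:ℝ) 1, H (x + s • h) = 0 := by
    apply hA.ae_eq_zero_of_integral_contDiff_smul_eq_zero
      (((hwh.sub hw).sub hI).locallyIntegrable.locallyIntegrableOn A)
    intro φ h1 h2 h3
    obtain ⟨ψ, hψ, hψ1, hψ2, hψ3, hψ4⟩ := segment_average h1 h2 h
    have hψS : tsupport ψ ⊆ S := by
      intro y hy
      obtain ⟨⟨s, x⟩, ⟨hs, hx⟩, rfl⟩ := hψ3 hy
      exact hAS x (h3 hx) s hs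
    have iφ : ∀ {f : Euc n → ℝ}, Integrable f → Integrable (fun x => φ x * f x) := fun hf =>
      integrable_test_mul h1.continuous h2 hf.locallyIntegrable
    -- the weak formulation tested with the segment average
    have t1 : ∫ y, (φ y - φ (y - h)) * w y = - ∫ y, ψ y * H y := by
      have : ∀ y, (φ y - φ (y - h)) * w y
          = ∑ j, h j * (fderiv ℝ ψ y (EuclideanSpace.single j 1) * w y) := by
        intro y
        rw [← hψ4 y, fderiv_apply_eq_sum, Finset.sum_mul]
        exact Finset.sum_congr rfl fun j _ => by ring
      simp only [this]
      rw [integral_finsetSum _ fun j _ => (integrable_test_mul (continuous_fderiv_apply hψ1 _)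
        (hasCompactSupport_fderiv_apply hψ2 _) hw.locallyIntegrable).const_mul _]
      have : ∀ y, ψ y * H y = ∑ j, h j * (ψ y * g j y) := by
        intro y
        rw [hH, Finset.mul_sum]
        exact Finset.sum_congr rfl fun j _ => by ring
      simp only [this]
      rw [integral_finsetSum _ fun j _ => (integrable_test_mul hψ1.continuous hψ2
        (hg j).locallyIntegrable).const_mul _, ← Finset.sum_neg_distrib]
      refine Finset.sum_congr rfl fun j _ => ?_
      rw [integral_const_mul, integral_const_mul, hWD j ψ hψ1 hψ2 hψS]
      ring
    have t2 : ∫ y, ψ y * H y = ∫ x, φ x * ∫ s in Ioc (0:ℝ) 1, H (x + s • h) := by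
      have a1 : ∀ y, ψ y * H y = ∫ s in Ioc (0:ℝ) 1, φ (y - s • h) * H y := by
        intro y
        rw [hψ y, intervalIntegral.integral_of_le zero_le_one, integral_mul_const]
      have a2 : ∀ x, φ x * (∫ s in Ioc (0:ℝ) 1, H (x + s • h))
          = ∫ s in Ioc (0:ℝ) 1, φ x * H (x + s • h) := by
        intro x; rw [integral_const_mul]
      simp only [a1, a2]
      obtain ⟨C, hC⟩ := h1.continuous.bounded_above_of_compact_support h2
      have hc := h1.continuous
      have j1 : Integrable (fun q : Euc n × ℝ => φ (q.1 - q.2 • h) * H q.1)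
          ((volume : Measure (Euc n)).prod (volume.restrict (Ioc (0:ℝ) 1))) := by
        have : Integrable (fun q : Euc n × ℝ => H q.1)
            ((volume : Measure (Euc n)).prod (volume.restrict (Ioc (0:ℝ) 1))) := hHi.comp_fst _
        exact this.bdd_mul (c := C) (Continuous.aestronglyMeasurable (by fun_prop))
          (Eventually.of_forall fun q => hC _)
      have j2 : Integrable (fun q : Euc n × ℝ => φ q.1 * H (q.1 + q.2 • h))
          ((volume : Measure (Euc n)).prod (volume.restrict (Ioc (0:ℝ) 1))) :=
        hprod.bdd_mul (c := C) (Continuous.aestronglyMeasurable (by fun_prop))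
          (Eventually.of_forall fun q => hC _)
      refine (integral_integral_swap j1).trans (Eq.trans ?_ (integral_integral_swap j2).symm)
      congr 1; ext s
      have := integral_add_right_eq_self (μ := (volume : Measure (Euc n)))
        (fun y => φ (y - s • h) * H y) (s • h)
      simpa using this.symm
    have t3 : ∫ y, φ (y - h) * w y = ∫ x, φ x * w (x + h) := by
      have := integral_add_right_eq_self (μ := (volume : Measure (Euc n))) (fun y => φ (y - h) * w y) h
      simpa using this.symm
    have i3 : Integrable (fun y => φ (y - h) * w y) := by
      have hc := h1.continuous
      obtain ⟨C, hC⟩ := h1.continuous.bounded_above_of_compact_support h2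
      exact hw.bdd_mul (c := C) (Continuous.aestronglyMeasurable (by fun_prop))
        (Eventually.of_forall fun q => hC _)
    have t4 : ∀ x, φ x • (w (x + h) - w x - ∫ s in Ioc (0:ℝ) 1, H (x + s • h))
        = φ x * w (x + h) - φ x * w x - φ x * ∫ s in Ioc (0:ℝ) 1, H (x + s • h) := by
      intro x; rw [smul_eq_mul]; ring
    change ∫ x, φ x • (w (x + h) - w x - ∫ s in Ioc (0:ℝ) 1, H (x + s • h)) = 0
    simp only [t4]
    simp only [sub_mul] at t1
    rw [integral_sub (iφ hw) i3, t3, t2] at t1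
    have i12 : Integrable (fun x => φ x * w (x + h) - φ x * w x) := (iφ hwh).sub (iφ hw)
    rw [integral_sub i12 (iφ hI), integral_sub (iφ hwh) (iφ hw)]
    linarith
  filter_upwards [key] with x hx hxA
  have := hx hxA
  linarith

/-- Pointwise increment bound from the line formula. -/
lemma line_bound {n : ℕ} {S A : Set (Euc n)} (hA : IsOpen A) (h : Euc n)
    (hAS : ∀ x ∈ A, ∀ s ∈ Icc (0:ℝ) 1, x + s • h ∈ S) {w : Euc n → ℝ} {g : Fin n → Euc n → ℝ}
    (hw : Integrable w) (hg : ∀ j, Integrable (g j)) (hgm : ∀ j, Measurable (g j))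
    (hWD : ∀ j, WD S j w (g j)) :
    ∀ᵐ x, x ∈ A → ‖w (x + h) - w x‖ₑ ≤ ‖h‖ₑ * ∫⁻ s in Ioc (0:ℝ) 1, ∑ j, ‖g j (x + s • h)‖ₑ := by
  filter_upwards [line_formula hA h hAS hw hg hgm hWD] with x hx hxA
  rw [hx hxA, ← lintegral_const_mul _ (by fun_prop)]
  refine (enorm_integral_le_lintegral_enorm _).trans (lintegral_mono fun s => ?_)
  refine (enorm_sum_le _ _).trans ?_
  rw [Finset.mul_sum]
  refine Finset.sum_le_sum fun j _ => ?_
  rw [enorm_mul]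
  gcongr
  rw [enorm_le_iff_norm_le]
  exact PiLp.norm_apply_le h j

/-! ### Poincaré inequality and averaged increments -/

/-- Jensen's inequality for powers of lower integrals against a probability measure. -/
lemma jensen_lint {α : Type*} [MeasurableSpace α] (μ : Measure α) [IsProbabilityMeasure μ]
    {f : α → ℝ≥0∞} (hf : Measurable f) {P : ℝ} (hP : 1 ≤ P) :
    (∫⁻ a, f a ∂μ) ^ P ≤ ∫⁻ a, f a ^ P ∂μ := by
  have h := eLpNorm'_le_eLpNorm'_of_exponent_le (p := 1) (q := P) one_pos hP μ
    (f := f) hf.aestronglyMeasurable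
  simp only [eLpNorm', enorm_eq_self, ENNReal.rpow_one, div_one] at h
  calc (∫⁻ a, f a ∂μ) ^ P ≤ ((∫⁻ a, f a ^ P ∂μ) ^ (1 / P)) ^ P := by gcongr
    _ = _ := by
      rw [← ENNReal.rpow_mul, one_div_mul_cancel (by positivity), ENNReal.rpow_one]

instance : IsProbabilityMeasure (volume.restrict (Ioc (0:ℝ) 1)) := ⟨by simp⟩

lemma lint_add_right {n : ℕ} (f : Euc n → ℝ≥0∞) (h : Euc n) : ∫⁻ x, f (x + h) = ∫⁻ x, f x :=
  lintegral_add_right_eq_self f h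

/-- Poincaré's inequality for functions that vanish after translation by `h`, when the segments
from `A` along `h` stay in the set `S` where the weak derivatives are known. -/
lemma poincare {n : ℕ} {S A : Set (Euc n)} (hA : IsOpen A) (h : Euc n)
    (hAS : ∀ x ∈ A, ∀ s ∈ Icc (0:ℝ) 1, x + s • h ∈ S) {w : Euc n → ℝ} {g : Fin n → Euc n → ℝ}
    (hw : Integrable w) (hg : ∀ j, Integrable (g j)) (hgm : ∀ j, Measurable (g j))
    (hWD : ∀ j, WD S j w (g j)) (h0 : ∀ x ∈ A, w (x + h) = 0) {r : ℝ} (hr : 1 ≤ r) :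
    ∫⁻ x in A, ‖w x‖ₑ ^ r ≤ ‖h‖ₑ ^ r * ∫⁻ x, (∑ j, ‖g j x‖ₑ) ^ r := by
  set gt : Euc n → ℝ≥0∞ := fun x => ∑ j, ‖g j x‖ₑ with hgt
  have hgtm : Measurable gt := by fun_prop
  have hr0 : 0 ≤ r := by linarith
  calc ∫⁻ x in A, ‖w x‖ₑ ^ r
      ≤ ∫⁻ x in A, ‖h‖ₑ ^ r * ∫⁻ s in Ioc (0:ℝ) 1, gt (x + s • h) ^ r := by
        apply lintegral_mono_ae
        rw [ae_restrict_iff' hA.measurableSet]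
        filter_upwards [line_bound hA h hAS hw hg hgm hWD] with x hx hxA
        have h1 := hx hxA
        rw [h0 x hxA, zero_sub, enorm_neg] at h1
        calc ‖w x‖ₑ ^ r ≤ (‖h‖ₑ * ∫⁻ s in Ioc (0:ℝ) 1, gt (x + s • h)) ^ r := by gcongr
          _ = ‖h‖ₑ ^ r * (∫⁻ s in Ioc (0:ℝ) 1, gt (x + s • h)) ^ r := ENNReal.mul_rpow_of_nonneg _ _ hr0
          _ ≤ _ := by gcongr; exact jensen_lint _ (by fun_prop) hr
    _ ≤ ∫⁻ x, ‖h‖ₑ ^ r * ∫⁻ s in Ioc (0:ℝ) 1, gt (x + s • h) ^ r := setLIntegral_le_lintegral _ _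
    _ = ‖h‖ₑ ^ r * ∫⁻ s in Ioc (0:ℝ) 1, ∫⁻ x, gt (x + s • h) ^ r := by
        rw [lintegral_const_mul' _ _ (by finiteness), lintegral_lintegral_swap]
        fun_prop
    _ = _ := by
        congr 1
        simp_rw [lint_add_right (fun x => gt x ^ r)]
        simp [hgt]

/-- Averaging data: a probability measure `ν`, dominated by `c` times Lebesgue
measure, with displacements of size at most `ρ` that keep `A` inside `S`. -/
structure AvgData {n : ℕ} (S A : Set (Euc n)) (ν : Measure (Euc n)) (c : ℝ≥0) (ρ : ℝ) : Prop where
  openA : IsOpen A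
  prob : IsProbabilityMeasure ν
  dom : ν ≤ (c : ℝ≥0∞) • volume
  small : ∀ᵐ z ∂ν, ‖z‖ ≤ ρ ∧ ∀ x ∈ A, ∀ s ∈ Icc (0:ℝ) 1, x + s • z ∈ S

/-- Domination by Lebesgue measure bounds an average at scale `s` by a total integral, with the
loss `s ^ (-n)` coming from the change of variables. -/
lemma AvgData.lint_le {n : ℕ} {S A : Set (Euc n)} {ν : Measure (Euc n)} {c : ℝ≥0} {ρ : ℝ}
    (D : AvgData S A ν c ρ) (f : Euc n → ℝ≥0∞) (x : Euc n) {s : ℝ} (hs : 0 < s) :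
    ∫⁻ z, f (x + s • z) ∂ν ≤ c * ENNReal.ofReal (s ^ (-(n:ℝ))) * ∫⁻ y, f y := by
  calc ∫⁻ z, f (x + s • z) ∂ν ≤ ∫⁻ z, f (x + s • z) ∂((c : ℝ≥0∞) • volume) :=
        lintegral_mono' D.dom le_rfl
    _ = c * ∫⁻ z, f (x + s • z) := by rw [lintegral_smul_measure]; rfl
    _ = c * (ENNReal.ofReal (s ^ (-(n:ℝ))) * ∫⁻ y, f (x + y)) := by
        congr 1
        have e := (Homeomorph.smulOfNeZero s hs.ne' : Euc n ≃ₜ Euc n).measurableEmbedding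
          |>.lintegral_map (μ := volume) (fun y => f (x + y))
        have h2 := Measure.map_addHaar_smul (volume : Measure (Euc n)) hs.ne'
        simp only [Homeomorph.smulOfNeZero_apply] at e
        rw [← e]
        change ∫⁻ a, f (x + a) ∂(Measure.map (fun y => s • y) volume) = _
        rw [h2, lintegral_smul_measure, smul_eq_mul]
        congr 2
        rw [finrank_euclideanSpace_fin, Real.rpow_neg hs.le, Real.rpow_natCast,
          abs_of_pos (by positivity)]
    _ = _ := by rw [lintegral_add_left_eq_self f x, mul_assoc]

/-- The increment of `w` along almost every displacement is bounded by the integral of the weak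
gradient along the segment. -/
lemma AvgData.increment {n : ℕ} {S A : Set (Euc n)} {ν : Measure (Euc n)} {c : ℝ≥0} {ρ : ℝ}
    (D : AvgData S A ν c ρ) {w : Euc n → ℝ} {g : Fin n → Euc n → ℝ} (hwm : Measurable w)
    (hw : Integrable w) (hg : ∀ j, Integrable (g j)) (hgm : ∀ j, Measurable (g j))
    (hWD : ∀ j, WD S j w (g j)) :
    ∀ᵐ x, x ∈ A → ∀ᵐ z ∂ν, ‖w (x + z) - w x‖ₑ
      ≤ ENNReal.ofReal ρ * ∫⁻ s in Ioc (0:ℝ) 1, ∑ j, ‖g j (x + s • z)‖ₑ := by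
  have := D.prob
  have h1 : ∀ᵐ z ∂ν, ∀ᵐ x ∂(volume.restrict A), ‖w (x + z) - w x‖ₑ
      ≤ ENNReal.ofReal ρ * ∫⁻ s in Ioc (0:ℝ) 1, ∑ j, ‖g j (x + s • z)‖ₑ := by
    filter_upwards [D.small] with z hz
    rw [ae_restrict_iff' D.openA.measurableSet]
    filter_upwards [line_bound D.openA z hz.2 hw hg hgm hWD] with x hx hxA
    refine (hx hxA).trans ?_
    gcongr
    rw [← ofReal_norm]
    exact ENNReal.ofReal_le_ofReal hz.1
  have hm : Measurable fun q : Euc n × Euc n =>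
      ENNReal.ofReal ρ * ∫⁻ s in Ioc (0:ℝ) 1, ∑ j, ‖g j (q.1 + s • q.2)‖ₑ := by
    apply Measurable.const_mul
    apply Measurable.lintegral_prod_right'
      (f := fun p : (Euc n × Euc n) × ℝ => ∑ j, ‖g j (p.1.1 + p.2 • p.1.2)‖ₑ)
    fun_prop
  rw [← Measure.ae_ae_comm, ae_restrict_iff' D.openA.measurableSet] at h1
  · exact h1
  · exact measurableSet_le (by fun_prop) hm

/-- Averages over small displacements are close to the function in `L¹`. -/
lemma AvgData.l1_close {n : ℕ} {S A : Set (Euc n)} {ν : Measure (Euc n)} {c : ℝ≥0} {ρ : ℝ}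
    (D : AvgData S A ν c ρ) {w : Euc n → ℝ} {g : Fin n → Euc n → ℝ} (hwm : Measurable w)
    (hw : Integrable w) (hg : ∀ j, Integrable (g j)) (hgm : ∀ j, Measurable (g j))
    (hWD : ∀ j, WD S j w (g j)) :
    ∫⁻ x in A, ‖w x - ∫ z, w (x + z) ∂ν‖ₑ ≤ ENNReal.ofReal ρ * ∫⁻ x, ∑ j, ‖g j x‖ₑ := by
  have := D.prob
  set gt : Euc n → ℝ≥0∞ := fun x => ∑ j, ‖g j x‖ₑ with hgt
  have hgtm : Measurable gt := by fun_prop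
  calc ∫⁻ x in A, ‖w x - ∫ z, w (x + z) ∂ν‖ₑ
      ≤ ∫⁻ x in A, ENNReal.ofReal ρ * ∫⁻ z, (∫⁻ s in Ioc (0:ℝ) 1, gt (x + s • z)) ∂ν := by
        apply lintegral_mono_ae
        rw [ae_restrict_iff' D.openA.measurableSet]
        filter_upwards [D.increment hwm hw hg hgm hWD] with x hx hxA
        have hint : Integrable (fun z => w (x + z)) ν :=
          ((hw.comp_add_left x).smul_measure (c := (c : ℝ≥0∞)) (by simp)).mono_measure D.dom
        have e : w x - ∫ z, w (x + z) ∂ν = ∫ z, (w x - w (x + z)) ∂ν := by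
          rw [integral_sub (integrable_const _) hint]; simp
        rw [e, ← lintegral_const_mul' _ _ (by finiteness)]
        refine (enorm_integral_le_lintegral_enorm _).trans (lintegral_mono_ae ?_)
        filter_upwards [hx hxA] with z hz
        rw [← enorm_neg, neg_sub]
        exact hz
    _ ≤ ∫⁻ x, ENNReal.ofReal ρ * ∫⁻ z, (∫⁻ s in Ioc (0:ℝ) 1, gt (x + s • z)) ∂ν :=
        setLIntegral_le_lintegral _ _
    _ = ENNReal.ofReal ρ * ∫⁻ z, (∫⁻ s in Ioc (0:ℝ) 1, ∫⁻ x, gt (x + s • z)) ∂ν := by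
        rw [lintegral_const_mul' _ _ (by finiteness), lintegral_lintegral_swap]
        · congr 1
          refine lintegral_congr fun z => ?_
          rw [lintegral_lintegral_swap]
          fun_prop
        · apply Measurable.aemeasurable
          apply Measurable.lintegral_prod_right'
            (f := fun p : (Euc n × Euc n) × ℝ => gt (p.1.1 + p.2 • p.1.2))
          fun_prop
    _ = _ := by
        simp_rw [lint_add_right gt]
        simp

/-- The scalar step in the gain of integrability: the factor `s ^ (-n)` enters only with the small
power `(P - q) / q`. -/
lemma gain_scalar {a m B : ℝ≥0∞} {s P q : ℝ} {n : ℕ} (hs : s ∈ Ioc (0:ℝ) 1) (h1q : 1 ≤ q)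
    (hqP : q ≤ P) (hn : 2 * n * (P - q) ≤ q) (hqq : P - q ≤ q) (hB1 : 1 ≤ B)
    (b1 : a ^ q ≤ m) (b2 : m ≤ B * ENNReal.ofReal (s ^ (-(n:ℝ)))) :
    a ^ P ≤ B * (ENNReal.ofReal (s ^ (-(1/2:ℝ))) * m) := by
  have hq0 : 0 < q := by linarith
  obtain ⟨θ, hθ⟩ : ∃ θ, θ = (P - q) / q := ⟨_, rfl⟩
  have hθ0 : 0 ≤ θ := hθ ▸ div_nonneg (by linarith) hq0.le
  have hθ1 : θ ≤ 1 := by rw [hθ, div_le_one hq0]; exact hqq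
  have hnθ : n * θ ≤ 1 / 2 := by
    rw [hθ, mul_div_assoc', div_le_iff₀ hq0]; linarith
  have hPq : P / q = 1 + θ := by rw [hθ]; field_simp; ring
  have hP : P = q * (1 + θ) := by rw [← hPq, mul_div_cancel₀ _ hq0.ne']
  have h1 : (B * ENNReal.ofReal (s ^ (-(n:ℝ)))) ^ θ ≤ B * ENNReal.ofReal (s ^ (-(1/2:ℝ))) := by
    rw [ENNReal.mul_rpow_of_nonneg _ _ hθ0]
    refine mul_le_mul' ?_ ?_
    · calc B ^ θ ≤ B ^ (1:ℝ) := ENNReal.rpow_le_rpow_of_exponent_le hB1 hθ1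
        _ = B := ENNReal.rpow_one _
    · rw [ENNReal.ofReal_rpow_of_pos (Real.rpow_pos_of_pos hs.1 _), ← Real.rpow_mul hs.1.le]
      apply ENNReal.ofReal_le_ofReal
      apply Real.rpow_le_rpow_of_exponent_ge hs.1 hs.2
      linarith
  calc a ^ P = (a ^ q) ^ (1 + θ) := by rw [← ENNReal.rpow_mul, ← hP]
    _ ≤ m ^ (1 + θ) := ENNReal.rpow_le_rpow b1 (by linarith)
    _ = m * m ^ θ := by
        rw [ENNReal.rpow_add_of_nonneg _ _ zero_le_one hθ0, ENNReal.rpow_one]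
    _ ≤ m * (B * ENNReal.ofReal (s ^ (-(1/2:ℝ)))) :=
        mul_le_mul' le_rfl ((ENNReal.rpow_le_rpow b2 hθ0).trans h1)
    _ = _ := by rw [mul_comm, mul_assoc]

lemma measurable_avg {n : ℕ} (ν : Measure (Euc n)) [SFinite ν] {f : Euc n → ℝ≥0∞}
    (hf : Measurable f) : Measurable fun q : Euc n × ℝ => ∫⁻ z, f (q.1 + q.2 • z) ∂ν := by
  apply Measurable.lintegral_prod_right'
    (f := fun p : (Euc n × ℝ) × Euc n => f (p.1.1 + p.1.2 • p.2))
  fun_prop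

lemma lint_avg {n : ℕ} (ν : Measure (Euc n)) [IsProbabilityMeasure ν] {f : Euc n → ℝ≥0∞}
    (hf : Measurable f) (s : ℝ) : ∫⁻ x, ∫⁻ z, f (x + s • z) ∂ν = ∫⁻ x, f x := by
  rw [lintegral_lintegral_swap]
  · simp_rw [lint_add_right f]; simp
  · fun_prop

/-- Local gain of integrability with a variable exponent. If the `q x`-th power of the gradient is
controlled near `x` by a fixed integrable function `K`, then `w` is integrable to a power `P x`
slightly larger than `q x`. The increments over displacements `s z` are estimated by Jensen's
inequality, and the loss `s ^ (-n)` in the crude bound of the averages of `K` only enters with the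
small power `(P x - q x) / q x`. -/
lemma AvgData.gain {n : ℕ} {S A : Set (Euc n)} {ν : Measure (Euc n)} {c : ℝ≥0} {ρ : ℝ}
    (D : AvgData S A ν c ρ) (hρ : ρ ≤ 1) {w : Euc n → ℝ} {g : Fin n → Euc n → ℝ}
    (hwm : Measurable w)
    (hw : Integrable w) (hg : ∀ j, Integrable (g j)) (hgm : ∀ j, Measurable (g j))
    (hWD : ∀ j, WD S j w (g j)) {K : Euc n → ℝ≥0∞} (hK : Measurable K) {P q : Euc n → ℝ} {Pm : ℝ}
    (hPq : ∀ᵐ x, x ∈ A → 1 ≤ q x ∧ q x ≤ P x ∧ P x ≤ Pm ∧ 2 * n * (P x - q x) ≤ q x ∧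
      P x - q x ≤ q x ∧
      ∀ y, dist x y ≤ ρ → (∑ j, ‖g j y‖ₑ) ^ q x ≤ K y) :
    ∫⁻ x in A, ‖w x‖ₑ ^ P x ≤ 2 ^ Pm * ((max 1 (c * ∫⁻ x, ‖w x‖ₑ)) ^ Pm * volume A +
      max 1 (c * ∫⁻ y, K y) * (∫⁻ s in Ioc (0:ℝ) 1, ENNReal.ofReal (s ^ (-(1/2:ℝ)))) *
        ∫⁻ y, K y) := by
  have := D.prob
  obtain ⟨gt, hgt⟩ : ∃ gt : Euc n → ℝ≥0∞, gt = fun x => ∑ j, ‖g j x‖ₑ := ⟨_, rfl⟩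
  have hgtm : Measurable gt := by rw [hgt]; fun_prop
  obtain ⟨M, hM⟩ : ∃ M, M = ∫⁻ y, K y := ⟨_, rfl⟩
  obtain ⟨B, hB⟩ : ∃ B, B = max 1 (c * M) := ⟨_, rfl⟩
  have hB1 : 1 ≤ B := hB ▸ le_max_left _ _
  obtain ⟨E, hE⟩ : ∃ E, E = max 1 (c * ∫⁻ x, ‖w x‖ₑ) := ⟨_, rfl⟩
  have hE1 : 1 ≤ E := hE ▸ le_max_left _ _
  obtain ⟨σ, hσ⟩ : ∃ σ : ℝ → ℝ≥0∞, σ = fun s => ENNReal.ofReal (s ^ (-(1/2:ℝ))) := ⟨_, rfl⟩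
  have hσm : Measurable σ := by rw [hσ]; fun_prop
  -- averages of `K` at scale `s`
  obtain ⟨Ms, hMs⟩ : ∃ Ms : Euc n → ℝ → ℝ≥0∞, Ms = fun x s => ∫⁻ z, K (x + s • z) ∂ν := ⟨_, rfl⟩
  have hMsm : Measurable fun q : Euc n × ℝ => Ms q.1 q.2 := by
    rw [hMs]; exact measurable_avg ν hK
  have hMsm' : ∀ x, Measurable (Ms x) := fun x =>
    hMsm.comp (by fun_prop : Measurable fun s : ℝ => (x, s))
  have hmm' : ∀ x, Measurable fun s : ℝ => ∫⁻ z, gt (x + s • z) ∂ν := fun x =>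
    (measurable_avg ν hgtm).comp (by fun_prop : Measurable fun s : ℝ => (x, s))
  have c1 : ∀ s, ∫⁻ x, Ms x s = M := by
    intro s
    rw [hMs, hM]; exact lint_avg ν hK s
  have hMsB : ∀ x s, 0 < s → Ms x s ≤ B * ENNReal.ofReal (s ^ (-(n:ℝ))) := by
    intro x s hs
    rw [hMs, hB, hM]
    refine (D.lint_le K x hs).trans ?_
    rw [mul_right_comm]
    gcongr
    exact le_max_right _ _
  have hgK : ∀ x s, s ∈ Ioc (0:ℝ) 1 → 1 ≤ q x →
      (∀ y, dist x y ≤ ρ → gt y ^ q x ≤ K y) →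
      (∫⁻ z, gt (x + s • z) ∂ν) ^ q x ≤ Ms x s := by
    intro x s hs h1q hKx
    rw [hMs]
    refine (jensen_lint ν (by fun_prop) h1q).trans (lintegral_mono_ae ?_)
    filter_upwards [D.small] with z hz
    apply hKx
    rw [dist_eq_norm, sub_add_cancel_left, norm_neg, norm_smul, Real.norm_of_nonneg hs.1.le]
    exact (mul_le_of_le_one_left (norm_nonneg _) hs.2).trans hz.1
  -- The value at `x` is an average over nearby points plus averaged increments; the former is at
  -- most `E`, by domination of `ν` by Lebesgue measure.
  have hinc : ∀ᵐ x, x ∈ A → ‖w x‖ₑ ≤ E + ∫⁻ s in Ioc (0:ℝ) 1, ∫⁻ z, gt (x + s • z) ∂ν := by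
    filter_upwards [D.increment hwm hw hg hgm hWD] with x hx hxA
    have a1 : ‖w x‖ₑ = ∫⁻ z, ‖w x‖ₑ ∂ν := by simp
    have a2 : ∫⁻ z, ‖w x‖ₑ ∂ν ≤
        ∫⁻ z, (‖w (x + z)‖ₑ + ∫⁻ s in Ioc (0:ℝ) 1, gt (x + s • z)) ∂ν := by
      apply lintegral_mono_ae
      filter_upwards [hx hxA] with z hz
      have b1 : ‖w x‖ₑ ≤ ‖w (x + z)‖ₑ + ‖w (x + z) - w x‖ₑ := by
        have : w x = w (x + z) - (w (x + z) - w x) := by ring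
        conv_lhs => rw [this]
        exact enorm_sub_le
      refine b1.trans (add_le_add_right (hz.trans ?_) _)
      calc _ ≤ ENNReal.ofReal 1 * _ := by gcongr
        _ = _ := by simp [hgt]
    rw [a1]
    refine a2.trans ?_
    rw [lintegral_add_left (by fun_prop)]
    have a3 : ∫⁻ z, ‖w (x + z)‖ₑ ∂ν ≤ E := by
      have := D.lint_le (fun y => ‖w y‖ₑ) x (s := 1) one_pos
      simp only [one_smul, Real.one_rpow, ENNReal.ofReal_one, mul_one] at this
      rw [hE]; exact this.trans (le_max_right _ _)
    have a4 : ∫⁻ z, (∫⁻ s in Ioc (0:ℝ) 1, gt (x + s • z)) ∂ν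
        = ∫⁻ s in Ioc (0:ℝ) 1, ∫⁻ z, gt (x + s • z) ∂ν := by
      rw [lintegral_lintegral_swap]
      fun_prop
    rw [a4]
    gcongr
  have hPq' : ∀ᵐ x, x ∈ A → 1 ≤ q x ∧ q x ≤ P x ∧ P x ≤ Pm ∧ 2 * n * (P x - q x) ≤ q x ∧
      P x - q x ≤ q x ∧ ∀ y, dist x y ≤ ρ → gt y ^ q x ≤ K y := by
    rw [hgt]; exact hPq
  rw [← hM, ← hB, ← hE]
  -- The averages of the gradient at scale `s` gain integrability at the price of a factor that is
  -- integrable in `s`, since `2 * n * (P x - q x) ≤ q x`.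
  have pw : ∀ᵐ x, x ∈ A → ‖w x‖ₑ ^ P x ≤
      2 ^ Pm * (E ^ Pm + ∫⁻ s in Ioc (0:ℝ) 1, B * (σ s * Ms x s)) := by
    filter_upwards [hinc, hPq'] with x hx hPx hxA
    obtain ⟨h1q, hqP, hPM, hn, hqq, hKx⟩ := hPx hxA
    have hq0 : 0 < q x := by linarith
    have hP1 : 1 ≤ P x := by linarith
    have e1 := hx hxA
    have e2 : ∀ s ∈ Ioc (0:ℝ) 1, (∫⁻ z, gt (x + s • z) ∂ν) ^ P x ≤ B * (σ s * Ms x s) := by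
      intro s hs
      have b1 := hgK x s hs h1q hKx
      have b2 := hMsB x s hs.1
      rw [hσ]
      exact gain_scalar hs h1q hqP hn hqq hB1 b1 b2
    have hm3 : Measurable fun s => B * (σ s * Ms x s) := (hσm.mul (hMsm' x)).const_mul B
    have e3 : ∫⁻ s in Ioc (0:ℝ) 1, (∫⁻ z, gt (x + s • z) ∂ν) ^ P x ≤
        ∫⁻ s in Ioc (0:ℝ) 1, B * (σ s * Ms x s) := setLIntegral_mono hm3 e2
    calc ‖w x‖ₑ ^ P x ≤ (E + ∫⁻ s in Ioc (0:ℝ) 1, ∫⁻ z, gt (x + s • z) ∂ν) ^ P x := by gcongr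
      _ ≤ 2 ^ (P x - 1) * (E ^ P x + (∫⁻ s in Ioc (0:ℝ) 1, ∫⁻ z, gt (x + s • z) ∂ν) ^ P x) :=
          ENNReal.rpow_add_le_mul_rpow_add_rpow _ _ hP1
      _ ≤ 2 ^ Pm * (E ^ Pm + ∫⁻ s in Ioc (0:ℝ) 1, (∫⁻ z, gt (x + s • z) ∂ν) ^ P x) := by
          refine mul_le_mul' (ENNReal.rpow_le_rpow_of_exponent_le one_le_two (by linarith))
            (add_le_add (ENNReal.rpow_le_rpow_of_exponent_le hE1 hPM)
              (jensen_lint _ (hmm' x) hP1))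
      _ ≤ _ := by
          exact mul_le_mul' le_rfl (add_le_add le_rfl e3)
  calc ∫⁻ x in A, ‖w x‖ₑ ^ P x
      ≤ ∫⁻ x in A, 2 ^ Pm * (E ^ Pm + ∫⁻ s in Ioc (0:ℝ) 1, B * (σ s * Ms x s)) := by
        apply lintegral_mono_ae
        rwa [ae_restrict_iff' D.openA.measurableSet]
    _ = 2 ^ Pm * (E ^ Pm * volume A + ∫⁻ x in A, ∫⁻ s in Ioc (0:ℝ) 1, B * (σ s * Ms x s)) := by
        rw [lintegral_const_mul' _ _ (by finiteness), lintegral_add_left (by fun_prop)]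
        simp
    _ ≤ 2 ^ Pm * (E ^ Pm * volume A + ∫⁻ x, ∫⁻ s in Ioc (0:ℝ) 1, B * (σ s * Ms x s)) := by
        gcongr
        exact Measure.restrict_le_self
    _ = _ := by
        congr 2
        rw [lintegral_lintegral_swap]
        · have : ∀ s, ∫⁻ x, B * (σ s * Ms x s) = σ s * (B * M) := by
            intro s
            have hm : Measurable fun x => Ms x s := hMsm.comp (by fun_prop : Measurable fun x : Euc n => (x, s))
            rw [lintegral_const_mul _ (by fun_prop), lintegral_const_mul _ hm, c1]
            ring
          simp only [this]
          rw [lintegral_mul_const _ hσm, hσ]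
          ring
        · apply Measurable.aemeasurable
          apply Measurable.const_mul
          exact (hσm.comp measurable_snd).mul hMsm

/-! ### Cut-offs, products, limits and the extension by zero to the slab -/

/-- The infinite slab `ℝ² × (-1/2,1/2)`. -/
def slab : Set (Euc 3) := {x | x 2 ∈ Ioo (-(1/2) : ℝ) (1/2)}

lemma isOpen_slab : IsOpen slab := by
  have : Continuous fun x : Euc 3 => x 2 := by fun_prop
  exact isOpen_Ioo.preimage this

lemma continuous_proj : Continuous projα := by
  unfold projα
  simp only [WithLp.equiv_symm_apply]
  apply (PiLp.continuous_toLp 2 _).comp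
  apply continuous_pi
  intro i
  fin_cases i <;> simp <;> fun_prop

lemma thinDomain_eq (ω : Set (Euc 2)) : thinDomain ω = projα ⁻¹' ω ∩ slab := rfl

lemma isOpen_thin {ω : Set (Euc 2)} (hω : IsOpen ω) : IsOpen (thinDomain ω) :=
  (hω.preimage continuous_proj).inter isOpen_slab

lemma thin_subset_slab {ω : Set (Euc 2)} : thinDomain ω ⊆ slab := fun _ hx => hx.2

lemma norm_le_sum_abs {n : ℕ} (x : Euc n) : ‖x‖ ≤ ∑ i, |x i| := by
  rw [EuclideanSpace.norm_eq]
  apply Real.sqrt_le_iff.mpr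
  refine ⟨by positivity, ?_⟩
  simp only [Real.norm_eq_abs]
  exact Finset.sum_sq_le_sq_sum_of_nonneg (fun i _ => abs_nonneg _)

lemma abs_apply_le_norm {n : ℕ} (x : Euc n) (i : Fin n) : |x i| ≤ ‖x‖ := by
  rw [← Real.norm_eq_abs]; exact PiLp.norm_apply_le x i

lemma mnorm_nonneg {d n : ℕ} (ξ : Mat d n) : 0 ≤ mnorm ξ := Real.sqrt_nonneg _

lemma abs_le_mnorm {d n : ℕ} (ξ : Mat d n) (i : Fin d) (j : Fin n) : |ξ i j| ≤ mnorm ξ := by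
  apply Real.abs_le_sqrt
  calc (ξ i j)^2 ≤ ∑ j, (ξ i j)^2 :=
        Finset.single_le_sum (f := fun j => (ξ i j)^2) (fun _ _ => sq_nonneg _) (Finset.mem_univ j)
    _ ≤ _ := Finset.single_le_sum (f := fun i => ∑ j, (ξ i j)^2)
        (fun _ _ => Finset.sum_nonneg fun _ _ => sq_nonneg _) (Finset.mem_univ i)

lemma mnorm_le_sum {d n : ℕ} (ξ : Mat d n) : mnorm ξ ≤ ∑ i, ∑ j, |ξ i j| := by
  unfold mnorm
  apply Real.sqrt_le_iff.mpr
  refine ⟨by positivity, ?_⟩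
  rw [← Finset.sum_product', ← Finset.sum_product']
  have := Finset.sum_sq_le_sq_sum_of_nonneg (s := (Finset.univ : Finset (Fin d)) ×ˢ
    (Finset.univ : Finset (Fin n))) (f := fun x => |ξ x.1 x.2|) (fun i _ => abs_nonneg _)
  simpa using this

lemma bounded_thin {ω : Set (Euc 2)} (hωb : Bornology.IsBounded ω) :
    Bornology.IsBounded (thinDomain ω) := by
  obtain ⟨R, hR⟩ := hωb.exists_norm_le
  rw [isBounded_iff_forall_norm_le]
  refine ⟨R + R + 1, fun x hx => ?_⟩
  have h1 := hR _ hx.1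
  have e0 : |x 0| ≤ R := by
    have := abs_apply_le_norm (projα x) 0
    simp only [projα, WithLp.equiv_symm_apply] at this h1
    exact le_trans (by simpa using this) h1
  have e1 : |x 1| ≤ R := by
    have := abs_apply_le_norm (projα x) 1
    simp only [projα, WithLp.equiv_symm_apply] at this h1
    exact le_trans (by simpa using this) h1
  have e2 : |x 2| ≤ 1 := by
    rw [abs_le]; constructor <;> linarith [hx.2.1, hx.2.2]
  refine (norm_le_sum_abs x).trans ?_
  rw [Fin.sum_univ_three]
  linarith

/-- Smooth cut-off functions. -/
lemma exists_cutoff {n : ℕ} {K U : Set (Euc n)} (hK : IsCompact K) (hU : IsOpen U) (hKU : K ⊆ U) :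
    ∃ χ : Euc n → ℝ, ContDiff ℝ (⊤ : ℕ∞) χ ∧ HasCompactSupport χ ∧ tsupport χ ⊆ U ∧
      (∀ x ∈ K, χ =ᶠ[𝓝 x] fun _ => 1) ∧ ∀ x, χ x ∈ Icc (0:ℝ) 1 := by
  obtain ⟨L, hL, hKL, hLU⟩ := exists_compact_between hK hU hKU
  obtain ⟨L', hL', hLL', hLU'⟩ := exists_compact_between hL hU hLU
  obtain ⟨f, h1, h0, h01⟩ := exists_contMDiffMap_one_nhds_of_subset_interior
    (n := (⊤ : ℕ∞)) (modelWithCornersSelf ℝ (Euc n)) hL.isClosed hLL'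
  have hs : tsupport f ⊆ L' :=
    closure_minimal (fun x hx => by by_contra h; exact hx (h0 x h)) hL'.isClosed
  refine ⟨f, f.contMDiff.contDiff, hL'.of_isClosed_subset (isClosed_tsupport _) hs,
    hs.trans hLU', ?_, h01⟩
  intro x hx
  have : ∀ᶠ y in 𝓝 x, y ∈ interior L := isOpen_interior.mem_nhds (hKL hx)
  filter_upwards [this] with y hy
  exact (h1.filter_mono (nhds_le_nhdsSet (interior_subset hy))).self_of_nhds

/-- Product rule for a weak derivative and a smooth function. -/
lemma WD.mul_smooth {n : ℕ} {S : Set (Euc n)} {j : Fin n} {w g : Euc n → ℝ} (h : WD S j w g)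
    (hw : LocallyIntegrable w) (hg : LocallyIntegrable g) {χ : Euc n → ℝ}
    (hχ : ContDiff ℝ (⊤ : ℕ∞) χ) :
    WD S j (fun x => χ x * w x)
      (fun x => χ x * g x + fderiv ℝ χ x (EuclideanSpace.single j 1) * w x) := by
  intro φ h1 h2 h3
  set e : Euc n := EuclideanSpace.single j 1
  have ht : tsupport (fun x => φ x * χ x) ⊆ tsupport φ := tsupport_mul_subset_left
  have hc : HasCompactSupport (fun x => φ x * χ x) := h2.mul_right
  have key := h (fun x => φ x * χ x) (h1.mul hχ) hc (ht.trans h3)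
  have hd : ∀ x, fderiv ℝ (fun x => φ x * χ x) x e
      = φ x * fderiv ℝ χ x e + χ x * fderiv ℝ φ x e := by
    intro x
    rw [fderiv_fun_mul (h1.differentiable (by simp) x) (hχ.differentiable (by simp) x)]
    simp
  change _ = - ∫ x, fderiv ℝ (fun x => φ x * χ x) x e * w x at key
  simp only [hd] at key
  have cχ := hχ.continuous
  have cφ := h1.continuous
  have cdχ := continuous_fderiv_apply hχ e
  have cdφ := continuous_fderiv_apply h1 e
  have sdφ := hasCompactSupport_fderiv_apply h2 e
  have i1 : Integrable fun x => (φ x * χ x) * g x := integrable_test_mul (cφ.mul cχ) hc hg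
  have i2 : Integrable fun x => (φ x * fderiv ℝ χ x e) * w x :=
    integrable_test_mul (cφ.mul cdχ) h2.mul_right hw
  have i3 : Integrable fun x => (χ x * fderiv ℝ φ x e) * w x :=
    integrable_test_mul (cχ.mul cdφ) sdφ.mul_left hw
  have e1 : ∫ x, φ x * (χ x * g x + fderiv ℝ χ x e * w x)
      = (∫ x, (φ x * χ x) * g x) + ∫ x, (φ x * fderiv ℝ χ x e) * w x := by
    rw [← integral_add i1 i2]; congr 1; ext x; ring
  have e2 : ∫ x, (φ x * fderiv ℝ χ x e + χ x * fderiv ℝ φ x e) * w x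
      = (∫ x, (φ x * fderiv ℝ χ x e) * w x) + ∫ x, (χ x * fderiv ℝ φ x e) * w x := by
    rw [← integral_add i2 i3]; congr 1; ext x; ring
  have e3 : ∫ x, fderiv ℝ φ x e * (χ x * w x) = ∫ x, (χ x * fderiv ℝ φ x e) * w x := by
    congr 1; ext x; ring
  rw [e1, e3, key, e2]; ring

/-- Weak derivatives pass to limits that can be tested against compactly supported continuous
functions. -/
lemma WD.lim {n : ℕ} {S : Set (Euc n)} {j : Fin n} {w g : ℕ → Euc n → ℝ} {w₀ g₀ : Euc n → ℝ}
    (h : ∀ᶠ k in atTop, WD S j (w k) (g k))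
    (hw : ∀ h : Euc n → ℝ, Continuous h → HasCompactSupport h → tsupport h ⊆ S →
      Tendsto (fun k => ∫ x, h x * w k x) atTop (𝓝 (∫ x, h x * w₀ x)))
    (hg : ∀ h : Euc n → ℝ, Continuous h → HasCompactSupport h → tsupport h ⊆ S →
      Tendsto (fun k => ∫ x, h x * g k x) atTop (𝓝 (∫ x, h x * g₀ x))) : WD S j w₀ g₀ := by
  intro φ h1 h2 h3
  have a := hg φ h1.continuous h2 h3
  have b := (hw _ (continuous_fderiv_apply h1 (EuclideanSpace.single j 1))
    (hasCompactSupport_fderiv_apply h2 _) ((tsupport_fderiv_apply_subset ℝ _).trans h3)).neg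
  refine tendsto_nhds_unique_of_eventuallyEq a b ?_
  filter_upwards [h] with k hk
  exact hk φ h1 h2 h3

lemma tendsto_test_of_L1 {n : ℕ} {w : ℕ → Euc n → ℝ} {w₀ : Euc n → ℝ}
    (hw : ∀ k, Integrable (w k)) (hw₀ : Integrable w₀)
    (hlim : Tendsto (fun k => ∫⁻ x, ‖w k x - w₀ x‖ₑ) atTop (𝓝 0))
    (h : Euc n → ℝ) (hh : Continuous h) (hc : HasCompactSupport h) :
    Tendsto (fun k => ∫ x, h x * w k x) atTop (𝓝 (∫ x, h x * w₀ x)) := by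
  obtain ⟨C, hC⟩ := hh.bounded_above_of_compact_support hc
  have hi : ∀ {w}, Integrable w → Integrable (fun x => h x * w x) := fun hw =>
    hw.bdd_mul (c := C) hh.aestronglyMeasurable (Eventually.of_forall hC)
  apply tendsto_integral_of_L1 _ (hi hw₀).aestronglyMeasurable
    (Eventually.of_forall fun k => hi (hw k))
  have : Tendsto (fun k => ENNReal.ofReal C * ∫⁻ x, ‖w k x - w₀ x‖ₑ) atTop (𝓝 0) := by
    have := ENNReal.Tendsto.const_mul (a := ENNReal.ofReal C) hlim (Or.inr ENNReal.ofReal_ne_top)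
    simpa using this
  refine tendsto_of_tendsto_of_tendsto_of_le_of_le tendsto_const_nhds this
    (fun _ => zero_le) fun k => ?_
  rw [← lintegral_const_mul' _ _ ENNReal.ofReal_ne_top]
  refine lintegral_mono fun x => ?_
  rw [← mul_sub, enorm_mul]
  gcongr
  rw [← ofReal_norm]
  exact ENNReal.ofReal_le_ofReal (hC x)

/-- Hölder's inequality on a finite measure space. -/
lemma lint_le_rpow {α : Type*} [MeasurableSpace α] (μ : Measure α) {f : α → ℝ≥0∞}
    (hf : AEMeasurable f μ) {r : ℝ} (hr : 1 ≤ r) :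
    ∫⁻ a, f a ∂μ ≤ (∫⁻ a, f a ^ r ∂μ) ^ (1 / r) * μ univ ^ (1 - 1 / r) := by
  have h := eLpNorm'_le_eLpNorm'_mul_rpow_measure_univ (p := 1) (q := r) one_pos hr
    (f := f) hf.aestronglyMeasurable
  simpa only [eLpNorm', enorm_eq_self, ENNReal.rpow_one, div_one, one_div_one] using h

lemma tendsto_L1_of_rpow {α : Type*} [MeasurableSpace α] {μ : Measure α} [IsFiniteMeasure μ]
    {f : ℕ → α → ℝ≥0∞} (hf : ∀ k, AEMeasurable (f k) μ) {r : ℝ} (hr : 1 ≤ r)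
    (h : Tendsto (fun k => ∫⁻ a, f k a ^ r ∂μ) atTop (𝓝 0)) :
    Tendsto (fun k => ∫⁻ a, f k a ∂μ) atTop (𝓝 0) := by
  have hr0 : 0 < r := by linarith
  have h1 : Tendsto (fun k => (∫⁻ a, f k a ^ r ∂μ) ^ (1 / r) * μ univ ^ (1 - 1 / r)) atTop (𝓝 0) := by
    have h2 := h.ennrpow_const (1 / r)
    rw [ENNReal.zero_rpow_of_pos (by positivity)] at h2
    have hfin : μ univ ^ (1 - 1 / r) ≠ ⊤ := by
      apply ENNReal.rpow_ne_top_of_nonneg _ (measure_ne_top _ _)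
      rw [sub_nonneg, div_le_one hr0]; exact hr
    have := ENNReal.Tendsto.mul_const h2 (Or.inr hfin)
    simpa using this
  exact tendsto_of_tendsto_of_tendsto_of_le_of_le tendsto_const_nhds h1 (fun _ => zero_le)
    fun k => lint_le_rpow μ (hf k) hr

lemma ofReal_rpow_enorm {E : Type*} [NormedAddCommGroup E] (x : E) {r : ℝ} (hr : 0 ≤ r) :
    ENNReal.ofReal (‖x‖ ^ r) = ‖x‖ₑ ^ r := by
  rw [← ofReal_norm, ENNReal.ofReal_rpow_of_nonneg (norm_nonneg _) hr]

/-- A locally integrable map with weak derivative on the whole space that vanishes near the lateral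
boundary has the zero extension of its restriction to `Ω` as a function with weak derivative on the
slab. -/
lemma slab_ext_vanish {ω : Set (Euc 2)} (hω : IsOpen ω) {l : Fin 3} {w g : Euc 3 → ℝ}
    (h : WD univ l w g) (hw : LocallyIntegrable w) (hg : LocallyIntegrable g) {V : Set (Euc 3)}
    (hV : IsOpen V) (hlat : latBoundary ω ⊆ V) (h0 : ∀ x ∈ V, w x = 0) :
    WD slab l ((thinDomain ω).indicator w) ((thinDomain ω).indicator g) := by
  have hg0 : ∀ᵐ x, x ∈ V → g x = 0 := (h.mono (subset_univ V)).eq_zero hV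
    (Eventually.of_forall h0) (hg.locallyIntegrableOn V)
  intro φ h1 h2 h3
  have hcl : IsClosed (projα ⁻¹' closure ω) := isClosed_closure.preimage continuous_proj
  have hC : IsCompact (tsupport φ ∩ ((projα ⁻¹' closure ω) ∩ Vᶜ)) :=
    IsCompact.inter_right h2 (hcl.inter hV.isClosed_compl)
  have hsub : tsupport φ ∩ ((projα ⁻¹' closure ω) ∩ Vᶜ) ⊆ thinDomain ω := by
    rintro x ⟨hx1, hx2, hx3⟩
    refine ⟨?_, h3 hx1⟩
    by_contra hxω
    apply hx3
    apply hlat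
    refine ⟨⟨hx2, ?_⟩, h3 hx1⟩
    rwa [hω.interior_eq]
  obtain ⟨χ, hχ, hχc, hχs, hχ1, -⟩ := exists_cutoff hC (isOpen_thin hω) hsub
  have key := (h.mul_smooth hw hg hχ).mono (subset_univ slab) φ h1 h2 h3
  have case : ∀ x, x ∈ tsupport φ → x ∈ V ∨ (x ∈ thinDomain ω ∧ χ =ᶠ[𝓝 x] fun _ => 1) ∨
      (x ∉ thinDomain ω ∧ x ∉ tsupport χ) := by
    intro x hx
    by_cases hxV : x ∈ V
    · exact Or.inl hxV
    by_cases hxΩ : x ∈ thinDomain ω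
    · exact Or.inr (Or.inl ⟨hxΩ, hχ1 x ⟨hx, subset_closure hxΩ.1, hxV⟩⟩)
    · exact Or.inr (Or.inr ⟨hxΩ, fun h => hxΩ (hχs h)⟩)
  have e1 : ∫ x, φ x * (thinDomain ω).indicator g x = ∫ x, φ x * (χ x * g x
      + fderiv ℝ χ x (EuclideanSpace.single l 1) * w x) := by
    apply integral_congr_ae
    filter_upwards [hg0] with x hx
    by_cases hφ : x ∈ tsupport φ
    · rcases case x hφ with hxV | ⟨hxΩ, hxχ⟩ | ⟨hxΩ, hxχ⟩
      · by_cases hxΩ : x ∈ thinDomain ω <;> simp [hxΩ, hx hxV, h0 x hxV]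
      · rw [indicator_of_mem hxΩ, hxχ.self_of_nhds, hxχ.fderiv_eq]
        simp
      · rw [indicator_of_notMem hxΩ, eq_zero_of_notMem_tsupport hxχ, fderiv_eq_zero_of_notMem hxχ]
        simp
    · rw [eq_zero_of_notMem_tsupport hφ]; simp
  have e2 : ∫ x, fderiv ℝ φ x (EuclideanSpace.single l 1) * (thinDomain ω).indicator w x
      = ∫ x, fderiv ℝ φ x (EuclideanSpace.single l 1) * (χ x * w x) := by
    congr 1; ext x
    by_cases hφ : x ∈ tsupport φ
    · rcases case x hφ with hxV | ⟨hxΩ, hxχ⟩ | ⟨hxΩ, hxχ⟩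
      · by_cases hxΩ : x ∈ thinDomain ω <;> simp [hxΩ, h0 x hxV]
      · rw [indicator_of_mem hxΩ, hxχ.self_of_nhds]
        simp
      · rw [indicator_of_notMem hxΩ, eq_zero_of_notMem_tsupport hxχ]
        simp
    · rw [fderiv_eq_zero_of_notMem hφ]; simp
  rw [e1, e2, key]

lemma integrable_indicator_of_loc {n : ℕ} {A : Set (Euc n)} (hA : MeasurableSet A)
    (hb : Bornology.IsBounded A) {w : Euc n → ℝ} (hw : LocallyIntegrable w) :
    Integrable (A.indicator w) := by
  rw [integrable_indicator_iff hA]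
  exact (hw.integrableOn_isCompact hb.isCompact_closure).mono_set subset_closure

lemma lint_indicator_sub {n : ℕ} {A : Set (Euc n)} (hA : MeasurableSet A) (w u : Euc n → ℝ) :
    ∫⁻ x, ‖A.indicator w x - A.indicator u x‖ₑ = ∫⁻ x in A, ‖w x - u x‖ₑ := by
  rw [← lintegral_indicator hA]
  congr 1; ext x
  by_cases hx : x ∈ A <;> simp [hx]

/-- Functions in `W^{1,r}_{0,∂_LΩ}`, extended by zero, have a weak gradient on the whole slab. -/
lemma slab_ext {ω : Set (Euc 2)} (hω : IsOpen ω) (hωb : Bornology.IsBounded ω) {r : ℝ} (hr : 1 ≤ r)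
    {u : Euc 3 → Euc 3} {G : Euc 3 → Mat 3 3}
    (hu : AEStronglyMeasurable u (volume.restrict (thinDomain ω)))
    (hG : ∀ i j, AEMeasurable (fun x => G x i j) (volume.restrict (thinDomain ω)))
    (h : MemLatZero ω r u G) (i j : Fin 3) :
    Integrable ((thinDomain ω).indicator fun x => u x i) ∧
    Integrable ((thinDomain ω).indicator fun x => G x i j) ∧
    WD slab j ((thinDomain ω).indicator fun x => u x i)
      ((thinDomain ω).indicator fun x => G x i j) := by
  obtain ⟨w, Gw, hWG, hwl, hGl, hV, hlim⟩ := h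
  set Ω := thinDomain ω with hΩ
  have hΩo : IsOpen Ω := isOpen_thin hω
  have hΩm := hΩo.measurableSet
  have hΩb : Bornology.IsBounded Ω := bounded_thin hωb
  have : IsFiniteMeasure (volume.restrict Ω) := ⟨by simpa using hΩb.measure_lt_top⟩
  have hr0 : 0 ≤ r := by linarith
  have hui : AEMeasurable (fun x => u x i) (volume.restrict Ω) :=
    ((EuclideanSpace.proj (𝕜 := ℝ) i).continuous.comp_aestronglyMeasurable hu).aemeasurable
  have hwli : ∀ k, LocallyIntegrable (fun x => w k x i) := fun k x => by
    obtain ⟨s, hs, hsi⟩ := hwl k x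
    exact ⟨s, hs, (EuclideanSpace.proj (𝕜 := ℝ) i).integrable_comp hsi⟩
  have wint : ∀ k, Integrable (Ω.indicator fun x => w k x i) := fun k =>
    integrable_indicator_of_loc hΩm hΩb (hwli k)
  have gint : ∀ k, Integrable (Ω.indicator fun x => Gw k x i j) := fun k =>
    integrable_indicator_of_loc hΩm hΩb (hGl k i j)
  have t1 : Tendsto (fun k => ∫⁻ x in Ω, ‖w k x i - u x i‖ₑ) atTop (𝓝 0) := by
    apply tendsto_L1_of_rpow (r := r) _ hr
    · refine tendsto_of_tendsto_of_tendsto_of_le_of_le tendsto_const_nhds hlim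
        (fun _ => zero_le) fun k => lintegral_mono fun x => ?_
      refine le_add_right ?_
      rw [ofReal_rpow_enorm _ hr0]
      gcongr
      rw [enorm_le_iff_norm_le]
      exact PiLp.norm_apply_le (w k x - u x) i
    · intro k
      exact (((integrable_indicator_iff hΩm).1 (wint k)).aestronglyMeasurable.aemeasurable.sub hui).enorm
  have t2 : Tendsto (fun k => ∫⁻ x in Ω, ‖Gw k x i j - G x i j‖ₑ) atTop (𝓝 0) := by
    apply tendsto_L1_of_rpow (r := r) _ hr
    · refine tendsto_of_tendsto_of_tendsto_of_le_of_le tendsto_const_nhds hlim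
        (fun _ => zero_le) fun k => lintegral_mono fun x => ?_
      refine le_add_left ?_
      rw [← ofReal_rpow_enorm _ hr0]
      apply ENNReal.ofReal_le_ofReal
      gcongr
      exact abs_le_mnorm (fun i l => Gw k x i l - G x i l) i j
    · intro k
      exact (((integrable_indicator_iff hΩm).1 (gint k)).aestronglyMeasurable.aemeasurable.sub (hG i j)).enorm
  have lim_int : ∀ {a : ℕ → Euc 3 → ℝ} {b : Euc 3 → ℝ}, (∀ k, Integrable (Ω.indicator (a k))) →
      AEMeasurable b (volume.restrict Ω) →
      Tendsto (fun k => ∫⁻ x in Ω, ‖a k x - b x‖ₑ) atTop (𝓝 0) → Integrable (Ω.indicator b) := by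
    intro a b ha hb hl
    obtain ⟨k, hk⟩ := (hl.eventually (gt_mem_nhds ENNReal.zero_lt_top)).exists
    rw [integrable_indicator_iff hΩm]
    have ha' := (integrable_indicator_iff hΩm).1 (ha k)
    have : IntegrableOn (fun x => a k x - b x) Ω :=
      ⟨(ha'.aestronglyMeasurable.aemeasurable.sub hb).aestronglyMeasurable, hk⟩
    have h3 := Integrable.sub ha' this
    refine h3.congr (Eventually.of_forall fun x => ?_)
    simp
  have uint := lim_int wint hui t1
  have Gint := lim_int gint (hG i j) t2
  refine ⟨uint, Gint, WD.lim (Eventually.of_forall fun k => ?_)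
    (fun h hh hc _ => tendsto_test_of_L1 wint uint ?_ h hh hc)
    (fun h hh hc _ => tendsto_test_of_L1 gint Gint ?_ h hh hc)⟩
  · obtain ⟨V, hVo, hlat, hV0⟩ := hV k
    exact slab_ext_vanish hω (weakGrad_iff.1 (hWG k) i j) (hwli k) (hGl k i j) hVo hlat
      (fun x hx => by simp [hV0 x hx])
  · simpa only [lint_indicator_sub hΩm] using t1
  · simpa only [lint_indicator_sub hΩm] using t2

/-! ### Weak sequential compactness in Lebesgue spaces -/

lemma tendsto_of_approx {a : ℕ → ℝ} {L : ℝ} (h : ∀ ε > 0, ∃ (b : ℕ → ℝ) (M : ℝ),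
    Tendsto b atTop (𝓝 M) ∧ (∀ k, |a k - b k| ≤ ε) ∧ |L - M| ≤ ε) : Tendsto a atTop (𝓝 L) := by
  rw [Metric.tendsto_atTop]
  intro ε hε
  obtain ⟨b, M, hb, hab, hLM⟩ := h (ε / 4) (by positivity)
  obtain ⟨N, hN⟩ := (Metric.tendsto_atTop.1 hb) (ε / 4) (by positivity)
  refine ⟨N, fun k hk => ?_⟩
  have h1 := hN k hk
  have h2 := hab k
  rw [Real.dist_eq] at *
  rw [abs_lt] at *
  rw [abs_le] at *
  constructor <;> linarith

lemma exists_lim_of_approx {a : ℕ → ℝ} (h : ∀ ε > 0, ∃ (b : ℕ → ℝ) (M : ℝ),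
    Tendsto b atTop (𝓝 M) ∧ (∀ k, |a k - b k| ≤ ε)) : ∃ L, Tendsto a atTop (𝓝 L) := by
  apply cauchySeq_tendsto_of_complete
  rw [Metric.cauchySeq_iff']
  intro ε hε
  obtain ⟨b, M, hb, hab⟩ := h (ε / 5) (by positivity)
  obtain ⟨N, hN⟩ := (Metric.tendsto_atTop.1 hb) (ε / 5) (by positivity)
  refine ⟨N, fun k hk => ?_⟩
  have h1 := hN k hk
  have h3 := hN N le_rfl
  have h2 := hab k
  have h4 := hab N
  rw [Real.dist_eq] at *
  rw [abs_lt] at *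
  rw [abs_le] at *
  constructor <;> linarith

/-- The Hölder conjugate exponent `r / (r - 1)`. -/
abbrev conj (r : ℝ) : ℝ := r / (r - 1)

lemma holder_conj {r : ℝ} (hr : 1 < r) : r.HolderConjugate (conj r) :=
  Real.HolderConjugate.conjExponent hr

section weak
variable {α : Type*} [MeasurableSpace α] {μ : Measure α} [IsFiniteMeasure μ]

lemma holder_enorm {r : ℝ} (hr : 1 < r) {f g : α → ℝ} (hf : AEMeasurable f μ)
    (hg : AEMeasurable g μ) {C : ℝ≥0∞} (hC : ∫⁻ a, ‖f a‖ₑ ^ r ∂μ ≤ C) :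
    ∫⁻ a, ‖g a * f a‖ₑ ∂μ ≤ (∫⁻ a, ‖g a‖ₑ ^ conj r ∂μ) ^ (1 / conj r) * C ^ (1 / r) := by
  have hc := holder_conj hr
  have := ENNReal.lintegral_mul_le_Lp_mul_Lq μ hc.symm hg.enorm hf.enorm
  simp only [Pi.mul_apply] at this
  simp only [enorm_mul]
  refine this.trans ?_
  have : (0:ℝ) ≤ 1 / r := hc.one_div_nonneg
  gcongr

lemma integrable_mul_of_conj {r : ℝ} (hr : 1 < r) {f g : α → ℝ} (hf : AEMeasurable f μ)
    (hg : AEMeasurable g μ) (hC : ∫⁻ a, ‖f a‖ₑ ^ r ∂μ < ⊤) (hg2 : ∫⁻ a, ‖g a‖ₑ ^ conj r ∂μ < ⊤) :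
    Integrable (fun a => g a * f a) μ := by
  have hc := holder_conj hr
  refine ⟨(hg.mul hf).aestronglyMeasurable, (holder_enorm hr hf hg le_rfl).trans_lt ?_⟩
  have h1 : (0:ℝ) ≤ 1 / r := hc.one_div_nonneg
  have h2 : (0:ℝ) ≤ 1 / conj r := hc.symm.one_div_nonneg
  exact ENNReal.mul_lt_top (ENNReal.rpow_lt_top_of_nonneg h2 hg2.ne)
    (ENNReal.rpow_lt_top_of_nonneg h1 hC.ne)

lemma integrable_of_rpow {r : ℝ} (hr : 1 ≤ r) {f : α → ℝ} (hf : AEMeasurable f μ)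
    (hC : ∫⁻ a, ‖f a‖ₑ ^ r ∂μ < ⊤) : Integrable f μ := by
  refine ⟨hf.aestronglyMeasurable, (lint_le_rpow μ hf.enorm hr).trans_lt ?_⟩
  apply ENNReal.mul_lt_top
  · exact ENNReal.rpow_lt_top_of_nonneg (by positivity) hC.ne
  · apply ENNReal.rpow_lt_top_of_nonneg _ (measure_ne_top _ _)
    rw [sub_nonneg, div_le_one (by linarith)]; exact hr

/-- Bound of set integrals by the measure of the set. -/
lemma setInt_bound {r : ℝ} (hr : 1 < r) {f : α → ℝ} (hf : AEMeasurable f μ) {C : ℝ≥0∞}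
    (hC : ∫⁻ a, ‖f a‖ₑ ^ r ∂μ ≤ C) {E : Set α} (hE : MeasurableSet E) :
    ∫⁻ a in E, ‖f a‖ₑ ∂μ ≤ μ E ^ (1 / conj r) * C ^ (1 / r) := by
  have hc := holder_conj hr
  have h := holder_enorm hr hf ((measurable_one.indicator hE).aemeasurable (μ := μ)
    (f := E.indicator (1 : α → ℝ))) hC
  have e1 : ∫⁻ a, ‖E.indicator (1 : α → ℝ) a * f a‖ₑ ∂μ = ∫⁻ a in E, ‖f a‖ₑ ∂μ := by
    rw [← lintegral_indicator hE]
    congr 1; ext a; by_cases ha : a ∈ E <;> simp [ha]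
  have e2 : ∫⁻ a, ‖E.indicator (1 : α → ℝ) a‖ₑ ^ conj r ∂μ = μ E := by
    rw [← lintegral_indicator_one hE]
    congr 1; ext a; by_cases ha : a ∈ E
    · simp [ha]
    · simp [ha, hc.symm.pos]
  rwa [e1, e2] at h

/-- The Hölder bound becomes small on sets of small measure. -/
lemma exists_small {r : ℝ} (hr : 1 < r) {C : ℝ≥0∞} (hC : C ≠ ⊤) {ε : ℝ} (hε : 0 < ε) :
    ∃ δ : ℝ, 0 < δ ∧ ∀ t : ℝ≥0∞, t ≤ ENNReal.ofReal δ →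
      t ^ (1 / conj r) * C ^ (1 / r) ≤ ENNReal.ofReal ε := by
  have hc := holder_conj hr
  have h1 : (0:ℝ) ≤ 1 / r := hc.one_div_nonneg
  have h2 : (0:ℝ) < 1 / conj r := hc.symm.one_div_pos
  have hC' : C ^ (1 / r) ≠ ⊤ := ENNReal.rpow_ne_top_of_nonneg h1 hC
  have ht : Tendsto (fun t : ℝ≥0∞ => t ^ (1 / conj r) * C ^ (1 / r)) (𝓝 0) (𝓝 0) := by
    have := ENNReal.Tendsto.mul_const (b := C ^ (1 / r))
      ((ENNReal.continuous_rpow_const (y := 1 / conj r)).tendsto 0) (Or.inr hC')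
    rwa [ENNReal.zero_rpow_of_pos h2, zero_mul] at this
  have := ht.eventually (ge_mem_nhds (ENNReal.ofReal_pos.2 hε))
  obtain ⟨δ, hδ, H⟩ := (ENNReal.nhds_zero_basis_Iic.eventually_iff).1 this
  obtain ⟨δ', hδ', hδδ⟩ := ENNReal.lt_iff_exists_nnreal_btwn.1 hδ
  refine ⟨δ', by exact_mod_cast hδ', fun t htt => H ?_⟩
  rw [ENNReal.ofReal_coe_nnreal] at htt
  exact htt.trans hδδ.le

lemma abs_int_le {f : α → ℝ} {ε : ℝ} (hε : 0 ≤ ε)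
    (h : ∫⁻ a, ‖f a‖ₑ ∂μ ≤ ENNReal.ofReal ε) : |∫ a, f a ∂μ| ≤ ε := by
  have := (enorm_integral_le_lintegral_enorm f (μ := μ)).trans h
  rw [← Real.norm_eq_abs]
  rw [← ofReal_norm] at this
  exact (ENNReal.ofReal_le_ofReal_iff hε).1 this

open scoped symmDiff in
/-- A countable family of sequences bounded in `L^r` has a common subsequence along which all
integrals over measurable sets converge. -/
lemma exists_subseq_setInt [IsSeparable μ] {ι : Type*} [Countable ι] {r : ℝ} (hr : 1 < r)
    {f : ι → ℕ → α → ℝ} (hf : ∀ i k, AEMeasurable (f i k) μ) {C : ℝ≥0∞} (hC : C ≠ ⊤)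
    (hfC : ∀ i k, ∫⁻ a, ‖f i k a‖ₑ ^ r ∂μ ≤ C) :
    ∃ φ : ℕ → ℕ, StrictMono φ ∧ ∀ i E, MeasurableSet E →
      ∃ L, Tendsto (fun k => ∫ a in E, f i (φ k) a ∂μ) atTop (𝓝 L) := by
  obtain ⟨𝒜, h𝒜c, h𝒜⟩ := exists_countable_measureDense (μ := μ)
  have : Countable 𝒜 := h𝒜c
  have hint : ∀ i k, Integrable (f i k) μ := fun i k =>
    integrable_of_rpow hr.le (hf i k) ((hfC i k).trans_lt hC.lt_top)
  have hc := holder_conj hr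
  have h1 : (0:ℝ) ≤ 1 / r := hc.one_div_nonneg
  have h2 : (0:ℝ) ≤ 1 / conj r := hc.symm.one_div_nonneg
  set R : ℝ := (μ univ ^ (1 / conj r) * C ^ (1 / r)).toReal with hR
  have hRt : μ univ ^ (1 / conj r) * C ^ (1 / r) ≠ ⊤ := ENNReal.mul_ne_top
    (ENNReal.rpow_ne_top_of_nonneg h2 (measure_ne_top _ _)) (ENNReal.rpow_ne_top_of_nonneg h1 hC)
  have hbd : ∀ i k E, MeasurableSet E → |∫ a in E, f i k a ∂μ| ≤ R := by
    intro i k E hE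
    apply abs_int_le ENNReal.toReal_nonneg
    rw [ENNReal.ofReal_toReal hRt]
    refine (setInt_bound hr (hf i k) (hfC i k) hE).trans ?_
    gcongr
    exact subset_univ _
  let seq : ℕ → (ι × 𝒜 → Icc (-R) R) := fun k q =>
    ⟨∫ a in q.2, f q.1 k a ∂μ, abs_le.1 (hbd _ _ _ (h𝒜.measurable _ q.2.2))⟩
  obtain ⟨L, φ, hφ, hL⟩ := CompactSpace.tendsto_subseq seq
  refine ⟨φ, hφ, fun i E hE => exists_lim_of_approx fun ε hε => ?_⟩
  obtain ⟨δ, hδ, hsm⟩ := exists_small hr hC hε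
  obtain ⟨A, hA, hEA⟩ := h𝒜.approx E hE (measure_ne_top _ _) δ hδ
  have hAm := h𝒜.measurable A hA
  refine ⟨fun k => ∫ a in A, f i (φ k) a ∂μ, L (i, ⟨A, hA⟩), ?_, fun k => ?_⟩
  · have := (tendsto_pi_nhds.1 hL) (i, ⟨A, hA⟩)
    exact (continuous_subtype_val.tendsto _).comp this
  · change |∫ a in E, f i (φ k) a ∂μ - ∫ a in A, f i (φ k) a ∂μ| ≤ ε
    rw [← integral_indicator hE, ← integral_indicator hAm,
      ← integral_sub ((hint i _).indicator hE) ((hint i _).indicator hAm)]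
    apply abs_int_le hε.le
    refine le_trans ?_ (hsm _ hEA.le)
    refine le_trans ?_ (setInt_bound hr (hf i (φ k)) (hfC i (φ k)) (hE.symmDiff hAm))
    rw [← lintegral_indicator (hE.symmDiff hAm)]
    refine lintegral_mono fun a => ?_
    by_cases h1 : a ∈ E <;> by_cases h2 : a ∈ A <;> simp [h1, h2, mem_symmDiff]

/-- If all integrals over measurable sets of an `L^r`-bounded sequence converge, the limit is given
by an integrable density (Radon–Nikodym). -/
lemma exists_density {r : ℝ} (hr : 1 < r)
    {f : ℕ → α → ℝ} (hf : ∀ k, AEMeasurable (f k) μ) {C : ℝ≥0∞} (hC : C ≠ ⊤)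
    (hfC : ∀ k, ∫⁻ a, ‖f k a‖ₑ ^ r ∂μ ≤ C)
    (hlim : ∀ E, MeasurableSet E → ∃ L, Tendsto (fun k => ∫ a in E, f k a ∂μ) atTop (𝓝 L)) :
    ∃ f₀ : α → ℝ, Measurable f₀ ∧ Integrable f₀ μ ∧ ∀ E, MeasurableSet E →
      Tendsto (fun k => ∫ a in E, f k a ∂μ) atTop (𝓝 (∫ a in E, f₀ a ∂μ)) := by
  classical
  have hint : ∀ k, Integrable (f k) μ := fun k =>
    integrable_of_rpow hr.le (hf k) ((hfC k).trans_lt hC.lt_top)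
  choose! L hL using hlim
  let s : SignedMeasure α :=
    { measureOf' := fun E => if MeasurableSet E then L E else 0
      empty' := by
        simp only [MeasurableSet.empty, if_true]
        exact tendsto_nhds_unique (hL ∅ MeasurableSet.empty) (by simp)
      not_measurable' := fun E hE => by simp [hE]
      m_iUnion' := by
        intro E hE hd
        simp only [hE, MeasurableSet.iUnion hE, if_true]
        rw [HasSum, SummationFilter.unconditional_filter, Metric.tendsto_nhds]
        intro ε hε
        obtain ⟨δ, hδ, hsm⟩ := exists_small hr hC (half_pos hε)
        have htail := ENNReal.tendsto_tsum_compl_atTop_zero (f := fun i => μ (E i))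
          (by rw [← measure_iUnion hd hE]; exact measure_ne_top _ _)
        filter_upwards [htail.eventually (ge_mem_nhds (ENNReal.ofReal_pos.2 hδ))] with S hS
        have hSm : MeasurableSet (⋃ i ∈ S, E i) := Finset.measurableSet_biUnion S fun i _ => hE i
        have hlim1 : Tendsto (fun k => ∑ i ∈ S, ∫ a in E i, f k a ∂μ) atTop
            (𝓝 (∑ i ∈ S, L (E i))) := tendsto_finsetSum _ fun i _ => hL _ (hE i)
        have hlim2 := (hlim1.sub (hL _ (MeasurableSet.iUnion hE))).abs
        have : |∑ i ∈ S, L (E i) - L (⋃ i, E i)| ≤ ε / 2 := by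
          refine le_of_tendsto hlim2 (Eventually.of_forall fun k => ?_)
          have hsub : (⋃ i ∈ S, E i) ⊆ ⋃ i, E i := iUnion₂_subset fun i _ => subset_iUnion E i
          rw [← integral_biUnion_finset S (fun i _ => hE i)
            (fun i _ j _ hij => hd hij) (fun i _ => (hint k).integrableOn), abs_sub_comm,
            ← setIntegral_sdiff hSm (hint k).integrableOn hsub]
          apply abs_int_le (half_pos hε).le
          refine (setInt_bound hr (hf k) (hfC k) ((MeasurableSet.iUnion hE).diff hSm)).trans
            (hsm _ (le_trans ?_ hS))
          refine le_trans (measure_mono ?_) (measure_iUnion_le _)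
          rintro a ⟨ha1, ha2⟩
          obtain ⟨i, hi⟩ := mem_iUnion.1 ha1
          refine mem_iUnion.2 ⟨⟨i, fun hiS => ha2 ?_⟩, hi⟩
          exact mem_iUnion₂.2 ⟨i, hiS, hi⟩
        rw [Real.dist_eq]
        linarith }
  have hs : ∀ E, MeasurableSet E → s E = L E := fun E hE => if_pos hE
  have hac : s ≪ᵥ μ.toENNRealVectorMeasure := by
    apply VectorMeasure.AbsolutelyContinuous.mk
    intro E hE h0
    rw [Measure.toENNRealVectorMeasure_apply_measurable hE] at h0
    rw [hs E hE]
    refine tendsto_nhds_unique (hL E hE) ?_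
    simp [Measure.restrict_eq_zero.2 h0]
  refine ⟨s.rnDeriv μ, SignedMeasure.measurable_rnDeriv s μ, SignedMeasure.integrable_rnDeriv s μ,
    fun E hE => ?_⟩
  have h := withDensityᵥ_apply (SignedMeasure.integrable_rnDeriv s μ) hE
  rw [SignedMeasure.withDensityᵥ_rnDeriv_eq s μ hac, hs E hE] at h
  rw [← h]
  exact hL E hE

/-- Convergence of integrals over sets upgrades to integrals against simple functions. -/
lemma tendsto_simple {f : ℕ → α → ℝ} {f₀ : α → ℝ} (hf : ∀ k, Integrable (f k) μ)
    (hf₀ : Integrable f₀ μ)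
    (h : ∀ E, MeasurableSet E →
      Tendsto (fun k => ∫ a in E, f k a ∂μ) atTop (𝓝 (∫ a in E, f₀ a ∂μ))) (g : SimpleFunc α ℝ) :
    Tendsto (fun k => ∫ a, g a * f k a ∂μ) atTop (𝓝 (∫ a, g a * f₀ a ∂μ)) := by
  have hi : ∀ (g : SimpleFunc α ℝ) {f : α → ℝ}, Integrable f μ → Integrable (fun a => g a * f a) μ := by
    intro g f hf
    obtain ⟨M, hM⟩ := g.exists_forall_norm_le
    exact hf.bdd_mul g.aestronglyMeasurable (Eventually.of_forall hM)
  induction g using SimpleFunc.induction with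
  | const c hs =>
    rename_i s
    have e : ∀ f : α → ℝ, ∫ a, (SimpleFunc.piecewise s hs (SimpleFunc.const α c)
        (SimpleFunc.const α 0)) a * f a ∂μ = c * ∫ a in s, f a ∂μ := by
      intro f
      rw [← integral_const_mul, ← integral_indicator hs]
      congr 1; ext a
      by_cases ha : a ∈ s <;> simp [ha]
    simp only [e]
    exact (h s hs).const_mul c
  | add _ h1 h2 =>
    rename_i g1 g2 _
    have e : ∀ f : α → ℝ, Integrable f μ → ∫ a, (g1 + g2) a * f a ∂μ
        = ∫ a, g1 a * f a ∂μ + ∫ a, g2 a * f a ∂μ := by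
      intro f hf
      rw [← integral_add (hi g1 hf) (hi g2 hf)]
      congr 1; ext a; simp [add_mul]
    simp only [e _ (hf _), e _ hf₀]
    exact h1.add h2

lemma rpow_le_of_holder {X C : ℝ≥0∞} {r : ℝ} (hr : 1 < r) (hX : X ≠ ⊤)
    (h : X ≤ X ^ (1 / conj r) * C ^ (1 / r)) : X ≤ C := by
  have hc := holder_conj hr
  have hr0 : 0 < r := by linarith
  rcases eq_or_ne X 0 with h0 | h0
  · simp [h0]
  have e : X = X ^ (1 / conj r) * X ^ (1 / r) := by
    rw [← ENNReal.rpow_add _ _ h0 hX]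
    have : 1 / conj r + 1 / r = 1 := by
      have := hc.symm.inv_add_inv_eq_one
      simpa [one_div] using this
    rw [this, ENNReal.rpow_one]
  have hp : X ^ (1 / conj r) ≠ 0 := by
    intro hh
    rw [ENNReal.rpow_eq_zero_iff] at hh
    rcases hh with hh | hh
    · exact h0 hh.1
    · exact hX hh.1
  have hp' : X ^ (1 / conj r) ≠ ⊤ := ENNReal.rpow_ne_top_of_nonneg hc.symm.one_div_nonneg hX
  have h3 : X ^ (1 / conj r) * X ^ (1 / r) ≤ X ^ (1 / conj r) * C ^ (1 / r) := by rwa [← e]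
  have h4 := (ENNReal.mul_le_mul_iff_right hp hp').1 h3
  exact (ENNReal.rpow_le_rpow_iff (by positivity)).1 h4

/-- The density inherits the `L^r` bound. -/
lemma density_bound {r : ℝ} (hr : 1 < r)
    {f : ℕ → α → ℝ} (hf : ∀ k, AEMeasurable (f k) μ) {C : ℝ≥0∞} (hC : C ≠ ⊤)
    (hfC : ∀ k, ∫⁻ a, ‖f k a‖ₑ ^ r ∂μ ≤ C) {f₀ : α → ℝ} (hm : Measurable f₀)
    (hf₀ : Integrable f₀ μ)
    (h : ∀ E, MeasurableSet E →
      Tendsto (fun k => ∫ a in E, f k a ∂μ) atTop (𝓝 (∫ a in E, f₀ a ∂μ))) :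
    ∫⁻ a, ‖f₀ a‖ₑ ^ r ∂μ ≤ C := by
  have hc := holder_conj hr
  have hr0 : 0 < r := by linarith
  have hint : ∀ k, Integrable (f k) μ := fun k =>
    integrable_of_rpow hr.le (hf k) ((hfC k).trans_lt hC.lt_top)
  set F : α → ℝ≥0∞ := fun a => ‖f₀ a‖ₑ
  have hFm : Measurable F := hm.enorm
  set s := SimpleFunc.eapprox F
  have key : ∀ n, ∫⁻ a, s n a ^ r ∂μ ≤ C := by
    intro n
    set t : SimpleFunc α ℝ := (s n).map ENNReal.toReal
    set sg : SimpleFunc α ℝ := SimpleFunc.piecewise {a | 0 ≤ f₀ a}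
      (measurableSet_le measurable_const hm) (SimpleFunc.const α 1) (SimpleFunc.const α (-1))
    set g : SimpleFunc α ℝ := sg * t.map (fun x => x ^ (r - 1))
    have hst : ∀ a, s n a ≠ ⊤ := fun a => (SimpleFunc.eapprox_lt_top F n a).ne
    have hsF : ∀ a, s n a ≤ F a := fun a => by
      rw [← SimpleFunc.iSup_eapprox_apply hFm a]; exact le_iSup (fun n => (s n) a) n
    have ht0 : ∀ a, 0 ≤ t a := fun a => ENNReal.toReal_nonneg
    have htf : ∀ a, t a ≤ |f₀ a| := fun a => by
      have := ENNReal.toReal_mono (by simp [F]) (hsF a)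
      simpa [t, F] using this
    have hga : ∀ a, ‖g a‖ₑ = s n a ^ (r - 1) := by
      intro a
      have h1 : ‖sg a‖ₑ = 1 := by
        by_cases ha : 0 ≤ f₀ a <;> simp [sg, ha]
      have h2 : ‖t a ^ (r - 1)‖ₑ = s n a ^ (r - 1) := by
        rw [Real.enorm_of_nonneg (Real.rpow_nonneg (ht0 a) _),
          ← ENNReal.ofReal_rpow_of_nonneg (ht0 a) (by linarith)]
        congr 1
        exact ENNReal.ofReal_toReal (hst a)
      change ‖sg a * t a ^ (r - 1)‖ₑ = _
      rw [enorm_mul, h1, h2, one_mul]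
    have hX : ∫⁻ a, ‖g a‖ₑ ^ conj r ∂μ = ∫⁻ a, s n a ^ r ∂μ := by
      congr 1; ext a
      rw [hga, ← ENNReal.rpow_mul]
      congr 1
      have : r - 1 ≠ 0 := by linarith
      simp only [conj]; field_simp
    have hgf : ∀ a, t a ^ r ≤ g a * f₀ a := by
      intro a
      have e1 : g a * f₀ a = t a ^ (r - 1) * |f₀ a| := by
        change sg a * t a ^ (r - 1) * f₀ a = _
        by_cases ha : 0 ≤ f₀ a
        · simp [sg, ha, abs_of_nonneg ha]
        · simp [sg, ha, abs_of_neg (not_le.1 ha)]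
      rw [e1]
      calc t a ^ r = t a ^ (r - 1) * t a := by
            rcases (ht0 a).eq_or_lt with h0 | h0
            · rw [← h0]; simp [hr0.ne']
            · rw [← Real.rpow_add_one h0.ne']; ring_nf
        _ ≤ _ := by gcongr; exact Real.rpow_nonneg (ht0 a) _; exact htf a
    obtain ⟨Mb, hMb⟩ := (t.map (fun x => x ^ r)).exists_forall_norm_le
    have htint : Integrable (fun a => t a ^ r) μ :=
      Integrable.of_bound (t.map (fun x => x ^ r)).aestronglyMeasurable Mb (Eventually.of_forall hMb)
    have hX2 : ∫⁻ a, s n a ^ r ∂μ = ENNReal.ofReal (∫ a, t a ^ r ∂μ) := by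
      rw [ofReal_integral_eq_lintegral_ofReal htint
        (Eventually.of_forall fun a => Real.rpow_nonneg (ht0 a) _)]
      congr 1; ext a
      rw [← ENNReal.ofReal_rpow_of_nonneg (ht0 a) hr0.le]
      congr 1
      exact (ENNReal.ofReal_toReal (hst a)).symm
    apply rpow_le_of_holder hr (by rw [hX2]; exact ENNReal.ofReal_ne_top)
    have hgi : Integrable (fun a => g a * f₀ a) μ := by
      obtain ⟨M, hM⟩ := g.exists_forall_norm_le
      exact hf₀.bdd_mul g.aestronglyMeasurable (Eventually.of_forall hM)
    have hl : ∫ a, t a ^ r ∂μ ≤ ∫ a, g a * f₀ a ∂μ := integral_mono htint hgi hgf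
    have hlim := (tendsto_simple hint hf₀ h g).enorm
    have hb : ‖∫ a, g a * f₀ a ∂μ‖ₑ ≤ (∫⁻ a, ‖g a‖ₑ ^ conj r ∂μ) ^ (1 / conj r) * C ^ (1 / r) :=
      le_of_tendsto hlim (Eventually.of_forall fun k =>
        (enorm_integral_le_lintegral_enorm _).trans
          (holder_enorm hr (hf k) g.aemeasurable (hfC k)))
    rw [hX] at hb
    refine le_trans ?_ hb
    rw [hX2, ← ofReal_norm]
    exact ENNReal.ofReal_le_ofReal (hl.trans (le_abs_self _))
  have hmon : Monotone fun n a => s n a ^ r := fun n m hnm a =>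
    ENNReal.rpow_le_rpow (SimpleFunc.monotone_eapprox F hnm a) hr0.le
  have hsup : ∫⁻ a, F a ^ r ∂μ = ⨆ n, ∫⁻ a, s n a ^ r ∂μ := by
    rw [← lintegral_iSup (fun n => (s n).measurable.pow_const r) hmon]
    congr 1; ext a
    have h1 : Tendsto (fun n => s n a) atTop (𝓝 (F a)) := SimpleFunc.tendsto_eapprox hFm a
    have h2 := h1.ennrpow_const r
    exact tendsto_nhds_unique h2 (tendsto_atTop_iSup fun n m hnm => hmon hnm a)
  rw [hsup]
  exact iSup_le key

/-- Weak sequential compactness in `L^r`, `1 < r < ∞`, simultaneously for countably many sequences. -/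
theorem weak_compact [IsSeparable μ] {ι : Type*} [Countable ι] {r : ℝ} (hr : 1 < r)
    {f : ι → ℕ → α → ℝ} (hf : ∀ i k, AEMeasurable (f i k) μ) {C : ℝ≥0∞} (hC : C ≠ ⊤)
    (hfC : ∀ i k, ∫⁻ a, ‖f i k a‖ₑ ^ r ∂μ ≤ C) :
    ∃ (φ : ℕ → ℕ) (f₀ : ι → α → ℝ), StrictMono φ ∧ ∀ i, Measurable (f₀ i) ∧
      ∫⁻ a, ‖f₀ i a‖ₑ ^ r ∂μ ≤ C ∧
      ∀ g : α → ℝ, AEMeasurable g μ → ∫⁻ a, ‖g a‖ₑ ^ conj r ∂μ < ⊤ →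
        Tendsto (fun k => ∫ a, g a * f i (φ k) a ∂μ) atTop (𝓝 (∫ a, g a * f₀ i a ∂μ)) := by
  obtain ⟨φ, hφ, hlim⟩ := exists_subseq_setInt hr hf hC hfC
  choose f₀ h1 h2 h3 using fun i => exists_density hr (fun k => hf i (φ k)) hC
    (fun k => hfC i (φ k)) (hlim i)
  have hb := fun i => density_bound hr (fun k => hf i (φ k)) hC (fun k => hfC i (φ k))
    (h1 i) (h2 i) (h3 i)
  refine ⟨φ, f₀, hφ, fun i => ⟨h1 i, hb i, fun g hg hgr => tendsto_of_approx fun ε hε => ?_⟩⟩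
  have hc := holder_conj hr
  have hcp : 0 < conj r := hc.symm.pos
  have hint : ∀ k, Integrable (f i (φ k)) μ := fun k =>
    integrable_of_rpow hr.le (hf i _) ((hfC i _).trans_lt hC.lt_top)
  obtain ⟨δ, hδ, hsm⟩ := exists_small hr hC hε
  have hgm : MemLp g (ENNReal.ofReal (conj r)) μ := by
    refine ⟨hg.aestronglyMeasurable, ?_⟩
    rw [eLpNorm_lt_top_iff_lintegral_rpow_enorm_lt_top (by simpa using hcp) (by simp),
      ENNReal.toReal_ofReal hcp.le]
    exact hgr
  obtain ⟨s, hs, hsm2⟩ := hgm.exists_simpleFunc_eLpNorm_sub_lt (by simp)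
    (ε := ENNReal.ofReal δ ^ (1 / conj r)) (by
      intro hh
      rw [ENNReal.rpow_eq_zero_iff] at hh
      rcases hh with hh | hh
      · exact (ENNReal.ofReal_pos.2 hδ).ne' hh.1
      · exact ENNReal.ofReal_ne_top hh.1)
  have hsr : ∫⁻ a, ‖s a‖ₑ ^ conj r ∂μ < ⊤ := by
    have := hsm2.2
    rwa [eLpNorm_lt_top_iff_lintegral_rpow_enorm_lt_top (by simpa using hcp) (by simp),
      ENNReal.toReal_ofReal hcp.le] at this
  have hd : ∫⁻ a, ‖g a - s a‖ₑ ^ conj r ∂μ ≤ ENNReal.ofReal δ := by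
    rw [eLpNorm_eq_lintegral_rpow_enorm_toReal (by simpa using hcp) (by simp),
      ENNReal.toReal_ofReal hcp.le] at hs
    exact ((ENNReal.rpow_lt_rpow_iff hc.symm.one_div_pos).1 hs).le
  have est : ∀ f : α → ℝ, AEMeasurable f μ → ∫⁻ a, ‖f a‖ₑ ^ r ∂μ ≤ C →
      |∫ a, g a * f a ∂μ - ∫ a, s a * f a ∂μ| ≤ ε := by
    intro f hf hfC
    rw [← integral_sub (integrable_mul_of_conj hr hf hg (hfC.trans_lt hC.lt_top) hgr)
      (integrable_mul_of_conj hr hf s.aemeasurable (hfC.trans_lt hC.lt_top) hsr)]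
    apply abs_int_le hε.le
    simp only [← sub_mul]
    exact (holder_enorm hr hf (hg.sub s.aemeasurable) hfC).trans (hsm _ hd)
  exact ⟨_, _, tendsto_simple hint (h2 i) (h3 i) s, fun k => est _ (hf i _) (hfC i _),
    est _ (h1 i).aemeasurable (hb i)⟩

end weak

/-! ### Fubini for `ℝ³ = ℝ² × ℝ` and maps independent of `x₃` -/

@[simp] lemma proj_embed (a : Euc 2) (s : ℝ) : projα (embed3 a s) = a := by
  ext i; fin_cases i <;> simp [projα, embed3]

@[simp] lemma embed_two (a : Euc 2) (s : ℝ) : embed3 a s 2 = s := by simp [embed3]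

@[simp] lemma embed_proj (x : Euc 3) : embed3 (projα x) (x 2) = x := by
  ext i; fin_cases i <;> simp [projα, embed3]

lemma continuous_embed : Continuous fun z : Euc 2 × ℝ => embed3 z.1 z.2 := by
  unfold embed3
  simp only [WithLp.equiv_symm_apply]
  apply (PiLp.continuous_toLp 2 _).comp
  apply continuous_pi
  intro i
  fin_cases i <;> simp <;> fun_prop

/-- The measurable identification `ℝ² × ℝ ≃ ℝ³`. -/
def emb : Euc 2 × ℝ ≃ᵐ Euc 3 where
  toFun z := embed3 z.1 z.2
  invFun x := (projα x, x 2)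
  left_inv z := by simp
  right_inv x := by simp
  measurable_toFun := continuous_embed.measurable
  measurable_invFun := by
    have := continuous_proj.measurable
    change Measurable fun x : Euc 3 => (projα x, x 2)
    fun_prop

lemma emb_apply (z : Euc 2 × ℝ) : emb z = embed3 z.1 z.2 := rfl

lemma mp_emb : MeasurePreserving emb volume volume := by
  have h1 : MeasurePreserving (WithLp.ofLp : Euc 2 → (Fin 2 → ℝ)) volume volume :=
    PiLp.volume_preserving_ofLp _
  have h2 : MeasurePreserving (WithLp.toLp 2 : (Fin 3 → ℝ) → Euc 3) volume volume :=
    PiLp.volume_preserving_toLp _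
  have h3 := (volume_preserving_piFinSuccAbove (fun _ : Fin 3 => ℝ) 2).symm
  have h4 : MeasurePreserving (Prod.swap : Euc 2 × ℝ → ℝ × Euc 2) volume volume :=
    Measure.measurePreserving_swap
  have h5 : MeasurePreserving (Prod.map id WithLp.ofLp : ℝ × Euc 2 → ℝ × (Fin 2 → ℝ))
      volume volume := (MeasurePreserving.id _).prod h1
  have := (h2.comp h3).comp (h5.comp h4)
  convert this using 1
  ext z i
  fin_cases i <;> simp [emb_apply, embed3, Fin.insertNthEquiv, Fin.insertNth, Fin.succAboveCases]

lemma lint_slab {F : Euc 3 → ℝ≥0∞} (hF : Measurable F) :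
    ∫⁻ x, F x = ∫⁻ a : Euc 2, ∫⁻ s : ℝ, F (embed3 a s) := by
  rw [← mp_emb.lintegral_comp hF, Measure.volume_eq_prod, lintegral_prod _ (by fun_prop)]
  rfl

/-- The projection of the thin domain onto the planar domain preserves the measure, since the
fibres have length one. -/
lemma mp_proj {ω : Set (Euc 2)} (hω : MeasurableSet ω) :
    MeasurePreserving projα (volume.restrict (thinDomain ω)) (volume.restrict ω) := by
  have h1 := (mp_emb.symm).restrict_preimage (s := ω ×ˢ Ioo (-(1/2):ℝ) (1/2))
    (hω.prod measurableSet_Ioo)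
  have h2 : emb.symm ⁻¹' (ω ×ˢ Ioo (-(1/2):ℝ) (1/2)) = thinDomain ω := by
    ext x; rfl
  rw [h2, Measure.volume_eq_prod, ← Measure.prod_restrict] at h1
  have : IsProbabilityMeasure (volume.restrict (Ioo (-(1/2):ℝ) (1/2))) :=
    ⟨by rw [Measure.restrict_apply_univ, Real.volume_Ioo]; norm_num⟩
  have h3 := measurePreserving_fst (μ := volume.restrict ω)
    (ν := volume.restrict (Ioo (-(1/2):ℝ) (1/2)))
  exact h3.comp h1

lemma slab_eq : slab = thinDomain univ := by ext; simp [slab, thinDomain]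

lemma ae_thin_of_planar {ω : Set (Euc 2)} (hω : MeasurableSet ω) {P : Euc 2 → Prop}
    (h : ∀ᵐ a ∂(volume.restrict ω), P a) : ∀ᵐ x ∂(volume.restrict (thinDomain ω)), P (projα x) :=
  (mp_proj hω).quasiMeasurePreserving.ae h

lemma ae_planar_of_thin {ω : Set (Euc 2)} (hω : MeasurableSet ω) {P : Euc 2 → Prop}
    (hP : MeasurableSet {a | P a})
    (h : ∀ᵐ x ∂(volume.restrict (thinDomain ω)), P (projα x)) : ∀ᵐ a ∂(volume.restrict ω), P a := by
  rw [← (mp_proj hω).map_eq, ae_map_iff (continuous_proj.measurable.aemeasurable) hP]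
  exact h

lemma lint_proj {ω : Set (Euc 2)} (hω : MeasurableSet ω) {F : Euc 2 → ℝ≥0∞} (hF : Measurable F) :
    ∫⁻ x in thinDomain ω, F (projα x) = ∫⁻ a in ω, F a :=
  (mp_proj hω).lintegral_comp hF

/-- The unit vector in the direction `x₃`. -/
abbrev e₃ : Euc 3 := EuclideanSpace.single 2 1

lemma proj_add_e₃ (x : Euc 3) (t : ℝ) : projα (x + t • e₃) = projα x := by
  ext i; fin_cases i <;> simp [projα]

lemma embed_add (a : Euc 2) (s t : ℝ) : embed3 a s + t • e₃ = embed3 a (s + t) := by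
  ext i; fin_cases i <;> simp [embed3]

/-- The average of `g` along the vertical fibres. -/
def planar (g : Euc 3 → ℝ) (a : Euc 2) : ℝ := ∫ s in Ioo (-(1/2):ℝ) (1/2), g (embed3 a s)

lemma measurable_planar {g : Euc 3 → ℝ} (hg : Measurable g) : Measurable (planar g) := by
  have : StronglyMeasurable fun z : Euc 2 × ℝ => g (embed3 z.1 z.2) :=
    (hg.comp continuous_embed.measurable).stronglyMeasurable
  exact (this.integral_prod_right (ν := volume.restrict (Ioo (-(1/2):ℝ) (1/2)))).measurable

/-- A function invariant under vertical translations is a function of the planar variable. -/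
lemma planar_of_invariant {g : Euc 3 → ℝ} (hg : Measurable g)
    (h : ∀ t : ℝ, ∀ᵐ x, x ∈ slab → x + t • e₃ ∈ slab → g (x + t • e₃) = g x) :
    ∀ᵐ x, x ∈ slab → g x = planar g (projα x) := by
  have hms : MeasurableSet slab := isOpen_slab.measurableSet
  have hS : MeasurableSet {q : Euc 3 × ℝ |
      q.1 ∈ slab → q.1 + q.2 • e₃ ∈ slab → g (q.1 + q.2 • e₃) = g q.1} := by
    have m1 : Measurable fun q : Euc 3 × ℝ => q.1 + q.2 • e₃ := by fun_prop
    have a1 : MeasurableSet {q : Euc 3 × ℝ | q.1 ∈ slab} := measurable_fst hms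
    have a2 : MeasurableSet {q : Euc 3 × ℝ | q.1 + q.2 • e₃ ∈ slab} := m1 hms
    have a3 : MeasurableSet {q : Euc 3 × ℝ | g (q.1 + q.2 • e₃) = g q.1} :=
      measurableSet_eq_fun (hg.comp m1) (hg.comp measurable_fst)
    exact a1.imp (a2.imp a3)
  have key : ∀ᵐ x : Euc 3, ∀ᵐ t : ℝ, x ∈ slab → x + t • e₃ ∈ slab → g (x + t • e₃) = g x := by
    have h1 : ∀ᵐ q ∂((volume : Measure (Euc 3)).prod (volume : Measure ℝ)), q.1 ∈ slab →
        q.1 + q.2 • e₃ ∈ slab → g (q.1 + q.2 • e₃) = g q.1 := by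
      have h2 : ∀ᵐ q ∂((volume : Measure ℝ).prod (volume : Measure (Euc 3))), q.2 ∈ slab →
          q.2 + q.1 • e₃ ∈ slab → g (q.2 + q.1 • e₃) = g q.2 := by
        rw [Measure.ae_prod_iff_ae_ae]
        · exact Eventually.of_forall h
        · exact measurable_swap hS
      exact (Measure.measurePreserving_swap (μ := (volume : Measure (Euc 3)))
        (ν := (volume : Measure ℝ))).quasiMeasurePreserving.ae h2
    exact Measure.ae_ae_of_ae_prod h1
  filter_upwards [key] with x hx hxs
  have e : ∀ᵐ s : ℝ, s ∈ Ioo (-(1/2):ℝ) (1/2) → g (embed3 (projα x) s) = g x := by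
    have h1 := (measurePreserving_sub_right (volume : Measure ℝ) (x 2)).quasiMeasurePreserving.ae hx
    filter_upwards [h1] with s hs hsI
    have e1 : x + (s - x 2) • e₃ = embed3 (projα x) s := by
      conv_lhs => rw [← embed_proj x, embed_add]
      simp
    rw [e1] at hs
    exact hs hxs (by change embed3 (projα x) s 2 ∈ Ioo (-(1/2):ℝ) (1/2); simpa using hsI)
  unfold planar
  rw [setIntegral_congr_ae measurableSet_Ioo e]
  simp; norm_num

/-- Weak derivatives are translation equivariant. -/
lemma WD.translate {n : ℕ} {S A : Set (Euc n)} {j : Fin n} {w g : Euc n → ℝ} (h : WD S j w g)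
    (z : Euc n) (hA : ∀ x ∈ A, x + z ∈ S) : WD A j (fun x => w (x + z)) (fun x => g (x + z)) := by
  intro φ h1 h2 h3
  have hc : ContDiff ℝ (⊤ : ℕ∞) fun x : Euc n => φ (x - z) := by fun_prop
  have hcs : HasCompactSupport fun x : Euc n => φ (x - z) := by
    have := h2.comp_homeomorph (Homeomorph.subRight z)
    exact this
  have hts : tsupport (fun x : Euc n => φ (x - z)) ⊆ S := by
    intro x hx
    have := tsupport_comp_subset_preimage φ (f := fun x : Euc n => x - z) (by fun_prop) hx
    have := hA _ (h3 this)
    simpa using this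
  have key := h _ hc hcs hts
  rw [← integral_add_right_eq_self (μ := (volume : Measure (Euc n))) _ z,
    ← integral_add_right_eq_self (μ := (volume : Measure (Euc n)))
      (fun x => (fderiv ℝ (fun x => φ (x - z)) x) (EuclideanSpace.single j 1) * w x) z] at key
  simpa [fderiv_comp_sub] using key

/-- If the vertical derivative vanishes, the function and all its weak derivatives are invariant
under vertical translations, hence functions of the planar variable. -/
lemma planar_reduction {w : Euc 3 → ℝ} {g : Fin 3 → Euc 3 → ℝ} (hwm : Measurable w)
    (hw : Integrable w) (hg : ∀ j, Integrable (g j)) (hgm : ∀ j, Measurable (g j))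
    (hWD : ∀ j, WD slab j w (g j)) (h2 : ∀ᵐ x, x ∈ slab → g 2 x = 0) :
    (∀ᵐ x, x ∈ slab → w x = planar w (projα x)) ∧
    ∀ j, ∀ᵐ x, x ∈ slab → g j x = planar (g j) (projα x) := by
  have hAo : ∀ t : ℝ, IsOpen {x : Euc 3 | x ∈ slab ∧ x + t • e₃ ∈ slab} := fun t =>
    isOpen_slab.inter (isOpen_slab.preimage (by fun_prop : Continuous fun x : Euc 3 => x + t • e₃))
  have hinv : ∀ t : ℝ, ∀ᵐ x, x ∈ slab → x + t • e₃ ∈ slab → w (x + t • e₃) = w x := by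
    intro t
    have hWD' : ∀ j, WD slab j w (if j = 2 then (fun _ => 0) else g j) := by
      intro j
      split_ifs with hj
      · subst hj
        exact (hWD 2).congr_on (Eventually.of_forall fun _ _ => rfl) h2
      · exact hWD j
    have hi : ∀ j : Fin 3, Integrable (if j = 2 then (fun _ => 0) else g j : Euc 3 → ℝ) := by
      intro j; split_ifs
      · exact integrable_zero _ _ _
      · exact hg j
    have hm : ∀ j : Fin 3, Measurable (if j = 2 then (fun _ => 0) else g j : Euc 3 → ℝ) := by
      intro j; split_ifs
      · exact measurable_const
      · exact hgm j
    have hseg : ∀ x ∈ {x : Euc 3 | x ∈ slab ∧ x + t • e₃ ∈ slab}, ∀ s ∈ Icc (0:ℝ) 1,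
        x + s • (t • e₃) ∈ slab := by
      rintro x ⟨hx, hx'⟩ s ⟨hs0, hs1⟩
      change (x + s • (t • e₃)) 2 ∈ Ioo (-(1/2):ℝ) (1/2)
      change x 2 ∈ Ioo (-(1/2):ℝ) (1/2) at hx
      change (x + t • e₃) 2 ∈ Ioo (-(1/2):ℝ) (1/2) at hx'
      have e1 : (x + s • (t • e₃)) 2 = (1 - s) • x 2 + s • (x + t • e₃) 2 := by
        simp; ring
      rw [e1]
      exact (convex_Ioo _ _) hx hx' (by linarith) hs0 (by ring)
    filter_upwards [line_formula (hAo t) (t • e₃) hseg hw hi hm hWD'] with x hx h1 h3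
    have := hx ⟨h1, h3⟩
    have z : ∀ s : ℝ, ∑ j, (t • e₃) j * (if j = 2 then (fun _ => 0) else g j : Euc 3 → ℝ)
        (x + s • t • e₃) = 0 := by
      intro s
      simp
    simp only [z, integral_zero] at this
    linarith
  refine ⟨planar_of_invariant hwm hinv, fun j => planar_of_invariant (hgm j) fun t => ?_⟩
  have l1 : LocallyIntegrable (fun x => w (x + t • e₃)) := (hw.comp_add_right _).locallyIntegrable
  have l2 : LocallyIntegrable (fun x => g j (x + t • e₃)) :=
    ((hg j).comp_add_right _).locallyIntegrable
  have h3 := (((hWD j).translate (t • e₃) (A := {x : Euc 3 | x ∈ slab ∧ x + t • e₃ ∈ slab})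
    (fun x hx => hx.2))).sub ((hWD j).mono fun x hx => hx.1) l1 l2 hw.locallyIntegrable
      (hg j).locallyIntegrable
  have h4 := h3.eq_zero (hAo t) ?_ ((l2.sub (hg j).locallyIntegrable).locallyIntegrableOn _)
  · filter_upwards [h4] with x hx a b
    have := hx ⟨a, b⟩
    linarith
  · filter_upwards [hinv t] with x hx hxA
    rw [hx hxA.1 hxA.2, sub_self]

/-! ### Weak derivatives of planar maps -/

lemma hasFDerivAt_linear_apply (x : Euc 3) :
    HasFDerivAt (fun x : Euc 3 => x 2) (EuclideanSpace.proj (𝕜 := ℝ) (2 : Fin 3)) x :=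
  (EuclideanSpace.proj (𝕜 := ℝ) (2 : Fin 3)).hasFDerivAt

/-- The projection as a continuous linear map. -/
def projL : Euc 3 →L[ℝ] Euc 2 :=
  LinearMap.toContinuousLinearMap
    { toFun := projα
      map_add' := fun x y => by ext i; fin_cases i <;> simp [projα]
      map_smul' := fun c x => by ext i; fin_cases i <;> simp [projα] }

lemma projL_apply (x : Euc 3) : projL x = projα x := rfl

lemma projL_single (l : Fin 2) :
    projL (EuclideanSpace.single l.castSucc 1) = EuclideanSpace.single l 1 := by
  rw [projL_apply]
  ext i; fin_cases i <;> fin_cases l <;> simp [projα]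

lemma int_prod_form (F : Euc 2 → ℝ) (H : ℝ → ℝ) :
    ∫ x : Euc 3, F (projα x) * H (x 2) = (∫ a, F a) * ∫ s, H s := by
  rw [← integral_prod_mul, ← Measure.volume_eq_prod,
    ← mp_emb.integral_comp' (g := fun x : Euc 3 => F (projα x) * H (x 2))]
  simp [emb_apply]

/-- A planar function whose lift to the slab is weakly differentiable is weakly differentiable:
test with `ψ(x_α) η(x₃)`, `∫ η = 1`. -/
lemma WD.to_planar {l : Fin 2} {w g : Euc 3 → ℝ} {W K : Euc 2 → ℝ} (h : WD slab l.castSucc w g)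
    (hw : ∀ᵐ x, x ∈ slab → w x = W (projα x)) (hg : ∀ᵐ x, x ∈ slab → g x = K (projα x)) :
    WD univ l W K := by
  have h' := h.congr_on hw hg
  intro ψ h1 h2 _
  let b : ContDiffBump (0:ℝ) := ⟨1/8, 1/4, by norm_num, by norm_num⟩
  obtain ⟨η, hη⟩ : ∃ η : ℝ → ℝ, η = b.normed volume := ⟨_, rfl⟩
  have η1 : ContDiff ℝ (⊤ : ℕ∞) η := by rw [hη]; exact b.contDiff_normed
  have η2 : tsupport η ⊆ Metric.closedBall 0 (1/4) := by rw [hη, b.tsupport_normed_eq]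
  have η3 : ∫ s, η s = 1 := by rw [hη]; exact b.integral_normed
  obtain ⟨φ, hφ⟩ : ∃ φ : Euc 3 → ℝ, φ = fun x => ψ (projα x) * η (x 2) := ⟨_, rfl⟩
  have p1 : ContDiff ℝ (⊤ : ℕ∞) fun x : Euc 3 => ψ (projα x) := h1.comp projL.contDiff
  have p2 : ContDiff ℝ (⊤ : ℕ∞) fun x : Euc 3 => η (x 2) :=
    η1.comp (EuclideanSpace.proj (𝕜 := ℝ) (2 : Fin 3)).contDiff
  have φ1 : ContDiff ℝ (⊤ : ℕ∞) φ := by rw [hφ]; exact p1.mul p2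
  have hsub : tsupport φ ⊆ (fun z : Euc 2 × ℝ => embed3 z.1 z.2) ''
      (tsupport ψ ×ˢ Metric.closedBall 0 (1/4)) := by
    apply closure_minimal
    · intro x hx
      refine ⟨(projα x, x 2), ⟨?_, ?_⟩, embed_proj x⟩
      · apply subset_closure
        intro h0; apply hx; simp [hφ, h0]
      · apply η2; apply subset_closure
        intro h0; apply hx; simp [hφ, h0]
    · exact ((h2.isCompact.prod (isCompact_closedBall _ _)).image continuous_embed).isClosed
  have φ2 : HasCompactSupport φ :=
    ((h2.isCompact.prod (isCompact_closedBall _ _)).image continuous_embed).of_isClosed_subset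
      (isClosed_tsupport _) hsub
  have φ3 : tsupport φ ⊆ slab := by
    intro x hx
    obtain ⟨z, ⟨_, hz⟩, rfl⟩ := hsub hx
    rw [Metric.mem_closedBall, dist_zero_right, Real.norm_eq_abs, abs_le] at hz
    change embed3 z.1 z.2 2 ∈ Ioo (-(1/2):ℝ) (1/2)
    rw [embed_two]
    constructor <;> linarith [hz.1, hz.2]
  have key := h' φ φ1 φ2 φ3
  have d : ∀ x, fderiv ℝ φ x (EuclideanSpace.single l.castSucc 1)
      = fderiv ℝ ψ (projα x) (EuclideanSpace.single l 1) * η (x 2) := by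
    intro x
    have a1 : HasFDerivAt (fun x : Euc 3 => ψ (projα x)) ((fderiv ℝ ψ (projα x)).comp projL) x :=
      HasFDerivAt.comp x (h1.differentiable (by simp)).differentiableAt.hasFDerivAt
        projL.hasFDerivAt
    have a2 : HasFDerivAt (fun x : Euc 3 => η (x 2))
        ((fderiv ℝ η (x 2)).comp (EuclideanSpace.proj (𝕜 := ℝ) (2 : Fin 3))) x :=
      HasFDerivAt.comp x (η1.differentiable (by simp)).differentiableAt.hasFDerivAt
        (hasFDerivAt_linear_apply x)
    have a3 := a1.mul a2
    have a4 : φ = (fun x => ψ (projα x)) * fun x => η (x 2) := hφ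
    rw [a4, a3.fderiv]
    have z : (2 : Fin 3) ≠ l.castSucc := by
      fin_cases l <;> simp
    simp [projL_single, mul_comm, z]
  have e1 : ∫ x, φ x * K (projα x) = ∫ a, ψ a * K a := by
    have := int_prod_form (fun a => ψ a * K a) η
    rw [η3, mul_one] at this
    rw [← this, hφ]; congr 1; ext x; ring
  have e2 : ∫ x, fderiv ℝ φ x (EuclideanSpace.single l.castSucc 1) * W (projα x)
      = ∫ a, fderiv ℝ ψ a (EuclideanSpace.single l 1) * W a := by
    have := int_prod_form (fun a => fderiv ℝ ψ a (EuclideanSpace.single l 1) * W a) η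
    rw [η3, mul_one] at this
    rw [← this]; congr 1; ext x; rw [d]; ring
  rw [e1, e2] at key
  exact key

lemma embed_eq (a : Euc 2) (s : ℝ) : embed3 a s = embed3 a 0 + s • e₃ := by
  rw [embed_add, zero_add]

lemma hasFDerivAt_embed_left (a : Euc 2) (s : ℝ) (l : Fin 2) :
    ∃ L : Euc 2 →L[ℝ] Euc 3, HasFDerivAt (fun a => embed3 a s) L a ∧
      L (EuclideanSpace.single l 1) = EuclideanSpace.single l.castSucc 1 := by
  let L : Euc 2 →L[ℝ] Euc 3 := LinearMap.toContinuousLinearMap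
    { toFun := fun a => embed3 a 0
      map_add' := fun x y => by ext i; fin_cases i <;> simp [embed3]
      map_smul' := fun c x => by ext i; fin_cases i <;> simp [embed3] }
  refine ⟨L, ?_, ?_⟩
  · have : (fun a => embed3 a s) = fun a => L a + s • e₃ := by
      ext1 a; rw [embed_eq]; rfl
    rw [this]
    exact L.hasFDerivAt.add_const _
  · change embed3 _ 0 = _
    ext i; fin_cases i <;> fin_cases l <;> simp [embed3]

lemma integrable_embed {F : Euc 3 → ℝ} (hF : Integrable F) :
    Integrable (fun z : ℝ × Euc 2 => F (embed3 z.2 z.1)) (volume.prod volume) := by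
  have h1 : Integrable (fun z : Euc 2 × ℝ => F (embed3 z.1 z.2)) (volume.prod volume) :=
    (mp_emb.integrable_comp_emb emb.measurableEmbedding).2 hF
  exact h1.swap

lemma int_embed {F : Euc 3 → ℝ} (hF : Integrable F) :
    ∫ x, F x = ∫ s : ℝ, ∫ a : Euc 2, F (embed3 a s) := by
  rw [← integral_prod _ (integrable_embed hF), ← mp_emb.integral_comp' (g := F),
    ← integral_prod_swap]
  rfl

lemma locInt_proj {W : Euc 2 → ℝ} (hW : LocallyIntegrable W) :
    LocallyIntegrable fun x : Euc 3 => W (projα x) := by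
  intro x
  obtain ⟨U, hU, hWU⟩ := hW (projα x)
  obtain ⟨V, hVU, hVo, hxV⟩ := mem_nhds_iff.1 hU
  refine ⟨projα ⁻¹' V ∩ {y | y 2 ∈ Ioo (x 2 - 1) (x 2 + 1)}, ?_, ?_⟩
  · have c2 : Continuous fun x : Euc 3 => x 2 := by fun_prop
    refine IsOpen.mem_nhds ((hVo.preimage continuous_proj).inter (isOpen_Ioo.preimage c2))
      ⟨hxV, ?_⟩
    constructor <;> simp
  · have h1 : IntegrableOn (fun z : Euc 2 × ℝ => W z.1) (V ×ˢ Ioo (x 2 - 1) (x 2 + 1))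
        (volume.prod volume) := by
      rw [IntegrableOn, ← Measure.prod_restrict]
      have : IsFiniteMeasure (volume.restrict (Ioo (x 2 - 1) (x 2 + 1))) :=
        ⟨by rw [Measure.restrict_apply_univ]; exact measure_Ioo_lt_top⟩
      exact (hWU.mono_set hVU).comp_fst _
    have h2 := (mp_emb.symm).integrableOn_comp_preimage emb.symm.measurableEmbedding
      (f := fun z : Euc 2 × ℝ => W z.1) (s := V ×ˢ Ioo (x 2 - 1) (x 2 + 1))
    exact h2.2 h1

/-- Lifting a planar weakly differentiable function to `ℝ³`. -/
lemma WD.lift {l : Fin 2} {W K : Euc 2 → ℝ} (h : WD univ l W K) (hW : LocallyIntegrable W)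
    (hK : LocallyIntegrable K) :
    WD univ l.castSucc (fun x => W (projα x)) (fun x => K (projα x)) := by
  intro φ h1 h2 _
  have c1 := continuous_fderiv_apply h1 (EuclideanSpace.single l.castSucc 1)
  have c2 := hasCompactSupport_fderiv_apply h2 (EuclideanSpace.single l.castSucc 1)
  rw [int_embed (integrable_test_mul h1.continuous h2 (locInt_proj hK)),
    int_embed (integrable_test_mul c1 c2 (locInt_proj hW)), ← integral_neg]
  congr 1; ext s
  simp only [proj_embed]
  have hcont : Continuous fun a : Euc 2 => embed3 a s :=
    continuous_embed.comp (by fun_prop : Continuous fun a : Euc 2 => (a, s))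
  have hce : IsClosedEmbedding fun a : Euc 2 => embed3 a s := by
    refine Topology.IsClosedEmbedding.of_continuous_injective_isClosedMap hcont ?_ ?_
    · intro a b hab
      have := congrArg projα hab
      simpa using this
    · intro C hC
      have : (fun a : Euc 2 => embed3 a s) '' C = projα ⁻¹' C ∩ {x | x 2 = s} := by
        ext x; constructor
        · rintro ⟨a, ha, rfl⟩; simpa using ha
        · rintro ⟨hx, hx2⟩; exact ⟨projα x, hx, by rw [← hx2]; exact embed_proj x⟩
      rw [this]
      exact (hC.preimage continuous_proj).inter
        (isClosed_eq (by fun_prop) continuous_const)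
  have s1 : ContDiff ℝ (⊤ : ℕ∞) fun a : Euc 2 => embed3 a s := by
    unfold embed3
    simp only [WithLp.equiv_symm_apply]
    apply (PiLp.contDiff_toLp (𝕜 := ℝ)).comp
    rw [contDiff_pi]
    intro i
    fin_cases i <;> simp <;> fun_prop
  have := h (fun a => φ (embed3 a s)) (h1.comp s1) (h2.comp_isClosedEmbedding hce) (subset_univ _)
  rw [this]
  congr 2; ext a
  obtain ⟨L, hL, hLl⟩ := hasFDerivAt_embed_left a s l
  have hh : HasFDerivAt (fun a => φ (embed3 a s)) ((fderiv ℝ φ (embed3 a s)).comp L) a :=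
    HasFDerivAt.comp a (h1.differentiable (by simp)).differentiableAt.hasFDerivAt hL
  rw [hh.fderiv]
  simp [hLl]

/-- The lift of a planar function has vanishing vertical weak derivative. -/
lemma WD.lift_vert {W : Euc 2 → ℝ} (hW : LocallyIntegrable W) :
    WD univ 2 (fun x => W (projα x)) (fun _ => 0) := by
  intro φ h1 h2 _
  have c1 := continuous_fderiv_apply h1 e₃
  have c2 := hasCompactSupport_fderiv_apply h2 e₃
  have hi := integrable_test_mul c1 c2 (locInt_proj hW)
  have : ∫ x, fderiv ℝ φ x e₃ * W (projα x) = 0 := by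
    rw [← mp_emb.integral_comp' (g := fun x => fderiv ℝ φ x e₃ * W (projα x)),
      Measure.volume_eq_prod, integral_prod]
    · apply integral_eq_zero_of_ae
      refine Eventually.of_forall fun a => ?_
      simp only [emb_apply, proj_embed, Pi.zero_apply]
      rw [integral_mul_const]
      have hd : ∀ s, HasDerivAt (fun s => φ (embed3 a s)) (fderiv ℝ φ (embed3 a s) e₃) s := by
        intro s
        have h3 : HasDerivAt (fun s : ℝ => embed3 a s) e₃ s := by
          have : (fun s : ℝ => embed3 a s) = fun s => embed3 a 0 + s • e₃ := by
            ext1 s; exact embed_eq a s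
          rw [this]
          simpa using ((hasDerivAt_id s).smul_const e₃).const_add (embed3 a 0)
        exact HasFDerivAt.comp_hasDerivAt s
          (h1.differentiable (by simp)).differentiableAt.hasFDerivAt h3
      have hce : IsClosedEmbedding fun s : ℝ => embed3 a s := by
        have hcont : Continuous fun s : ℝ => embed3 a s :=
          continuous_embed.comp (by fun_prop : Continuous fun s : ℝ => (a, s))
        refine Topology.IsClosedEmbedding.of_continuous_injective_isClosedMap hcont ?_ ?_
        · intro s t hst
          have := congrArg (fun x : Euc 3 => x 2) hst
          simpa using this
        · intro C hC
          have : (fun s : ℝ => embed3 a s) '' C = (fun x : Euc 3 => x 2) ⁻¹' C ∩ {x | projα x = a} := by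
            ext x; constructor
            · rintro ⟨s, hs, rfl⟩; simpa using hs
            · rintro ⟨hx, hx2⟩; exact ⟨x 2, hx, by rw [← hx2]; exact embed_proj x⟩
          rw [this]
          exact (hC.preimage (by fun_prop)).inter
            (isClosed_eq continuous_proj continuous_const)
      have hcs1 := h2.comp_isClosedEmbedding hce
      have hcs2 := c2.comp_isClosedEmbedding hce
      have hi1 : Integrable (φ ∘ fun s : ℝ => embed3 a s) :=
        (h1.continuous.comp hce.continuous).integrable_of_hasCompactSupport hcs1
      have hi2 : Integrable ((fun x => fderiv ℝ φ x e₃) ∘ fun s : ℝ => embed3 a s) :=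
        (c1.comp hce.continuous).integrable_of_hasCompactSupport hcs2
      have := integral_eq_zero_of_hasDerivAt_of_integrable hd hi2 hi1
      rw [this, zero_mul]
    · exact (mp_emb.integrable_comp_emb emb.measurableEmbedding).2 hi
  simp only [mul_zero, integral_zero]
  rw [this, neg_zero]

/-! ### Exponents and energy bounds -/

lemma sum_rpow_le {ι : Type*} [Fintype ι] (f : ι → ℝ≥0∞) {r : ℝ} (hr : 0 < r) :
    (∑ i, f i) ^ r ≤ (Fintype.card ι : ℝ≥0∞) ^ r * ∑ i, f i ^ r := by
  rcases isEmpty_or_nonempty ι with h | h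
  · simp [hr]
  obtain ⟨i₀, -, hi₀⟩ := Finset.exists_max_image Finset.univ f Finset.univ_nonempty
  calc (∑ i, f i) ^ r ≤ (∑ _i : ι, f i₀) ^ r := by
        gcongr with i hi; exact hi₀ i hi
    _ = (Fintype.card ι : ℝ≥0∞) ^ r * f i₀ ^ r := by
        rw [Finset.sum_const, nsmul_eq_mul, ENNReal.mul_rpow_of_nonneg _ _ hr.le]; simp
    _ ≤ _ := by
        gcongr
        exact Finset.single_le_sum (f := fun i => f i ^ r) (fun _ _ => zero_le) (Finset.mem_univ i₀)

lemma scaleX_eq (ε : ℝ) (x : Euc 3) : scaleX ε x = embed3 (projα x) (ε * x 2) := by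
  ext i; fin_cases i <;> simp [scaleX, updCoord, embed3, projα]

lemma continuous_scaleX (ε : ℝ) : Continuous (scaleX ε) := by
  have : scaleX ε = fun x => embed3 (projα x) (ε * x 2) := funext (scaleX_eq ε)
  rw [this]
  exact continuous_embed.comp (f := fun x : Euc 3 => (projα x, ε * x 2))
    (continuous_proj.prodMk (by fun_prop))

lemma scaleX_mem {ω : Set (Euc 2)} {ε : ℝ} (h0 : 0 < ε) (h1 : ε ≤ 1) {x : Euc 3}
    (hx : x ∈ thinDomain ω) : scaleX ε x ∈ thinDomain ω := by
  rw [scaleX_eq]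
  obtain ⟨a, b, c⟩ := hx
  refine ⟨by rwa [proj_embed], ?_⟩
  rw [embed_two]
  constructor <;> nlinarith

/-- For `0 < ε ≤ 1` the vertical scaling maps `Ω` into itself and is nonsingular, so that
properties holding almost everywhere pull back. -/
lemma ae_scale {ω : Set (Euc 2)} (hω : MeasurableSet (thinDomain ω)) {ε : ℝ} (h0 : 0 < ε)
    (h1 : ε ≤ 1) {P : Euc 3 → Prop} (h : ∀ᵐ x ∂(volume.restrict (thinDomain ω)), P x) :
    ∀ᵐ x ∂(volume.restrict (thinDomain ω)), P (scaleX ε x) := by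
  rw [ae_restrict_iff' hω] at h ⊢
  let L : Euc 3 →ₗ[ℝ] Euc 3 :=
    { toFun := scaleX ε
      map_add' := fun x y => by
        ext i; fin_cases i <;> simp [scaleX, updCoord, mul_add]
      map_smul' := fun c x => by
        ext i; fin_cases i <;> simp [scaleX, updCoord]; ring }
  have hinj : Function.Injective L := by
    intro x y hxy
    have h2 : embed3 (projα x) (ε * x 2) = embed3 (projα y) (ε * y 2) := by
      rw [← scaleX_eq, ← scaleX_eq]; exact hxy
    have h3 := congrArg projα h2
    have h4 := congrArg (fun z : Euc 3 => z 2) h2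
    simp only [proj_embed, embed_two] at h3 h4
    have h5 : x 2 = y 2 := mul_left_cancel₀ h0.ne' h4
    rw [← embed_proj x, ← embed_proj y, h3, h5]
  have hdet : LinearMap.det L ≠ 0 := by
    have := (LinearEquiv.ofInjectiveEndo L hinj).isUnit_det'
    exact this.ne_zero
  have := (Measure.LinearMap.quasiMeasurePreserving (μ := volume) L hdet).ae h
  filter_upwards [this] with x hx hxΩ
  exact hx (scaleX_mem h0 h1 hxΩ)

/-- For an exponent in `𝒫_b(Ω)` with `Ω` of positive measure, `p⁻` is a genuine lower bound
almost everywhere and not a junk value of the essential infimum. -/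
lemma pminus_facts {ω : Set (Euc 2)} {p : Euc 3 → ℝ} (hp : IsPb (thinDomain ω) p)
    (hne : volume (thinDomain ω) ≠ 0) :
    1 < pminus ω p ∧ ∃ pM, ∀ᵐ x ∂(volume.restrict (thinDomain ω)), pminus ω p ≤ p x ∧ p x ≤ pM := by
  obtain ⟨-, pm, pM, h1, h2⟩ := hp
  have : (ae (volume.restrict (thinDomain ω))).NeBot := by
    rw [ae_neBot]; intro h0; exact hne (Measure.restrict_eq_zero.1 h0)
  have hb : IsBoundedUnder (· ≥ ·) (ae (volume.restrict (thinDomain ω))) p :=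
    isBoundedUnder_of_eventually_ge (a := pm) (h2.mono fun x hx => hx.1)
  have hb' : IsCoboundedUnder (· ≥ ·) (ae (volume.restrict (thinDomain ω))) p :=
    (isBoundedUnder_of_eventually_le (a := pM) (h2.mono fun x hx => hx.2)).isCoboundedUnder_flip
  refine ⟨h1.trans_le (le_essInf_of_ae_le pm (h2.mono fun x hx => hx.1) hb'), pM, ?_⟩
  filter_upwards [h2, ae_essInf_le hb] with x hx hx'
  exact ⟨hx', hx.2⟩

lemma volume_thin_ne_zero {ω : Set (Euc 2)} (hω : IsOpen ω) (hne : ω.Nonempty) :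
    volume (thinDomain ω) ≠ 0 := by
  obtain ⟨a, ha⟩ := hne
  refine ((isOpen_thin hω).measure_pos _ ⟨embed3 a 0, ?_, ?_⟩).ne'
  · rwa [proj_embed]
  · rw [embed_two]; norm_num

lemma abs_le_scaleCol {ε : ℝ} (h0 : 0 < ε) (h1 : ε ≤ 1) (ξ : Mat 3 3) (i j : Fin 3) :
    |ξ i j| ≤ mnorm (scaleCol ε ξ) := by
  refine le_trans ?_ (abs_le_mnorm (scaleCol ε ξ) i j)
  unfold scaleCol
  split_ifs
  · rw [abs_div, abs_of_pos h0]
    exact le_div_self (abs_nonneg _) h0 h1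
  · exact le_rfl

lemma vert_le_scaleCol {ε : ℝ} (h0 : 0 < ε) (ξ : Mat 3 3) (i : Fin 3) :
    |ξ i 2| ≤ ε * mnorm (scaleCol ε ξ) := by
  have := abs_le_mnorm (scaleCol ε ξ) i 2
  simp only [scaleCol, if_true, abs_div, abs_of_pos h0] at this
  rwa [div_le_iff₀ h0, mul_comm] at this

lemma rpow_le_one_add {a : ℝ≥0∞} {r P : ℝ} (hr : 0 ≤ r) (h : r ≤ P) : a ^ r ≤ 1 + a ^ P := by
  rcases le_total a 1 with h1 | h1
  · exact (ENNReal.rpow_le_one h1 hr).trans le_self_add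
  · exact (ENNReal.rpow_le_rpow_of_exponent_le h1 h).trans le_add_self

/-- The growth condition turns the energy bound into a modular bound for the scaled gradient. -/
lemma energy_bound {ω : Set (Euc 2)} (hω : IsOpen ω)
    {f : Euc 2 → ℝ → ℝ → Mat 3 3 → ℝ} {C₁ C₂ : ℝ} (hC₁ : 0 < C₁)
    (hgrowth : ∀ᵐ xα ∂(volume.restrict ω), ∀ y ∈ Set.Ioo (-(1/2):ℝ) (1/2),
      ∀ q ∈ Set.Ici (1:ℝ), ∀ ξ : Mat 3 3,
        C₁ * mnorm ξ ^ q - 1 / C₁ ≤ f xα y q ξ ∧ f xα y q ξ ≤ C₂ * (mnorm ξ ^ q + 1))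
    {ε : ℝ} (h0 : 0 < ε) (h1 : ε ≤ 1) {P : Euc 3 → ℝ}
    (hP : ∀ᵐ x ∂(volume.restrict (thinDomain ω)), 1 ≤ P x) (G : Euc 3 → Mat 3 3) :
    ∫⁻ x in thinDomain ω, ENNReal.ofReal (mnorm (scaleCol ε (G x)) ^ P x) ≤
      ENNReal.ofReal (1 / C₁) * ((∫⁻ x in thinDomain ω, ENNReal.ofReal
        (f (projα x) (ε * x 2) (P x) (scaleCol ε (G x))))
        + ENNReal.ofReal (1 / C₁) * volume (thinDomain ω)) := by
  have hm := (isOpen_thin hω).measurableSet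
  have key : ∀ᵐ x ∂(volume.restrict (thinDomain ω)),
      ENNReal.ofReal (mnorm (scaleCol ε (G x)) ^ P x) ≤ ENNReal.ofReal (1 / C₁) *
        (ENNReal.ofReal (f (projα x) (ε * x 2) (P x) (scaleCol ε (G x)))
          + ENNReal.ofReal (1 / C₁)) := by
    filter_upwards [ae_thin_of_planar hω.measurableSet hgrowth, hP, ae_restrict_mem hm]
      with x hx hPx hxΩ
    have hy : ε * x 2 ∈ Ioo (-(1/2):ℝ) (1/2) := by
      obtain ⟨-, b, c⟩ := hxΩ
      constructor <;> nlinarith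
    have := (hx _ hy (P x) hPx (scaleCol ε (G x))).1
    have hc : 0 ≤ 1 / C₁ := by positivity
    refine le_trans (ENNReal.ofReal_le_ofReal (?_ : _ ≤ 1 / C₁ * (f (projα x) (ε * x 2) (P x)
      (scaleCol ε (G x)) + 1 / C₁))) ?_
    · rw [div_mul_eq_mul_div, le_div_iff₀ hC₁]; linarith
    · rw [ENNReal.ofReal_mul hc]
      gcongr
      exact ENNReal.ofReal_add_le
  refine (lintegral_mono_ae key).trans ?_
  rw [lintegral_const_mul' _ _ ENNReal.ofReal_ne_top]
  gcongr
  rw [lintegral_add_right _ measurable_const]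
  simp

/-- A sequence of scalar functions `U k i` (components of the displacement) and `H k i j`
(components of its gradient) on the thin domain, extended by zero, with the information extracted
from bounded energies. -/
structure Core (ω : Set (Euc 2)) (r pM : ℝ) (C : ℝ≥0∞) (P : ℕ → Euc 3 → ℝ)
    (U : ℕ → Fin 3 → Euc 3 → ℝ) (H : ℕ → Fin 3 → Fin 3 → Euc 3 → ℝ) : Prop where
  hr : 1 < r
  hC : C ≠ ⊤
  mP : ∀ k, Measurable (P k)
  hP : ∀ k, ∀ᵐ x ∂(volume.restrict (thinDomain ω)), r ≤ P k x ∧ P k x ≤ pM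
  mU : ∀ k i, Measurable (U k i)
  mH : ∀ k i j, Measurable (H k i j)
  iU : ∀ k i, Integrable (U k i)
  iH : ∀ k i j, Integrable (H k i j)
  zU : ∀ k i x, x ∉ thinDomain ω → U k i x = 0
  zH : ∀ k i j x, x ∉ thinDomain ω → H k i j x = 0
  wd : ∀ k i j, WD slab j (U k i) (H k i j)
  energy : ∀ k i j, ∫⁻ x in thinDomain ω, ‖H k i j x‖ₑ ^ P k x ≤ C
  rU : ∀ k i, ∫⁻ x in thinDomain ω, ‖U k i x‖ₑ ^ r ≤ C
  rH : ∀ k i j, ∫⁻ x in thinDomain ω, ‖H k i j x‖ₑ ^ r ≤ C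
  vert : ∀ i, Tendsto (fun k => ∫⁻ x in thinDomain ω, ‖H k i 2 x‖ₑ ^ r) atTop (𝓝 0)

/-- A horizontal translation that moves the bounded set `Ω` off itself. -/
lemma exists_translation {ω : Set (Euc 2)} (hωb : Bornology.IsBounded ω) :
    ∃ h : Euc 3, h 2 = 0 ∧ ∀ x ∈ thinDomain ω, x + h ∉ thinDomain ω := by
  obtain ⟨R, hR⟩ := (bounded_thin hωb).exists_norm_le
  refine ⟨EuclideanSpace.single 0 (2 * |R| + 1), by simp, fun x hx hx' => ?_⟩
  have h1 := (abs_apply_le_norm x 0).trans (hR x hx)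
  have h2 := (abs_apply_le_norm _ 0).trans (hR _ hx')
  simp at h2
  rw [abs_le] at h1 h2
  linarith [le_abs_self R, abs_nonneg R, h1.1, h2.2]

/-- Poincaré's inequality in `Ω` for functions extended by zero to the slab. -/
lemma poincare_thin {ω : Set (Euc 2)} (hω : IsOpen ω) {h : Euc 3} (h2 : h 2 = 0)
    (hh : ∀ x ∈ thinDomain ω, x + h ∉ thinDomain ω) {w : Euc 3 → ℝ} {g : Fin 3 → Euc 3 → ℝ}
    (hw : Integrable w) (hg : ∀ j, Integrable (g j)) (hgm : ∀ j, Measurable (g j))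
    (hWD : ∀ j, WD slab j w (g j)) (z : ∀ x ∉ thinDomain ω, w x = 0)
    (zg : ∀ j, ∀ x ∉ thinDomain ω, g j x = 0) {r : ℝ} (hr : 1 ≤ r) :
    ∫⁻ x in thinDomain ω, ‖w x‖ₑ ^ r ≤
      ‖h‖ₑ ^ r * (3 ^ r * ∑ j, ∫⁻ x in thinDomain ω, ‖g j x‖ₑ ^ r) := by
  have hr0 : 0 < r := by linarith
  have hm := (isOpen_thin hω).measurableSet
  refine (poincare (isOpen_thin hω) h ?_ hw hg hgm hWD (fun x hx => z _ (hh x hx)) hr).trans ?_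
  · intro x hx s _
    change (x + s • h) 2 ∈ Ioo (-(1/2):ℝ) (1/2)
    simpa [h2] using hx.2
  · gcongr
    rw [← lintegral_finsetSum _ (by fun_prop), ← lintegral_const_mul' _ _ (by finiteness),
      ← lintegral_indicator hm]
    apply lintegral_mono
    intro x
    by_cases hx : x ∈ thinDomain ω
    · rw [indicator_of_mem hx]
      exact (sum_rpow_le _ hr0).trans (by simp)
    · rw [indicator_of_notMem hx]
      simp [zg _ x hx, hr0]

/-! ### Uniform estimates for energy-bounded sequences -/

/-- An energy-bounded sequence has representatives, extended by zero outside `Ω`, that satisfy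
the uniform estimates collected in `Core`, with the scaled exponents `p_ε`. -/
lemma exists_core {ω : Set (Euc 2)} (hω : IsOpen ω) (hωb : Bornology.IsBounded ω)
    (hne : ω.Nonempty) {f : Euc 2 → ℝ → ℝ → Mat 3 3 → ℝ} {C₁ C₂ : ℝ} (hC₁ : 0 < C₁)
    (hgrowth : ∀ᵐ xα ∂(volume.restrict ω), ∀ y ∈ Set.Ioo (-(1/2):ℝ) (1/2),
      ∀ q ∈ Set.Ici (1:ℝ), ∀ ξ : Mat 3 3,
        C₁ * mnorm ξ ^ q - 1 / C₁ ≤ f xα y q ξ ∧ f xα y q ξ ≤ C₂ * (mnorm ξ ^ q + 1))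
    {p : Euc 3 → ℝ} (hp : IsPb (thinDomain ω) p)
    {εs : ℕ → ℝ} (hεpos : ∀ k, 0 < εs k) (hε1 : ∀ k, εs k ≤ 1)
    (hεs : Tendsto εs atTop (nhds (0:ℝ)))
    {u : ℕ → Euc 3 → Euc 3} {G : ℕ → Euc 3 → Mat 3 3}
    (hadm : ∀ k, SobAdm ω p (εs k) (u k) (G k))
    (hbound : ∃ C : ℝ≥0∞, C < ⊤ ∧ ∀ k,
      (∫⁻ x in thinDomain ω, ENNReal.ofReal
        (f (projα x) (εs k * x 2) (p (scaleX (εs k) x)) (scaleCol (εs k) (G k x)))) ≤ C) :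
    ∃ pM C U H, Core ω (pminus ω p) pM C (fun k x => p (scaleX (εs k) x)) U H ∧
      (∀ k i, ∀ᵐ x ∂(volume.restrict (thinDomain ω)), U k i x = u k x i) ∧
      (∀ k i j, ∀ᵐ x ∂(volume.restrict (thinDomain ω)), H k i j x = G k x i j) := by
  have hm := (isOpen_thin hω).measurableSet
  obtain ⟨hr, pM, hpM⟩ := pminus_facts hp (volume_thin_ne_zero hω hne)
  obtain ⟨r, hrdef⟩ : ∃ r, r = pminus ω p := ⟨_, rfl⟩
  rw [← hrdef] at hr hpM ⊢
  have hr0 : 0 < r := by linarith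
  obtain ⟨C₀, hC₀, hE⟩ := hbound
  have hV : volume (thinDomain ω) ≠ ⊤ := (bounded_thin hωb).measure_lt_top.ne
  have hPk : ∀ k, ∀ᵐ x ∂(volume.restrict (thinDomain ω)),
      r ≤ p (scaleX (εs k) x) ∧ p (scaleX (εs k) x) ≤ pM := fun k =>
    ae_scale hm (hεpos k) (hε1 k) hpM
  obtain ⟨CE, hCE⟩ : ∃ CE, CE = ENNReal.ofReal (1 / C₁) * (C₀
        + ENNReal.ofReal (1 / C₁) * volume (thinDomain ω)) := ⟨_, rfl⟩
  have hCEt : CE ≠ ⊤ := by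
    rw [hCE]; have := hC₀.ne; finiteness
  have hEn : ∀ k, ∫⁻ x in thinDomain ω,
      ENNReal.ofReal (mnorm (scaleCol (εs k) (G k x)) ^ p (scaleX (εs k) x)) ≤ CE := by
    intro k
    refine (energy_bound hω hC₁ hgrowth (hεpos k) (hε1 k)
      ((hPk k).mono fun x hx => by linarith [hx.1]) (G k)).trans ?_
    rw [hCE]
    gcongr
    exact hE k
  -- measurable representatives, extended by zero
  have hGm : ∀ k i j, AEMeasurable (fun x => G k x i j) (volume.restrict (thinDomain ω)) :=
    fun k => (hadm k).2.1
  have hum : ∀ k i, AEMeasurable (fun x => u k x i) (volume.restrict (thinDomain ω)) :=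
    fun k i => ((EuclideanSpace.proj (𝕜 := ℝ) i).continuous.comp_aestronglyMeasurable
      (hadm k).1).aemeasurable
  obtain ⟨U, hU⟩ : ∃ U : ℕ → Fin 3 → Euc 3 → ℝ,
    U = fun k i => (thinDomain ω).indicator ((hum k i).mk _) := ⟨_, rfl⟩
  obtain ⟨H, hH⟩ : ∃ H : ℕ → Fin 3 → Fin 3 → Euc 3 → ℝ,
    H = fun k i j => (thinDomain ω).indicator ((hGm k i j).mk _) := ⟨_, rfl⟩
  have eU : ∀ k i, ∀ᵐ x ∂(volume.restrict (thinDomain ω)), U k i x = u k x i := by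
    intro k i
    filter_upwards [(hum k i).ae_eq_mk, ae_restrict_mem hm] with x hx hxm
    rw [hU]; simp only [indicator_of_mem hxm]; exact hx.symm
  have eH : ∀ k i j, ∀ᵐ x ∂(volume.restrict (thinDomain ω)), H k i j x = G k x i j := by
    intro k i j
    filter_upwards [(hGm k i j).ae_eq_mk, ae_restrict_mem hm] with x hx hxm
    rw [hH]; simp only [indicator_of_mem hxm]; exact hx.symm
  have zU : ∀ k i x, x ∉ thinDomain ω → U k i x = 0 := by
    intro k i x hx; rw [hU]; exact indicator_of_notMem hx _
  have zH : ∀ k i j x, x ∉ thinDomain ω → H k i j x = 0 := by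
    intro k i j x hx; rw [hH]; exact indicator_of_notMem hx _
  have eU' : ∀ k i, ∀ᵐ x, (thinDomain ω).indicator (fun x => u k x i) x = U k i x := by
    intro k i
    filter_upwards [(ae_restrict_iff' hm).1 (eU k i)] with x hx
    by_cases hxm : x ∈ thinDomain ω
    · rw [indicator_of_mem hxm, hx hxm]
    · rw [indicator_of_notMem hxm, zU k i x hxm]
  have eH' : ∀ k i j, ∀ᵐ x, (thinDomain ω).indicator (fun x => G k x i j) x = H k i j x := by
    intro k i j
    filter_upwards [(ae_restrict_iff' hm).1 (eH k i j)] with x hx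
    by_cases hxm : x ∈ thinDomain ω
    · rw [indicator_of_mem hxm, hx hxm]
    · rw [indicator_of_notMem hxm, zH k i j x hxm]
  have mU : ∀ k i, Measurable (U k i) := by
    intro k i; rw [hU]; exact (hum k i).measurable_mk.indicator hm
  have mH : ∀ k i j, Measurable (H k i j) := by
    intro k i j; rw [hH]; exact (hGm k i j).measurable_mk.indicator hm
  have sl := fun k i j => slab_ext hω hωb hr.le (hadm k).1 (hadm k).2.1
    (hrdef ▸ (hadm k).2.2.2.1 : MemLatZero ω r (u k) (G k)) i j
  have iU : ∀ k i, Integrable (U k i) := fun k i => (sl k i 0).1.congr (eU' k i)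
  have iH : ∀ k i j, Integrable (H k i j) := fun k i j => (sl k i j).2.1.congr (eH' k i j)
  have wd : ∀ k i j, WD slab j (U k i) (H k i j) := fun k i j =>
    (sl k i j).2.2.congr_on ((eU' k i).mono fun x hx _ => hx) ((eH' k i j).mono fun x hx _ => hx)
  -- modular bound on each entry
  have hen : ∀ a b : ℝ, ∀ q : ℝ, 0 ≤ q → |a| ≤ b → ‖a‖ₑ ^ q ≤ ENNReal.ofReal (b ^ q) := by
    intro a b q hq hab
    rw [Real.enorm_eq_ofReal_abs, ENNReal.ofReal_rpow_of_nonneg (abs_nonneg _) hq]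
    exact ENNReal.ofReal_le_ofReal (Real.rpow_le_rpow (abs_nonneg _) hab hq)
  have en : ∀ k i j, ∫⁻ x in thinDomain ω, ‖H k i j x‖ₑ ^ p (scaleX (εs k) x) ≤ CE := by
    intro k i j
    refine le_trans (lintegral_mono_ae ?_) (hEn k)
    filter_upwards [eH k i j, hPk k] with x hx hxP
    rw [hx]
    exact hen _ _ _ (by linarith [hxP.1]) (abs_le_scaleCol (hεpos k) (hε1 k) _ i j)
  have hone : ∀ {F : Euc 3 → ℝ≥0∞} {G : Euc 3 → ℝ≥0∞},
      (∀ᵐ x ∂(volume.restrict (thinDomain ω)), F x ≤ 1 + G x) →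
      ∫⁻ x in thinDomain ω, F x ≤ volume (thinDomain ω) + ∫⁻ x in thinDomain ω, G x := by
    intro F G h
    refine (lintegral_mono_ae h).trans ?_
    rw [lintegral_add_left measurable_const]; simp
  have rH : ∀ k i j, ∫⁻ x in thinDomain ω, ‖H k i j x‖ₑ ^ r ≤ volume (thinDomain ω) + CE := by
    intro k i j
    refine (hone (G := fun x => ‖H k i j x‖ₑ ^ p (scaleX (εs k) x)) ?_).trans
      (add_le_add le_rfl (en k i j))
    filter_upwards [hPk k] with x hx
    exact rpow_le_one_add hr0.le hx.1
  -- Poincaré's inequality bounds the functions by their gradients.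
  obtain ⟨h, h2, hh⟩ := exists_translation hωb
  have rU : ∀ k i, ∫⁻ x in thinDomain ω, ‖U k i x‖ₑ ^ r ≤
      ‖h‖ₑ ^ r * (3 ^ r * (3 * (volume (thinDomain ω) + CE))) := by
    intro k i
    refine (poincare_thin hω h2 hh (iU k i) (iH k i) (mH k i) (wd k i) (zU k i) (zH k i)
      hr.le).trans ?_
    gcongr
    refine (Finset.sum_le_sum fun j _ => rH k i j).trans ?_
    rw [Finset.sum_const, nsmul_eq_mul]; simp
  -- The third column of the scaled gradient carries the factor `1/ε`, so its bound forces the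
  -- unscaled transverse derivative to vanish at rate `ε`.
  have vert : ∀ i, Tendsto (fun k => ∫⁻ x in thinDomain ω, ‖H k i 2 x‖ₑ ^ r) atTop (𝓝 0) := by
    intro i
    have hb : ∀ k, ∫⁻ x in thinDomain ω, ‖H k i 2 x‖ₑ ^ r ≤
        ENNReal.ofReal (εs k) ^ r * (volume (thinDomain ω) + CE) := by
      intro k
      calc ∫⁻ x in thinDomain ω, ‖H k i 2 x‖ₑ ^ r
          ≤ ∫⁻ x in thinDomain ω, ENNReal.ofReal (εs k) ^ r * (1 +
            ENNReal.ofReal (mnorm (scaleCol (εs k) (G k x)) ^ p (scaleX (εs k) x))) := by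
            apply lintegral_mono_ae
            filter_upwards [eH k i 2, hPk k] with x hx hxP
            rw [hx]
            have h1 : ‖G k x i 2‖ₑ ≤ ENNReal.ofReal (εs k) *
                ENNReal.ofReal (mnorm (scaleCol (εs k) (G k x))) := by
              rw [Real.enorm_eq_ofReal_abs, ← ENNReal.ofReal_mul (hεpos k).le]
              exact ENNReal.ofReal_le_ofReal (vert_le_scaleCol (hεpos k) _ i)
            refine (ENNReal.rpow_le_rpow h1 hr0.le).trans ?_
            rw [ENNReal.mul_rpow_of_nonneg _ _ hr0.le]
            gcongr
            rw [← ENNReal.ofReal_rpow_of_nonneg (mnorm_nonneg _) (by linarith [hxP.1])]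
            exact rpow_le_one_add hr0.le hxP.1
        _ ≤ _ := by
            rw [lintegral_const_mul' _ _ (by finiteness)]
            gcongr
            exact (hone (Eventually.of_forall fun x => le_rfl)).trans (add_le_add le_rfl (hEn k))
    refine tendsto_of_tendsto_of_tendsto_of_le_of_le tendsto_const_nhds ?_ (fun _ => zero_le) hb
    have h1 : Tendsto (fun k => ENNReal.ofReal (εs k) ^ r) atTop (𝓝 0) := by
      have := (ENNReal.continuous_rpow_const (y := r)).tendsto 0 |>.comp
        (by simpa using ENNReal.tendsto_ofReal hεs : Tendsto (fun k => ENNReal.ofReal (εs k))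
          atTop (𝓝 0))
      simpa [hr0, Function.comp_def] using this
    have := ENNReal.Tendsto.mul_const h1 (b := volume (thinDomain ω) + CE)
      (Or.inr (by finiteness))
    simpa using this
  refine ⟨pM, CE + ((volume (thinDomain ω) + CE) +
    ‖h‖ₑ ^ r * (3 ^ r * (3 * (volume (thinDomain ω) + CE)))), U, H, ?_, eU, eH⟩
  exact
    { hr := hr
      hC := by finiteness
      mP := fun k => hp.1.comp (continuous_scaleX _).measurable
      hP := hPk
      mU := mU, mH := mH, iU := iU, iH := iH, zU := zU, zH := zH, wd := wd
      energy := fun k i j => (en k i j).trans le_self_add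
      rU := fun k i => (rU k i).trans (le_add_self.trans le_add_self)
      rH := fun k i j => (rH k i j).trans (le_self_add.trans le_add_self)
      vert := vert }

/-! ### The planar weak limit -/

/-- The planar limit of a sequence: functions `V i` with weak partial derivatives `K i l` on the
plane, vanishing outside `ω`, which are the weak limits of the sequence on the thin domain. -/
structure Lim (ω : Set (Euc 2)) (r : ℝ) (C : ℝ≥0∞)
    (U : ℕ → Fin 3 → Euc 3 → ℝ) (H : ℕ → Fin 3 → Fin 3 → Euc 3 → ℝ)
    (V : Fin 3 → Euc 2 → ℝ) (K : Fin 3 → Fin 2 → Euc 2 → ℝ) : Prop where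
  mV : ∀ i, Measurable (V i)
  mK : ∀ i l, Measurable (K i l)
  iV : ∀ i, Integrable (V i)
  iK : ∀ i l, Integrable (K i l)
  zV : ∀ i a, a ∉ ω → V i a = 0
  zK : ∀ i l a, a ∉ ω → K i l a = 0
  wd : ∀ i l, WD univ l (V i) (K i l)
  rV : ∀ i, ∫⁻ a in ω, ‖V i a‖ₑ ^ r ≤ C
  rK : ∀ i l, ∫⁻ a in ω, ‖K i l a‖ₑ ^ r ≤ C
  cU : ∀ i (g : Euc 3 → ℝ), Measurable g → ∫⁻ x in thinDomain ω, ‖g x‖ₑ ^ conj r < ⊤ →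
    Tendsto (fun k => ∫ x in thinDomain ω, g x * U k i x) atTop
      (𝓝 (∫ x in thinDomain ω, g x * V i (projα x)))
  cH : ∀ i l (g : Euc 3 → ℝ), Measurable g → ∫⁻ x in thinDomain ω, ‖g x‖ₑ ^ conj r < ⊤ →
    Tendsto (fun k => ∫ x in thinDomain ω, g x * H k i (Fin.castSucc l) x) atTop
      (𝓝 (∫ x in thinDomain ω, g x * K i l (projα x)))
  c2 : ∀ i (g : Euc 3 → ℝ), Measurable g → ∫⁻ x in thinDomain ω, ‖g x‖ₑ ^ conj r < ⊤ →
    Tendsto (fun k => ∫ x in thinDomain ω, g x * H k i 2 x) atTop (𝓝 0)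

lemma conj_pos {r : ℝ} (hr : 1 < r) : 0 < conj r := (holder_conj hr).symm.pos

lemma lint_bdd_rpow {α : Type*} [MeasurableSpace α] {μ : Measure α} [IsFiniteMeasure μ]
    {g : α → ℝ} {M : ℝ} (hg : ∀ x, |g x| ≤ M) {s : ℝ} (hs : 0 ≤ s) :
    ∫⁻ x, ‖g x‖ₑ ^ s ∂μ < ⊤ := by
  have : ∀ x, ‖g x‖ₑ ^ s ≤ ENNReal.ofReal M ^ s := fun x => by
    refine ENNReal.rpow_le_rpow ?_ hs
    rw [← ofReal_norm]
    exact ENNReal.ofReal_le_ofReal (hg x)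
  refine (lintegral_mono this).trans_lt ?_
  rw [lintegral_const]
  exact ENNReal.mul_lt_top (ENNReal.rpow_lt_top_of_nonneg hs ENNReal.ofReal_ne_top)
    (measure_lt_top _ _)

/-- A weak limit of functions converging strongly to zero vanishes. -/
lemma weak_limit_zero {α : Type*} [MeasurableSpace α] {μ : Measure α} [IsFiniteMeasure μ]
    {r : ℝ} (hr : 1 < r) {f : ℕ → α → ℝ} {f₀ : α → ℝ}
    (hi : Integrable f₀ μ) (hm : Measurable f₀)
    (hlim : ∀ g : α → ℝ, AEMeasurable g μ → ∫⁻ a, ‖g a‖ₑ ^ conj r ∂μ < ⊤ →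
        Tendsto (fun k => ∫ a, g a * f k a ∂μ) atTop (𝓝 (∫ a, g a * f₀ a ∂μ)))
    (h0 : Tendsto (fun k => ∫⁻ x, ‖f k x‖ₑ ∂μ) atTop (𝓝 0)) : ∀ᵐ x ∂μ, f₀ x = 0 := by
  obtain ⟨g, hg⟩ : ∃ g : α → ℝ, g = fun x => if 0 ≤ f₀ x then 1 else -1 := ⟨_, rfl⟩
  have hgm : Measurable g := by
    rw [hg]; exact Measurable.ite (measurableSet_le measurable_const hm) measurable_const
      measurable_const
  have hgb : ∀ x, |g x| ≤ 1 := by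
    intro x; rw [hg]; dsimp only; split_ifs <;> simp
  have h1 := hlim g hgm.aemeasurable (lint_bdd_rpow hgb (conj_pos hr).le)
  have h2 : Tendsto (fun k => ∫ a, g a * f k a ∂μ) atTop (𝓝 0) := by
    rw [tendsto_zero_iff_enorm_tendsto_zero]
    refine tendsto_of_tendsto_of_tendsto_of_le_of_le tendsto_const_nhds h0 (fun _ => zero_le)
      fun k => (enorm_integral_le_lintegral_enorm _).trans (lintegral_mono fun x => ?_)
    rw [enorm_mul]
    refine mul_le_of_le_one_left zero_le ?_
    rw [← ofReal_norm]
    exact ENNReal.ofReal_le_one.2 (hgb x)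
  have h3 := tendsto_nhds_unique h1 h2
  have h4 : ∀ x, g x * f₀ x = |f₀ x| := by
    intro x; rw [hg]; dsimp only; split_ifs with h
    · rw [one_mul, abs_of_nonneg h]
    · rw [abs_of_neg (not_le.1 h)]; ring
  simp only [h4] at h3
  rw [integral_eq_zero_iff_of_nonneg (fun x => abs_nonneg _) hi.abs] at h3
  filter_upwards [h3] with x hx
  exact abs_eq_zero.1 hx

lemma ae_slab_ext {ω : Set (Euc 2)} (hω : IsOpen ω) {f : Euc 3 → ℝ}
    (h : ∀ᵐ x ∂(volume.restrict (thinDomain ω)), f x = 0) :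
    ∀ᵐ x, (thinDomain ω).indicator f x = 0 := by
  rw [ae_restrict_iff' (isOpen_thin hω).measurableSet] at h
  filter_upwards [h] with x hx
  by_cases hm : x ∈ thinDomain ω
  · rw [indicator_of_mem hm]; exact hx hm
  · exact indicator_of_notMem hm _

/-- Along a subsequence a sequence with bounded energy converges weakly to a planar limit. -/
lemma exists_lim {ω : Set (Euc 2)} (hω : IsOpen ω) (hωb : Bornology.IsBounded ω)
    {r pM : ℝ} {C : ℝ≥0∞} {P : ℕ → Euc 3 → ℝ}
    {U : ℕ → Fin 3 → Euc 3 → ℝ} {H : ℕ → Fin 3 → Fin 3 → Euc 3 → ℝ} (c : Core ω r pM C P U H) :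
    ∃ φ V K, StrictMono φ ∧ Lim ω r C (fun k => U (φ k)) (fun k => H (φ k)) V K := by
  have hm := (isOpen_thin hω).measurableSet
  have hr := c.hr
  have : IsFiniteMeasure (volume.restrict (thinDomain ω)) :=
    ⟨by simpa using (bounded_thin hωb).measure_lt_top⟩
  obtain ⟨φ, f₀, hφ, hf⟩ := weak_compact (μ := volume.restrict (thinDomain ω))
    (ι := Fin 3 ⊕ Fin 3 × Fin 3) hr
    (f := fun i k => Sum.elim (fun i => U k i) (fun ij => H k ij.1 ij.2) i)
    (by
      rintro (i | ij) k
      · exact (c.mU k i).aemeasurable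
      · exact (c.mH k ij.1 ij.2).aemeasurable) c.hC
    (by
      rintro (i | ij) k
      · exact c.rU k i
      · exact c.rH k ij.1 ij.2)
  obtain ⟨U₀, hU₀⟩ : ∃ U₀ : Fin 3 → Euc 3 → ℝ,
    U₀ = fun i => (thinDomain ω).indicator (f₀ (.inl i)) := ⟨_, rfl⟩
  obtain ⟨H₀, hH₀⟩ : ∃ H₀ : Fin 3 → Fin 3 → Euc 3 → ℝ,
    H₀ = fun i j => (thinDomain ω).indicator (f₀ (.inr (i, j))) := ⟨_, rfl⟩
  have mU₀ : ∀ i, Measurable (U₀ i) := fun i => by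
    rw [hU₀]; exact (hf (.inl i)).1.indicator hm
  have mH₀ : ∀ i j, Measurable (H₀ i j) := fun i j => by
    rw [hH₀]; exact (hf (.inr (i, j))).1.indicator hm
  have iU₀ : ∀ i, Integrable (U₀ i) := fun i => by
    rw [hU₀]
    exact (integrable_indicator_iff hm).2 (integrable_of_rpow hr.le (hf (.inl i)).1.aemeasurable
      ((hf (.inl i)).2.1.trans_lt c.hC.lt_top))
  have iH₀ : ∀ i j, Integrable (H₀ i j) := fun i j => by
    rw [hH₀]
    exact (integrable_indicator_iff hm).2 (integrable_of_rpow hr.le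
      (hf (.inr (i, j))).1.aemeasurable ((hf (.inr (i, j))).2.1.trans_lt c.hC.lt_top))
  -- testing on the whole space is testing on `Ω`
  have test : ∀ (h : Euc 3 → ℝ) (w : Euc 3 → ℝ), (∀ x ∉ thinDomain ω, w x = 0) →
      ∫ x, h x * w x = ∫ x in thinDomain ω, h x * w x := by
    intro h w hw
    rw [setIntegral_eq_integral_of_forall_compl_eq_zero]
    intro x hx; rw [hw x hx, mul_zero]
  have tU : ∀ i (h : Euc 3 → ℝ), Continuous h → HasCompactSupport h → tsupport h ⊆ slab →
      Tendsto (fun k => ∫ x, h x * U (φ k) i x) atTop (𝓝 (∫ x, h x * U₀ i x)) := by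
    intro i h h1 h2 _
    obtain ⟨M, hM⟩ := h1.bounded_above_of_compact_support h2
    have := (hf (.inl i)).2.2 h h1.aemeasurable (lint_bdd_rpow hM (conj_pos hr).le)
    simp only [Sum.elim_inl] at this
    rw [test h (U₀ i) (fun x hx => by rw [hU₀]; exact indicator_of_notMem hx _)]
    simp only [fun k => test h (U (φ k) i) (c.zU _ i)]
    convert this using 2
    refine setIntegral_congr_fun hm fun x hx => ?_
    simp only [hU₀, indicator_of_mem hx]
  have tH : ∀ i j (h : Euc 3 → ℝ), Continuous h → HasCompactSupport h → tsupport h ⊆ slab →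
      Tendsto (fun k => ∫ x, h x * H (φ k) i j x) atTop (𝓝 (∫ x, h x * H₀ i j x)) := by
    intro i j h h1 h2 _
    obtain ⟨M, hM⟩ := h1.bounded_above_of_compact_support h2
    have := (hf (.inr (i, j))).2.2 h h1.aemeasurable (lint_bdd_rpow hM (conj_pos hr).le)
    simp only [Sum.elim_inr] at this
    rw [test h (H₀ i j) (fun x hx => by rw [hH₀]; exact indicator_of_notMem hx _)]
    simp only [fun k => test h (H (φ k) i j) (c.zH _ i j)]
    convert this using 2
    refine setIntegral_congr_fun hm fun x hx => ?_
    simp only [hH₀, indicator_of_mem hx]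
  have wd₀ : ∀ i j, WD slab j (U₀ i) (H₀ i j) := fun i j =>
    WD.lim (Eventually.of_forall fun k => c.wd (φ k) i j) (tU i) (tH i j)
  -- The transverse derivatives converge strongly to zero, so their weak limit vanishes.
  have hf2 : ∀ i, ∀ᵐ x ∂(volume.restrict (thinDomain ω)), f₀ (.inr (i, 2)) x = 0 := by
    intro i
    refine weak_limit_zero hr (f := fun k => H (φ k) i 2)
      (integrable_of_rpow hr.le (hf (.inr (i, 2))).1.aemeasurable
        ((hf (.inr (i, 2))).2.1.trans_lt c.hC.lt_top))
      (hf (.inr (i, 2))).1 (hf (.inr (i, 2))).2.2 ?_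
    have := tendsto_L1_of_rpow (μ := volume.restrict (thinDomain ω))
      (f := fun k x => ‖H (φ k) i 2 x‖ₑ) (fun k => (c.mH _ _ _).enorm.aemeasurable) hr.le
      ((c.vert i).comp hφ.tendsto_atTop)
    exact this
  have h2₀ : ∀ i, ∀ᵐ x, x ∈ slab → H₀ i 2 x = 0 := by
    intro i
    rw [hH₀]
    filter_upwards [ae_slab_ext hω (hf2 i)] with x hx _ using hx
  have red := fun i => planar_reduction (mU₀ i) (iU₀ i) (iH₀ i) (mH₀ i) (wd₀ i) (h2₀ i)
  have zero : ∀ (w : Euc 3 → ℝ), (∀ x ∉ thinDomain ω, w x = 0) → ∀ a ∉ ω, planar w a = 0 := by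
    intro w hw a ha
    have : ∀ s, w (embed3 a s) = 0 := fun s => hw _ fun h => ha (by
      have := h.1; rwa [proj_embed] at this)
    simp [planar, this]
  have zU₀ : ∀ i, ∀ x ∉ thinDomain ω, U₀ i x = 0 := fun i x hx => by
    rw [hU₀]; exact indicator_of_notMem hx _
  have zH₀ : ∀ i j, ∀ x ∉ thinDomain ω, H₀ i j x = 0 := fun i j x hx => by
    rw [hH₀]; exact indicator_of_notMem hx _
  have eqU : ∀ i, ∀ᵐ x ∂(volume.restrict (thinDomain ω)),
      f₀ (.inl i) x = planar (U₀ i) (projα x) := by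
    intro i
    filter_upwards [ae_restrict_of_ae (red i).1, ae_restrict_mem hm] with x hx hxm
    rw [← hx hxm.2, hU₀]; simp only [indicator_of_mem hxm]
  have eqH : ∀ i j, ∀ᵐ x ∂(volume.restrict (thinDomain ω)),
      f₀ (.inr (i, j)) x = planar (H₀ i j) (projα x) := by
    intro i j
    filter_upwards [ae_restrict_of_ae ((red i).2 j), ae_restrict_mem hm] with x hx hxm
    rw [← hx hxm.2, hH₀]; simp only [indicator_of_mem hxm]
  have rV : ∀ i, ∫⁻ a in ω, ‖planar (U₀ i) a‖ₑ ^ r ≤ C := by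
    intro i
    have hmm : Measurable fun a => ‖planar (U₀ i) a‖ₑ ^ r :=
      (measurable_planar (mU₀ i)).enorm.pow_const _
    rw [← lint_proj hω.measurableSet hmm]
    refine le_trans (le_of_eq (lintegral_congr_ae ?_)) (hf (.inl i)).2.1
    filter_upwards [eqU i] with x hx
    rw [hx]
  have rK : ∀ i j, ∫⁻ a in ω, ‖planar (H₀ i j) a‖ₑ ^ r ≤ C := by
    intro i j
    have hmm : Measurable fun a => ‖planar (H₀ i j) a‖ₑ ^ r :=
      (measurable_planar (mH₀ i j)).enorm.pow_const _
    rw [← lint_proj hω.measurableSet hmm]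
    refine le_trans (le_of_eq (lintegral_congr_ae ?_)) (hf (.inr (i, j))).2.1
    filter_upwards [eqH i j] with x hx
    rw [hx]
  have : IsFiniteMeasure (volume.restrict ω) := ⟨by simpa using hωb.measure_lt_top⟩
  have int : ∀ w : Euc 2 → ℝ, Measurable w → (∀ a ∉ ω, w a = 0) → ∫⁻ a in ω, ‖w a‖ₑ ^ r ≤ C →
      Integrable w := by
    intro w h1 h2 h3
    have := (integrable_indicator_iff hω.measurableSet).2
      (integrable_of_rpow hr.le h1.aemeasurable (h3.trans_lt c.hC.lt_top))
    rwa [indicator_eq_self.2] at this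
    intro a ha
    by_contra h; exact ha (h2 a h)
  refine ⟨φ, fun i => planar (U₀ i), fun i l => planar (H₀ i l.castSucc), hφ, ?_⟩
  constructor
  · exact fun i => measurable_planar (mU₀ i)
  · exact fun i l => measurable_planar (mH₀ i _)
  · exact fun i => int _ (measurable_planar (mU₀ i)) (zero _ (zU₀ i)) (rV i)
  · exact fun i l => int _ (measurable_planar (mH₀ i _)) (zero _ (zH₀ i _)) (rK i _)
  · exact fun i => zero _ (zU₀ i)
  · exact fun i l => zero _ (zH₀ i _)
  · exact fun i l => (wd₀ i l.castSucc).to_planar (red i).1 ((red i).2 _)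
  · exact rV
  · exact fun i l => rK i _
  · intro i g h1 h2
    have := (hf (.inl i)).2.2 g h1.aemeasurable h2
    simp only [Sum.elim_inl] at this
    convert this using 2
    refine integral_congr_ae ?_
    filter_upwards [eqU i] with x hx
    rw [hx]
  · intro i l g h1 h2
    have := (hf (.inr (i, l.castSucc))).2.2 g h1.aemeasurable h2
    simp only [Sum.elim_inr] at this
    convert this using 2
    refine integral_congr_ae ?_
    filter_upwards [eqH i l.castSucc] with x hx
    rw [hx]
  · intro i g h1 h2
    have := (hf (.inr (i, 2))).2.2 g h1.aemeasurable h2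
    simp only [Sum.elim_inr] at this
    convert this using 2
    rw [← integral_zero (α := Euc 3) (G := ℝ) (μ := volume.restrict (thinDomain ω))]
    refine integral_congr_ae ?_
    filter_upwards [hf2 i] with x hx
    rw [hx, mul_zero]

/-! ### Lower semicontinuity of the modular -/

lemma young_sign {p : ℝ} (hp : 1 < p) (a b : ℝ) :
    p * (|a| ^ (p - 1) * SignType.sign a) * b ≤ (p - 1) * |a| ^ p + |b| ^ p := by
  have h := Real.young_inequality b (|a| ^ (p - 1) * SignType.sign a) (holder_conj hp)
  have hp0 : 0 < p := by linarith
  have hp1 : 0 < p - 1 := by linarith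
  have h2 : |(|a| ^ (p - 1) * (SignType.sign a : ℝ))| ^ conj p ≤ |a| ^ p := by
    rw [abs_mul, abs_of_nonneg (by positivity : (0:ℝ) ≤ |a| ^ (p - 1))]
    have h3 : |(SignType.sign a : ℝ)| ≤ 1 := by
      rcases lt_trichotomy a 0 with h | h | h <;> simp [h]
    calc (|a| ^ (p - 1) * |(SignType.sign a : ℝ)|) ^ conj p
        ≤ (|a| ^ (p - 1)) ^ conj p := by
          apply Real.rpow_le_rpow (by positivity) _ (conj_pos hp).le
          exact mul_le_of_le_one_right (by positivity) h3
      _ = |a| ^ p := by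
          rw [← Real.rpow_mul (abs_nonneg _)]; congr 1; unfold conj; field_simp
  have h4 : p * (|b| ^ p / p + |(|a| ^ (p - 1) * (SignType.sign a : ℝ))| ^ conj p / conj p)
      ≤ |b| ^ p + (p - 1) * |a| ^ p := by
    have : p * (|b| ^ p / p + |(|a| ^ (p - 1) * (SignType.sign a : ℝ))| ^ conj p / conj p)
      = |b| ^ p + (p - 1) * |(|a| ^ (p - 1) * (SignType.sign a : ℝ))| ^ conj p := by
      unfold conj; field_simp
    rw [this]; gcongr
  have h5 := mul_le_mul_of_nonneg_left h hp0.le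
  linarith

lemma sign_mul_self_rpow {p : ℝ} (hp : 1 < p) (a : ℝ) :
    p * (|a| ^ (p - 1) * SignType.sign a) * a = p * |a| ^ p := by
  have h1 : (SignType.sign a : ℝ) * a = |a| := by
    rcases lt_trichotomy a 0 with h | h | h
    · simp [h, abs_of_neg h]
    · simp [h]
    · simp [h, abs_of_pos h]
  rw [mul_assoc, mul_assoc, h1]
  rcases eq_or_ne a 0 with rfl | ha
  · simp [Real.zero_rpow (by linarith : p ≠ 0)]
  · congr 1
    rw [← Real.rpow_add_one (abs_ne_zero.2 ha)]; congr 1; ring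

/-- Lower semicontinuity of the modular for weak convergence, on the set where a function `a`
coincides with the weak limit and is bounded: convexity in the form of Young's inequality
reduces it to the convergence of products of strongly and weakly convergent sequences. -/
lemma lsc_trunc {α : Type*} [MeasurableSpace α] {μ : Measure α} [IsFiniteMeasure μ] {r pM : ℝ}
    (hr : 1 < r) {P : ℕ → α → ℝ} {P₀ : α → ℝ} (mP : ∀ k, Measurable (P k)) (mP₀ : Measurable P₀)
    (hP : ∀ k, ∀ᵐ x ∂μ, r ≤ P k x ∧ P k x ≤ pM) {A : Set α}
    (hlim : ∀ᵐ x ∂μ, x ∈ A → Tendsto (fun k => P k x) atTop (𝓝 (P₀ x)))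
    {g : ℕ → α → ℝ} {g₀ : α → ℝ} (mg : ∀ k, Measurable (g k)) (ig₀ : Integrable g₀ μ)
    {C : ℝ≥0∞} (hC : C ≠ ⊤) (hE : ∀ k, ∫⁻ x, ‖g k x‖ₑ ^ P k x ∂μ ≤ C)
    (hR : ∀ k, ∫⁻ x, ‖g k x‖ₑ ^ r ∂μ ≤ C)
    (hw : ∀ h : α → ℝ, Measurable h → ∫⁻ x, ‖h x‖ₑ ^ conj r ∂μ < ⊤ →
      Tendsto (fun k => ∫ x, h x * g k x ∂μ) atTop (𝓝 (∫ x, h x * g₀ x ∂μ)))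
    {a : α → ℝ} (ma : Measurable a) {M : ℝ} (haM : ∀ x, |a x| ≤ M)
    (hA : MeasurableSet A) (ha : ∀ x, a x ≠ 0 → x ∈ A ∧ a x = g₀ x) :
    ∫⁻ x in A, ‖a x‖ₑ ^ P₀ x ∂μ ≤ C := by
  have hcr := conj_pos hr
  obtain ⟨s, hs⟩ : ∃ s : ℝ → ℝ → ℝ, s = fun p a => p * (|a| ^ (p - 1) * (SignType.sign a : ℝ)) :=
    ⟨_, rfl⟩
  -- on `a ≠ 0` all exponents are under control; elsewhere everything vanishes
  have hgood : ∀ᵐ x ∂μ, (∀ k, r ≤ P k x ∧ P k x ≤ pM) ∧ (x ∈ A → r ≤ P₀ x) ∧ (a x ≠ 0 →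
      (Tendsto (fun k => P k x) atTop (𝓝 (P₀ x)) ∧ r ≤ P₀ x ∧ P₀ x ≤ pM)) := by
    filter_upwards [ae_all_iff.2 hP, hlim] with x h1 h2
    refine ⟨h1, fun hx => ge_of_tendsto' (h2 hx) fun k => (h1 k).1, fun hx => ?_⟩
    have h3 := h2 (ha x hx).1
    exact ⟨h3, ge_of_tendsto' h3 fun k => (h1 k).1, le_of_tendsto' h3 fun k => (h1 k).2⟩
  have bpow : ∀ (x : α) (q : ℝ), 0 ≤ q → q ≤ pM → |a x| ^ q ≤ (1 + |M|) ^ pM := by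
    intro x q h0 h1
    calc |a x| ^ q ≤ (1 + |M|) ^ q :=
          Real.rpow_le_rpow (abs_nonneg _) ((haM x).trans (by linarith [le_abs_self M])) h0
      _ ≤ _ := Real.rpow_le_rpow_of_exponent_le (by linarith [abs_nonneg M]) h1
  obtain ⟨B, hB⟩ : ∃ B, B = pM * (1 + |M|) ^ pM := ⟨_, rfl⟩
  have sb : ∀ (x : α) (q : ℝ), r ≤ q → q ≤ pM → |s q (a x)| ≤ B := by
    intro x q h1 h2
    have h3 : |(SignType.sign (a x) : ℝ)| ≤ 1 := by
      rcases lt_trichotomy (a x) 0 with h | h | h <;> simp [h]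
    rw [hs, hB]
    simp only
    rw [abs_mul, abs_mul, abs_of_nonneg (by linarith : 0 ≤ q),
      abs_of_nonneg (by positivity : (0:ℝ) ≤ |a x| ^ (q - 1))]
    have h4 := bpow x (q - 1) (by linarith) (by linarith)
    have h5 : |a x| ^ (q - 1) * |(SignType.sign (a x) : ℝ)| ≤ (1 + |M|) ^ pM :=
      (mul_le_of_le_one_right (by positivity) h3).trans h4
    exact mul_le_mul h2 h5 (by positivity) (by linarith)
  have msg : Measurable fun t : ℝ => (SignType.sign t : ℝ) := by
    have : (fun t : ℝ => (SignType.sign t : ℝ)) =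
        fun t => if 0 < t then 1 else if t < 0 then -1 else 0 := by
      ext t; rcases lt_trichotomy t 0 with h | h | h
      · simp [h, not_lt.2 h.le]
      · simp [h]
      · simp [h]
    rw [this]
    exact Measurable.ite (measurableSet_lt measurable_const measurable_id) measurable_const
      (Measurable.ite (measurableSet_lt measurable_id measurable_const) measurable_const
        measurable_const)
  have ms : ∀ {Q : α → ℝ}, Measurable Q → Measurable fun x => s (Q x) (a x) := by
    intro Q hQ
    rw [hs]
    exact hQ.mul ((ma.abs.pow (hQ.sub_const 1)).mul (msg.comp ma))
  -- the limit multiplier is replaced by zero off `a ≠ 0`, where it vanishes for `P k`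
  obtain ⟨t₀, ht₀⟩ : ∃ t₀ : α → ℝ, t₀ = fun x => if a x = 0 then 0 else s (P₀ x) (a x) := ⟨_, rfl⟩
  have mt₀ : Measurable t₀ := by
    rw [ht₀]
    exact Measurable.ite (measurableSet_eq_fun ma measurable_const) measurable_const (ms mP₀)
  have s0 : ∀ q, s q 0 = 0 := fun q => by rw [hs]; simp
  have hB0 : ∀ᵐ x ∂μ, 0 ≤ B := by
    filter_upwards [hgood] with x hx
    exact (abs_nonneg _).trans (sb x _ (hx.1 0).1 (hx.1 0).2)
  have t₀b : ∀ᵐ x ∂μ, |t₀ x| ≤ B := by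
    filter_upwards [hgood, hB0] with x hx hx0
    rw [ht₀]; dsimp only
    split_ifs with h
    · simpa using hx0
    · exact sb x _ (hx.2.2 h).2.1 (hx.2.2 h).2.2
  have skb : ∀ k, ∀ᵐ x ∂μ, |s (P k x) (a x)| ≤ B := fun k => by
    filter_upwards [hP k] with x hx using sb x _ hx.1 hx.2
  have slim : ∀ᵐ x ∂μ, Tendsto (fun k => s (P k x) (a x)) atTop (𝓝 (t₀ x)) := by
    filter_upwards [hgood] with x hx
    by_cases h : a x = 0
    · simp [h, s0, ht₀]
    · rw [ht₀]; simp only [h, if_false]; rw [hs]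
      have h1 := (hx.2.2 h).1
      exact h1.mul ((tendsto_const_nhds.rpow (h1.sub_const 1)
        (Or.inl (abs_ne_zero.2 h))).mul_const _)
  have ebd : ∀ {y : ℝ} {b : ℝ}, |y| ≤ b → ‖y‖ₑ ≤ ENNReal.ofReal b := fun h => by
    rw [← ofReal_norm]; exact ENNReal.ofReal_le_ofReal h
  have conv : Tendsto (fun k => ∫⁻ x, ‖s (P k x) (a x) - t₀ x‖ₑ ^ conj r ∂μ) atTop (𝓝 0) := by
    have := tendsto_lintegral_of_dominated_convergence (μ := μ)
      (F := fun k x => ‖s (P k x) (a x) - t₀ x‖ₑ ^ conj r) (f := fun _ => 0)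
      (fun _ => ENNReal.ofReal (2 * B) ^ conj r)
      (fun k => ((ms (mP k)).sub mt₀).enorm.pow_const _) (fun k => ?_) ?_ ?_
    · simpa using this
    · filter_upwards [skb k, t₀b] with x h1 h2
      refine ENNReal.rpow_le_rpow (ebd ?_) hcr.le
      calc |s (P k x) (a x) - t₀ x| ≤ |s (P k x) (a x)| + |t₀ x| := abs_sub _ _
        _ ≤ 2 * B := by linarith
    · rw [lintegral_const]
      exact ENNReal.mul_ne_top (ENNReal.rpow_ne_top_of_nonneg hcr.le ENNReal.ofReal_ne_top)
        (measure_ne_top _ _)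
    · filter_upwards [slim] with x hx
      have h1 : Tendsto (fun k => ‖s (P k x) (a x) - t₀ x‖ₑ) atTop (𝓝 0) := by
        have := (hx.sub_const (t₀ x)).enorm
        simpa using this
      have := h1.ennrpow_const (conj r)
      rwa [ENNReal.zero_rpow_of_pos hcr] at this
  have iag : ∀ k, Integrable (g k) μ := fun k => integrable_of_rpow hr.le (mg k).aemeasurable
    ((hR k).trans_lt hC.lt_top)
  have isg : ∀ k, Integrable (fun x => s (P k x) (a x) * g k x) μ := fun k =>
    (iag k).bdd_mul (ms (mP k)).aestronglyMeasurable (skb k)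
  have itg : ∀ k, Integrable (fun x => t₀ x * g k x) μ := fun k =>
    (iag k).bdd_mul mt₀.aestronglyMeasurable t₀b
  have L1 : Tendsto (fun k => ∫ x, s (P k x) (a x) * g k x ∂μ) atTop (𝓝 (∫ x, t₀ x * g₀ x ∂μ)) := by
    have h1 := hw t₀ mt₀ (by
      refine (lintegral_mono_ae (t₀b.mono fun x hx =>
        ENNReal.rpow_le_rpow (ebd hx) hcr.le)).trans_lt ?_
      rw [lintegral_const]
      exact ENNReal.mul_lt_top (ENNReal.rpow_lt_top_of_nonneg hcr.le ENNReal.ofReal_ne_top)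
        (measure_lt_top _ _))
    have h2 : Tendsto (fun k => ∫ x, (s (P k x) (a x) - t₀ x) * g k x ∂μ) atTop (𝓝 0) := by
      rw [tendsto_zero_iff_enorm_tendsto_zero]
      have h3 : Tendsto (fun k => (∫⁻ x, ‖s (P k x) (a x) - t₀ x‖ₑ ^ conj r ∂μ) ^ (1 / conj r)
          * C ^ (1 / r)) atTop (𝓝 0) := by
        have h4 := conv.ennrpow_const (1 / conj r)
        rw [ENNReal.zero_rpow_of_pos (by positivity)] at h4
        have := ENNReal.Tendsto.mul_const h4 (Or.inr
          (ENNReal.rpow_ne_top_of_nonneg (by positivity : (0:ℝ) ≤ 1 / r) hC))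
        simpa using this
      refine tendsto_of_tendsto_of_tendsto_of_le_of_le tendsto_const_nhds h3 (fun _ => zero_le)
        fun k => ?_
      refine (enorm_integral_le_lintegral_enorm _).trans ?_
      exact holder_enorm hr (mg k).aemeasurable ((ms (mP k)).sub mt₀).aemeasurable (hR k)
    have h3 := h1.add h2
    rw [add_zero] at h3
    refine h3.congr fun k => ?_
    have e : ∀ x, (s (P k x) (a x) - t₀ x) * g k x = s (P k x) (a x) * g k x - t₀ x * g k x :=
      fun x => by ring
    simp only [e]
    rw [integral_sub (isg k) (itg k)]; ring
  -- the other side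
  obtain ⟨m₀, hm₀⟩ : ∃ m₀ : α → ℝ, m₀ = fun x => if a x = 0 then 0 else |a x| ^ P₀ x := ⟨_, rfl⟩
  obtain ⟨n₀, hn₀⟩ : ∃ n₀ : α → ℝ, n₀ = fun x => (P₀ x - 1) * m₀ x := ⟨_, rfl⟩
  have mm₀ : Measurable m₀ := by
    rw [hm₀]
    exact Measurable.ite (measurableSet_eq_fun ma measurable_const) measurable_const
      (ma.abs.pow mP₀)
  have m₀b : ∀ᵐ x ∂μ, ‖m₀ x‖ ≤ (1 + |M|) ^ pM := by
    filter_upwards [hgood] with x hx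
    rw [hm₀]; dsimp only
    split_ifs with h
    · simp; positivity
    · rw [Real.norm_eq_abs, abs_of_nonneg (by positivity)]
      exact bpow x _ (by linarith [(hx.2.2 h).2.1]) (hx.2.2 h).2.2
  have im₀ : Integrable m₀ μ := Integrable.of_bound mm₀.aestronglyMeasurable _ m₀b
  have mnk : ∀ k, Measurable fun x => (P k x - 1) * |a x| ^ P k x := fun k =>
    ((mP k).sub_const 1).mul (ma.abs.pow (mP k))
  have nkb : ∀ k, ∀ᵐ x ∂μ, ‖(P k x - 1) * |a x| ^ P k x‖ ≤ B := by
    intro k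
    filter_upwards [hP k] with x hx
    rw [Real.norm_eq_abs, abs_of_nonneg (mul_nonneg (by linarith [hx.1]) (by positivity)), hB]
    exact mul_le_mul (by linarith [hx.2]) (bpow x _ (by linarith [hx.1]) hx.2) (by positivity)
      (by linarith [hx.1, hx.2])
  have L2 : Tendsto (fun k => ∫ x, (P k x - 1) * |a x| ^ P k x ∂μ) atTop (𝓝 (∫ x, n₀ x ∂μ)) := by
    refine tendsto_integral_of_dominated_convergence (fun _ => B)
      (fun k => (mnk k).aestronglyMeasurable) (integrable_const _) nkb ?_
    filter_upwards [hgood] with x hx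
    rw [hn₀, hm₀]
    by_cases h : a x = 0
    · have : ∀ k, (0:ℝ) ^ P k x = 0 := fun k => Real.zero_rpow (by linarith [(hx.1 k).1])
      simp [h, this]
    · simp only [h, if_false]
      have h1 := (hx.2.2 h).1
      exact (h1.sub_const 1).mul (tendsto_const_nhds.rpow h1 (Or.inl (abs_ne_zero.2 h)))
  have hk : ∀ k, ∫ x, s (P k x) (a x) * g k x ∂μ ≤
      ∫ x, (P k x - 1) * |a x| ^ P k x ∂μ + C.toReal := by
    intro k
    have eqp : ∀ᵐ x ∂μ, ENNReal.ofReal (|g k x| ^ P k x) = ‖g k x‖ₑ ^ P k x := by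
      filter_upwards [hP k] with x hx
      exact ofReal_rpow_enorm (g k x) (by linarith [hx.1])
    have hpm : Measurable fun x => |g k x| ^ P k x := (mg k).abs.pow (mP k)
    have hle : ∫⁻ x, ENNReal.ofReal (|g k x| ^ P k x) ∂μ ≤ C := by
      rw [lintegral_congr_ae eqp]; exact hE k
    have ip : Integrable (fun x => |g k x| ^ P k x) μ := by
      refine ⟨hpm.aestronglyMeasurable, ?_⟩
      rw [hasFiniteIntegral_iff_ofReal (Eventually.of_forall fun x => by positivity)]
      exact hle.trans_lt hC.lt_top
    have h1 : ∫ x, |g k x| ^ P k x ∂μ ≤ C.toReal := by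
      rw [integral_eq_lintegral_of_nonneg_ae (Eventually.of_forall fun x => by positivity)
        hpm.aestronglyMeasurable]
      exact ENNReal.toReal_mono hC hle
    have i2 : Integrable (fun x => (P k x - 1) * |a x| ^ P k x) μ :=
      Integrable.of_bound (mnk k).aestronglyMeasurable _ (nkb k)
    calc ∫ x, s (P k x) (a x) * g k x ∂μ
        ≤ ∫ x, ((P k x - 1) * |a x| ^ P k x + |g k x| ^ P k x) ∂μ := by
          refine integral_mono_ae (isg k) (i2.add ip) ?_
          filter_upwards [hP k] with x hx
          rw [hs]
          exact young_sign (by linarith [hx.1]) _ _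
      _ = _ := integral_add i2 ip
      _ ≤ _ := by linarith
  have hfin := le_of_tendsto_of_tendsto' L1 (L2.add_const _) hk
  have e1 : ∀ᵐ x ∂μ, t₀ x * g₀ x = n₀ x + m₀ x := by
    filter_upwards [hgood] with x hx
    rw [hn₀, hm₀, ht₀]
    by_cases h : a x = 0
    · simp [h]
    · simp only [h, if_false]
      rw [hs, ← (ha x h).2, sign_mul_self_rpow (by linarith [(hx.2.2 h).2.1])]
      ring
  have in₀ : Integrable n₀ μ := by
    have : Integrable (fun x => t₀ x * g₀ x) μ := ig₀.bdd_mul mt₀.aestronglyMeasurable t₀b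
    refine ((this.congr e1).sub im₀).congr (Eventually.of_forall fun x => ?_)
    simp
  rw [integral_congr_ae e1, integral_add in₀ im₀] at hfin
  have hfin2 : ∫ x, m₀ x ∂μ ≤ C.toReal := by linarith
  have e2 : ∀ᵐ x ∂(μ.restrict A), ‖a x‖ₑ ^ P₀ x = ENNReal.ofReal (m₀ x) := by
    filter_upwards [ae_restrict_of_ae hgood, ae_restrict_mem hA] with x hx hxA
    have := hx.2.1 hxA
    rw [hm₀]
    by_cases h : a x = 0
    · simp [h, ENNReal.zero_rpow_of_pos (by linarith : 0 < P₀ x)]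
    · simp only [h, if_false]
      rw [← ofReal_rpow_enorm (a x) (by linarith)]
      rfl
  rw [lintegral_congr_ae e2]
  refine (setLIntegral_le_lintegral _ _).trans ?_
  have m0 : ∀ x, 0 ≤ m₀ x := fun x => by
    rw [hm₀]; dsimp only; split_ifs <;> positivity
  rw [← ofReal_integral_eq_lintegral_ofReal im₀ (Eventually.of_forall m0)]
  exact (ENNReal.ofReal_le_ofReal hfin2).trans ENNReal.ofReal_toReal_le

/-- Lower semicontinuity on a set where the exponents converge pointwise; the weak limit need not
be bounded, since its truncations increase to it. -/
lemma lsc_set {α : Type*} [MeasurableSpace α] {μ : Measure α} [IsFiniteMeasure μ] {r pM : ℝ}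
    (hr : 1 < r) {P : ℕ → α → ℝ} {P₀ : α → ℝ} (mP : ∀ k, Measurable (P k)) (mP₀ : Measurable P₀)
    (hP : ∀ k, ∀ᵐ x ∂μ, r ≤ P k x ∧ P k x ≤ pM) {A : Set α} (hA : MeasurableSet A)
    (hlim : ∀ᵐ x ∂μ, x ∈ A → Tendsto (fun k => P k x) atTop (𝓝 (P₀ x)))
    {g : ℕ → α → ℝ} {g₀ : α → ℝ} (mg : ∀ k, Measurable (g k)) (mg₀ : Measurable g₀)
    (ig₀ : Integrable g₀ μ)
    {C : ℝ≥0∞} (hC : C ≠ ⊤) (hE : ∀ k, ∫⁻ x, ‖g k x‖ₑ ^ P k x ∂μ ≤ C)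
    (hR : ∀ k, ∫⁻ x, ‖g k x‖ₑ ^ r ∂μ ≤ C)
    (hw : ∀ h : α → ℝ, Measurable h → ∫⁻ x, ‖h x‖ₑ ^ conj r ∂μ < ⊤ →
      Tendsto (fun k => ∫ x, h x * g k x ∂μ) atTop (𝓝 (∫ x, h x * g₀ x ∂μ))) :
    ∫⁻ x in A, ‖g₀ x‖ₑ ^ P₀ x ∂μ ≤ C := by
  obtain ⟨a, ha⟩ : ∃ a : ℕ → α → ℝ, a = fun m : ℕ => (A ∩ {x | |g₀ x| ≤ (m:ℝ)}).indicator g₀ := ⟨_, rfl⟩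
  have mS : ∀ m : ℕ, MeasurableSet (A ∩ {x | |g₀ x| ≤ m}) := fun m =>
    hA.inter (measurableSet_le mg₀.abs measurable_const)
  have ma : ∀ m, Measurable (a m) := fun m => by rw [ha]; exact mg₀.indicator (mS m)
  have hm : ∀ m, ∫⁻ x in A, ‖a m x‖ₑ ^ P₀ x ∂μ ≤ C := by
    intro m
    refine lsc_trunc hr mP mP₀ hP hlim mg ig₀ hC hE hR hw (ma m) (M := m) ?_ hA ?_
    · intro x
      by_cases h : x ∈ A ∩ {x | |g₀ x| ≤ m}
      · rw [ha]; simp only [indicator_of_mem h]; exact h.2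
      · rw [ha]; simp only [indicator_of_notMem h]; simp
    · intro x hx
      have h : x ∈ A ∩ {x | |g₀ x| ≤ m} := by
        by_contra h
        apply hx; rw [ha]; exact indicator_of_notMem h _
      exact ⟨h.1, by rw [ha]; exact indicator_of_mem h _⟩
  calc ∫⁻ x in A, ‖g₀ x‖ₑ ^ P₀ x ∂μ
      = ∫⁻ x in A, liminf (fun m => ‖a m x‖ₑ ^ P₀ x) atTop ∂μ := by
        refine setLIntegral_congr_fun hA fun x hx => ?_
        refine (Tendsto.liminf_eq (tendsto_const_nhds.congr' ?_)).symm
        obtain ⟨N, hN⟩ := exists_nat_ge |g₀ x|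
        filter_upwards [eventually_ge_atTop N] with m hm
        have : x ∈ A ∩ {x | |g₀ x| ≤ m} := ⟨hx, hN.trans (by exact_mod_cast hm)⟩
        rw [ha]; simp only [indicator_of_mem this]
    _ ≤ liminf (fun m => ∫⁻ x in A, ‖a m x‖ₑ ^ P₀ x ∂μ) atTop :=
        lintegral_liminf_le fun m => (ma m).enorm.pow mP₀
    _ ≤ C := liminf_le_of_frequently_le' (Eventually.of_forall hm).frequently

lemma subseq_of_TendstoL1 {n : ℕ} {A : Set (Euc n)} {P : ℕ → Euc n → ℝ} {Q : Euc n → ℝ}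
    (mP : ∀ k, Measurable (P k)) (mQ : Measurable Q) (h : TendstoL1 A P Q) :
    ∃ φ : ℕ → ℕ, StrictMono φ ∧
      ∀ᵐ x ∂(volume.restrict A), Tendsto (fun k => P (φ k) x) atTop (𝓝 (Q x)) := by
  refine (tendstoInMeasure_of_tendsto_eLpNorm (p := 1) one_ne_zero
    (fun k => (mP k).aestronglyMeasurable) mQ.aestronglyMeasurable ?_).exists_seq_tendsto_ae
  simp only [eLpNorm_one_eq_lintegral_enorm, Pi.sub_apply, ← ofReal_norm, Real.norm_eq_abs]
  exact h

/-- An open bounded set is exhausted by open sets compactly contained in it. -/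
lemma exists_exhaustion {n : ℕ} {S : Set (Euc n)} (hS : IsOpen S) (hb : Bornology.IsBounded S)
    (hne : Sᶜ.Nonempty) :
    ∃ A : ℕ → Set (Euc n), Monotone A ∧ (∀ m, CompactlyIn (A m) S) ∧ S = ⋃ m, A m := by
  have hcl : IsClosed Sᶜ := hS.isClosed_compl
  have hsub : ∀ m : ℕ, closure {x | 1 / ((m:ℝ) + 1) < Metric.infDist x Sᶜ} ⊆ S := by
    intro m x hx
    have h1 : closure {x | 1 / ((m:ℝ) + 1) < Metric.infDist x Sᶜ} ⊆
        {x | 1 / ((m:ℝ) + 1) ≤ Metric.infDist x Sᶜ} :=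
      closure_minimal (ofPred_subset_ofPred.2 fun y hy => hy.le)
        (isClosed_le continuous_const (Metric.continuous_infDist_pt _))
    have h2 : (0:ℝ) < Metric.infDist x Sᶜ := lt_of_lt_of_le (by positivity) (h1 hx)
    by_contra h
    exact h2.ne' (Metric.infDist_zero_of_mem h)
  refine ⟨fun m => {x | 1 / ((m:ℝ) + 1) < Metric.infDist x Sᶜ}, ?_, fun m => ⟨?_, ?_, hsub m⟩, ?_⟩
  · intro m m' hmm x hx
    refine lt_of_le_of_lt ?_ (show 1 / ((m:ℝ) + 1) < _ from hx)
    have : (m:ℝ) ≤ m' := by exact_mod_cast hmm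
    gcongr
  · exact isOpen_lt continuous_const (Metric.continuous_infDist_pt _)
  · exact (hb.subset (subset_closure.trans (hsub m))).isCompact_closure
  · refine subset_antisymm (fun x hx => ?_) (iUnion_subset fun m => subset_closure.trans (hsub m))
    have h2 : 0 < Metric.infDist x Sᶜ :=
      (hcl.notMem_iff_infDist_pos hne).1 (fun h => h hx)
    obtain ⟨m, hm⟩ := exists_nat_one_div_lt h2
    exact mem_iUnion.2 ⟨m, hm⟩

lemma thin_compl_nonempty {ω : Set (Euc 2)} : (thinDomain ω)ᶜ.Nonempty := by
  refine ⟨EuclideanSpace.single 2 1, fun h => ?_⟩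
  have := h.2.2
  norm_num at this

/-- The exponents `P k` converge locally in `L¹` to a planar exponent, which inherits their
bounds. -/
lemma limit_exponent_bounds {ω : Set (Euc 2)} (hω : IsOpen ω) (hωb : Bornology.IsBounded ω)
    {r pM : ℝ} {P : ℕ → Euc 3 → ℝ} (mP : ∀ k, Measurable (P k))
    (hP : ∀ k, ∀ᵐ x ∂(volume.restrict (thinDomain ω)), r ≤ P k x ∧ P k x ≤ pM)
    {p₀ : Euc 2 → ℝ} (mp₀ : Measurable p₀)
    (h : ∀ A : Set (Euc 3), CompactlyIn A (thinDomain ω) →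
          TendstoL1 A P (fun x => p₀ (projα x))) :
    ∀ᵐ a ∂(volume.restrict ω), r ≤ p₀ a ∧ p₀ a ≤ pM := by
  refine ae_planar_of_thin hω.measurableSet ((measurableSet_le measurable_const mp₀).inter
    (measurableSet_le mp₀ measurable_const)) ?_
  obtain ⟨A, -, hA, hU⟩ := exists_exhaustion (isOpen_thin hω) (bounded_thin hωb)
    thin_compl_nonempty
  rw [hU, ae_restrict_iUnion_iff]
  intro m
  obtain ⟨φ, -, hφ⟩ := subseq_of_TendstoL1 mP (mp₀.comp continuous_proj.measurable) (h _ (hA m))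
  have hP' : ∀ᵐ x ∂(volume.restrict (A m)), ∀ k, r ≤ P k x ∧ P k x ≤ pM :=
    ae_all_iff.2 fun k => ae_restrict_of_ae_restrict_of_subset
      (subset_closure.trans (hA m).2.2) (hP k)
  filter_upwards [hφ, hP'] with x h1 h2
  exact ⟨ge_of_tendsto' h1 fun k => (h2 _).1, le_of_tendsto' h1 fun k => (h2 _).2⟩

/-- Lower semicontinuity of the modular under local convergence of the exponents. -/
lemma lsc {ω : Set (Euc 2)} (hω : IsOpen ω) (hωb : Bornology.IsBounded ω)
    {r pM : ℝ} (hr : 1 < r) {P : ℕ → Euc 3 → ℝ} (mP : ∀ k, Measurable (P k))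
    (hP : ∀ k, ∀ᵐ x ∂(volume.restrict (thinDomain ω)), r ≤ P k x ∧ P k x ≤ pM)
    {p₀ : Euc 2 → ℝ} (mp₀ : Measurable p₀)
    (h : ∀ A : Set (Euc 3), CompactlyIn A (thinDomain ω) →
          TendstoL1 A P (fun x => p₀ (projα x)))
    {g : ℕ → Euc 3 → ℝ} {k₀ : Euc 2 → ℝ} (mg : ∀ k, Measurable (g k)) (mk₀ : Measurable k₀)
    (ik₀ : Integrable k₀) {C : ℝ≥0∞} (hC : C ≠ ⊤)
    (hE : ∀ k, ∫⁻ x in thinDomain ω, ‖g k x‖ₑ ^ P k x ≤ C)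
    (hR : ∀ k, ∫⁻ x in thinDomain ω, ‖g k x‖ₑ ^ r ≤ C)
    (hw : ∀ h : Euc 3 → ℝ, Measurable h → ∫⁻ x in thinDomain ω, ‖h x‖ₑ ^ conj r < ⊤ →
      Tendsto (fun k => ∫ x in thinDomain ω, h x * g k x) atTop
        (𝓝 (∫ x in thinDomain ω, h x * k₀ (projα x)))) :
    ∫⁻ a in ω, ‖k₀ a‖ₑ ^ p₀ a ≤ C := by
  have hm := (isOpen_thin hω).measurableSet
  have mpr := continuous_proj.measurable
  have : IsFiniteMeasure (volume.restrict (thinDomain ω)) :=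
    ⟨by simpa using (bounded_thin hωb).measure_lt_top⟩
  have e := lint_proj hω.measurableSet (F := fun a => ‖k₀ a‖ₑ ^ p₀ a) (mk₀.enorm.pow mp₀)
  rw [← e]
  have ik : Integrable (fun x => k₀ (projα x)) (volume.restrict (thinDomain ω)) :=
    (mp_proj hω.measurableSet).integrable_comp_of_integrable ik₀.restrict
  obtain ⟨A, hmono, hA, hU⟩ := exists_exhaustion (isOpen_thin hω) (bounded_thin hωb)
    thin_compl_nonempty
  have hmA : ∀ m, MeasurableSet (A m) := fun m => (hA m).1.measurableSet
  have hAs : ∀ m, A m ⊆ thinDomain ω := fun m => subset_closure.trans (hA m).2.2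
  have key : ∀ m, ∫⁻ x in A m, ‖k₀ (projα x)‖ₑ ^ p₀ (projα x) ≤ C := by
    intro m
    obtain ⟨φ, hφm, hφ⟩ := subseq_of_TendstoL1 mP (mp₀.comp mpr) (h _ (hA m))
    have := lsc_set (μ := volume.restrict (thinDomain ω)) hr (P := fun k => P (φ k))
      (P₀ := fun x => p₀ (projα x)) (fun k => mP _) (mp₀.comp mpr) (fun k => hP _) (hmA m)
      (ae_restrict_of_ae ((ae_restrict_iff' (hmA m)).1 hφ)) (g := fun k => g (φ k))
      (g₀ := fun x => k₀ (projα x)) (fun k => mg _) (mk₀.comp mpr) ik hC (fun k => hE _)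
      (fun k => hR _) (fun h h1 h2 => (hw h h1 h2).comp hφm.tendsto_atTop)
    rwa [Measure.restrict_restrict (hmA m), inter_eq_left.2 (hAs m)] at this
  rw [hU, setLIntegral_iUnion_of_directed _ (hmono.directed_le)]
  exact iSup_le key

/-! ### Gain of integrability on the thin domain -/

/-- Averages over a half ball: from the part of the thin domain on one side of the midplane all
vectors pointing to the other side and shorter than `1/2` stay in the slab. -/
lemma exists_avg {ω : Set (Euc 2)} (hω : IsOpen ω) {ρ : ℝ} (hρ : 0 < ρ) (hρ2 : ρ ≤ 1/2) {σ : ℝ}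
    (hσ : |σ| = 1) : ∃ (ν : Measure (Euc 3)) (c : ℝ≥0),
      AvgData slab {x | x ∈ thinDomain ω ∧ σ * x 2 < 0} ν c ρ := by
  obtain ⟨Z, hZ⟩ : ∃ Z : Set (Euc 3), Z = Metric.ball 0 ρ ∩ {z | 0 < σ * z 2} := ⟨_, rfl⟩
  have hZo : IsOpen Z := by
    rw [hZ]; exact Metric.isOpen_ball.inter (isOpen_lt continuous_const (by fun_prop))
  have hZne : Z.Nonempty := by
    refine ⟨EuclideanSpace.single 2 (σ * (ρ / 2)), ?_⟩
    rw [hZ]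
    refine ⟨?_, ?_⟩
    · simp [hσ, abs_of_pos hρ]; linarith
    · have : σ * σ = 1 := by rw [← abs_mul_abs_self, hσ, one_mul]
      simp [← mul_assoc, this, hρ]
  have hZ0 : volume Z ≠ 0 := (hZo.measure_pos _ hZne).ne'
  have hZt : volume Z ≠ ⊤ := by
    rw [hZ]; exact ((measure_mono inter_subset_left).trans_lt measure_ball_lt_top).ne
  refine ⟨(volume Z)⁻¹ • volume.restrict Z, ((volume Z)⁻¹).toNNReal, ?_, ?_, ?_, ?_⟩
  · have h : IsOpen {x : Euc 3 | σ * x 2 < 0} := isOpen_lt (by fun_prop) continuous_const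
    exact (isOpen_thin hω).inter h
  · constructor
    simp [ENNReal.inv_mul_cancel hZ0 hZt]
  · rw [ENNReal.coe_toNNReal (ENNReal.inv_ne_top.2 hZ0)]
    intro S
    simp only [Measure.smul_apply, smul_eq_mul]
    gcongr
    exact Measure.restrict_le_self
  · refine Measure.ae_smul_measure ?_ _
    filter_upwards [ae_restrict_mem hZo.measurableSet] with z hz
    rw [hZ] at hz
    have h1 : ‖z‖ < ρ := by simpa using hz.1
    have h2 : 0 < σ * z 2 := hz.2
    refine ⟨h1.le, fun x hx s hs => ?_⟩
    have h3 := (abs_apply_le_norm z 2).trans_lt h1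
    change x 2 + s * z 2 ∈ Ioo (-(1/2):ℝ) (1/2)
    have h4 := hx.2
    have h5 := hx.1.2
    have h6 : |s * z 2| < 1/2 := by
      rw [abs_mul, abs_of_nonneg hs.1]
      have := hs.2
      nlinarith [abs_nonneg (z 2)]
    rw [abs_lt] at h6
    have hs0 := hs.1
    rcases (abs_eq one_pos.le).1 hσ with h | h
    · rw [h] at h2 h4
      have : 0 ≤ s * z 2 := mul_nonneg hs0 (by linarith)
      exact ⟨by linarith [h5.1], by linarith⟩
    · rw [h] at h2 h4
      have : 0 ≤ s * -z 2 := mul_nonneg hs0 (by linarith)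
      exact ⟨by linarith, by linarith [h5.2]⟩

/-- Uniform continuity of an exponent on a set. -/
def UnifOn {n : ℕ} (S : Set (Euc n)) (e : Euc n → ℝ) : Prop :=
  ∀ η > 0, ∃ ρ > 0, ∀ a ∈ S, ∀ b ∈ S, dist a b ≤ ρ → |e a - e b| ≤ η

lemma volume_midplane : volume {x : Euc 3 | x 2 = 0} = 0 := by
  have : {x : Euc 3 | x 2 = 0} = emb '' (univ ×ˢ {0}) := by
    ext x
    simp only [mem_image, Set.mem_prod, mem_univ, true_and, mem_singleton_iff, Prod.exists]
    constructor
    · intro hx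
      exact ⟨projα x, 0, rfl, by rw [emb_apply, ← (show x 2 = 0 from hx), embed_proj]⟩
    · rintro ⟨a, b, rfl, rfl⟩
      rw [emb_apply]; exact embed_two _ _
  rw [this, ← mp_emb.measure_preimage_equiv, preimage_image_eq _ emb.injective,
    Measure.volume_eq_prod, Measure.prod_prod]
  simp

lemma proj_dist (x y : Euc 3) : dist (projα x) (projα y) ≤ dist x y := by
  rw [EuclideanSpace.dist_eq, EuclideanSpace.dist_eq]
  apply Real.sqrt_le_sqrt
  rw [Fin.sum_univ_two, Fin.sum_univ_three]
  have : 0 ≤ dist (x 2) (y 2) ^ 2 := by positivity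
  have h : dist (projα x 0) (projα y 0) = dist (x 0) (y 0) := rfl
  have h' : dist (projα x 1) (projα y 1) = dist (x 1) (y 1) := rfl
  rw [h, h']
  linarith

lemma pow_sum_bound {x : ℝ} {pM : ℝ} (h0 : 1 ≤ x) (h1 : x ≤ pM) (f : Fin 3 → ℝ≥0∞) :
    (∑ j, f j) ^ x ≤ 3 ^ pM * ∑ j, f j ^ x := by
  refine (sum_rpow_le f (by linarith)).trans ?_
  gcongr
  simp only [Fintype.card_fin]
  exact ENNReal.rpow_le_rpow_of_exponent_le (by norm_num) h1

/-- Higher integrability on the thin domain: a modular bound for the gradient with an exponent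
close to `e` yields a bound for the function with the exponent `e + η`. -/
lemma gain_thin {ω : Set (Euc 2)} (hω : IsOpen ω) (hωb : Bornology.IsBounded ω)
    {r pM : ℝ} {e : Euc 2 → ℝ} (me : Measurable e)
    (he : ∀ᵐ a ∂(volume.restrict ω), r ≤ e a ∧ e a ≤ pM) (hu : UnifOn ω e)
    {η : ℝ} (h0 : 0 < η) (h1 : 18 * η ≤ 1) (h2 : 2 * η ≤ r - 1) {C : ℝ≥0∞} (hC : C ≠ ⊤) :
    ∃ B : ℝ≥0∞, B ≠ ⊤ ∧ ∀ (w : Euc 3 → ℝ) (g : Fin 3 → Euc 3 → ℝ) (E : Euc 3 → ℝ),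
      Measurable w → Integrable w → (∀ j, Measurable (g j)) → (∀ j, Integrable (g j)) →
      (∀ j, WD slab j w (g j)) → (∀ j x, x ∉ thinDomain ω → g j x = 0) → Measurable E →
      (∀ᵐ x ∂(volume.restrict (thinDomain ω)), e (projα x) - η ≤ E x ∧ 1 ≤ E x ∧ E x ≤ pM) →
      ∫⁻ x, ‖w x‖ₑ ≤ C → (∀ j, ∫⁻ x in thinDomain ω, ‖g j x‖ₑ ^ E x ≤ C) →
      ∫⁻ x in thinDomain ω, ‖w x‖ₑ ^ (e (projα x) + η) ≤ B := by
  have hm := (isOpen_thin hω).measurableSet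
  have hV : volume (thinDomain ω) ≠ ⊤ := (bounded_thin hωb).measure_lt_top.ne
  obtain ⟨ρ₀, hρ₀, hcont⟩ := hu η h0
  obtain ⟨ρ, hρ⟩ : ∃ ρ, ρ = min ρ₀ (1/2) := ⟨_, rfl⟩
  have hρ0 : 0 < ρ := by rw [hρ]; positivity
  have hρ1 : ρ ≤ ρ₀ := by rw [hρ]; exact min_le_left _ _
  have hρ2 : ρ ≤ 1/2 := by rw [hρ]; exact min_le_right _ _
  -- Each half of the thin domain is averaged over a half ball pointing towards the other half, so that
  -- segments of length at most `1/2` never leave the slab.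
  obtain ⟨ν₁, c₁, D₁⟩ := exists_avg hω hρ0 hρ2 (σ := 1) (by simp)
  obtain ⟨ν₂, c₂, D₂⟩ := exists_avg hω hρ0 hρ2 (σ := -1) (by simp)
  obtain ⟨BK, hBK⟩ : ∃ BK : ℝ≥0∞, BK = 2 * volume (thinDomain ω) + 3 ^ pM * (3 * C) := ⟨_, rfl⟩
  have hI : (∫⁻ s in Ioc (0:ℝ) 1, ENNReal.ofReal (s ^ (-(1/2:ℝ)))) ≠ ⊤ := by
    have : IntegrableOn (fun s : ℝ => s ^ (-(1/2:ℝ))) (Ioc 0 1) := by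
      have := intervalIntegral.intervalIntegrable_rpow' (a := 0) (b := 1)
        (show (-1:ℝ) < -(1/2) by norm_num)
      rwa [intervalIntegrable_iff_integrableOn_Ioc_of_le zero_le_one] at this
    have h := this.2
    rw [hasFiniteIntegral_iff_ofReal] at h
    · exact h.ne
    · filter_upwards [ae_restrict_mem measurableSet_Ioc] with s hs
      exact Real.rpow_nonneg hs.1.le _
  have hBKt : BK ≠ ⊤ := by
    rw [hBK]
    have : (3:ℝ≥0∞) ^ pM ≠ ⊤ := by
      intro h; rw [ENNReal.rpow_eq_top_iff] at h; simp at h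
    finiteness
  obtain ⟨F, hF⟩ : ∃ F : ℝ≥0 → ℝ≥0∞, F = fun c : ℝ≥0 => 2 ^ (pM + 1) *
    ((max 1 (c * C)) ^ (pM + 1) * volume (thinDomain ω) +
      max 1 (c * BK) * (∫⁻ s in Ioc (0:ℝ) 1, ENNReal.ofReal (s ^ (-(1/2:ℝ)))) * BK) := ⟨_, rfl⟩
  by_cases hpM : pM < 1
  · refine ⟨0, ENNReal.zero_ne_top, ?_⟩
    intro w g E _ _ _ _ _ _ _ hE
    have : ∀ᵐ x ∂(volume.restrict (thinDomain ω)), False := by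
      filter_upwards [hE] with x hx
      linarith [hx.2.1, hx.2.2]
    rw [lintegral_congr_ae (g := fun _ => 0) (this.mono fun x hx => hx.elim)]
    simp
  rw [not_lt] at hpM
  have hFt : ∀ c, F c ≠ ⊤ := by
    intro c
    have hx : ∀ x : ℝ≥0∞, x ≠ ⊤ → max 1 x ≠ ⊤ := fun x hx => by simp [hx]
    have a1 : (max 1 (c * C)) ^ (pM + 1) ≠ ⊤ :=
      ENNReal.rpow_ne_top_of_nonneg (by linarith) (hx _ (by finiteness))
    have a2 := hx (c * BK) (by finiteness)
    have a3 : (2:ℝ≥0∞) ^ (pM + 1) ≠ ⊤ := ENNReal.rpow_ne_top_of_nonneg (by linarith) (by simp)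
    rw [hF]
    finiteness
  refine ⟨F c₁ + F c₂, by have := hFt c₁; have := hFt c₂; finiteness, ?_⟩
  intro w g E mw iw mg ig wd zg mE hE hwC hgC
  obtain ⟨K, hK⟩ : ∃ K : Euc 3 → ℝ≥0∞, K = (thinDomain ω).indicator
    fun y => 1 + (∑ j, ‖g j y‖ₑ) ^ (e (projα y) - η) := ⟨_, rfl⟩
  have mpr := continuous_proj.measurable
  have mK : Measurable K := by
    rw [hK]
    refine Measurable.indicator ?_ hm
    have m1 : Measurable fun y => ∑ j, ‖g j y‖ₑ := by fun_prop
    exact (m1.pow ((me.comp mpr).sub_const η)).const_add 1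
  have heΩ := ae_thin_of_planar hω.measurableSet he
  have hKB : ∫⁻ y, K y ≤ BK := by
    rw [hK, lintegral_indicator hm, hBK]
    calc ∫⁻ y in thinDomain ω, (1 + (∑ j, ‖g j y‖ₑ) ^ (e (projα y) - η))
        ≤ ∫⁻ y in thinDomain ω, (2 + 3 ^ pM * ∑ j, ‖g j y‖ₑ ^ E y) := by
          refine lintegral_mono_ae ?_
          filter_upwards [hE, heΩ] with y h3 h4
          have h5 : 0 ≤ e (projα y) - η := by linarith [h4.1]
          have h6 := (rpow_le_one_add h5 h3.1).trans
            (add_le_add_right (pow_sum_bound h3.2.1 h3.2.2 fun j => ‖g j y‖ₑ) 1)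
          calc 1 + (∑ j, ‖g j y‖ₑ) ^ (e (projα y) - η) ≤ 1 + (1 + _) := by gcongr
            _ = _ := by rw [← add_assoc]; norm_num
      _ ≤ _ := by
          rw [lintegral_add_left measurable_const, lintegral_const,
            lintegral_const_mul _ (by fun_prop), lintegral_finsetSum _ (by fun_prop)]
          simp only [MeasurableSet.univ, Measure.restrict_apply, univ_inter]
          gcongr
          calc ∑ j, ∫⁻ y in thinDomain ω, ‖g j y‖ₑ ^ E y ≤ ∑ _j : Fin 3, C :=
                Finset.sum_le_sum fun j _ => hgC j
            _ = 3 * C := by simp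
  -- Within distance `ρ` the exponent `e` varies by at most `η`, so `e x - 2 * η` is below the exponent
  -- `E y ≥ e y - η` at every nearby point `y`, and `K` dominates the corresponding power.
  have hPq : ∀ σ : ℝ, ∀ᵐ x, x ∈ {x | x ∈ thinDomain ω ∧ σ * x 2 < 0} →
      1 ≤ e (projα x) - 2 * η ∧ e (projα x) - 2 * η ≤ e (projα x) + η ∧ e (projα x) + η ≤ pM + 1 ∧
      2 * (3:ℕ) * ((e (projα x) + η) - (e (projα x) - 2 * η)) ≤ e (projα x) - 2 * η ∧
      (e (projα x) + η) - (e (projα x) - 2 * η) ≤ e (projα x) - 2 * η ∧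
      ∀ y, dist x y ≤ ρ → (∑ j, ‖g j y‖ₑ) ^ (e (projα x) - 2 * η) ≤ K y := by
    intro σ
    filter_upwards [(ae_restrict_iff' hm).1 heΩ] with x hx hxA
    obtain ⟨a, b⟩ := hx hxA.1
    refine ⟨by linarith, by linarith, by linarith, by push_cast; linarith, by linarith, ?_⟩
    intro y hy
    by_cases hyΩ : y ∈ thinDomain ω
    · rw [hK, indicator_of_mem hyΩ]
      have := hcont _ hxA.1.1 _ hyΩ.1 ((proj_dist x y).trans (hy.trans hρ1))
      rw [abs_le] at this
      exact rpow_le_one_add (by linarith) (by linarith [this.2])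
    · have : (∑ j, ‖g j y‖ₑ) = 0 := by simp [zg _ y hyΩ]
      rw [this, ENNReal.zero_rpow_of_pos (by linarith)]
      exact zero_le
  have hb : ∀ (σ : ℝ) ν c, AvgData slab {x | x ∈ thinDomain ω ∧ σ * x 2 < 0} ν c ρ →
      ∫⁻ x in {x | x ∈ thinDomain ω ∧ σ * x 2 < 0}, ‖w x‖ₑ ^ (e (projα x) + η) ≤ F c := by
    intro σ ν c D
    refine (D.gain (by linarith) mw iw ig mg wd mK (hPq σ)).trans ?_
    rw [hF]
    dsimp only
    have hpM0 : 0 ≤ pM + 1 := by linarith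
    have hsub : volume {x : Euc 3 | x ∈ thinDomain ω ∧ σ * x 2 < 0} ≤ volume (thinDomain ω) :=
      measure_mono fun x hx => hx.1
    gcongr
  calc ∫⁻ x in thinDomain ω, ‖w x‖ₑ ^ (e (projα x) + η)
      ≤ ∫⁻ x in ({x | x ∈ thinDomain ω ∧ 1 * x 2 < 0} ∪ {x | x ∈ thinDomain ω ∧ -1 * x 2 < 0}) ∪
          {x | x 2 = 0}, ‖w x‖ₑ ^ (e (projα x) + η) := by
        refine lintegral_mono_set fun x hx => ?_
        rcases lt_trichotomy (x 2) 0 with h | h | h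
        · exact Or.inl (Or.inl ⟨hx, by linarith⟩)
        · exact Or.inr h
        · exact Or.inl (Or.inr ⟨hx, by linarith⟩)
    _ ≤ _ := by
        refine (lintegral_union_le _ _ _).trans ?_
        rw [setLIntegral_measure_zero _ _ volume_midplane, add_zero]
        refine (lintegral_union_le _ _ _).trans ?_
        exact add_le_add (hb _ _ _ D₁) (hb _ _ _ D₂)

/-! ### Averages of integrable functions -/

/-- Translations are continuous in `L¹`. -/
lemma translation_L1 {n : ℕ} {g : Euc n → ℝ} (ig : Integrable g) (mg : Measurable g)
    {ε : ℝ≥0∞} (hε : ε ≠ 0) :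
    ∃ δ > 0, ∀ h : Euc n, ‖h‖ ≤ δ → ∫⁻ x, ‖g (x + h) - g x‖ₑ ≤ ε := by
  have hε3 : ε / 3 ≠ 0 := (ENNReal.div_pos hε (by norm_num)).ne'
  obtain ⟨f, fc, fg, fcont, fint⟩ := ig.exists_hasCompactSupport_lintegral_sub_le hε3
  obtain ⟨R, hR⟩ := fc.isCompact.isBounded.subset_closedBall 0
  obtain ⟨B, hB⟩ : ∃ B : Set (Euc n), B = Metric.closedBall 0 (R + 1) := ⟨_, rfl⟩
  have hBt : volume B ≠ ⊤ := by rw [hB]; exact measure_closedBall_lt_top.ne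
  obtain ⟨η, hη0, hη⟩ : ∃ η : ℝ≥0, 0 < η ∧ η * volume B ≤ ε / 3 := by
    obtain ⟨η, h1, h2⟩ := ENNReal.exists_nnreal_pos_mul_lt hBt hε3
    exact ⟨η, h1, h2.le⟩
  obtain ⟨δ, hδ, hu⟩ := Metric.uniformContinuous_iff.1 (fc.uniformContinuous_of_continuous fcont)
    η (by exact_mod_cast hη0)
  refine ⟨min (δ / 2) 1, by positivity, fun h hh => ?_⟩
  have h1 : ‖h‖ < δ := by linarith [hh.trans (min_le_left _ _)]
  have h2 : ‖h‖ ≤ 1 := hh.trans (min_le_right _ _)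
  have key : ∀ x, ‖f (x + h) - f x‖ₑ ≤ B.indicator (fun _ => (η : ℝ≥0∞)) x := by
    intro x
    by_cases hx : x ∈ B
    · rw [indicator_of_mem hx]
      have := hu (a := x + h) (b := x) (by simpa [dist_eq_norm] using h1)
      rw [dist_eq_norm] at this
      rw [← enorm_norm, Real.enorm_eq_ofReal (norm_nonneg _)]
      exact (ENNReal.ofReal_le_ofReal this.le).trans (by simp)
    · have hx' : R + 1 < ‖x‖ := by simpa [hB] using hx
      have e1 : f x = 0 := by
        by_contra hne
        have := hR (subset_tsupport _ hne)
        simp at this; linarith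
      have e2 : f (x + h) = 0 := by
        by_contra hne
        have := hR (subset_tsupport _ hne)
        simp at this
        have h3 : ‖x‖ ≤ ‖x + h‖ + ‖h‖ := by
          simpa using norm_sub_le (x + h) h
        linarith
      simp [e1, e2]
  calc ∫⁻ x, ‖g (x + h) - g x‖ₑ
      ≤ ∫⁻ x, (‖g (x + h) - f (x + h)‖ₑ + ‖f (x + h) - f x‖ₑ + ‖g x - f x‖ₑ) := by
        refine lintegral_mono fun x => ?_
        have : g (x + h) - g x = (g (x + h) - f (x + h)) + (f (x + h) - f x) + -(g x - f x) := by ring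
        rw [this]
        refine (enorm_add_le _ _).trans ?_
        rw [enorm_neg]
        gcongr
        exact enorm_add_le _ _
    _ ≤ ε / 3 + ε / 3 + ε / 3 := by
        have mf := fcont.measurable
        rw [lintegral_add_left (by fun_prop), lintegral_add_left (by fun_prop)]
        rw [lint_add_right (fun x => ‖g x - f x‖ₑ) h]
        gcongr
        refine (lintegral_mono key).trans ?_
        rw [lintegral_indicator (by rw [hB]; exact measurableSet_closedBall)]
        simpa using hη
    _ = ε := ENNReal.add_thirds ε

/-- The average of `g` over the points `x + s z`, where `z` has law `ν`. -/
def avg {n : ℕ} (ν : Measure (Euc n)) (s : ℝ) (g : Euc n → ℝ) (x : Euc n) : ℝ :=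
  ∫ z, g (x + s • z) ∂ν

lemma avg_enorm_le {n : ℕ} (ν : Measure (Euc n)) (s : ℝ) (g : Euc n → ℝ) (x : Euc n) :
    ‖avg ν s g x‖ₑ ≤ ∫⁻ z, ‖g (x + s • z)‖ₑ ∂ν := enorm_integral_le_lintegral_enorm _

lemma measurable_avg_real {n : ℕ} (ν : Measure (Euc n)) [SFinite ν] {s : ℝ} {g : Euc n → ℝ}
    (mg : Measurable g) : Measurable (avg ν s g) := by
  have : StronglyMeasurable (fun q : Euc n × Euc n => g (q.1 + s • q.2)) :=
    (mg.comp (by fun_prop)).stronglyMeasurable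
  exact (this.integral_prod_right (ν := ν)).measurable

lemma integrable_avg {n : ℕ} (ν : Measure (Euc n)) [IsProbabilityMeasure ν] {s : ℝ}
    {g : Euc n → ℝ} (mg : Measurable g) (ig : Integrable g) : Integrable (avg ν s g) := by
  refine ⟨(measurable_avg_real ν mg).aestronglyMeasurable, ?_⟩
  have : ∫⁻ x, ‖avg ν s g x‖ₑ ≤ ∫⁻ x, ‖g x‖ₑ := by
    refine (lintegral_mono fun x => avg_enorm_le ν s g x).trans ?_
    rw [lint_avg ν mg.enorm]
  exact this.trans_lt ig.2

lemma integrable_slice {n : ℕ} {ν : Measure (Euc n)} {c : ℝ≥0} {ρ : ℝ}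
    (D : AvgData univ univ ν c ρ) {g : Euc n → ℝ} (mg : Measurable g) (ig : Integrable g)
    {s : ℝ} (hs : 0 < s) (x : Euc n) : Integrable (fun z => g (x + s • z)) ν := by
  refine ⟨(mg.comp (by fun_prop)).aestronglyMeasurable, ?_⟩
  refine (D.lint_le (fun y => ‖g y‖ₑ) x hs).trans_lt ?_
  exact ENNReal.mul_lt_top (ENNReal.mul_lt_top (by simp) (by simp)) ig.2

/-- The mean oscillation over shrinking sets tends to zero in `L¹`. -/
lemma osc_L1 {n : ℕ} {ν : Measure (Euc n)} {c : ℝ≥0} {ρ : ℝ}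
    (D : AvgData univ univ ν c ρ) (hρ : 0 < ρ) {g : Euc n → ℝ} (mg : Measurable g) (ig : Integrable g)
    {t : ℕ → ℝ} (t0 : ∀ k, 0 < t k) (ht : Tendsto t atTop (𝓝 0)) :
    Tendsto (fun k => ∫⁻ x, ∫⁻ z, ‖g (x + t k • z) - g x‖ₑ ∂ν) atTop (𝓝 0) := by
  have := D.prob
  rw [ENNReal.tendsto_nhds_zero]
  intro ε hε
  obtain ⟨δ, hδ, hd⟩ := translation_L1 ig mg hε.ne'
  have hev : ∀ᶠ k in atTop, t k < δ / ρ := ht.eventually_lt_const (by positivity)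
  filter_upwards [hev] with k hk
  rw [lt_div_iff₀ hρ] at hk
  rw [lintegral_lintegral_swap (by fun_prop)]
  calc _ ≤ ∫⁻ _z, ε ∂ν := by
        refine lintegral_mono_ae ?_
        filter_upwards [D.small] with z hz
        refine hd _ ?_
        rw [norm_smul, Real.norm_eq_abs, abs_of_pos (t0 k)]
        exact (mul_le_mul_of_nonneg_left hz.1 (t0 k).le).trans hk.le
    _ = ε := by simp

lemma avg_sub_le {n : ℕ} {ν : Measure (Euc n)} {c : ℝ≥0} {ρ : ℝ}
    (D : AvgData univ univ ν c ρ) {g : Euc n → ℝ} (mg : Measurable g) (ig : Integrable g)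
    {s : ℝ} (hs : 0 < s) (x : Euc n) :
    ‖avg ν s g x - g x‖ₑ ≤ ∫⁻ z, ‖g (x + s • z) - g x‖ₑ ∂ν := by
  have := D.prob
  have : avg ν s g x - g x = ∫ z, (g (x + s • z) - g x) ∂ν := by
    rw [integral_sub (integrable_slice D mg ig hs x) (integrable_const _)]
    simp [avg]
  rw [this]
  exact enorm_integral_le_lintegral_enorm _

/-- Averaging commutes with weak derivatives on the whole space. -/
lemma WD.avg {n : ℕ} {j : Fin n} {w g : Euc n → ℝ} (h : WD univ j w g)
    (mw : Measurable w) (mg : Measurable g) (iw : Integrable w) (ig : Integrable g)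
    (ν : Measure (Euc n)) [IsProbabilityMeasure ν] (s : ℝ) :
    WD univ j (TF.avg ν s w) (TF.avg ν s g) := by
  have swap : ∀ (ψ f : Euc n → ℝ), Continuous ψ → HasCompactSupport ψ → Measurable f →
      Integrable f → ∫ x, ψ x * TF.avg ν s f x = ∫ z, (∫ x, ψ x * f (x + s • z)) ∂ν := by
    intro ψ f hψ hc mf hf
    simp_rw [TF.avg, ← integral_const_mul]
    rw [integral_integral_swap]
    obtain ⟨M, hM⟩ := hψ.bounded_above_of_compact_support hc
    have mψ := hψ.measurable
    refine ⟨by fun_prop, ?_⟩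
    change (∫⁻ q, _ ∂_) < ⊤
    rw [lintegral_prod _ (by fun_prop)]
    calc _ ≤ ∫⁻ x, ENNReal.ofReal M * ∫⁻ z, ‖f (x + s • z)‖ₑ ∂ν := by
          refine lintegral_mono fun x => ?_
          rw [← lintegral_const_mul _ (by fun_prop)]
          refine lintegral_mono fun z => ?_
          simp only [Function.uncurry, enorm_mul]
          gcongr
          rw [← ofReal_norm]
          exact ENNReal.ofReal_le_ofReal (hM x)
      _ = ENNReal.ofReal M * ∫⁻ x, ‖f x‖ₑ := by
          rw [lintegral_const_mul', lint_avg ν mf.enorm]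
          simp
      _ < ⊤ := ENNReal.mul_lt_top (by simp) hf.2
  intro φ h1 h2 h3
  rw [swap φ g h1.continuous h2 mg ig,
    swap _ w (continuous_fderiv_apply h1 _) (hasCompactSupport_fderiv_apply h2 _) mw iw,
    ← integral_neg]
  congr 1
  ext z
  exact h.translate (A := univ) (s • z) (fun _ _ => mem_univ _) φ h1 h2 h3

/-! ### Averages under a log-Hölder exponent -/

/-- The pointwise step behind the log-Hölder estimate: `a ^ p = a ^ q * a ^ (p - q)`, where the
second factor is bounded because `a` is at most a multiple of `b` and `b ^ (p - q)` is bounded. -/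
lemma kernel_scalar {a m M b L : ℝ≥0∞} {q p : ℝ} (hq : 0 ≤ q) (hqp : q ≤ p)
    (hd : p - q ≤ 1) (hM : 1 ≤ M) (h1 : a ^ q ≤ m) (h2 : a ≤ M * b) (hL : b ^ (p - q) ≤ L) :
    a ^ p ≤ m * (M * L) := by
  have e : p = q + (p - q) := by ring
  rw [e, ENNReal.rpow_add_of_nonneg _ _ hq (by linarith)]
  gcongr
  calc a ^ (p - q) ≤ (M * b) ^ (p - q) := ENNReal.rpow_le_rpow h2 (by linarith)
    _ = M ^ (p - q) * b ^ (p - q) := ENNReal.mul_rpow_of_nonneg _ _ (by linarith)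
    _ ≤ M ^ (1:ℝ) * L := by
        gcongr
    _ = M * L := by simp

/-- The factor `s ^ (-n)` produced by averaging at scale `s` stays bounded after taking the
power `γ / |log (s ρ)|`; this is where the logarithmic modulus of continuity enters. -/
lemma log_scalar {γ ρ s : ℝ} (hγ : 0 < γ) (hρ : 0 < ρ) (hs : 0 < s) (h1 : s * ρ < 1/2)
    (h2 : s * ρ ^ 2 ≤ 1) (n : ℕ) :
    ENNReal.ofReal (s ^ (-(n:ℝ))) ^ (γ / |Real.log (s * ρ)|)
      ≤ ENNReal.ofReal (Real.exp (2 * n * γ)) := by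
  have hl : Real.log (s * ρ) < 0 := Real.log_neg (by positivity) (by linarith)
  rw [ENNReal.ofReal_rpow_of_pos (by positivity), abs_of_neg hl]
  apply ENNReal.ofReal_le_ofReal
  rw [← Real.rpow_mul hs.le, Real.rpow_def_of_pos hs, Real.exp_le_exp]
  have h3 : Real.log s + 2 * Real.log ρ ≤ 0 := by
    have := Real.log_nonpos (by positivity) h2
    rw [Real.log_mul hs.ne' (by positivity), Real.log_pow] at this
    simpa using this
  have h4 : -Real.log s ≤ 2 * (-Real.log (s * ρ)) := by
    rw [Real.log_mul hs.ne' hρ.ne']; linarith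
  have hpos : 0 < -Real.log (s * ρ) := by linarith
  calc Real.log s * (-(n:ℝ) * (γ / -Real.log (s * ρ)))
      = n * γ * (-Real.log s / -Real.log (s * ρ)) := by field_simp
    _ ≤ n * γ * 2 := by
        gcongr
        rwa [div_le_iff₀ hpos]
    _ = 2 * n * γ := by ring

/-- The log-Hölder condition with its modulus expressed through a scale `s` bounding the
distance. -/
lemma logHolder_unif {n : ℕ} {S : Set (Euc n)} {p : Euc n → ℝ} (h : LogHolder S p) :
    ∃ γ > 0, ∀ s, 0 < s → s < 1/2 → ∀ x ∈ S, ∀ y ∈ S, dist x y ≤ s →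
      |p x - p y| ≤ γ / |Real.log s| := by
  obtain ⟨γ, hγ, h⟩ := h
  refine ⟨γ, hγ, fun s hs hs2 x hx y hy hd => ?_⟩
  rcases eq_or_lt_of_le (dist_nonneg (x := x) (y := y)) with h0 | h0
  · rw [dist_eq_zero.1 h0.symm]
    simp; positivity
  refine (h x hx y hy h0 (by linarith)).trans ?_
  have l1 : Real.log s < 0 := Real.log_neg hs (by linarith)
  have l2 : Real.log (dist x y) ≤ Real.log s := Real.log_le_log h0 hd
  rw [abs_of_neg l1, abs_of_neg (by linarith)]
  gcongr
  linarith

lemma tendsto_log_modulus (γ ρ : ℝ) (hρ : 0 < ρ) {t : ℕ → ℝ} (t0 : ∀ k, 0 < t k)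
    (ht : Tendsto t atTop (𝓝 0)) :
    Tendsto (fun k => γ / |Real.log (t k * ρ)|) atTop (𝓝 0) := by
  have h1 : Tendsto (fun k => t k * ρ) atTop (𝓝[>] 0) := by
    rw [tendsto_nhdsWithin_iff]
    exact ⟨by simpa using ht.mul_const ρ, Eventually.of_forall fun k => mul_pos (t0 k) hρ⟩
  have h2 := tendsto_abs_atBot_atTop.comp (Real.tendsto_log_nhdsGT_zero.comp h1)
  exact h2.const_div_atTop γ

lemma logHolder_unifOn {n : ℕ} {S : Set (Euc n)} {p : Euc n → ℝ} (h : LogHolder S p) :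
    UnifOn S p := by
  obtain ⟨γ, hγ, h⟩ := logHolder_unif h
  intro η hη
  have h1 : Tendsto (fun k : ℕ => 1 / ((k:ℝ) + 1)) atTop (𝓝 0) :=
    tendsto_one_div_add_atTop_nhds_zero_nat
  have h2 := tendsto_log_modulus γ 1 one_pos (fun k => by positivity) h1
  obtain ⟨k, hk1, hk2⟩ := ((h2.eventually_lt_const hη).and
    (h1.eventually_lt_const (show (0:ℝ) < 1/2 by norm_num))).exists
  rw [mul_one] at hk1
  exact ⟨1 / ((k:ℝ) + 1), by positivity, fun a ha b hb hd =>
    (h _ (by positivity) hk2 a ha b hb hd).trans hk1.le⟩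

/-- Averages of a function with finite modular for a log-Hölder exponent converge in the modular
sense. -/
lemma avg_modular {n : ℕ} {ω : Set (Euc n)} (hω : IsOpen ω) (hωb : Bornology.IsBounded ω)
    {p : Euc n → ℝ} (mp : Measurable p) {pm pM : ℝ} (hpm : 1 < pm)
    (hp : ∀ᵐ x ∂(volume.restrict ω), pm ≤ p x ∧ p x ≤ pM) (hl : LogHolder ω p)
    {ν : Measure (Euc n)} {c : ℝ≥0} {ρ : ℝ} (D : AvgData univ univ ν c ρ) (hρ : 0 < ρ)
    {g : Euc n → ℝ} (mg : Measurable g) (ig : Integrable g) (zg : ∀ x, x ∉ ω → g x = 0)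
    (hg : ∫⁻ x in ω, ‖g x‖ₑ ^ p x < ⊤) {t : ℕ → ℝ} (t0 : ∀ k, 0 < t k)
    (ht : Tendsto t atTop (𝓝 0)) :
    Tendsto (fun k => ∫⁻ x in ω, ‖avg ν (t k) g x - g x‖ₑ ^ p x) atTop (𝓝 0) := by
  have hν := D.prob
  have hV : volume ω ≠ ⊤ := hωb.measure_lt_top.ne
  have hm := hω.measurableSet
  obtain ⟨γ, hγ, hmod⟩ := logHolder_unif hl
  obtain ⟨F, hF⟩ : ∃ F : Euc n → ℝ, F = ω.indicator (fun x => |g x| ^ p x) := ⟨_, rfl⟩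
  have mF : Measurable F := by
    rw [hF]; exact Measurable.indicator (by fun_prop) hm
  have hFe : ∀ x, x ∈ ω → 0 ≤ p x → ‖F x‖ₑ = ‖g x‖ₑ ^ p x := by
    intro x hx h0
    rw [hF, indicator_of_mem hx, ← ofReal_rpow_enorm (g x) h0, Real.enorm_eq_ofReal (by positivity),
      Real.norm_eq_abs]
  have hFint : ∫⁻ x, ‖F x‖ₑ < ⊤ := by
    have : ∫⁻ x, ‖F x‖ₑ = ∫⁻ x in ω, ‖F x‖ₑ := by
      rw [← lintegral_indicator hm]
      congr 1
      ext x
      by_cases hx : x ∈ ω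
      · rw [indicator_of_mem hx]
      · rw [indicator_of_notMem hx, hF, indicator_of_notMem hx]; simp
    rw [this]
    refine lt_of_eq_of_lt (lintegral_congr_ae ?_) hg
    filter_upwards [hp, ae_restrict_mem hm] with x hx hxω
    exact hFe x hxω (by linarith [hx.1])
  have iF : Integrable F := ⟨mF.aestronglyMeasurable, hFint⟩
  obtain ⟨M, hM⟩ : ∃ M : ℝ≥0∞, M = max 1 (c * ∫⁻ x, ‖g x‖ₑ) := ⟨_, rfl⟩
  have hM1 : 1 ≤ M := by rw [hM]; exact le_max_left _ _
  have hMt : M ≠ ⊤ := by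
    rw [hM]; exact (max_lt (by simp) (ENNReal.mul_lt_top (by simp) ig.2)).ne
  obtain ⟨L, hL⟩ : ∃ L : ℝ≥0∞, L = M * ENNReal.ofReal (Real.exp (2 * n * γ)) := ⟨_, rfl⟩
  have hLt : L ≠ ⊤ := by rw [hL]; exact ENNReal.mul_ne_top hMt (by simp)
  obtain ⟨osc, hosc⟩ : ∃ osc : ℕ → Euc n → ℝ≥0∞,
    osc = fun k x => ∫⁻ z, ‖F (x + t k • z) - F x‖ₑ ∂ν := ⟨_, rfl⟩
  have oscm : ∀ k, Measurable (osc k) := by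
    intro k; rw [hosc]
    exact Measurable.lintegral_prod_right'
      (f := fun q : Euc n × Euc n => ‖F (q.1 + t k • q.2) - F q.1‖ₑ) (by fun_prop)
  have osc0 : Tendsto (fun k => ∫⁻ x in ω, osc k x) atTop (𝓝 0) := by
    refine tendsto_of_tendsto_of_tendsto_of_le_of_le tendsto_const_nhds (osc_L1 D hρ mF iF t0 ht)
      (fun _ => zero_le) (fun k => ?_)
    rw [hosc]
    exact setLIntegral_le_lintegral _ _
  -- the pointwise estimate by Jensen's inequality at the exponent `p x - γ / |log (t ρ)|`
  have main : ∀ᶠ k in atTop, ∀ᵐ x ∂(volume.restrict ω),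
      ‖avg ν (t k) g x‖ₑ ^ p x ≤ (1 + ‖F x‖ₑ + osc k x) * L := by
    have ev1 : ∀ᶠ k in atTop, t k * ρ < 1/2 := by
      have : Tendsto (fun k => t k * ρ) atTop (𝓝 0) := by simpa using ht.mul_const ρ
      exact this.eventually_lt_const (by norm_num)
    have ev2 : ∀ᶠ k in atTop, t k * ρ ^ 2 < 1 := by
      have : Tendsto (fun k => t k * ρ ^ 2) atTop (𝓝 0) := by simpa using ht.mul_const (ρ ^ 2)
      exact this.eventually_lt_const (by norm_num)
    have ev3 := (tendsto_log_modulus γ ρ hρ t0 ht).eventually_lt_const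
      (show (0:ℝ) < min 1 (pm - 1) from lt_min one_pos (by linarith))
    filter_upwards [ev1, ev2, ev3] with k k1 k2 k3
    have d1 := (lt_min_iff.1 k3).1
    have d2 := (lt_min_iff.1 k3).2
    have hls := log_scalar hγ hρ (t0 k) k1 k2.le n
    have hmk := hmod (t k * ρ) (mul_pos (t0 k) hρ) k1
    have d0 : 0 ≤ γ / |Real.log (t k * ρ)| := by positivity
    obtain ⟨δ, hδ⟩ : ∃ δ, δ = γ / |Real.log (t k * ρ)| := ⟨_, rfl⟩
    rw [← hδ] at d0 d1 d2 hls hmk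
    filter_upwards [hp, ae_restrict_mem hm] with x hx hxω
    have hpx : p x = (p x - δ) + δ := by ring
    have hq1 : 1 ≤ p x - δ := by linarith [hx.1]
    have j1 : (∫⁻ z, ‖g (x + t k • z)‖ₑ ∂ν) ^ (p x - δ) ≤ 1 + ‖F x‖ₑ + osc k x := by
      calc _ ≤ ∫⁻ z, ‖g (x + t k • z)‖ₑ ^ (p x - δ) ∂ν := jensen_lint ν (by fun_prop) hq1
        _ ≤ ∫⁻ z, ((1 + ‖F x‖ₑ) + ‖F (x + t k • z) - F x‖ₑ) ∂ν := by
            refine lintegral_mono_ae ?_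
            filter_upwards [D.small] with z hz
            have hF3 : ‖F (x + t k • z)‖ₑ ≤ ‖F x‖ₑ + ‖F (x + t k • z) - F x‖ₑ := by
              have := enorm_add_le (F x) (F (x + t k • z) - F x)
              simpa using this
            by_cases hy : x + t k • z ∈ ω
            · have hd : dist x (x + t k • z) ≤ t k * ρ := by
                rw [dist_self_add_right, norm_smul, Real.norm_eq_abs, abs_of_pos (t0 k)]
                exact mul_le_mul_of_nonneg_left hz.1 (t0 k).le
              have := (abs_le.1 (hmk x hxω _ hy hd)).2
              refine (rpow_le_one_add (by linarith) (by linarith : p x - δ ≤ p (x + t k • z))).trans ?_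
              rw [← hFe _ hy (by linarith), add_assoc]
              gcongr
            · rw [zg _ hy]
              simp [show 0 < p x - δ by linarith]
        _ = 1 + ‖F x‖ₑ + osc k x := by
            rw [lintegral_add_left measurable_const, hosc]; simp
    have j2 : ∫⁻ z, ‖g (x + t k • z)‖ₑ ∂ν ≤ M * ENNReal.ofReal (t k ^ (-(n:ℝ))) := by
      refine (D.lint_le (fun y => ‖g y‖ₑ) x (t0 k)).trans ?_
      rw [mul_right_comm, hM]
      gcongr
      exact le_max_right _ _
    refine (ENNReal.rpow_le_rpow (avg_enorm_le ν (t k) g x) (by linarith)).trans ?_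
    rw [hL]
    exact kernel_scalar (by linarith) (by linarith) (by linarith) hM1 j1 j2
      (by rw [show p x - (p x - δ) = δ by ring]; exact hls)
  -- dominated convergence along subsequences, after splitting off the oscillation
  obtain ⟨H, hH⟩ : ∃ H : Euc n → ℝ≥0∞, H = fun x => 2 ^ pM * ((1 + ‖F x‖ₑ) * L + ‖F x‖ₑ) := ⟨_, rfl⟩
  have mH : Measurable H := by rw [hH]; fun_prop
  have Hint : ∫⁻ x in ω, H x ≠ ⊤ := by
    rw [hH]
    have h1 : ∫⁻ x in ω, ‖F x‖ₑ ≠ ⊤ := ((setLIntegral_le_lintegral _ _).trans_lt hFint).ne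
    rw [lintegral_const_mul _ (by fun_prop), lintegral_add_left (by fun_prop),
      lintegral_mul_const _ (by fun_prop), lintegral_add_left (by fun_prop)]
    simp only [lintegral_const, Measure.restrict_apply MeasurableSet.univ, univ_inter, one_mul]
    exact ENNReal.mul_ne_top (by simp) (ENNReal.add_ne_top.2
      ⟨ENNReal.mul_ne_top (ENNReal.add_ne_top.2 ⟨hV, h1⟩) hLt, h1⟩)
  have bound : ∀ᶠ k in atTop, ∀ᵐ x ∂(volume.restrict ω),
      ‖avg ν (t k) g x - g x‖ₑ ^ p x ≤ min (‖avg ν (t k) g x - g x‖ₑ ^ p x) (H x)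
        + 2 ^ pM * L * osc k x := by
    filter_upwards [main] with k hk
    filter_upwards [hk, hp, ae_restrict_mem hm] with x hx hpx hxω
    have h1 : ‖avg ν (t k) g x - g x‖ₑ ^ p x ≤ H x + 2 ^ pM * L * osc k x := by
      have e : ‖avg ν (t k) g x - g x‖ₑ ≤ ∑ i, (![‖avg ν (t k) g x‖ₑ, ‖g x‖ₑ] : Fin 2 → ℝ≥0∞) i := by
        simpa using enorm_sub_le (a := avg ν (t k) g x) (b := g x)
      calc _ ≤ _ := ENNReal.rpow_le_rpow e (by linarith)
        _ ≤ _ := sum_rpow_le _ (by linarith)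
        _ ≤ 2 ^ pM * ((1 + ‖F x‖ₑ + osc k x) * L + ‖F x‖ₑ) := by
            simp only [Fin.sum_univ_two, Matrix.cons_val_zero, Matrix.cons_val_one,
              Fintype.card_fin]
            rw [← hFe x hxω (by linarith)]
            gcongr
            exact ENNReal.rpow_le_rpow_of_exponent_le (by norm_num) hpx.2
        _ = H x + 2 ^ pM * L * osc k x := by rw [hH]; ring
    rcases le_total (‖avg ν (t k) g x - g x‖ₑ ^ p x) (H x) with h | h
    · rw [min_eq_left h]; exact le_self_add
    · rw [min_eq_right h]; exact h1
  refine tendsto_of_subseq_tendsto fun ns hns => ?_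
  have hL1 : TendstoL1 univ (fun k => avg ν (t (ns k)) g) g := by
    have : Tendsto (fun k => ∫⁻ x, ‖avg ν (t k) g x - g x‖ₑ) atTop (𝓝 0) :=
      tendsto_of_tendsto_of_tendsto_of_le_of_le tendsto_const_nhds (osc_L1 D hρ mg ig t0 ht)
        (fun _ => zero_le) (fun k => lintegral_mono fun x => avg_sub_le D mg ig (t0 k) x)
    simpa [TendstoL1, ← ofReal_norm, Function.comp_def] using this.comp hns
  obtain ⟨φ, hφ, hae⟩ := subseq_of_TendstoL1 (fun k => measurable_avg_real ν mg) mg hL1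
  refine ⟨φ, ?_⟩
  have hsub : Tendsto (fun k => ns (φ k)) atTop atTop := hns.comp hφ.tendsto_atTop
  have lim1 : Tendsto (fun k => ∫⁻ x in ω, min (‖avg ν (t (ns (φ k))) g x - g x‖ₑ ^ p x) (H x))
      atTop (𝓝 0) := by
    have := tendsto_lintegral_of_dominated_convergence (μ := volume.restrict ω)
      (F := fun k x => min (‖avg ν (t (ns (φ k))) g x - g x‖ₑ ^ p x) (H x)) (f := fun _ => 0) H
      (fun k => by
        have := measurable_avg_real ν mg (s := t (ns (φ k)))
        fun_prop)
      (fun k => ae_of_all _ fun x => min_le_right _ _) Hint ?_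
    · simpa using this
    · rw [Measure.restrict_univ] at hae
      filter_upwards [ae_restrict_of_ae hae, hp] with x hx hpx
      have h1 : Tendsto (fun k => avg ν (t (ns (φ k))) g x - g x) atTop (𝓝 0) := by
        simpa using hx.sub_const (g x)
      have h2 := (h1.enorm).ennrpow_const (p x)
      rw [enorm_zero, ENNReal.zero_rpow_of_pos (by linarith)] at h2
      exact tendsto_of_tendsto_of_tendsto_of_le_of_le tendsto_const_nhds h2
        (fun _ => zero_le) (fun k => min_le_left _ _)
  have lim2 : Tendsto (fun k => 2 ^ pM * L * ∫⁻ x in ω, osc (ns (φ k)) x) atTop (𝓝 0) := by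
    have := ENNReal.Tendsto.const_mul (osc0.comp hsub) (a := 2 ^ pM * L)
      (Or.inr (ENNReal.mul_ne_top (by simp) hLt))
    simpa using this
  have lim3 := lim1.add lim2
  rw [add_zero] at lim3
  refine tendsto_of_tendsto_of_tendsto_of_le_of_le' tendsto_const_nhds lim3
    (Eventually.of_forall fun _ => zero_le) ?_
  filter_upwards [hsub.eventually bound] with k hk
  rw [← lintegral_const_mul _ (oscm _), ← lintegral_add_right _ ((oscm _).const_mul _)]
  exact lintegral_mono_ae hk

/-! ### Lipschitz boundaries: inward directions and partitions of unity -/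

open scoped Manifold

lemma updCoord_eq {n : ℕ} (y : Euc n) (i : Fin n) (s : ℝ) :
    y + s • EuclideanSpace.single i (1:ℝ) = updCoord y i (y i + s) := by
  ext j
  by_cases h : j = i
  · subst h; simp [updCoord]
  · simp [updCoord, h]

/-- Near each point of the closure of a Lipschitz domain, a fixed cone of directions points
into the domain. -/
lemma inward_nbhd {n : ℕ} {ω : Set (Euc n)} (hω : IsOpen ω) (hL : HasLipschitzBoundary ω)
    {x : Euc n} (hx : x ∈ closure ω) :
    ∃ U : Set (Euc n), IsOpen U ∧ x ∈ U ∧ ∃ (a : Euc n) (b : ℝ), 0 < b ∧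
      ∀ K : Set (Euc n), IsCompact K → K ⊆ U → ∃ t₀ > (0:ℝ), ∀ t : ℝ, 0 < t → t < t₀ →
        ∀ y ∈ closure ω, y ∈ K → ∀ z, ‖z - a‖ ≤ b → y + t • z ∈ ω := by
  -- points of a compact subset of an open set stay inside under small displacements
  have stay : ∀ (U K : Set (Euc n)) (a : Euc n) (b : ℝ), 0 < b → IsOpen U → IsCompact K → K ⊆ U →
      ∃ t₀ > (0:ℝ), ∀ t : ℝ, 0 < t → t < t₀ → ∀ y ∈ K, ∀ z, ‖z - a‖ ≤ b → y + t • z ∈ U := by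
    intro U K a b hb hU hK hKU
    obtain ⟨δ, hδ, hd⟩ := hK.exists_cthickening_subset_open hU hKU
    refine ⟨δ / (‖a‖ + b), by positivity, fun t h0 h1 y hy z hz => hd ?_⟩
    apply Metric.mem_cthickening_of_dist_le _ y _ _ hy
    rw [dist_self_add_left, norm_smul, Real.norm_eq_abs, abs_of_pos h0]
    have h2 : ‖z‖ ≤ ‖a‖ + b := by
      have := norm_add_le (z - a) a
      rw [sub_add_cancel] at this
      linarith
    rw [lt_div_iff₀ (by positivity)] at h1
    exact (mul_le_mul_of_nonneg_left h2 h0.le).trans h1.le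
  by_cases hxω : x ∈ ω
  · refine ⟨ω, hω, hxω, 0, 1, one_pos, fun K hK hKU => ?_⟩
    obtain ⟨t₀, ht, h⟩ := stay ω K 0 1 one_pos hω hK hKU
    exact ⟨t₀, ht, fun t h0 h1 y _ hy z hz => h t h0 h1 y hy z hz⟩
  · obtain ⟨U, hU, hxU, e, i₀, f, Kf, hf, hfi, hgraph⟩ := hL x
      ⟨hx, by rwa [hω.interior_eq]⟩
    refine ⟨U, hU, hxU, e.symm (EuclideanSpace.single i₀ 1), 1 / ((Kf:ℝ) + 2), by positivity,
      fun K hK hKU => ?_⟩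
    obtain ⟨t₀, ht, hs⟩ := stay U K (e.symm (EuclideanSpace.single i₀ 1)) (1 / ((Kf:ℝ) + 2))
      (by positivity) hU hK hKU
    refine ⟨t₀, ht, fun t h0 h1 y hyc hyK z hz => ?_⟩
    have hin := hs t h0 h1 y hyK z hz
    -- the graph inequality passes to the closure
    have hle : f (e y) ≤ e y i₀ := by
      have hcl : y ∈ closure (ω ∩ U) := by
        rw [inter_comm]; exact hU.inter_closure ⟨hKU hyK, hyc⟩
      have hsub : ω ∩ U ⊆ {y | f (e y) ≤ e y i₀} := by
        rw [hgraph]; intro y hy; exact hy.2.le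
      have hclosed : IsClosed {y : Euc n | f (e y) ≤ e y i₀} := by
        have hfc := hf.continuous
        have hec := e.continuous
        exact isClosed_le (hfc.comp hec) (by fun_prop)
      exact closure_minimal hsub hclosed hcl
    obtain ⟨ζ, hζ⟩ : ∃ ζ : Euc n, ζ = e z - EuclideanSpace.single i₀ 1 := ⟨_, rfl⟩
    have hζn : ‖ζ‖ ≤ 1 / ((Kf:ℝ) + 2) := by
      have : ζ = e (z - e.symm (EuclideanSpace.single i₀ 1)) := by rw [hζ, map_sub]; simp
      rw [this, e.norm_map]; exact hz
    have hez : e (y + t • z) = (e y + t • ζ) + t • EuclideanSpace.single i₀ (1:ℝ) := by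
      rw [map_add, map_smul, hζ, smul_sub]; abel
    have h3 : f (e (y + t • z)) = f (e y + t • ζ) := by
      rw [hez, updCoord_eq, hfi]
    have h4 : f (e y + t • ζ) ≤ f (e y) + Kf * (t * ‖ζ‖) := by
      have := hf.dist_le_mul (e y + t • ζ) (e y)
      rw [dist_self_add_left, norm_smul, Real.norm_eq_abs, abs_of_pos h0, Real.dist_eq] at this
      linarith [(abs_le.1 this).2]
    have h5 : e (y + t • z) i₀ = e y i₀ + t * ζ i₀ + t := by
      rw [hez]; simp
    have h6 := (abs_le.1 ((abs_apply_le_norm ζ i₀))).1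
    have h7 : (Kf + 1) * ‖ζ‖ < 1 := by
      have hK0 : (0:ℝ) ≤ Kf := Kf.2
      calc ((Kf:ℝ) + 1) * ‖ζ‖ ≤ (Kf + 1) * (1 / (Kf + 2)) := by gcongr
        _ < 1 := by rw [mul_one_div, div_lt_one (by positivity)]; linarith
    have : y + t • z ∈ ω ∩ U := by
      rw [hgraph]
      refine ⟨hin, ?_⟩
      change f (e (y + t • z)) < e (y + t • z) i₀
      rw [h3, h5]
      nlinarith
    exact this.1

/-- A smooth partition of unity on the closure of a bounded Lipschitz domain, each member of which
comes with a ball of directions pointing into the domain. -/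
lemma exists_partition {n : ℕ} {ω : Set (Euc n)} (hω : IsOpen ω) (hωb : Bornology.IsBounded ω)
    (hL : HasLipschitzBoundary ω) :
    ∃ (ι : Type) (_ : Fintype ι) (χ : ι → Euc n → ℝ) (a : ι → Euc n) (b : ι → ℝ),
      (∀ i, ContDiff ℝ (⊤ : ℕ∞) (χ i)) ∧ (∀ x ∈ closure ω, ∑ i, χ i x = 1) ∧ (∀ i, 0 < b i) ∧
      ∃ t₀ > (0:ℝ), ∀ (i : ι) (t : ℝ), 0 < t → t < t₀ → ∀ y ∈ closure ω, y ∈ tsupport (χ i) →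
        ∀ z, ‖z - a i‖ ≤ b i → y + t • z ∈ ω := by
  have hc : IsCompact (closure ω) := hωb.isCompact_closure
  choose! U hU hxU a b hb hK using fun x (hx : x ∈ closure ω) => inward_nbhd hω hL hx
  obtain ⟨s, hs, hcov⟩ := hc.elim_nhds_subcover U
    (fun x hx => (hU x hx).mem_nhds (hxU x hx))
  obtain ⟨χ, hχ⟩ := SmoothPartitionOfUnity.exists_isSubordinate 𝓘(ℝ, Euc n)
    (isClosed_closure (s := ω)) (fun i : s => U i) (fun i => hU _ (hs _ i.2)) (by
      intro x hx
      obtain ⟨i, hi, hxi⟩ := mem_iUnion₂.1 (hcov hx)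
      exact mem_iUnion.2 ⟨⟨i, hi⟩, hxi⟩)
  have hKi : ∀ i : s, ∃ t₀ > (0:ℝ), ∀ t : ℝ, 0 < t → t < t₀ → ∀ y ∈ closure ω,
      y ∈ closure ω ∩ tsupport (χ i) → ∀ z, ‖z - a i‖ ≤ b i → y + t • z ∈ ω := fun i =>
    hK _ (hs _ i.2) _ (hc.inter_right (isClosed_tsupport _)) (inter_subset_right.trans (hχ i))
  choose t₀ ht₀ hin using hKi
  obtain ⟨τ, hτ0, hτ⟩ : ∃ τ > (0:ℝ), ∀ i, τ ≤ t₀ i := by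
    rcases isEmpty_or_nonempty s with he | hne
    · exact ⟨1, one_pos, fun i => he.elim i⟩
    · obtain ⟨i, hi⟩ := Finite.exists_min t₀
      exact ⟨t₀ i, ht₀ i, hi⟩
  let eq := Fintype.equivFin s
  refine ⟨Fin (Fintype.card s), inferInstance, fun k => χ (eq.symm k), fun k => a (eq.symm k),
    fun k => b (eq.symm k), fun k => (χ (eq.symm k)).contMDiff.contDiff, fun x hx => ?_,
    fun k => hb _ (hs _ (eq.symm k).2), τ, hτ0, fun k t h0 h1 y hy hyt z hz => ?_⟩
  · rw [← χ.sum_eq_one hx, finsum_eq_sum_of_fintype]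
    exact eq.symm.sum_comp (fun i => χ i x)
  · exact hin (eq.symm k) t h0 (h1.trans_le (hτ _)) y hy ⟨hy, hyt⟩ z hz

/-- The uniform distribution on a ball. -/
lemma exists_ball_avg {n : ℕ} (a : Euc n) {b : ℝ} (hb : 0 < b) :
    ∃ (ν : Measure (Euc n)) (c : ℝ≥0), AvgData univ univ ν c (‖a‖ + b) ∧
      ∀ᵐ z ∂ν, ‖z - a‖ ≤ b := by
  obtain ⟨Z, hZ⟩ : ∃ Z : Set (Euc n), Z = Metric.ball a b := ⟨_, rfl⟩
  have hZo : IsOpen Z := by rw [hZ]; exact Metric.isOpen_ball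
  have hZ0 : volume Z ≠ 0 := (hZo.measure_pos _ (by rw [hZ]; exact ⟨a, by simpa using hb⟩)).ne'
  have hZt : volume Z ≠ ⊤ := by rw [hZ]; exact measure_ball_lt_top.ne
  have hae : ∀ᵐ z ∂((volume Z)⁻¹ • volume.restrict Z), ‖z - a‖ ≤ b := by
    refine Measure.ae_smul_measure ?_ _
    filter_upwards [ae_restrict_mem hZo.measurableSet] with z hz
    rw [hZ, mem_ball_iff_norm] at hz
    exact hz.le
  refine ⟨(volume Z)⁻¹ • volume.restrict Z, ((volume Z)⁻¹).toNNReal, ⟨isOpen_univ, ?_, ?_, ?_⟩, hae⟩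
  · constructor
    simp [ENNReal.inv_mul_cancel hZ0 hZt]
  · rw [ENNReal.coe_toNNReal (ENNReal.inv_ne_top.2 hZ0)]
    intro S
    simp only [Measure.smul_apply, smul_eq_mul]
    gcongr
    exact Measure.restrict_le_self
  · filter_upwards [hae] with z hz
    refine ⟨?_, fun _ _ _ _ => mem_univ _⟩
    have := norm_add_le (z - a) a
    rw [sub_add_cancel] at this
    linarith

/-! ### Approximation by functions with compact support in the domain -/

lemma WD.sum {n : ℕ} {S : Set (Euc n)} {j : Fin n} {ι : Type} [Fintype ι] {w g : ι → Euc n → ℝ}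
    (h : ∀ i, WD S j (w i) (g i)) (hw : ∀ i, LocallyIntegrable (w i))
    (hg : ∀ i, LocallyIntegrable (g i)) : WD S j (fun x => ∑ i, w i x) (fun x => ∑ i, g i x) := by
  intro φ h1 h2 h3
  simp_rw [Finset.mul_sum]
  rw [integral_finsetSum _ fun i _ => integrable_test_mul h1.continuous h2 (hg i),
    integral_finsetSum _ fun i _ => integrable_test_mul (continuous_fderiv_apply h1 _)
      (hasCompactSupport_fderiv_apply h2 _) (hw i), ← Finset.sum_neg_distrib]
  exact Finset.sum_congr rfl fun i _ => h i φ h1 h2 h3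

/-- Linear combinations with bounded coefficients preserve finiteness of the modular. -/
lemma modular_comb {n : ℕ} {ω : Set (Euc n)} (hm : MeasurableSet ω) {p : Euc n → ℝ}
    (mp : Measurable p) {pM : ℝ} (hp : ∀ᵐ x ∂(volume.restrict ω), 1 ≤ p x ∧ p x ≤ pM)
    {α β u v : Euc n → ℝ} (mu : Measurable u) {M : ℝ}
    (hα : ∀ x ∈ ω, |α x| ≤ M) (hβ : ∀ x ∈ ω, |β x| ≤ M)
    (hu : ∫⁻ x in ω, ‖u x‖ₑ ^ p x < ⊤) (hv : ∫⁻ x in ω, ‖v x‖ₑ ^ p x < ⊤) :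
    ∫⁻ x in ω, ‖α x * u x + β x * v x‖ₑ ^ p x < ⊤ := by
  obtain ⟨A, hA⟩ : ∃ A : ℝ≥0∞, A = max 1 (ENNReal.ofReal M) := ⟨_, rfl⟩
  have hA1 : 1 ≤ A := by rw [hA]; exact le_max_left _ _
  have hAt : A ≠ ⊤ := by rw [hA]; exact (max_lt (by simp) (by simp)).ne
  have key : ∀ᵐ x ∂(volume.restrict ω), ‖α x * u x + β x * v x‖ₑ ^ p x ≤
      (2 ^ pM * A ^ pM) * (‖u x‖ₑ ^ p x + ‖v x‖ₑ ^ p x) := by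
    filter_upwards [hp, ae_restrict_mem hm] with x hx hxω
    have b1 : ‖α x‖ₑ ≤ A := by
      rw [hA, ← ofReal_norm]
      exact (ENNReal.ofReal_le_ofReal (hα x hxω)).trans (le_max_right _ _)
    have b2 : ‖β x‖ₑ ≤ A := by
      rw [hA, ← ofReal_norm]
      exact (ENNReal.ofReal_le_ofReal (hβ x hxω)).trans (le_max_right _ _)
    have e : ‖α x * u x + β x * v x‖ₑ ≤ ∑ i, (![A * ‖u x‖ₑ, A * ‖v x‖ₑ] : Fin 2 → ℝ≥0∞) i := by
      simp only [Fin.sum_univ_two, Matrix.cons_val_zero, Matrix.cons_val_one]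
      refine (enorm_add_le _ _).trans ?_
      rw [enorm_mul, enorm_mul]
      gcongr
    have h0 : (0:ℝ) ≤ p x := by linarith [hx.1]
    calc _ ≤ _ := ENNReal.rpow_le_rpow e h0
      _ ≤ _ := sum_rpow_le _ (by linarith [hx.1])
      _ = 2 ^ p x * A ^ p x * (‖u x‖ₑ ^ p x + ‖v x‖ₑ ^ p x) := by
          simp only [Fin.sum_univ_two, Matrix.cons_val_zero, Matrix.cons_val_one,
              Fintype.card_fin]
          rw [ENNReal.mul_rpow_of_nonneg _ _ h0, ENNReal.mul_rpow_of_nonneg _ _ h0]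
          push_cast
          ring
      _ ≤ _ := by
          gcongr ?_ * ?_ * _
          · exact ENNReal.rpow_le_rpow_of_exponent_le (by norm_num) hx.2
          · exact ENNReal.rpow_le_rpow_of_exponent_le hA1 hx.2
  refine (lintegral_mono_ae key).trans_lt ?_
  have hc : (2 ^ pM * A ^ pM : ℝ≥0∞) ≠ ⊤ := ENNReal.mul_ne_top
    (ENNReal.rpow_ne_top_of_ne_zero (by norm_num) (by norm_num))
    (ENNReal.rpow_ne_top_of_ne_zero (by positivity) hAt)
  rw [lintegral_const_mul' _ _ hc, lintegral_add_left (by fun_prop)]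
  exact ENNReal.mul_lt_top hc.lt_top (ENNReal.add_lt_top.2 ⟨hu, hv⟩)

/-- A function that is a finite sum of pieces is approximated in modular by averaging each piece
with its own measure. -/
lemma avg_sum_modular {n : ℕ} {ω : Set (Euc n)} (hω : IsOpen ω) (hωb : Bornology.IsBounded ω)
    {p : Euc n → ℝ} (mp : Measurable p) {pm pM : ℝ} (hpm : 1 < pm)
    (hp : ∀ᵐ x ∂(volume.restrict ω), pm ≤ p x ∧ p x ≤ pM) (hl : LogHolder ω p)
    {ι : Type} [Fintype ι] {ν : ι → Measure (Euc n)} {c : ι → ℝ≥0} {ρ : ι → ℝ}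
    (D : ∀ i, AvgData univ univ (ν i) (c i) (ρ i)) (hρ : ∀ i, 0 < ρ i)
    {g : ι → Euc n → ℝ} (mg : ∀ i, Measurable (g i)) (ig : ∀ i, Integrable (g i))
    (zg : ∀ i x, x ∉ ω → g i x = 0)
    (hg : ∀ i, ∫⁻ x in ω, ‖g i x‖ₑ ^ p x < ⊤) {t : ℕ → ℝ} (t0 : ∀ k, 0 < t k)
    (ht : Tendsto t atTop (𝓝 0)) {Y : Euc n → ℝ} (hY : ∀ x ∈ ω, Y x = ∑ i, g i x) :
    Tendsto (fun k => ∫⁻ x in ω, ‖∑ i, avg (ν i) (t k) (g i) x - Y x‖ₑ ^ p x) atTop (𝓝 0) := by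
  have hν := fun i => (D i).prob
  obtain ⟨Q, hQ⟩ : ∃ Q : ℝ≥0∞, Q = max 1 (Fintype.card ι : ℝ≥0∞) ^ |pM| := ⟨_, rfl⟩
  have hQt : Q ≠ ⊤ := by
    rw [hQ]
    exact ENNReal.rpow_ne_top_of_nonneg (abs_nonneg _) (max_lt (by simp) (by simp)).ne
  have hlim : Tendsto (fun k => Q * ∑ i, ∫⁻ x in ω, ‖avg (ν i) (t k) (g i) x - g i x‖ₑ ^ p x)
      atTop (𝓝 0) := by
    have h1 := tendsto_finsetSum (Finset.univ : Finset ι) fun i _ =>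
      avg_modular hω hωb mp hpm hp hl (D i) (hρ i) (mg i) (ig i) (zg i) (hg i) t0 ht
    rw [Finset.sum_const_zero] at h1
    have := ENNReal.Tendsto.const_mul h1 (a := Q) (Or.inr hQt)
    simpa using this
  refine tendsto_of_tendsto_of_tendsto_of_le_of_le tendsto_const_nhds hlim
    (fun _ => zero_le) (fun k => ?_)
  have ma : ∀ i, Measurable fun x => ‖avg (ν i) (t k) (g i) x - g i x‖ₑ ^ p x := fun i => by
    have := measurable_avg_real (ν i) (mg i) (s := t k)
    have := mg i
    fun_prop
  dsimp only
  rw [← lintegral_finsetSum _ fun i _ => ma i, ← lintegral_const_mul _ (Finset.measurable_fun_sum _ fun i _ => ma i)]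
  refine lintegral_mono_ae ?_
  filter_upwards [hp, ae_restrict_mem hω.measurableSet] with x hx hxω
  have e : ‖∑ i, avg (ν i) (t k) (g i) x - Y x‖ₑ ≤ ∑ i, ‖avg (ν i) (t k) (g i) x - g i x‖ₑ := by
    rw [hY x hxω, ← Finset.sum_sub_distrib]
    exact enorm_sum_le _ _
  refine (ENNReal.rpow_le_rpow e (by linarith)).trans ((sum_rpow_le _ (by linarith)).trans ?_)
  gcongr
  rw [hQ]
  calc (Fintype.card ι : ℝ≥0∞) ^ p x ≤ max 1 (Fintype.card ι : ℝ≥0∞) ^ p x :=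
        ENNReal.rpow_le_rpow (le_max_right _ _) (by linarith)
    _ ≤ _ := ENNReal.rpow_le_rpow_of_exponent_le (le_max_left _ _) (hx.2.trans (le_abs_self _))

/-- Density of compactly supported Sobolev functions: on a bounded Lipschitz domain and for a
log-Hölder exponent, functions whose extension by zero is weakly differentiable with finite modular
are modular limits of functions with compact support in the domain. -/
lemma approx {n : ℕ} {ω : Set (Euc n)} (hω : IsOpen ω) (hωb : Bornology.IsBounded ω)
    (hL : HasLipschitzBoundary ω) {p : Euc n → ℝ} (mp : Measurable p) {pm pM : ℝ} (hpm : 1 < pm)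
    (hp : ∀ᵐ x ∂(volume.restrict ω), pm ≤ p x ∧ p x ≤ pM) (hl : LogHolder ω p)
    {κ : Type} {V : κ → Euc n → ℝ} {K : κ → Fin n → Euc n → ℝ}
    (mV : ∀ i, Measurable (V i)) (mK : ∀ i l, Measurable (K i l))
    (iV : ∀ i, Integrable (V i)) (iK : ∀ i l, Integrable (K i l))
    (zV : ∀ i x, x ∉ ω → V i x = 0) (zK : ∀ i l x, x ∉ ω → K i l x = 0)
    (wd : ∀ i l, WD univ l (V i) (K i l))
    (rV : ∀ i, ∫⁻ x in ω, ‖V i x‖ₑ ^ p x < ⊤) (rK : ∀ i l, ∫⁻ x in ω, ‖K i l x‖ₑ ^ p x < ⊤) :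
    ∃ (W : ℕ → κ → Euc n → ℝ) (N : ℕ → κ → Fin n → Euc n → ℝ) (S : ℕ → Set (Euc n)),
      (∀ k, IsCompact (S k) ∧ S k ⊆ ω) ∧ (∀ k i, Measurable (W k i)) ∧
      (∀ k i l, Measurable (N k i l)) ∧ (∀ k i, Integrable (W k i)) ∧
      (∀ k i l, Integrable (N k i l)) ∧ (∀ k i l, WD univ l (W k i) (N k i l)) ∧
      (∀ k i x, x ∉ S k → W k i x = 0) ∧
      (∀ i, Tendsto (fun k => ∫⁻ x in ω, ‖W k i x - V i x‖ₑ ^ p x) atTop (𝓝 0)) ∧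
      (∀ i l, Tendsto (fun k => ∫⁻ x in ω, ‖N k i l x - K i l x‖ₑ ^ p x) atTop (𝓝 0)) := by
  have hm := hω.measurableSet
  have hc : IsCompact (closure ω) := hωb.isCompact_closure
  have hp1 : ∀ᵐ x ∂(volume.restrict ω), 1 ≤ p x ∧ p x ≤ pM := by
    filter_upwards [hp] with x hx
    exact ⟨by linarith [hx.1], hx.2⟩
  obtain ⟨ι, _, χ, a, b, hχ, hsum, hb, t₀, ht₀, hin⟩ := exists_partition hω hωb hL
  choose ν c D hball using fun i => exists_ball_avg (-(a i)) (hb i)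
  have hν := fun i => (D i).prob
  obtain ⟨t, htd⟩ : ∃ t : ℕ → ℝ, t = fun k : ℕ => t₀ / ((k:ℝ) + 2) := ⟨_, rfl⟩
  have t0 : ∀ k, 0 < t k := fun k => by rw [htd]; positivity
  have t1 : ∀ k, t k < t₀ := fun k => by
    rw [htd]
    refine div_lt_self ht₀ ?_
    have : (0:ℝ) ≤ k := k.cast_nonneg
    linarith
  have tlim : Tendsto t atTop (𝓝 0) := by
    rw [htd]
    exact Tendsto.const_div_atTop (tendsto_atTop_add_const_right _ _ tendsto_natCast_atTop_atTop) _
  have mχ : ∀ m, Measurable (χ m) := fun m => (hχ m).continuous.measurable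
  have cd : ∀ m l, Continuous fun x => fderiv ℝ (χ m) x (EuclideanSpace.single l 1) :=
    fun m l => continuous_fderiv_apply (hχ m) _
  choose B₁ hB₁ using fun m => hc.exists_bound_of_continuousOn (hχ m).continuous.continuousOn
  choose B₂ hB₂ using fun m l => hc.exists_bound_of_continuousOn (cd m l).continuousOn
  have key : ∀ (α β u v : Euc n → ℝ) (C₁ C₂ : ℝ), Measurable α → Measurable β →
      Measurable u → Measurable v → Integrable u → Integrable v →
      (∀ x ∈ closure ω, ‖α x‖ ≤ C₁) → (∀ x ∈ closure ω, ‖β x‖ ≤ C₂) →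
      (∀ x, x ∉ ω → u x = 0) → (∀ x, x ∉ ω → v x = 0) →
      (∫⁻ x in ω, ‖u x‖ₑ ^ p x < ⊤) → (∫⁻ x in ω, ‖v x‖ₑ ^ p x < ⊤) →
      Integrable (fun x => α x * u x + β x * v x) ∧
        ∫⁻ x in ω, ‖α x * u x + β x * v x‖ₑ ^ p x < ⊤ := by
    intro α β u v C₁ C₂ mα mβ mu mv iu iv hα hβ zu zv ru rv
    constructor
    · refine ((iu.norm.const_mul C₁).add (iv.norm.const_mul C₂)).mono' (by fun_prop)
        (ae_of_all _ fun x => ?_)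
      by_cases hx : x ∈ ω
      · refine (norm_add_le _ _).trans ?_
        rw [norm_mul, norm_mul]
        exact add_le_add (mul_le_mul_of_nonneg_right (hα x (subset_closure hx)) (norm_nonneg _))
          (mul_le_mul_of_nonneg_right (hβ x (subset_closure hx)) (norm_nonneg _))
      · simp [zu x hx, zv x hx]
    · exact modular_comb hm mp hp1 mu (M := max C₁ C₂)
        (fun x hx => (hα x (subset_closure hx)).trans (le_max_left _ _))
        (fun x hx => (hβ x (subset_closure hx)).trans (le_max_right _ _)) ru rv
  -- Localisation by the partition of unity, with the product rule for the derivatives.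
  obtain ⟨f, hf⟩ : ∃ f : ι → κ → Euc n → ℝ, f = fun m i x => χ m x * V i x := ⟨_, rfl⟩
  obtain ⟨f', hf'⟩ : ∃ f' : ι → κ → Fin n → Euc n → ℝ, f' = fun m i l x =>
    χ m x * K i l x + fderiv ℝ (χ m) x (EuclideanSpace.single l 1) * V i x := ⟨_, rfl⟩
  have mf : ∀ m i, Measurable (f m i) := fun m i => by rw [hf]; exact (mχ m).mul (mV i)
  have mf' : ∀ m i l, Measurable (f' m i l) := fun m i l => by
    rw [hf']; exact ((mχ m).mul (mK i l)).add ((cd m l).measurable.mul (mV i))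
  have if' : ∀ m i l, Integrable (f' m i l) ∧ ∫⁻ x in ω, ‖f' m i l x‖ₑ ^ p x < ⊤ := fun m i l => by
    rw [hf']
    exact key _ _ _ _ _ _ (mχ m) (cd m l).measurable (mK i l) (mV i) (iK i l) (iV i) (hB₁ m)
      (hB₂ m l) (zK i l) (zV i) (rK i l) (rV i)
  have if0 : ∀ m i, Integrable (f m i) ∧ ∫⁻ x in ω, ‖f m i x‖ₑ ^ p x < ⊤ := fun m i => by
    have := key (χ m) (fun _ => 0) _ _ _ 0 (mχ m) measurable_const (mV i) (mV i) (iV i) (iV i) (hB₁ m)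
      (by simp) (zV i) (zV i) (rV i) (rV i)
    rw [hf]
    simpa using this
  have zf : ∀ m i x, x ∉ ω → f m i x = 0 := fun m i x hx => by rw [hf]; simp [zV i x hx]
  have zf' : ∀ m i l x, x ∉ ω → f' m i l x = 0 := fun m i l x hx => by
    rw [hf']; simp [zV i x hx, zK i l x hx]
  have wdf : ∀ m i l, WD univ l (f m i) (f' m i l) := fun m i l => by
    rw [hf, hf']
    exact (wd i l).mul_smooth (iV i).locallyIntegrable (iK i l).locallyIntegrable (hχ m)
  have sumf : ∀ i, ∀ x ∈ ω, V i x = ∑ m, f m i x := by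
    intro i x hx
    rw [hf]
    simp only
    rw [← Finset.sum_mul, hsum x (subset_closure hx), one_mul]
  have sumf' : ∀ i l, ∀ x ∈ ω, K i l x = ∑ m, f' m i l x := by
    intro i l x hx
    rw [hf']
    simp only
    rw [Finset.sum_add_distrib, ← Finset.sum_mul, ← Finset.sum_mul, hsum x (subset_closure hx)]
    -- The partition sums to one near `x`, so its derivatives sum to zero.
    have : ∑ m, fderiv ℝ (χ m) x (EuclideanSpace.single l 1) = 0 := by
      have h1 : HasFDerivAt (fun y => ∑ m, χ m y) (∑ m, fderiv ℝ (χ m) x) x :=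
        HasFDerivAt.fun_sum fun m _ => ((hχ m).differentiable (by simp) x).hasFDerivAt
      have h2 : (fun y => ∑ m, χ m y) =ᶠ[𝓝 x] fun _ => 1 := by
        filter_upwards [hω.mem_nhds hx] with y hy using hsum y (subset_closure hy)
      have h3 := h1.unique ((hasFDerivAt_const (1:ℝ) x).congr_of_eventuallyEq h2)
      rw [← sum_apply, h3]; simp
    rw [this]; simp
  -- The averages are supported in the translates of the supports by small inward directions; these
  -- sets are compact and contained in `ω` once `t k` is small.
  obtain ⟨S, hS⟩ : ∃ S : ℕ → Set (Euc n), S = fun k => ⋃ m,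
    (fun q : Euc n × Euc n => q.1 + t k • q.2) ''
      ((closure ω ∩ tsupport (χ m)) ×ˢ Metric.closedBall (a m) (b m)) := ⟨_, rfl⟩
  refine ⟨fun k i x => ∑ m, avg (ν m) (t k) (f m i) x, fun k i l x => ∑ m, avg (ν m) (t k) (f' m i l) x,
    S, fun k => ⟨?_, ?_⟩, fun k i => Finset.measurable_fun_sum _ fun m _ => measurable_avg_real _ (mf m i),
    fun k i l => Finset.measurable_fun_sum _ fun m _ => measurable_avg_real _ (mf' m i l),
    fun k i => integrable_finsetSum _ fun m _ => integrable_avg _ (mf m i) (if0 m i).1,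
    fun k i l => integrable_finsetSum _ fun m _ => integrable_avg _ (mf' m i l) (if' m i l).1,
    fun k i l => WD.sum (fun m => (wdf m i l).avg (mf m i) (mf' m i l) (if0 m i).1 (if' m i l).1 _ _)
      (fun m => (integrable_avg _ (mf m i) (if0 m i).1).locallyIntegrable)
      (fun m => (integrable_avg _ (mf' m i l) (if' m i l).1).locallyIntegrable),
    fun k i x hx => ?_,
    fun i => avg_sum_modular hω hωb mp hpm hp hl D (fun m => add_pos_of_nonneg_of_pos (norm_nonneg _) (hb m))
      (fun m => mf m i) (fun m => (if0 m i).1) (fun m => zf m i) (fun m => (if0 m i).2) t0 tlim (sumf i),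
    fun i l => avg_sum_modular hω hωb mp hpm hp hl D (fun m => add_pos_of_nonneg_of_pos (norm_nonneg _) (hb m))
      (fun m => mf' m i l) (fun m => (if' m i l).1) (fun m => zf' m i l) (fun m => (if' m i l).2) t0 tlim
      (sumf' i l)⟩
  · rw [hS]
    refine isCompact_iUnion fun m => IsCompact.image ?_ (by fun_prop)
    exact (hc.inter_right (isClosed_tsupport _)).prod (isCompact_closedBall _ _)
  · rw [hS]
    refine iUnion_subset fun m => ?_
    rintro _ ⟨⟨y, z⟩, ⟨hy, hz⟩, rfl⟩
    exact hin m (t k) (t0 k) (t1 k) y hy.1 hy.2 z (by simpa [dist_eq_norm] using hz)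
  · refine Finset.sum_eq_zero fun m _ => ?_
    have : ∀ᵐ z ∂(ν m), f m i (x + t k • z) = 0 := by
      filter_upwards [hball m] with z hz
      by_contra hne
      apply hx
      have h1 : x + t k • z ∈ ω := by
        by_contra h; exact hne (zf m i _ h)
      have h2 : x + t k • z ∈ tsupport (χ m) := by
        refine subset_tsupport _ fun h => hne ?_
        rw [hf]; simp [h]
      rw [hS]
      refine mem_iUnion.2 ⟨m, (x + t k • z, -z), ⟨⟨subset_closure h1, h2⟩, ?_⟩, by simp⟩
      rw [mem_closedBall_iff_norm, ← norm_neg]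
      have e : -(-z - a m) = z - -(a m) := by abel
      rw [e]
      exact mem_closedBall_iff_norm.1 hz
    rw [avg, integral_congr_ae this]
    simp

/-! ### From scalar components to the Sobolev classes -/

/-- A nonnegative function dominated by a sum of components has its modular bounded by the modulars
of the components. -/
lemma mod_le_sum {α ι : Type*} [MeasurableSpace α] {μ : Measure α} [Fintype ι] {F : ι → α → ℝ}
    (mF : ∀ i, AEMeasurable (F i) μ) {N : α → ℝ} (h0 : ∀ x, 0 ≤ N x)
    (hN : ∀ x, N x ≤ ∑ i, |F i x|) {q : α → ℝ} (mq : AEMeasurable q μ) {pM : ℝ}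
    (hq : ∀ᵐ x ∂μ, 1 ≤ q x ∧ q x ≤ pM) :
    ∫⁻ x, ENNReal.ofReal (N x ^ q x) ∂μ ≤
      (1 + (Fintype.card ι : ℝ≥0∞)) ^ pM * ∑ i, ∫⁻ x, ‖F i x‖ₑ ^ q x ∂μ := by
  have hc : (1 + (Fintype.card ι : ℝ≥0∞)) ^ pM ≠ ⊤ :=
    ENNReal.rpow_ne_top_of_ne_zero (by simp) (by simp)
  rw [← lintegral_finsetSum' _ fun i _ => (mF i).enorm.pow mq, ← lintegral_const_mul' _ _ hc]
  refine lintegral_mono_ae ?_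
  filter_upwards [hq] with x hx
  have hx0 : 0 < q x := by linarith [hx.1]
  rw [← ENNReal.ofReal_rpow_of_nonneg (h0 x) hx0.le]
  have e : ENNReal.ofReal (N x) ≤ ∑ i, ‖F i x‖ₑ := by
    refine (ENNReal.ofReal_le_ofReal (hN x)).trans ?_
    rw [ENNReal.ofReal_sum_of_nonneg fun i _ => abs_nonneg _]
    simp [Real.enorm_eq_ofReal_abs]
  refine (ENNReal.rpow_le_rpow e hx0.le).trans ((sum_rpow_le _ hx0).trans ?_)
  gcongr ?_ * _
  exact (ENNReal.rpow_le_rpow le_add_self hx0.le).trans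
    (ENNReal.rpow_le_rpow_of_exponent_le le_self_add hx.2)

lemma mod_lt_top {α ι : Type*} [MeasurableSpace α] {μ : Measure α} [Fintype ι] {F : ι → α → ℝ}
    (mF : ∀ i, AEMeasurable (F i) μ) {N : α → ℝ} (h0 : ∀ x, 0 ≤ N x)
    (hN : ∀ x, N x ≤ ∑ i, |F i x|) {q : α → ℝ} (mq : AEMeasurable q μ) {pM : ℝ}
    (hq : ∀ᵐ x ∂μ, 1 ≤ q x ∧ q x ≤ pM) (hF : ∀ i, ∫⁻ x, ‖F i x‖ₑ ^ q x ∂μ < ⊤) :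
    ∫⁻ x, ENNReal.ofReal (N x ^ q x) ∂μ < ⊤ := by
  refine (mod_le_sum mF h0 hN mq hq).trans_lt (ENNReal.mul_lt_top ?_ ?_)
  · exact (ENNReal.rpow_ne_top_of_ne_zero (by simp) (by simp)).lt_top
  · exact ENNReal.sum_lt_top.2 fun i _ => hF i

lemma mod_tendsto {α ι : Type*} [MeasurableSpace α] {μ : Measure α} [Fintype ι]
    {F : ℕ → ι → α → ℝ}
    (mF : ∀ k i, AEMeasurable (F k i) μ) {N : ℕ → α → ℝ} (h0 : ∀ k x, 0 ≤ N k x)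
    (hN : ∀ k x, N k x ≤ ∑ i, |F k i x|) {q : α → ℝ} (mq : AEMeasurable q μ) {pM : ℝ}
    (hq : ∀ᵐ x ∂μ, 1 ≤ q x ∧ q x ≤ pM)
    (hF : ∀ i, Tendsto (fun k => ∫⁻ x, ‖F k i x‖ₑ ^ q x ∂μ) atTop (𝓝 0)) :
    Tendsto (fun k => ∫⁻ x, ENNReal.ofReal (N k x ^ q x) ∂μ) atTop (𝓝 0) := by
  refine tendsto_of_tendsto_of_tendsto_of_le_of_le tendsto_const_nhds ?_ (fun _ => zero_le)
    fun k => mod_le_sum (mF k) (h0 k) (hN k) mq hq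
  have h1 := tendsto_finsetSum Finset.univ fun i _ => hF i
  have h2 := ENNReal.Tendsto.const_mul (a := (1 + (Fintype.card ι : ℝ≥0∞)) ^ pM) h1
    (Or.inr (ENNReal.rpow_ne_top_of_ne_zero (by simp) (by simp)))
  simpa using h2

/-- The vector field with the given components. -/
def vec {n d : ℕ} (V : Fin d → Euc n → ℝ) (x : Euc n) : Euc d := WithLp.toLp 2 fun i => V i x

@[simp] lemma vec_apply {n d : ℕ} (V : Fin d → Euc n → ℝ) (x : Euc n) (i : Fin d) :
    vec V x i = V i x := rfl

lemma measurable_vec {n d : ℕ} {V : Fin d → Euc n → ℝ} (h : ∀ i, Measurable (V i)) :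
    Measurable (vec V) := by
  unfold vec
  fun_prop

lemma mnorm_le_sum_prod {d n : ℕ} (ξ : Mat d n) : mnorm ξ ≤ ∑ q : Fin d × Fin n, |ξ q.1 q.2| := by
  rw [Fintype.sum_prod_type]
  exact mnorm_le_sum ξ

lemma mem_planar {ω : Set (Euc 2)} {q : Euc 2 → ℝ} (mq : Measurable q) {pM : ℝ}
    (hq : ∀ᵐ x ∂(volume.restrict ω), 1 ≤ q x ∧ q x ≤ pM)
    {V : Fin 3 → Euc 2 → ℝ} {K : Fin 3 → Fin 2 → Euc 2 → ℝ}
    (mV : ∀ i, Measurable (V i)) (mK : ∀ i l, Measurable (K i l))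
    (wd : ∀ i l, WD univ l (V i) (K i l))
    (rV : ∀ i, ∫⁻ x in ω, ‖V i x‖ₑ ^ q x < ⊤) (rK : ∀ i l, ∫⁻ x in ω, ‖K i l x‖ₑ ^ q x < ⊤) :
    MemW1pPlanar ω q (vec V) (fun x i l => K i l x) := by
  refine ⟨(measurable_vec mV).aestronglyMeasurable, fun i l => (mK i l).aemeasurable,
    weakGrad_iff.2 fun i l => (wd i l).mono (subset_univ _), ?_, ?_⟩
  · exact mod_lt_top (fun i => (mV i).aemeasurable) (fun x => norm_nonneg _)
      (fun x => norm_le_sum_abs _) mq.aemeasurable hq rV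
  · exact mod_lt_top (F := fun q : Fin 3 × Fin 2 => K q.1 q.2) (fun i => (mK _ _).aemeasurable)
      (fun x => mnorm_nonneg _) (fun x => mnorm_le_sum_prod _) mq.aemeasurable hq fun i => rK _ _

/-- Data of a pair `(V, K)`, a planar map extended by zero and its weak gradient on all of `ℝ²`. -/
structure Ext (ω : Set (Euc 2)) (V : Fin 3 → Euc 2 → ℝ) (K : Fin 3 → Fin 2 → Euc 2 → ℝ) :
    Prop where
  mV : ∀ i, Measurable (V i)
  mK : ∀ i l, Measurable (K i l)
  iV : ∀ i, Integrable (V i)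
  iK : ∀ i l, Integrable (K i l)
  zV : ∀ i a, a ∉ ω → V i a = 0
  zK : ∀ i l a, a ∉ ω → K i l a = 0
  wd : ∀ i l, WD univ l (V i) (K i l)

/-- A planar function whose extension by zero is weakly differentiable belongs to the Sobolev class
with zero boundary values, provided the exponent is log-Hölder continuous. -/
lemma Ext.mem0 {ω : Set (Euc 2)} (hω : IsOpen ω) (hωb : Bornology.IsBounded ω)
    (hL : HasLipschitzBoundary ω) {q : Euc 2 → ℝ} (mq : Measurable q) {pm pM : ℝ} (hpm : 1 < pm)
    (hq : ∀ᵐ x ∂(volume.restrict ω), pm ≤ q x ∧ q x ≤ pM) (hl : LogHolder ω q)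
    {V : Fin 3 → Euc 2 → ℝ} {K : Fin 3 → Fin 2 → Euc 2 → ℝ} (X : Ext ω V K)
    (rV : ∀ i, ∫⁻ x in ω, ‖V i x‖ₑ ^ q x < ⊤) (rK : ∀ i l, ∫⁻ x in ω, ‖K i l x‖ₑ ^ q x < ⊤) :
    MemW1p0Planar ω q (vec V) (fun x i l => K i l x) := by
  have hm := hω.measurableSet
  have hq1 : ∀ᵐ x ∂(volume.restrict ω), 1 ≤ q x ∧ q x ≤ pM := by
    filter_upwards [hq] with x hx using ⟨by linarith [hx.1], hx.2⟩
  refine ⟨mem_planar mq hq1 X.mV X.mK X.wd rV rK, ?_⟩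
  obtain ⟨W, N, S, hS, mW, mN, -, -, wdW, zW, cW, cN⟩ := approx hω hωb hL mq hpm hq hl X.mV X.mK
    X.iV X.iK X.zV X.zK X.wd rV rK
  have e1 : ∀ᶠ k in atTop, ∀ i, ∫⁻ x in ω, ‖W k i x - V i x‖ₑ ^ q x < 1 :=
    eventually_all.2 fun i => (cW i).eventually_lt_const one_pos
  have e2 : ∀ᶠ k in atTop, ∀ i l, ∫⁻ x in ω, ‖N k i l x - K i l x‖ₑ ^ q x < 1 :=
    eventually_all.2 fun i => eventually_all.2 fun l => (cN i l).eventually_lt_const one_pos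
  -- the approximations have finite modular once they are close to the limit
  obtain ⟨k₀, hk₀⟩ := eventually_atTop.1 (e1.and e2)
  refine ⟨fun k => vec (W (k + k₀)), fun k x i l => N (k + k₀) i l x, fun k => ⟨?_, ?_, ?_⟩, ?_⟩
  · have h := hk₀ (k + k₀) le_add_self
    refine mem_planar mq hq1 (mW _) (mN _) (wdW _) (fun i => ?_) fun i l => ?_
    · have := modular_comb hm mq hq1 (α := fun _ => 1) (β := fun _ => 1) (M := 1)
        (u := fun x => W (k + k₀) i x - V i x) (v := V i) ((mW _ i).sub (X.mV i))
        (by simp) (by simp) ((h.1 i).trans ENNReal.one_lt_top) (rV i)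
      simpa using this
    · have := modular_comb hm mq hq1 (α := fun _ => 1) (β := fun _ => 1) (M := 1)
        (u := fun x => N (k + k₀) i l x - K i l x) (v := K i l) ((mN _ i l).sub (X.mK i l))
        (by simp) (by simp) ((h.2 i l).trans ENNReal.one_lt_top) (rK i l)
      simpa using this
  · exact HasCompactSupport.intro (hS _).1 fun x hx => by
      ext i; simpa using zW _ i x hx
  · refine (closure_minimal ?_ (hS (k + k₀)).1.isClosed).trans (hS (k + k₀)).2
    intro x hx
    by_contra h
    exact hx (by ext i; simpa using zW _ i x h)
  · have hW : ∀ k i, Measurable fun x => W k i x - V i x := fun k i => (mW k i).sub (X.mV i)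
    have l1 := mod_tendsto (μ := volume.restrict ω) (F := fun k i x => W (k + k₀) i x - V i x)
      (N := fun k x => ‖vec (W (k + k₀)) x - vec V x‖) (fun k i => (hW _ i).aemeasurable)
      (fun k x => norm_nonneg _) (fun k x => norm_le_sum_abs _) mq.aemeasurable hq1
      fun i => (cW i).comp (tendsto_add_atTop_nat k₀)
    have l2 := mod_tendsto (μ := volume.restrict ω)
      (F := fun k (s : Fin 3 × Fin 2) x => N (k + k₀) s.1 s.2 x - K s.1 s.2 x)
      (N := fun k x => mnorm fun i l => N (k + k₀) i l x - K i l x)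
      (fun k s => ((mN _ s.1 s.2).sub (X.mK _ _)).aemeasurable)
      (fun k x => mnorm_nonneg _) (fun k x => mnorm_le_sum_prod _) mq.aemeasurable hq1
      fun s => (cN s.1 s.2).comp (tendsto_add_atTop_nat k₀)
    have l3 := l1.add l2
    rw [add_zero] at l3
    refine l3.congr fun k => ?_
    rw [← lintegral_add_left']
    have m1 : Measurable fun x => ‖vec (W (k + k₀)) x - vec V x‖ :=
      ((measurable_vec (mW _)).sub (measurable_vec X.mV)).norm
    exact ((m1.pow mq).ennreal_ofReal).aemeasurable

lemma joinCols_castSucc (A : Mat 3 2) (b : Fin 3 → ℝ) (i : Fin 3) (l : Fin 2) :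
    joinCols A b i l.castSucc = A i l := by
  have h : ((l.castSucc : Fin 3) : ℕ) < 2 := l.2
  simp only [joinCols, h, dite_true]
  rfl

lemma joinCols_two (A : Mat 3 2) (b : Fin 3 → ℝ) (i : Fin 3) : joinCols A b i 2 = b i := by
  simp [joinCols]

/-- The gradient on `ℝ³` of an `x₃`-independent map with planar gradient `K`. -/
def liftGrad (K : Fin 3 → Fin 2 → Euc 2 → ℝ) (x : Euc 3) : Mat 3 3 :=
  joinCols (fun i l => K i l (projα x)) 0

/-- The first two indices are the planar directions, the last one is the transverse direction. -/
lemma fin3_cases {P : Fin 3 → Prop} (h : ∀ l : Fin 2, P l.castSucc) (h2 : P 2) (j : Fin 3) : P j :=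
  Fin.lastCases (motive := P) h2 h j

lemma liftGrad_castSucc (K : Fin 3 → Fin 2 → Euc 2 → ℝ) (x : Euc 3) (i : Fin 3) (l : Fin 2) :
    liftGrad K x i l.castSucc = K i l (projα x) := joinCols_castSucc _ _ _ _

lemma liftGrad_two (K : Fin 3 → Fin 2 → Euc 2 → ℝ) (x : Euc 3) (i : Fin 3) :
    liftGrad K x i 2 = 0 := joinCols_two _ _ _

lemma measurable_liftGrad {K : Fin 3 → Fin 2 → Euc 2 → ℝ} (mK : ∀ i l, Measurable (K i l))
    (i j : Fin 3) : Measurable fun x => liftGrad K x i j := by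
  refine fin3_cases (P := fun j => Measurable fun x => liftGrad K x i j) (fun l => ?_) ?_ j
  · simp_rw [liftGrad_castSucc]
    exact (mK i l).comp continuous_proj.measurable
  · simp_rw [liftGrad_two]
    exact measurable_const

lemma wd_liftGrad {V : Fin 3 → Euc 2 → ℝ} {K : Fin 3 → Fin 2 → Euc 2 → ℝ}
    (iV : ∀ i, Integrable (V i)) (iK : ∀ i l, Integrable (K i l))
    (wd : ∀ i l, WD univ l (V i) (K i l)) (i j : Fin 3) :
    WD univ j (fun x => V i (projα x)) (fun x => liftGrad K x i j) := by
  refine fin3_cases (P := fun j => WD univ j (fun x => V i (projα x)) fun x => liftGrad K x i j)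
    (fun l => ?_) ?_ j
  · simp_rw [liftGrad_castSucc]
    exact (wd i l).lift (iV i).locallyIntegrable (iK i l).locallyIntegrable
  · simp_rw [liftGrad_two]
    exact WD.lift_vert (iV i).locallyIntegrable

lemma locInt_liftGrad {K : Fin 3 → Fin 2 → Euc 2 → ℝ} (iK : ∀ i l, Integrable (K i l))
    (i j : Fin 3) : LocallyIntegrable fun x => liftGrad K x i j := by
  refine fin3_cases (P := fun j => LocallyIntegrable fun x => liftGrad K x i j) (fun l => ?_) ?_ j
  · simp_rw [liftGrad_castSucc]
    exact locInt_proj (iK i l).locallyIntegrable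
  · simp_rw [liftGrad_two]
    exact (integrable_zero _ _ _).locallyIntegrable

/-- Approximants with compact support in `ω`, viewed as functions on `ℝ³` independent of the third
variable, vanish near the lateral boundary of `Ω`. -/
lemma Ext.latZero {ω : Set (Euc 2)} (hω : IsOpen ω) (hωb : Bornology.IsBounded ω)
    (hL : HasLipschitzBoundary ω) {r : ℝ} (hr : 1 < r)
    {V : Fin 3 → Euc 2 → ℝ} {K : Fin 3 → Fin 2 → Euc 2 → ℝ} (X : Ext ω V K)
    (rV : ∀ i, ∫⁻ x in ω, ‖V i x‖ₑ ^ r < ⊤) (rK : ∀ i l, ∫⁻ x in ω, ‖K i l x‖ₑ ^ r < ⊤) :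
    MemLatZero ω r (fun x => vec V (projα x)) (liftGrad K) := by
  have hm := hω.measurableSet
  have hl : LogHolder ω fun _ => r := ⟨1, one_pos, fun x _ y _ _ _ => by simp⟩
  obtain ⟨W, N, S, hS, mW, mN, iW, iN, wdW, zW, cW, cN⟩ := approx hω hωb hL
    (p := fun _ => r) measurable_const hr (ae_of_all _ fun _ => ⟨le_rfl, le_rfl⟩) hl X.mV X.mK
    X.iV X.iK X.zV X.zK X.wd rV rK
  refine ⟨fun k x => vec (W k) (projα x), fun k => liftGrad (N k), fun k => ?_, fun k => ?_,
    fun k i j => locInt_liftGrad (iN k) i j, fun k => ⟨projα ⁻¹' (S k)ᶜ, ?_, ?_, ?_⟩, ?_⟩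
  · exact weakGrad_iff.2 fun i j => wd_liftGrad (iW k) (iN k) (wdW k) i j
  · have h : ∀ i, LocallyIntegrable fun x => W k i (projα x) :=
      fun i => locInt_proj (iW k i).locallyIntegrable
    have e : (fun x => vec (W k) (projα x)) =
        fun x => ∑ i, W k i (projα x) • (EuclideanSpace.single i (1:ℝ) : Euc 3) := by
      funext x
      ext j
      simp [vec, Fin.sum_univ_three]
      fin_cases j <;> simp
    change LocallyIntegrable fun x => vec (W k) (projα x)
    rw [e, locallyIntegrable_iff]
    intro A hA
    refine integrable_finsetSum _ fun i _ => ?_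
    exact ((locallyIntegrable_iff.1 (h i)) A hA).smul_const _
  · exact (hS k).1.isClosed.isOpen_compl.preimage continuous_proj
  · intro x hx h
    exact hx.1.2 (by rw [hω.interior_eq]; exact (hS k).2 h)
  · intro x hx
    ext i
    simpa using zW k i (projα x) hx
  · have hr1 : ∀ᵐ x ∂(volume.restrict (thinDomain ω)), 1 ≤ r ∧ r ≤ r :=
      ae_of_all _ fun _ => ⟨hr.le, le_rfl⟩
    have mp := continuous_proj.measurable
    have hW : ∀ k i, Measurable fun x => W k i (projα x) - V i (projα x) :=
      fun k i => ((mW k i).comp mp).sub ((X.mV i).comp mp)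
    have l1 := mod_tendsto (μ := volume.restrict (thinDomain ω))
      (F := fun k i x => W k i (projα x) - V i (projα x)) (q := fun _ => r) (pM := r)
      (N := fun k x => ‖vec (W k) (projα x) - vec V (projα x)‖) (fun k i => (hW _ i).aemeasurable)
      (fun k x => norm_nonneg _) (fun k x => norm_le_sum_abs _) aemeasurable_const hr1
      fun i => by
        refine (cW i).congr fun k => ?_
        exact (lint_proj hm (F := fun a => ‖W k i a - V i a‖ₑ ^ r)
          ((((mW k i).sub (X.mV i)).enorm).pow_const _)).symm
    have l2 := mod_tendsto (μ := volume.restrict (thinDomain ω))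
      (F := fun k (s : Fin 3 × Fin 3) x => liftGrad (N k) x s.1 s.2 - liftGrad K x s.1 s.2)
      (N := fun k x => mnorm fun i l => liftGrad (N k) x i l - liftGrad K x i l)
      (q := fun _ => r) (pM := r)
      (fun k s => ((measurable_liftGrad (mN k) _ _).sub (measurable_liftGrad X.mK _ _)).aemeasurable)
      (fun k x => mnorm_nonneg _) (fun k x => mnorm_le_sum_prod _) aemeasurable_const hr1 (by
        rintro ⟨i, j⟩
        refine fin3_cases (P := fun j => Tendsto (fun k => ∫⁻ x in thinDomain ω,
          ‖liftGrad (N k) x i j - liftGrad K x i j‖ₑ ^ r) atTop (𝓝 0)) (fun l => ?_) ?_ j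
        · simp_rw [liftGrad_castSucc]
          refine (cN i l).congr fun k => ?_
          exact (lint_proj hm (F := fun a => ‖N k i l a - K i l a‖ₑ ^ r)
            ((((mN k i l).sub (X.mK i l)).enorm).pow_const _)).symm
        · simp_rw [liftGrad_two]
          simp [show (0:ℝ) < r by linarith])
    have l3 := l1.add l2
    rw [add_zero] at l3
    refine l3.congr fun k => ?_
    rw [← lintegral_add_left']
    have m1 : Measurable fun x => ‖vec (W k) (projα x) - vec V (projα x)‖ :=
      (((measurable_vec (mW _)).comp mp).sub ((measurable_vec X.mV).comp mp)).norm
    exact ((m1.pow_const r).ennreal_ofReal).aemeasurable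

/-! ### Strong convergence by averaging -/

lemma tendsto_zero_of_approx {x : ℕ → ℝ≥0∞}
    (h : ∀ ε > 0, ∃ (a : ℕ → ℝ≥0∞) (b : ℝ≥0∞), Tendsto a atTop (𝓝 0) ∧ b ≤ ε ∧
      ∀ᶠ k in atTop, x k ≤ a k + b) : Tendsto x atTop (𝓝 0) := by
  rw [ENNReal.tendsto_nhds_zero]
  intro ε hε
  have h2 : 0 < ε / 2 := ENNReal.half_pos hε.ne'
  obtain ⟨a, b, ha, hb, hx⟩ := h (ε / 2) h2
  filter_upwards [hx, ENNReal.tendsto_nhds_zero.1 ha _ h2] with k h1 h3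
  calc x k ≤ a k + b := h1
    _ ≤ ε / 2 + ε / 2 := add_le_add h3 hb
    _ = ε := ENNReal.add_halves ε

/-- Averages of a weakly null sequence converge to zero pointwise, since the averaging measure has
a bounded density. -/
lemma AvgData.avg_tendsto {S A Ω : Set (Euc 3)} {ν : Measure (Euc 3)} {c : ℝ≥0} {ρ : ℝ}
    (D : AvgData S A ν c ρ) {d : ℕ → Euc 3 → ℝ} (zd : ∀ k x, x ∉ Ω → d k x = 0)
    (hw : ∀ (h : Euc 3 → ℝ) (M : ℝ), Measurable h → (∀ x, |h x| ≤ M) →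
      Tendsto (fun k => ∫ x in Ω, h x * d k x) atTop (𝓝 0)) (x : Euc 3) :
    Tendsto (fun k => ∫ z, d k (x + z) ∂ν) atTop (𝓝 0) := by
  have := D.prob
  have hac : ν ≪ volume := (Measure.absolutelyContinuous_of_le D.dom).trans
    (Measure.smul_absolutelyContinuous)
  have hb : ν.rnDeriv volume ≤ᵐ[volume] fun _ => (c : ℝ≥0∞) := by
    refine ae_le_of_forall_setLIntegral_le_of_sigmaFinite (Measure.measurable_rnDeriv _ _)
      fun s hs _ => ?_
    refine (Measure.setLIntegral_rnDeriv_le s).trans ?_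
    simpa using D.dom s
  have hh : Measurable fun y : Euc 3 => min (ν.rnDeriv volume (y - x)).toReal c :=
    (((Measure.measurable_rnDeriv ν volume).comp (measurable_sub_const x)).ennreal_toReal).min
      measurable_const
  refine (hw _ c hh fun y => ?_).congr fun k => ?_
  · have h0 : 0 ≤ min (ν.rnDeriv volume (y - x)).toReal (c : ℝ) :=
      le_min ENNReal.toReal_nonneg c.2
    rw [abs_of_nonneg h0]
    exact min_le_right _ _
  · rw [setIntegral_eq_integral_of_forall_compl_eq_zero fun y hy => by simp [zd k y hy],
      ← integral_add_right_eq_self (μ := (volume : Measure (Euc 3)))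
        (fun y => min (ν.rnDeriv volume (y - x)).toReal c * d k y) x,
      ← integral_rnDeriv_smul hac]
    refine integral_congr_ae ?_
    filter_upwards [hb] with z hz
    have : (ν.rnDeriv volume z).toReal ≤ c := ENNReal.toReal_le_coe_of_le_coe hz
    simp [min_eq_left this, add_comm x z]

/-- Rellich compactness in the form needed here: a weakly null sequence with bounded gradients
converges strongly in `L¹`. -/
lemma strong_L1 {ω : Set (Euc 2)} (hω : IsOpen ω) (hωb : Bornology.IsBounded ω)
    {d : ℕ → Euc 3 → ℝ} {g : ℕ → Fin 3 → Euc 3 → ℝ}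
    (md : ∀ k, Measurable (d k)) (mg : ∀ k j, Measurable (g k j))
    (id : ∀ k, Integrable (d k)) (ig : ∀ k j, Integrable (g k j))
    (zd : ∀ k x, x ∉ thinDomain ω → d k x = 0) (wd : ∀ k j, WD slab j (d k) (g k j))
    {C : ℝ≥0∞} (hC : C ≠ ⊤) (hd : ∀ k, ∫⁻ x, ‖d k x‖ₑ ≤ C)
    (hg : ∀ k, ∫⁻ x, ∑ j, ‖g k j x‖ₑ ≤ C)
    (hw : ∀ (h : Euc 3 → ℝ) (M : ℝ), Measurable h → (∀ x, |h x| ≤ M) →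
      Tendsto (fun k => ∫ x in thinDomain ω, h x * d k x) atTop (𝓝 0)) :
    Tendsto (fun k => ∫⁻ x in thinDomain ω, ‖d k x‖ₑ) atTop (𝓝 0) := by
  -- In each half of the thin domain averages over displacements towards the other half stay in the
  -- slab.
  have half : ∀ σ : ℝ, |σ| = 1 → Tendsto (fun k =>
      ∫⁻ x in {x | x ∈ thinDomain ω ∧ σ * x 2 < 0}, ‖d k x‖ₑ) atTop (𝓝 0) := by
    intro σ hσ
    refine tendsto_zero_of_approx fun ε hε => ?_
    obtain ⟨ρ, hρ0, hρ1, hρ⟩ : ∃ ρ : ℝ, 0 < ρ ∧ ρ ≤ 1/2 ∧ ENNReal.ofReal ρ * C ≤ ε := by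
      have t : Tendsto (fun ρ : ℝ => ENNReal.ofReal ρ * C) (𝓝[>] 0) (𝓝 0) := by
        have h1 : Tendsto (fun ρ : ℝ => ENNReal.ofReal ρ) (𝓝[>] 0) (𝓝 0) := by
          have := (ENNReal.continuous_ofReal.tendsto 0).mono_left (nhdsWithin_le_nhds (s := Ioi 0))
          simpa using this
        simpa using ENNReal.Tendsto.mul_const h1 (Or.inr hC)
      have e := (ENNReal.tendsto_nhds_zero.1 t ε hε).and
        (Ioc_mem_nhdsGT (show (0:ℝ) < 1/2 by norm_num))
      obtain ⟨ρ, h1, h2⟩ := e.exists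
      exact ⟨ρ, h2.1, h2.2, h1⟩
    obtain ⟨ν, c, D⟩ := exists_avg hω hρ0 hρ1 hσ
    have := D.prob
    obtain ⟨A, hA⟩ : ∃ A, A = {x | x ∈ thinDomain ω ∧ σ * x 2 < 0} := ⟨_, rfl⟩
    rw [← hA] at D ⊢
    have hAs : A ⊆ thinDomain ω := by rw [hA]; exact fun x hx => hx.1
    have ma : ∀ k, Measurable fun x => ∫ z, d k (x + z) ∂ν := fun k => by
      have e : (fun x => ∫ z, d k (x + z) ∂ν) = avg ν 1 (d k) := by funext x; simp [avg]
      rw [e]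
      exact measurable_avg_real ν (md k)
    have hfin : IsFiniteMeasure (volume.restrict A) := ⟨by
      rw [Measure.restrict_apply_univ]
      exact (measure_mono hAs).trans_lt (bounded_thin hωb).measure_lt_top⟩
    refine ⟨fun k => ∫⁻ x in A, ‖∫ z, d k (x + z) ∂ν‖ₑ, ENNReal.ofReal ρ * C, ?_, hρ,
      Eventually.of_forall fun k => ?_⟩
    · have t := tendsto_lintegral_of_dominated_convergence (μ := volume.restrict A)
        (F := fun k x => ‖∫ z, d k (x + z) ∂ν‖ₑ) (f := fun _ => 0) (fun _ => (c : ℝ≥0∞) * C)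
        (fun k => (ma k).enorm) (fun k => ae_of_all _ fun x => ?_) ?_
        (ae_of_all _ fun x => ?_)
      · simpa using t
      · refine (enorm_integral_le_lintegral_enorm _).trans ?_
        have := D.lint_le (fun y => ‖d k y‖ₑ) x one_pos
        simp only [one_smul, Real.one_rpow, ENNReal.ofReal_one, mul_one] at this
        exact this.trans (mul_le_mul_right (hd k) _)
      · rw [lintegral_const]
        exact ENNReal.mul_ne_top (ENNReal.mul_ne_top (by simp) hC) (measure_ne_top _ _)
      · simpa using (D.avg_tendsto zd hw x).enorm
    · have h1 := (D.l1_close (md k) (id k) (ig k) (mg k) (wd k)).trans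
        (mul_le_mul_right (hg k) _)
      calc ∫⁻ x in A, ‖d k x‖ₑ ≤ ∫⁻ x in A, (‖∫ z, d k (x + z) ∂ν‖ₑ
            + ‖d k x - ∫ z, d k (x + z) ∂ν‖ₑ) := lintegral_mono fun x => by
            refine le_trans (le_of_eq ?_) (enorm_add_le _ _)
            congr 1; ring
        _ = _ := lintegral_add_left (ma k).enorm _
        _ ≤ _ := add_le_add le_rfl h1
  have h1 := (half 1 (by simp)).add (half (-1) (by simp))
  rw [add_zero] at h1
  refine tendsto_of_tendsto_of_tendsto_of_le_of_le tendsto_const_nhds h1 (fun _ => zero_le)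
    fun k => ?_
  refine le_trans (lintegral_mono_set' ?_) (lintegral_union_le _ _ _)
  have hz : ∀ᵐ x : Euc 3, x 2 ≠ 0 := by
    rw [ae_iff]; simpa using volume_midplane
  filter_upwards [hz] with x hx hxm
  rcases lt_or_gt_of_ne hx with h | h
  · exact Or.inl ⟨hxm, by linarith⟩
  · exact Or.inr ⟨hxm, by linarith⟩

/-- Interpolation between the first power and the power `p + η`, according to whether `a ≤ N`. -/
lemma interp_scalar {a N : ℝ≥0∞} (hN : 1 ≤ N) (ha : a ≠ ⊤) {p pM η : ℝ}
    (h1 : 1 ≤ p) (h2 : p ≤ pM) (hη : 0 < η) : a ^ p ≤ N ^ pM * a + N ^ (-η) * a ^ (p + η) := by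
  by_cases h : a ≤ N
  · refine le_trans ?_ le_self_add
    rcases eq_or_ne a 0 with h0 | h0
    · rw [h0, ENNReal.zero_rpow_of_pos (by linarith)]; exact zero_le
    · calc a ^ p = a ^ (p - 1) * a := by
            conv_rhs => rw [← ENNReal.rpow_one a, ← ENNReal.rpow_mul, one_mul]
            rw [← ENNReal.rpow_add _ _ h0 ha]; congr 1; ring
        _ ≤ N ^ (p - 1) * a := by
            gcongr ?_ * a
            exact ENNReal.rpow_le_rpow h (by linarith)
        _ ≤ N ^ pM * a := by
            gcongr ?_ * a
            exact ENNReal.rpow_le_rpow_of_exponent_le hN (by linarith)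
  · push Not at h
    have h0 : a ≠ 0 := (lt_of_le_of_lt zero_le h).ne'
    refine le_trans ?_ le_add_self
    calc a ^ p = a ^ (-η) * a ^ (p + η) := by
          rw [← ENNReal.rpow_add _ _ h0 ha]; congr 1; ring
      _ ≤ _ := by
          gcongr ?_ * _
          rw [ENNReal.rpow_neg, ENNReal.rpow_neg]
          exact ENNReal.inv_le_inv.2 (ENNReal.rpow_le_rpow h.le hη.le)

/-- Strong `L¹` convergence together with a bound on a higher modular gives modular convergence. -/
lemma mod_of_L1 {α : Type*} [MeasurableSpace α] {μ : Measure α} {d : ℕ → α → ℝ}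
    (md : ∀ k, Measurable (d k)) {q : α → ℝ} {pM η : ℝ} (hη : 0 < η)
    (hq : ∀ᵐ x ∂μ, 1 ≤ q x ∧ q x ≤ pM) {B : ℝ≥0∞} (hB : B ≠ ⊤)
    (hb : ∀ᶠ k in atTop, ∫⁻ x, ‖d k x‖ₑ ^ (q x + η) ∂μ ≤ B)
    (h1 : Tendsto (fun k => ∫⁻ x, ‖d k x‖ₑ ∂μ) atTop (𝓝 0)) :
    Tendsto (fun k => ∫⁻ x, ‖d k x‖ₑ ^ q x ∂μ) atTop (𝓝 0) := by
  refine tendsto_zero_of_approx fun ε hε => ?_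
  obtain ⟨N, hN1, hN⟩ : ∃ N : ℝ≥0, 1 ≤ N ∧ (N : ℝ≥0∞) ^ (-η) * B ≤ ε := by
    have t : Tendsto (fun N : ℝ≥0 => (N : ℝ≥0∞) ^ (-η) * B) atTop (𝓝 0) := by
      have t1 : Tendsto (fun N : ℝ≥0 => (N : ℝ≥0∞) ^ (-η)) atTop (𝓝 0) := by
        have := (ENNReal.tendsto_coe_nhds_top.2 (tendsto_id (α := ℝ≥0) (x := atTop))).ennrpow_const (-η)
        simpa [ENNReal.top_rpow_of_neg (neg_lt_zero.2 hη)] using this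
      simpa using ENNReal.Tendsto.mul_const t1 (Or.inr hB)
    obtain ⟨N, h⟩ := ((ENNReal.tendsto_nhds_zero.1 t ε hε).and (eventually_ge_atTop 1)).exists
    exact ⟨N, h.2, h.1⟩
  have hNt : (N : ℝ≥0∞) ^ pM ≠ ⊤ := ENNReal.rpow_ne_top_of_ne_zero
    (by simpa using (lt_of_lt_of_le one_pos hN1).ne') (by simp)
  have hNt2 : (N : ℝ≥0∞) ^ (-η) ≠ ⊤ := ENNReal.rpow_ne_top_of_ne_zero
    (by simpa using (lt_of_lt_of_le one_pos hN1).ne') (by simp)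
  refine ⟨fun k => (N : ℝ≥0∞) ^ pM * ∫⁻ x, ‖d k x‖ₑ ∂μ, (N : ℝ≥0∞) ^ (-η) * B, ?_, hN, ?_⟩
  · simpa using ENNReal.Tendsto.const_mul h1 (Or.inr hNt)
  · filter_upwards [hb] with k hk
    calc ∫⁻ x, ‖d k x‖ₑ ^ q x ∂μ ≤ ∫⁻ x, ((N : ℝ≥0∞) ^ pM * ‖d k x‖ₑ +
          (N : ℝ≥0∞) ^ (-η) * ‖d k x‖ₑ ^ (q x + η)) ∂μ := by
          refine lintegral_mono_ae ?_
          filter_upwards [hq] with x hx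
          exact interp_scalar (by exact_mod_cast hN1) (by simp) hx.1 hx.2 hη
      _ = (N : ℝ≥0∞) ^ pM * ∫⁻ x, ‖d k x‖ₑ ∂μ +
          (N : ℝ≥0∞) ^ (-η) * ∫⁻ x, ‖d k x‖ₑ ^ (q x + η) ∂μ := by
          rw [lintegral_add_left ((md k).enorm.const_mul _), lintegral_const_mul' _ _ hNt,
            lintegral_const_mul' _ _ hNt2]
      _ ≤ _ := by gcongr

/-! ### Exponents and modulars of the limit -/

lemma unifOn_of_continuousOn {n : ℕ} {ω : Set (Euc n)} (hωb : Bornology.IsBounded ω)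
    {e : Euc n → ℝ} (h : ContinuousOn e (closure ω)) : UnifOn ω e := by
  have hu := hωb.isCompact_closure.uniformContinuousOn_of_continuous h
  intro η hη
  obtain ⟨ρ, hρ, H⟩ := Metric.uniformContinuousOn_iff_le.1 hu η hη
  exact ⟨ρ, hρ, fun a ha b hb hab => by
    simpa [Real.dist_eq] using H a (subset_closure ha) b (subset_closure hb) hab⟩

/-- The planar function, viewed on `Ω` and extended by zero, has the regularity in the slab that
`gain_thin` requires. -/
lemma Ext.slab_facts {ω : Set (Euc 2)} (hω : IsOpen ω) (hωb : Bornology.IsBounded ω)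
    {V : Fin 3 → Euc 2 → ℝ} {K : Fin 3 → Fin 2 → Euc 2 → ℝ} (X : Ext ω V K) (i : Fin 3) :
    Measurable ((thinDomain ω).indicator fun x => V i (projα x)) ∧
    Integrable ((thinDomain ω).indicator fun x => V i (projα x)) ∧
    (∀ j, Measurable ((thinDomain ω).indicator fun x => liftGrad K x i j)) ∧
    (∀ j, Integrable ((thinDomain ω).indicator fun x => liftGrad K x i j)) ∧
    ∀ j, WD slab j ((thinDomain ω).indicator fun x => V i (projα x))
      ((thinDomain ω).indicator fun x => liftGrad K x i j) := by
  have hm := (isOpen_thin hω).measurableSet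
  have hb := bounded_thin hωb
  refine ⟨((X.mV i).comp continuous_proj.measurable).indicator hm,
    integrable_indicator_of_loc hm hb (locInt_proj (X.iV i).locallyIntegrable),
    fun j => (measurable_liftGrad X.mK i j).indicator hm,
    fun j => integrable_indicator_of_loc hm hb (locInt_liftGrad X.iK i j), fun j => ?_⟩
  have off : ∀ x ∈ slab, x ∉ thinDomain ω → projα x ∉ ω := fun x hx h hp =>
    h (by rw [thinDomain_eq]; exact ⟨hp, hx⟩)
  refine ((wd_liftGrad X.iV X.iK X.wd i j).mono (subset_univ _)).congr_on
    (ae_of_all _ fun x hx => ?_) (ae_of_all _ fun x hx => ?_)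
  · by_cases h : x ∈ thinDomain ω
    · rw [indicator_of_mem h]
    · rw [indicator_of_notMem h]; exact X.zV i _ (off x hx h)
  · by_cases h : x ∈ thinDomain ω
    · rw [indicator_of_mem h]
    · rw [indicator_of_notMem h]
      refine fin3_cases (P := fun j => liftGrad K x i j = 0) (fun l => ?_) ?_ j
      · rw [liftGrad_castSucc]; exact X.zK i l _ (off x hx h)
      · exact liftGrad_two _ _ _

lemma lint_indicator_enorm {α : Type*} [MeasurableSpace α] {μ : Measure α} {A : Set α}
    (hA : MeasurableSet A) (f : α → ℝ) : ∫⁻ x, ‖A.indicator f x‖ₑ ∂μ = ∫⁻ x in A, ‖f x‖ₑ ∂μ := by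
  rw [← lintegral_indicator hA]
  refine lintegral_congr fun x => ?_
  rw [enorm_indicator_eq_indicator_enorm]

/-- The gain of integrability `gain_thin` for the planar function viewed on `Ω`. -/
lemma Ext.gain {ω : Set (Euc 2)} (hω : IsOpen ω) (hωb : Bornology.IsBounded ω)
    {V : Fin 3 → Euc 2 → ℝ} {K : Fin 3 → Fin 2 → Euc 2 → ℝ} (X : Ext ω V K)
    {r pM : ℝ} (hr : 1 < r) {e : Euc 2 → ℝ} (me : Measurable e)
    (he : ∀ᵐ a ∂(volume.restrict ω), r ≤ e a ∧ e a ≤ pM) (hu : UnifOn ω e)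
    (rK : ∀ i l, ∫⁻ a in ω, ‖K i l a‖ₑ ^ e a < ⊤)
    {η : ℝ} (h0 : 0 < η) (h1 : 18 * η ≤ 1) (h2 : 2 * η ≤ r - 1) (i : Fin 3) :
    ∫⁻ x in thinDomain ω, ‖V i (projα x)‖ₑ ^ (e (projα x) + η) < ⊤ := by
  have hm := hω.measurableSet
  have hmΩ := (isOpen_thin hω).measurableSet
  have mp := continuous_proj.measurable
  obtain ⟨C, hC⟩ : ∃ C : ℝ≥0∞, C = (∫⁻ x in thinDomain ω, ‖V i (projα x)‖ₑ)
    + ∑ l, ∫⁻ a in ω, ‖K i l a‖ₑ ^ e a := ⟨_, rfl⟩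
  obtain ⟨f1, f2, f3, f4, f5⟩ := X.slab_facts hω hωb i
  have hCt : C ≠ ⊤ := by
    rw [hC]
    refine (ENNReal.add_lt_top.2 ⟨?_, ENNReal.sum_lt_top.2 fun l _ => rK i l⟩).ne
    have := f2.2
    rw [HasFiniteIntegral, lint_indicator_enorm hmΩ] at this
    exact this
  obtain ⟨B, hB, H⟩ := gain_thin hω hωb me he hu h0 h1 h2 hCt
  have het := ae_thin_of_planar hm he
  have := H _ (fun j => (thinDomain ω).indicator fun x => liftGrad K x i j)
    (fun x => e (projα x)) f1 f2 f3 f4 f5 (fun j x hx => indicator_of_notMem hx _)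
    (me.comp mp) (by
      filter_upwards [het] with x hx using ⟨by linarith, by linarith [hx.1], hx.2⟩)
    (by rw [lint_indicator_enorm hmΩ, hC]; exact le_self_add) (fun j => ?_)
  · refine lt_of_le_of_lt (le_of_eq ?_) (this.trans_lt hB.lt_top)
    refine setLIntegral_congr_fun hmΩ fun x hx => ?_
    simp only [indicator_of_mem hx]
  · have e1 : ∫⁻ x in thinDomain ω, ‖(thinDomain ω).indicator (fun x => liftGrad K x i j) x‖ₑ ^
        e (projα x) = ∫⁻ x in thinDomain ω, ‖liftGrad K x i j‖ₑ ^ e (projα x) := by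
      refine setLIntegral_congr_fun hmΩ fun x hx => ?_
      simp only [indicator_of_mem hx]
    rw [e1]
    refine fin3_cases (P := fun j => ∫⁻ x in thinDomain ω, ‖liftGrad K x i j‖ₑ ^ e (projα x) ≤ C)
      (fun l => ?_) ?_ j
    · simp_rw [liftGrad_castSucc]
      rw [lint_proj hm (F := fun a => ‖K i l a‖ₑ ^ e a) ((X.mK i l).enorm.pow me), hC]
      exact (Finset.single_le_sum (f := fun l => ∫⁻ a in ω, ‖K i l a‖ₑ ^ e a)
        (fun _ _ => zero_le) (Finset.mem_univ l)).trans le_add_self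
    · simp_rw [liftGrad_two]
      refine le_of_eq_of_le ?_ zero_le
      rw [lintegral_eq_zero_iff' (by fun_prop)]
      filter_upwards [het] with x hx
      simp [show 0 < e (projα x) by linarith [hx.1]]

/-- A margin by which exponents bounded below by `r > 1` can be increased. -/
lemma exists_margin {r : ℝ} (hr : 1 < r) : ∃ η : ℝ, 0 < η ∧ 18 * η ≤ 1 ∧ 2 * η ≤ r - 1 := by
  refine ⟨min (1 / 18) ((r - 1) / 2), lt_min (by norm_num) (by linarith), ?_, ?_⟩
  · linarith [min_le_left (1 / 18 : ℝ) ((r - 1) / 2)]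
  · linarith [min_le_right (1 / 18 : ℝ) ((r - 1) / 2)]

/-- A finite modular of the planar gradient implies a finite modular of the function. -/
lemma Ext.mod_lt_top {ω : Set (Euc 2)} (hω : IsOpen ω) (hωb : Bornology.IsBounded ω)
    {V : Fin 3 → Euc 2 → ℝ} {K : Fin 3 → Fin 2 → Euc 2 → ℝ} (X : Ext ω V K)
    {r pM : ℝ} (hr : 1 < r) {e : Euc 2 → ℝ} (me : Measurable e)
    (he : ∀ᵐ a ∂(volume.restrict ω), r ≤ e a ∧ e a ≤ pM) (hu : UnifOn ω e)
    (rK : ∀ i l, ∫⁻ a in ω, ‖K i l a‖ₑ ^ e a < ⊤) (i : Fin 3) :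
    ∫⁻ a in ω, ‖V i a‖ₑ ^ e a < ⊤ := by
  obtain ⟨η, h0, h1, h2⟩ := exists_margin hr
  have hm := hω.measurableSet
  have h := X.gain hω hωb hr me he hu rK h0 h1 h2 i
  rw [lint_proj hm (F := fun a => ‖V i a‖ₑ ^ (e a + η)) ((X.mV i).enorm.pow (by fun_prop))] at h
  have hv : volume ω < ⊤ := hωb.measure_lt_top
  calc ∫⁻ a in ω, ‖V i a‖ₑ ^ e a ≤ ∫⁻ a in ω, (1 + ‖V i a‖ₑ ^ (e a + η)) := by
        refine lintegral_mono_ae ?_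
        filter_upwards [he] with a ha using rpow_le_one_add (by linarith [ha.1]) (by linarith)
    _ = volume ω + ∫⁻ a in ω, ‖V i a‖ₑ ^ (e a + η) := by
        rw [lintegral_add_left measurable_const]; simp
    _ < ⊤ := ENNReal.add_lt_top.2 ⟨hv, h⟩

lemma tendstoL1_comp {n : ℕ} {A : Set (Euc n)} {P : ℕ → Euc n → ℝ} {Q : Euc n → ℝ}
    (h : TendstoL1 A P Q) {φ : ℕ → ℕ} (hφ : StrictMono φ) : TendstoL1 A (fun k => P (φ k)) Q := by
  unfold TendstoL1 at h ⊢
  exact h.comp hφ.tendsto_atTop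

lemma tendstoL1_of_Linf {n : ℕ} {A S : Set (Euc n)} (hAS : A ⊆ S) (hb : Bornology.IsBounded A)
    {P : ℕ → Euc n → ℝ} {Q : Euc n → ℝ} (h : TendstoLinf S P Q) : TendstoL1 A P Q := by
  have hv : volume A ≠ ⊤ := hb.measure_lt_top.ne
  have t := ENNReal.Tendsto.mul_const h (Or.inr hv)
  rw [zero_mul] at t
  refine tendsto_of_tendsto_of_tendsto_of_le_of_le tendsto_const_nhds t (fun _ => zero_le)
    fun k => ?_
  have hae : ∀ᵐ x ∂(volume.restrict A), ENNReal.ofReal |P k x - Q x| ≤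
      eLpNorm (fun x => P k x - Q x) ⊤ (volume.restrict S) := by
    refine ae_restrict_of_ae_restrict_of_subset hAS ?_
    rw [eLpNorm_exponent_top]
    filter_upwards [ae_le_eLpNormEssSup (f := fun x => P k x - Q x) (μ := volume.restrict S)]
      with x hx
    rwa [← Real.enorm_eq_ofReal_abs]
  refine (lintegral_mono_ae hae).trans ?_
  rw [lintegral_const, Measure.restrict_apply_univ]

lemma enorm_sub_rpow_le (a b : ℝ) {s M : ℝ} (h0 : 0 < s) (h1 : s ≤ M) :
    ‖a - b‖ₑ ^ s ≤ 2 ^ M * (‖a‖ₑ ^ s + ‖b‖ₑ ^ s) := by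
  have e : ‖a - b‖ₑ ≤ ∑ i, (![‖a‖ₑ, ‖b‖ₑ] : Fin 2 → ℝ≥0∞) i := by
    simpa [Fin.sum_univ_two] using enorm_sub_le (a := a) (b := b)
  refine (ENNReal.rpow_le_rpow e h0.le).trans ((sum_rpow_le _ h0).trans ?_)
  simp only [Fin.sum_univ_two, Matrix.cons_val_zero, Matrix.cons_val_one, Fintype.card_fin,
    Nat.cast_ofNat]
  gcongr ?_ * _
  exact ENNReal.rpow_le_rpow_of_exponent_le (by norm_num) h1

lemma Lim.ext {ω : Set (Euc 2)} {r : ℝ} {C : ℝ≥0∞} {U : ℕ → Fin 3 → Euc 3 → ℝ}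
    {H : ℕ → Fin 3 → Fin 3 → Euc 3 → ℝ} {V : Fin 3 → Euc 2 → ℝ} {K : Fin 3 → Fin 2 → Euc 2 → ℝ}
    (L : Lim ω r C U H V K) : Ext ω V K :=
  ⟨L.mV, L.mK, L.iV, L.iK, L.zV, L.zK, L.wd⟩

lemma Core.comp {ω : Set (Euc 2)} {r pM : ℝ} {C : ℝ≥0∞} {P : ℕ → Euc 3 → ℝ}
    {U : ℕ → Fin 3 → Euc 3 → ℝ} {H : ℕ → Fin 3 → Fin 3 → Euc 3 → ℝ} (c : Core ω r pM C P U H)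
    {φ : ℕ → ℕ} (hφ : StrictMono φ) :
    Core ω r pM C (fun k => P (φ k)) (fun k => U (φ k)) (fun k => H (φ k)) where
  hr := c.hr
  hC := c.hC
  mP k := c.mP _
  hP k := c.hP _
  mU k := c.mU _
  mH k := c.mH _
  iU k := c.iU _
  iH k := c.iH _
  zU k := c.zU _
  zH k := c.zH _
  wd k := c.wd _
  energy k := c.energy _
  rU k := c.rU _
  rH k := c.rH _
  vert i := (c.vert i).comp hφ.tendsto_atTop

/-- The gradient of the limit has finite modular with respect to the limit exponent. -/
lemma Lim.grad_mod {ω : Set (Euc 2)} (hω : IsOpen ω) (hωb : Bornology.IsBounded ω)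
    {r pM : ℝ} {C : ℝ≥0∞} {P : ℕ → Euc 3 → ℝ} {U : ℕ → Fin 3 → Euc 3 → ℝ}
    {H : ℕ → Fin 3 → Fin 3 → Euc 3 → ℝ} (c : Core ω r pM C P U H)
    {V : Fin 3 → Euc 2 → ℝ} {K : Fin 3 → Fin 2 → Euc 2 → ℝ} (L : Lim ω r C U H V K)
    {p₀ : Euc 2 → ℝ} (mp₀ : Measurable p₀)
    (h : ∀ A : Set (Euc 3), CompactlyIn A (thinDomain ω) → TendstoL1 A P (fun x => p₀ (projα x)))
    (i : Fin 3) (l : Fin 2) : ∫⁻ a in ω, ‖K i l a‖ₑ ^ p₀ a < ⊤ :=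
  (lsc hω hωb c.hr c.mP c.hP mp₀ h (fun k => c.mH k i l.castSucc) (L.mK i l) (L.iK i l) c.hC
    (fun k => c.energy k i _) (fun k => c.rH k i _) (L.cH i l)).trans_lt c.hC.lt_top

/-! ### Strong convergence in the modular of the limit exponent -/

lemma lint_norm_le_rpow {α : Type*} [MeasurableSpace α] {μ : Measure α} (f : α → ℝ) {r : ℝ}
    (hr : 1 ≤ r) : ∫⁻ x, ‖f x‖ₑ ∂μ ≤ μ univ + ∫⁻ x, ‖f x‖ₑ ^ r ∂μ := by
  calc ∫⁻ x, ‖f x‖ₑ ∂μ ≤ ∫⁻ x, (1 + ‖f x‖ₑ ^ r) ∂μ := lintegral_mono fun x => by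
        simpa using rpow_le_one_add (a := ‖f x‖ₑ) zero_le_one hr
    _ = μ univ + ∫⁻ x, ‖f x‖ₑ ^ r ∂μ := by
        rw [lintegral_add_left measurable_const]; simp

lemma lint_eq_setLIntegral_of_zero {α : Type*} [MeasurableSpace α] {μ : Measure α} {A : Set α}
    {f : α → ℝ} (h : ∀ x, x ∉ A → f x = 0) : ∫⁻ x, ‖f x‖ₑ ∂μ = ∫⁻ x in A, ‖f x‖ₑ ∂μ := by
  rw [setLIntegral_eq_of_support_subset]
  intro x hx
  by_contra h'
  exact hx (by simp [h x h'])

/-- Strong convergence in the modular of the limit exponent. The energy bound and the uniform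
closeness of the exponents give a bound for the modular with exponent `p₀ + η`; interpolation with
the strong `L¹` convergence concludes. -/
lemma strong_mod {ω : Set (Euc 2)} (hω : IsOpen ω) (hωb : Bornology.IsBounded ω)
    {r pM : ℝ} {C : ℝ≥0∞} {P : ℕ → Euc 3 → ℝ} {U : ℕ → Fin 3 → Euc 3 → ℝ}
    {H : ℕ → Fin 3 → Fin 3 → Euc 3 → ℝ} (c : Core ω r pM C P U H)
    {V : Fin 3 → Euc 2 → ℝ} {K : Fin 3 → Fin 2 → Euc 2 → ℝ} (L : Lim ω r C U H V K)
    {p₀ : Euc 2 → ℝ} (mp₀ : Measurable p₀)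
    (hp₀ : ∀ᵐ a ∂(volume.restrict ω), r ≤ p₀ a ∧ p₀ a ≤ pM) (hu : UnifOn ω p₀)
    (hlim : TendstoLinf (thinDomain ω) P (fun x => p₀ (projα x)))
    (rK : ∀ i l, ∫⁻ a in ω, ‖K i l a‖ₑ ^ p₀ a < ⊤) (i : Fin 3) :
    Tendsto (fun k => ∫⁻ x in thinDomain ω, ‖U k i x - V i (projα x)‖ₑ ^ p₀ (projα x))
      atTop (𝓝 0) := by
  have hm := (isOpen_thin hω).measurableSet
  have hv : volume (thinDomain ω) ≠ ⊤ := (bounded_thin hωb).measure_lt_top.ne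
  have : IsFiniteMeasure (volume.restrict (thinDomain ω)) := ⟨by simpa using hv.lt_top⟩
  have X := L.ext
  obtain ⟨mV, iV, mG, iG, wV⟩ := X.slab_facts hω hωb i
  have p₀t := ae_thin_of_planar hω.measurableSet hp₀
  have uv : ∀ {f : Euc 3 → ℝ}, (volume.restrict (thinDomain ω)) univ +
      ∫⁻ x in thinDomain ω, ‖f x‖ₑ ^ r ≤ volume (thinDomain ω) +
      ∫⁻ x in thinDomain ω, ‖f x‖ₑ ^ r := fun {f} => by rw [Measure.restrict_apply_univ]
  have U1 : ∀ k, ∫⁻ x in thinDomain ω, ‖U k i x‖ₑ ≤ volume (thinDomain ω) + C := fun k =>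
    (lint_norm_le_rpow _ c.hr.le).trans (uv.trans (by gcongr; exact c.rU k i))
  have H1 : ∀ k j, ∫⁻ x in thinDomain ω, ‖H k i j x‖ₑ ≤ volume (thinDomain ω) + C := fun k j =>
    (lint_norm_le_rpow _ c.hr.le).trans (uv.trans (by gcongr; exact c.rH k i j))
  obtain ⟨C₁, hC₁⟩ : ∃ C₁, C₁ = volume (thinDomain ω) + C +
      ∫⁻ x in thinDomain ω, ‖V i (projα x)‖ₑ := ⟨_, rfl⟩
  obtain ⟨C₂, hC₂⟩ : ∃ C₂, C₂ = ∑ j, (volume (thinDomain ω) + C +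
      ∫⁻ x in thinDomain ω, ‖liftGrad K x i j‖ₑ) := ⟨_, rfl⟩
  have hC₁t : C₁ ≠ ⊤ := by
    rw [hC₁, ← lint_indicator_enorm hm]
    exact ENNReal.add_ne_top.2 ⟨ENNReal.add_ne_top.2 ⟨hv, c.hC⟩, iV.2.ne⟩
  have hC₂t : C₂ ≠ ⊤ := by
    rw [hC₂]
    refine ENNReal.sum_ne_top.2 fun j _ => ?_
    rw [← lint_indicator_enorm hm]
    exact ENNReal.add_ne_top.2 ⟨ENNReal.add_ne_top.2 ⟨hv, c.hC⟩, (iG j).2.ne⟩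
  obtain ⟨d, hd⟩ : ∃ d : ℕ → Euc 3 → ℝ, d = fun k x =>
      U k i x - (thinDomain ω).indicator (fun x => V i (projα x)) x := ⟨_, rfl⟩
  obtain ⟨g, hg⟩ : ∃ g : ℕ → Fin 3 → Euc 3 → ℝ, g = fun k j x =>
      H k i j x - (thinDomain ω).indicator (fun x => liftGrad K x i j) x := ⟨_, rfl⟩
  have dΩ : ∀ k, ∀ x ∈ thinDomain ω, d k x = U k i x - V i (projα x) := fun k x hx => by
    rw [hd]; simp only [indicator_of_mem hx]
  have zd : ∀ k x, x ∉ thinDomain ω → d k x = 0 := fun k x hx => by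
    rw [hd]; simp only [indicator_of_notMem hx, c.zU k i x hx, sub_zero]
  have zg : ∀ k j x, x ∉ thinDomain ω → g k j x = 0 := fun k j x hx => by
    rw [hg]; simp only [indicator_of_notMem hx, c.zH k i j x hx, sub_zero]
  have md : ∀ k, Measurable (d k) := fun k => by rw [hd]; exact (c.mU k i).sub mV
  -- Strong convergence in `L¹`, to be interpolated below with a bound at the exponent `p₀ + η`.
  have dL1 : Tendsto (fun k => ∫⁻ x in thinDomain ω, ‖d k x‖ₑ) atTop (𝓝 0) := by
    refine strong_L1 hω hωb (g := g) md (fun k j => ?_) (fun k => ?_) (fun k j => ?_) zd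
      (fun k j => ?_) (C := C₁ + C₂) (ENNReal.add_ne_top.2 ⟨hC₁t, hC₂t⟩) (fun k => ?_)
      (fun k => ?_) fun h M mh hM => ?_
    · rw [hg]; exact (c.mH k i j).sub (mG j)
    · rw [hd]; exact (c.iU k i).sub iV
    · rw [hg]; exact (c.iH k i j).sub (iG j)
    · rw [hd, hg]
      exact (c.wd k i j).sub (wV j) (c.iU k i).locallyIntegrable (c.iH k i j).locallyIntegrable
        iV.locallyIntegrable (iG j).locallyIntegrable
    · refine le_trans ?_ le_self_add
      rw [lint_eq_setLIntegral_of_zero (zd k), hC₁]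
      calc ∫⁻ x in thinDomain ω, ‖d k x‖ₑ
          ≤ ∫⁻ x in thinDomain ω, (‖U k i x‖ₑ + ‖V i (projα x)‖ₑ) :=
            setLIntegral_mono' hm fun x hx => by rw [dΩ k x hx]; exact enorm_sub_le
        _ = (∫⁻ x in thinDomain ω, ‖U k i x‖ₑ) + ∫⁻ x in thinDomain ω, ‖V i (projα x)‖ₑ :=
            lintegral_add_left (c.mU k i).enorm _
        _ ≤ _ := by gcongr; exact U1 k
    · refine le_trans ?_ le_add_self
      rw [lintegral_finsetSum _ fun j _ => by
        rw [hg]; exact ((c.mH k i j).sub (mG j)).enorm, hC₂]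
      refine Finset.sum_le_sum fun j _ => ?_
      rw [lint_eq_setLIntegral_of_zero (zg k j)]
      calc ∫⁻ x in thinDomain ω, ‖g k j x‖ₑ
          ≤ ∫⁻ x in thinDomain ω, (‖H k i j x‖ₑ + ‖liftGrad K x i j‖ₑ) :=
            setLIntegral_mono' hm fun x hx => by
              rw [hg]; simp only [indicator_of_mem hx]; exact enorm_sub_le
        _ = (∫⁻ x in thinDomain ω, ‖H k i j x‖ₑ) + ∫⁻ x in thinDomain ω, ‖liftGrad K x i j‖ₑ :=
            lintegral_add_left (c.mH k i j).enorm _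
        _ ≤ _ := by gcongr; exact H1 k j
    · have t := (L.cU i h mh (lint_bdd_rpow hM (conj_pos c.hr).le)).sub
        (tendsto_const_nhds (x := ∫ x in thinDomain ω, h x * V i (projα x)))
      rw [sub_self] at t
      refine t.congr fun k => ?_
      have hb : ∀ᵐ x ∂(volume.restrict (thinDomain ω)), ‖h x‖ ≤ M := ae_of_all _ hM
      have iV' : IntegrableOn (fun x => V i (projα x)) (thinDomain ω) :=
        (integrable_indicator_iff hm).1 iV
      rw [← integral_sub
        ((c.iU k i).integrableOn.bdd_mul mh.aestronglyMeasurable hb)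
        (iV'.bdd_mul mh.aestronglyMeasurable hb)]
      refine setIntegral_congr_fun hm fun x hx => ?_
      simp only [dΩ k x hx, mul_sub]
  -- A uniform bound of the modulars with exponent `p₀ + η`, for the sequence and for its limit.
  obtain ⟨η, h0, h1, h2⟩ := exists_margin c.hr
  obtain ⟨B, hB, hgain⟩ := gain_thin hω hωb mp₀ hp₀ hu h0 h1 h2
    (C := volume (thinDomain ω) + C) (ENNReal.add_ne_top.2 ⟨hv, c.hC⟩)
  have gV := X.gain hω hωb c.hr mp₀ hp₀ hu rK h0 h1 h2 i
  -- Uniform convergence of the exponents gives `P k ≥ p₀ - η`, as `gain_thin` requires.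
  have close : ∀ᶠ k in atTop, ∀ᵐ x ∂(volume.restrict (thinDomain ω)),
      |P k x - p₀ (projα x)| ≤ η := by
    unfold TendstoLinf at hlim
    filter_upwards [hlim.eventually_le_const (ENNReal.ofReal_pos.2 h0)] with k hk
    rw [eLpNorm_exponent_top] at hk
    filter_upwards [ae_le_eLpNormEssSup (f := fun x => P k x - p₀ (projα x))
      (μ := volume.restrict (thinDomain ω))] with x hx
    have := hx.trans hk
    rw [Real.enorm_eq_ofReal_abs] at this
    exact (ENNReal.ofReal_le_ofReal_iff h0.le).1 this
  have fin := mod_of_L1 (μ := volume.restrict (thinDomain ω)) md (q := fun x => p₀ (projα x)) h0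
    (p₀t.mono fun x hx => ⟨c.hr.le.trans hx.1, hx.2⟩)
    (B := 2 ^ (pM + η) * (B + ∫⁻ x in thinDomain ω, ‖V i (projα x)‖ₑ ^ (p₀ (projα x) + η)))
    (ENNReal.mul_ne_top (ENNReal.rpow_ne_top_of_ne_zero (by norm_num) (by norm_num))
      (ENNReal.add_ne_top.2 ⟨hB, gV.ne⟩)) ?_ dL1
  · refine fin.congr fun k => setLIntegral_congr_fun hm fun x hx => ?_
    simp only [dΩ k x hx]
  · filter_upwards [close] with k hk
    have gU := hgain (U k i) (fun j => H k i j) (P k) (c.mU k i) (c.iU k i) (c.mH k i) (c.iH k i)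
      (c.wd k i) (c.zH k i) (c.mP k) (by
        filter_upwards [hk, c.hP k] with x hx hx'
        rw [abs_le] at hx
        exact ⟨by linarith, c.hr.le.trans hx'.1, hx'.2⟩)
      (by rw [lint_eq_setLIntegral_of_zero (c.zU k i)]; exact U1 k)
      (fun j => (c.energy k i j).trans le_add_self)
    have mex : Measurable fun x : Euc 3 => p₀ (projα x) + η :=
      (mp₀.comp continuous_proj.measurable).add_const η
    calc ∫⁻ x in thinDomain ω, ‖d k x‖ₑ ^ (p₀ (projα x) + η)
        ≤ ∫⁻ x in thinDomain ω, 2 ^ (pM + η) * (‖U k i x‖ₑ ^ (p₀ (projα x) + η) +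
            ‖V i (projα x)‖ₑ ^ (p₀ (projα x) + η)) := by
          refine lintegral_mono_ae ?_
          filter_upwards [p₀t, ae_restrict_mem hm] with x hx hxm
          rw [dΩ k x hxm]
          exact enorm_sub_rpow_le _ _ (by linarith [c.hr, hx.1]) (by linarith [hx.2])
      _ = 2 ^ (pM + η) * ((∫⁻ x in thinDomain ω, ‖U k i x‖ₑ ^ (p₀ (projα x) + η)) +
            ∫⁻ x in thinDomain ω, ‖V i (projα x)‖ₑ ^ (p₀ (projα x) + η)) := by
          rw [lintegral_const_mul' _ _
            (ENNReal.rpow_ne_top_of_ne_zero (by norm_num) (by norm_num)),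
            lintegral_add_left ((c.mU k i).enorm.pow mex)]
      _ ≤ _ := by gcongr

/-! ### Adjusting the exponents outside the domain -/

lemma weakLr_of_enorm {A : Set (Euc 3)} {r : ℝ} (hr : 1 < r) {F F' : ℕ → Euc 3 → ℝ}
    {F₀ : Euc 3 → ℝ} (h : ∀ g : Euc 3 → ℝ, Measurable g → ∫⁻ x in A, ‖g x‖ₑ ^ conj r < ⊤ →
      Tendsto (fun k => ∫ x in A, g x * F k x) atTop (𝓝 (∫ x in A, g x * F₀ x)))
    (hF : ∀ k, ∀ᵐ x ∂(volume.restrict A), F k x = F' k x) : WeakLrTendsto A r F' F₀ := by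
  intro g mg hg
  refine (h g mg ?_).congr fun k => integral_congr_ae ?_
  · refine lt_of_le_of_lt (le_of_eq ?_) hg
    refine lintegral_congr fun x => ?_
    rw [← Real.norm_eq_abs, ofReal_rpow_enorm _ (div_nonneg (by linarith) (by linarith))]
  · filter_upwards [hF k] with x hx
    rw [hx]

/-- The limit exponent is prescribed on `ω` only; extending it by zero makes it measurable without
changing any of the quantities involved. -/
lemma measurable_indicator_of_continuousOn {ω : Set (Euc 2)} (hω : IsOpen ω) {e : Euc 2 → ℝ}
    (h : ContinuousOn e (closure ω)) : Measurable (ω.indicator e) := by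
  classical
  rw [← Set.piecewise_eq_indicator]
  exact (h.mono subset_closure).measurable_piecewise continuousOn_const hω.measurableSet

lemma UnifOn.congr {n : ℕ} {S : Set (Euc n)} {e e' : Euc n → ℝ} (h : UnifOn S e)
    (he : ∀ x ∈ S, e' x = e x) : UnifOn S e' := fun η hη => by
  obtain ⟨ρ, h0, hρ⟩ := h η hη
  exact ⟨ρ, h0, fun a ha b hb hab => by rw [he a ha, he b hb]; exact hρ a ha b hb hab⟩

lemma emod_congr {n : ℕ} {S : Set (Euc n)} (hS : MeasurableSet S) {q q' : Euc n → ℝ}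
    (h : ∀ x ∈ S, q x = q' x) (f : Euc n → ℝ) : emod S q f = emod S q' f :=
  setLIntegral_congr_fun hS fun x hx => by simp only [h x hx]

lemma tendstoL1_congr {n : ℕ} {A : Set (Euc n)} (hA : MeasurableSet A) {P : ℕ → Euc n → ℝ}
    {Q Q' : Euc n → ℝ} (h : ∀ x ∈ A, Q x = Q' x) (t : TendstoL1 A P Q) : TendstoL1 A P Q' := by
  unfold TendstoL1 at t ⊢
  exact t.congr fun k => setLIntegral_congr_fun hA fun x hx => by simp only [h x hx]

lemma tendstoLinf_congr {n : ℕ} {A : Set (Euc n)} (hA : MeasurableSet A) {P : ℕ → Euc n → ℝ}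
    {Q Q' : Euc n → ℝ} (h : ∀ x ∈ A, Q x = Q' x) (t : TendstoLinf A P Q) : TendstoLinf A P Q' := by
  unfold TendstoLinf at t ⊢
  refine t.congr fun k => eLpNorm_congr_ae ?_
  filter_upwards [ae_restrict_mem hA] with x hx
  rw [h x hx]

end TF

open TF
/-- Proposition `compactness`: compactness of energy bounded
sequences for the clamped thin-film functionals. -/
theorem statement10 (ω : Set (Euc 2)) (hω : IsOpen ω) (hωb : Bornology.IsBounded ω)
    (hωc : IsConnected ω) (hωL : HasLipschitzBoundary ω)
    (f : Euc 2 → ℝ → ℝ → Mat 3 3 → ℝ)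
    (hfmeas : Measurable fun t : Euc 2 × ℝ × ℝ × Mat 3 3 => f t.1 t.2.1 t.2.2.1 t.2.2.2)
    (C₁ C₂ : ℝ) (hC₁ : 0 < C₁) (hC₁₂ : C₁ ≤ C₂)
    (hgrowth : ∀ᵐ xα ∂(volume.restrict ω), ∀ y ∈ Set.Ioo (-(1/2):ℝ) (1/2),
      ∀ q ∈ Set.Ici (1:ℝ), ∀ ξ : Mat 3 3,
        C₁ * mnorm ξ ^ q - 1 / C₁ ≤ f xα y q ξ ∧ f xα y q ξ ≤ C₂ * (mnorm ξ ^ q + 1))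
    (p : Euc 3 → ℝ) (hp : IsPb (thinDomain ω) p)
    (εs : ℕ → ℝ) (hεpos : ∀ k, 0 < εs k) (hεs : Tendsto εs atTop (nhds (0:ℝ)))
    (u : ℕ → Euc 3 → Euc 3) (G : ℕ → Euc 3 → Mat 3 3)
    (hadm : ∀ k, SobAdm ω p (εs k) (u k) (G k))
    (hbound : ∃ C : ℝ≥0∞, C < ⊤ ∧ ∀ k,
      (∫⁻ x in thinDomain ω, ENNReal.ofReal
        (f (projα x) (εs k * x 2) (p (scaleX (εs k) x)) (scaleCol (εs k) (G k x)))) ≤ C) :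
    ∃ (φ : ℕ → ℕ) (u₀ : Euc 3 → Euc 3) (G₀ : Euc 3 → Mat 3 3)
      (v : Euc 2 → Euc 3) (Gv : Euc 2 → Mat 3 2), StrictMono φ ∧
      -- (1) weak convergence in W^{1,p⁻}(Ω;ℝ³) to u₀ ∈ W^{1,p⁻}_{0,∂_LΩ},
      --     identified with v ∈ W^{1,p⁻}_0(ω;ℝ³)
      (∀ i, WeakLrTendsto (thinDomain ω) (pminus ω p)
        (fun k x => u (φ k) x i) (fun x => u₀ x i)) ∧
      (∀ i j, WeakLrTendsto (thinDomain ω) (pminus ω p)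
        (fun k x => G (φ k) x i j) (fun x => G₀ x i j)) ∧
      IsWeakGrad (thinDomain ω) u₀ G₀ ∧
      MemLatZero ω (pminus ω p) u₀ G₀ ∧
      emod (thinDomain ω) (fun _ => pminus ω p) (fun x => ‖u₀ x‖) < ⊤ ∧
      emod (thinDomain ω) (fun _ => pminus ω p) (fun x => mnorm (G₀ x)) < ⊤ ∧
      (∀ᵐ x ∂(volume.restrict (thinDomain ω)), u₀ x = v (projα x)) ∧
      MemW1p0Planar ω (fun _ => pminus ω p) v Gv ∧
      -- (2) if p₀ ∈ C(ω̄) and p_{εₖ} → p₀ in L¹_loc(Ω), then u₀ ∈ W^{1,p₀(·)}(ω;ℝ³)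
      (∀ p₀ : Euc 2 → ℝ, ContinuousOn p₀ (closure ω) →
        (∀ A : Set (Euc 3), CompactlyIn A (thinDomain ω) →
          TendstoL1 A (fun k x => p (scaleX (εs k) x)) (fun x => p₀ (projα x))) →
        MemW1pPlanar ω p₀ v Gv) ∧
      -- (3) if p₀ ∈ 𝒫_b^{log}(ω) and p_{εₖ} → p₀ in L¹_loc(Ω), then u₀ ∈ W^{1,p₀(·)}_0(ω;ℝ³)
      (∀ p₀ : Euc 2 → ℝ, IsPbLog ω p₀ →
        (∀ A : Set (Euc 3), CompactlyIn A (thinDomain ω) →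
          TendstoL1 A (fun k x => p (scaleX (εs k) x)) (fun x => p₀ (projα x))) →
        MemW1p0Planar ω p₀ v Gv) ∧
      -- (4) if p₀ ∈ C(ω̄) and p_{εₖ} → p₀ in L^∞(Ω), then u_{εₖ} → u₀ in L^{p₀(·)}(Ω;ℝ³)
      (∀ p₀ : Euc 2 → ℝ, ContinuousOn p₀ (closure ω) →
        TendstoLinf (thinDomain ω) (fun k x => p (scaleX (εs k) x)) (fun x => p₀ (projα x)) →
        TendstoModular (thinDomain ω) (fun x => p₀ (projα x)) (fun k => u (φ k)) u₀) := by
  have hm := (isOpen_thin hω).measurableSet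
  have hne := hωc.nonempty
  have hr : 1 < pminus ω p := (pminus_facts hp (volume_thin_ne_zero hω hne)).1
  -- The comparison of the gradient with the scaled gradient needs `ε ≤ 1`: drop finitely many terms.
  obtain ⟨N₀, hN₀⟩ := eventually_atTop.1 (hεs.eventually_le_const (zero_lt_one' ℝ))
  have mono₀ : StrictMono fun k : ℕ => k + N₀ := fun a b h => by simpa using h
  obtain ⟨C, hC, hCb⟩ := hbound
  obtain ⟨pM, C', U, H, c, hU, hH⟩ := exists_core hω hωb hne hC₁ hgrowth hp
    (fun k => hεpos (k + N₀)) (fun k => hN₀ _ (Nat.le_add_left _ _))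
    (hεs.comp mono₀.tendsto_atTop) (fun k => hadm (k + N₀)) ⟨C, hC, fun k => hCb (k + N₀)⟩
  obtain ⟨φ, V, K, hφ, L⟩ := exists_lim hω hωb c
  have cφ := c.comp hφ
  have X := L.ext
  have mono : StrictMono fun k => φ k + N₀ := mono₀.comp hφ
  have rV : ∀ i, ∫⁻ a in ω, ‖V i a‖ₑ ^ pminus ω p < ⊤ := fun i =>
    (L.rV i).trans_lt c.hC.lt_top
  have rK : ∀ i l, ∫⁻ a in ω, ‖K i l a‖ₑ ^ pminus ω p < ⊤ := fun i l =>
    (L.rK i l).trans_lt c.hC.lt_top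
  have rVt : ∀ i, ∫⁻ x in thinDomain ω, ‖V i (projα x)‖ₑ ^ pminus ω p < ⊤ := fun i => by
    rw [lint_proj hω.measurableSet (F := fun a => ‖V i a‖ₑ ^ pminus ω p)
      ((X.mV i).enorm.pow_const _)]
    exact rV i
  have rKt : ∀ i j, ∫⁻ x in thinDomain ω, ‖liftGrad K x i j‖ₑ ^ pminus ω p < ⊤ := fun i =>
    fin3_cases (fun l => by
      simp only [liftGrad_castSucc]
      rw [lint_proj hω.measurableSet (F := fun a => ‖K i l a‖ₑ ^ pminus ω p)
        ((X.mK i l).enorm.pow_const _)]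
      exact rK i l) (by
      simp only [liftGrad_two, enorm_zero, ENNReal.zero_rpow_of_pos (zero_lt_one.trans hr),
        lintegral_zero, ENNReal.zero_lt_top])
  have mVp : ∀ i, Measurable fun x : Euc 3 => V i (projα x) := fun i =>
    (X.mV i).comp continuous_proj.measurable
  -- Consequences of the local `L¹` convergence of the exponents: bounds on the limit exponent, the
  -- modular of the gradient by lower semicontinuity, that of the function by the gain of integrability.
  have main : ∀ p₀ : Euc 2 → ℝ, Measurable p₀ → UnifOn ω p₀ →
      (∀ A : Set (Euc 3), CompactlyIn A (thinDomain ω) →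
        TendstoL1 A (fun k x => p (scaleX (εs k) x)) (fun x => p₀ (projα x))) →
      (∀ᵐ a ∂(volume.restrict ω), pminus ω p ≤ p₀ a ∧ p₀ a ≤ pM) ∧
      (∀ i, ∫⁻ a in ω, ‖V i a‖ₑ ^ p₀ a < ⊤) ∧ ∀ i l, ∫⁻ a in ω, ‖K i l a‖ₑ ^ p₀ a < ⊤ := by
    intro p₀ mp₀ hu hl
    have hl' : ∀ A : Set (Euc 3), CompactlyIn A (thinDomain ω) →
        TendstoL1 A (fun k x => p (scaleX (εs (φ k + N₀)) x)) (fun x => p₀ (projα x)) :=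
      fun A hA => tendstoL1_comp (hl A hA) mono
    have b := limit_exponent_bounds hω hωb cφ.mP cφ.hP mp₀ hl'
    have k := Lim.grad_mod hω hωb cφ L mp₀ hl'
    exact ⟨b, X.mod_lt_top hω hωb hr mp₀ b hu k, k⟩
  refine ⟨fun k => φ k + N₀, fun x => vec V (projα x), liftGrad K, vec V, fun x i l => K i l x,
    mono, fun i => weakLr_of_enorm hr (L.cU i) fun k => hU (φ k) i, fun i => ?_,
    weakGrad_iff.2 fun i j => (wd_liftGrad X.iV X.iK X.wd i j).mono (subset_univ _),
    X.latZero hω hωb hωL hr rV rK, ?_, ?_, ae_of_all _ fun _ => rfl,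
    X.mem0 hω hωb hωL measurable_const hr (ae_of_all _ fun _ => ⟨le_rfl, le_rfl⟩)
      ⟨1, one_pos, fun x _ y _ _ _ => by simp⟩ rV rK, ?_, ?_, ?_⟩
  · refine fin3_cases (fun l => ?_) ?_
    · refine weakLr_of_enorm hr ?_ fun k => hH (φ k) i l.castSucc
      simp only [liftGrad_castSucc]
      exact L.cH i l
    · refine weakLr_of_enorm hr ?_ fun k => hH (φ k) i 2
      simp only [liftGrad_two, mul_zero, integral_zero]
      exact L.c2 i
  · exact mod_lt_top (F := fun i x => V i (projα x)) (fun i => (mVp i).aemeasurable)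
      (fun x => norm_nonneg _) (fun x => norm_le_sum_abs _) aemeasurable_const
      (ae_of_all _ fun _ => ⟨hr.le, le_rfl⟩) rVt
  · exact mod_lt_top (F := fun (q : Fin 3 × Fin 3) x => liftGrad K x q.1 q.2)
      (fun q => (measurable_liftGrad X.mK q.1 q.2).aemeasurable)
      (fun x => mnorm_nonneg _) (fun x => mnorm_le_sum_prod _) aemeasurable_const
      (ae_of_all _ fun _ => ⟨hr.le, le_rfl⟩) fun q => rKt q.1 q.2
  · intro p₀ hc hl
    -- The exponent is continuous only on the closure of `ω`; set to zero outside `ω` it is measurable.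
    have m₁ := measurable_indicator_of_continuousOn hω hc
    have e₁ : ∀ a ∈ ω, ω.indicator p₀ a = p₀ a := fun a ha => indicator_of_mem ha _
    obtain ⟨b, v, k⟩ := main _ m₁ ((unifOn_of_continuousOn hωb hc).congr e₁) fun A hA =>
      tendstoL1_congr hA.1.measurableSet
        (fun x hx => (e₁ _ (hA.2.2 (subset_closure hx)).1).symm) (hl A hA)
    obtain ⟨h1, h2, h3, h4, h5⟩ := mem_planar m₁ (b.mono fun x hx => ⟨hr.le.trans hx.1, hx.2⟩)
      X.mV X.mK X.wd v k
    rw [emod_congr hω.measurableSet e₁] at h4 h5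
    exact ⟨h1, h2, h3, h4, h5⟩
  · intro p₀ hp₀ hl
    obtain ⟨b, v, k⟩ := main _ hp₀.1.1 (logHolder_unifOn hp₀.2) hl
    exact X.mem0 hω hωb hωL hp₀.1.1 hr b hp₀.2 v k
  · intro p₀ hc hl
    -- The exponent is continuous only on the closure of `ω`; set to zero outside `ω` it is measurable.
    have m₁ := measurable_indicator_of_continuousOn hω hc
    have e₁ : ∀ a ∈ ω, ω.indicator p₀ a = p₀ a := fun a ha => indicator_of_mem ha _
    have u₁ := (unifOn_of_continuousOn hωb hc).congr e₁
    have l₁ := tendstoLinf_congr hm (fun x hx => (e₁ _ hx.1).symm) hl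
    obtain ⟨b, -, k⟩ := main _ m₁ u₁ fun A hA =>
      tendstoL1_of_Linf (subset_closure.trans hA.2.2) (hA.2.1.isBounded.subset subset_closure) l₁
    have lφ : TendstoLinf (thinDomain ω) (fun k x => p (scaleX (εs (φ k + N₀)) x))
        (fun x => ω.indicator p₀ (projα x)) := by
      unfold TendstoLinf at l₁ ⊢
      exact l₁.comp mono.tendsto_atTop
    have s := strong_mod hω hωb cφ L m₁ b u₁ lφ k
    have t := mod_tendsto (μ := volume.restrict (thinDomain ω))
      (F := fun k i x => U (φ k) i x - V i (projα x))
      (N := fun k x => ‖vec (U (φ k)) x - vec V (projα x)‖)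
      (fun k i => ((cφ.mU k i).sub (mVp i)).aemeasurable) (fun k x => norm_nonneg _)
      (fun k x => norm_le_sum_abs _) (m₁.comp continuous_proj.measurable).aemeasurable
      ((ae_thin_of_planar hω.measurableSet b).mono fun x hx => ⟨hr.le.trans hx.1, hx.2⟩) s
    unfold TendstoModular
    refine t.congr fun k => lintegral_congr_ae ?_
    filter_upwards [ae_restrict_mem hm, ae_all_iff.2 (hU (φ k))] with x hx hx'
    have : vec (U (φ k)) x = u (φ k + N₀) x := by
      ext i; exact hx' i
    simp only [this, Function.comp, e₁ _ hx.1]
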